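/- There exist universal constants C, α > 0 (the paper's proof yields α ≤ 4) such that for every n ≥ 2 and every pair of convex bodies K₁, K₂ ⊆ ℝⁿ, the partial containment distance satisfies d_PC(K₁, K₂) ≤ C·logᵅ(n+1). -/

import Mathlib

/-!
The proof compares the Gaussian mean of the gauge of a convex body in isotropic position with its mean over the body,
by Eldan's stochastic localization, and concludes with a random rotation.

Let `X` have an isotropic log-concave density `exp (-V)`, and let `Y = t X + √t Z` be the observation at time `t`, with
`Z` a standard Gaussian. Given `Y = y`, the posterior of `X` has density proportional to
`exp (⟨y, x⟩ - t |x|² / 2 - V x)`; let `a` and `A` be its mean and covariance. For functions of `(t, Y)` Dynkin's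
formula (`dynkin`) holds with generator `𝓛 = ∂ₜ + a · ∇ + Δ / 2`. One has `𝓛 A = -A²`, and the space derivatives of
`A` are the third central moments of the posterior. The posterior is `t`-strongly log-concave, so it satisfies Klartag's
improved Lichnerowicz inequality `improved_poincare`, with Poincaré constant `√(Θ / t)` for any `Θ ≥ ‖A‖`. That
inequality is deduced from Bochner's formula and from density of the range of the Langevin generator, the latter by a
continuity method starting at a Gaussian. It bounds the third moments (`tensor_bound`). A Gronwall argument for
`1 - exp (-tr (A - 1)^q)`, with `q` even of order `log n`, then shows that up to time `q⁻⁴` the covariance is close to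
the identity with very high probability (`Str_small`).

Let `h` be the gauge of a convex neighbourhood of the origin. The functional `Ff` averages `h` over a Gaussian around
`a` with precision `τ = 4 γ exp (γ t)`, `γ = q⁴`. Its drift is `½ τ² ∑ Hess · (A² - γ / τ)`, which is nonnegative while
`A ≥ 1/2` since `γ / τ ≤ 1/4`. At time `0` its value is `Eg h / (2 q²)`, where `Eg` is the standard Gaussian mean. At
time `q⁻⁴ / 2` Jensen's inequality and subadditivity bound its expectation by `E h(X) + e^{-1/4} Eg h / (2 q²)`. Hence
`gauss_le`: `Eg h ≤ 20 q² E h(X)`.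

A convex body is approximated by densities `exp (-V)` with `V` smooth and convex, equal to a quadratic polynomial plus a
compactly supported function (`body_approx`, `body_potential`). After an affine change of variables (`whiten`,
`iso_position`) its gauge has Gaussian mean at most `40 q²` and its second moment is at most `4 n` times its volume. For
two bodies in this position, averaging over the Haar measure of the orthogonal group (`avg_le`, `exists_rotation`) gives
a rotation for which the mean of each gauge over the other body is at most `320 q²`. Markov's inequality (`part_cont`)
yields partial containment with factor `s = 32000 q²`. Finally `λ = s²` and `q ≤ 20510 log (n + 1)` (`exists_q`) give
the exponent `4`.
-/

open MeasureTheory Real Pointwise RealInnerProductSpace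
open scoped ENNReal

noncomputable section

/-- A convex body: a compact convex set with non-empty interior. -/
def IsConvexBody {n : ℕ} (K : Set (EuclideanSpace ℝ (Fin n))) : Prop :=
  IsCompact K ∧ Convex ℝ K ∧ (interior K).Nonempty

/-- The uniform probability measure on a set `K`. -/
def unifOn {n : ℕ} (K : Set (EuclideanSpace ℝ (Fin n))) : Measure (EuclideanSpace ℝ (Fin n)) :=
  (volume K)⁻¹ • volume.restrict K

/-- A probability measure `μ` on `ℝⁿ` is isotropic: its barycenter vanishes and its
covariance matrix is the identity. -/
def IsIsotropicMeasure {n : ℕ} (μ : Measure (EuclideanSpace ℝ (Fin n))) : Prop :=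
  (∀ i, ∫ x, x i ∂μ = 0) ∧ ∀ i j, ∫ x, x i * x j ∂μ = if i = j then 1 else 0

/-- A convex body is in isotropic position if the uniform probability measure on it
is isotropic. -/
def IsIsotropicBody {n : ℕ} (K : Set (EuclideanSpace ℝ (Fin n))) : Prop :=
  IsIsotropicMeasure (unifOn K)

/-- A log-concave density: nonnegative, and multiplicatively convex. This is equivalent to:
`{p > 0}` is convex and `log (1/p)` is convex on it. -/
def IsLogConcaveDensity {n : ℕ} (p : EuclideanSpace ℝ (Fin n) → ℝ) : Prop :=
  (∀ x, 0 ≤ p x) ∧ ∀ x y : EuclideanSpace ℝ (Fin n), ∀ t : ℝ, 0 ≤ t → t ≤ 1 →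
    p x ^ t * p y ^ (1 - t) ≤ p (t • x + (1 - t) • y)

/-- A measure on `ℝⁿ` is log-concave if it has a log-concave density w.r.t. Lebesgue. -/
def IsLogConcaveMeasure {n : ℕ} (μ : Measure (EuclideanSpace ℝ (Fin n))) : Prop :=
  ∃ p : EuclideanSpace ℝ (Fin n) → ℝ, Measurable p ∧ IsLogConcaveDensity p ∧
    μ = volume.withDensity fun x => ENNReal.ofReal (p x)

/-- The standard Gaussian probability measure on `ℝⁿ`. -/
def stdGaussian (n : ℕ) : Measure (EuclideanSpace ℝ (Fin n)) :=
  volume.withDensity fun x => ENNReal.ofReal ((2 * π) ^ (-(n : ℝ) / 2) * Real.exp (-‖x‖ ^ 2 / 2))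

/-- The Poincaré constant of a measure: the least `A ≥ 0` such that
`Var f ≤ A ⬝ E |∇ f|²` for all locally Lipschitz `f`. -/
def poincareConst {n : ℕ} (μ : Measure (EuclideanSpace ℝ (Fin n))) : ℝ :=
  sInf {A : ℝ | 0 ≤ A ∧ ∀ f : EuclideanSpace ℝ (Fin n) → ℝ, LocallyLipschitz f →
    ∫ x, (f x - ∫ y, f y ∂μ) ^ 2 ∂μ ≤ A * ∫ x, ‖gradient f x‖ ^ 2 ∂μ}

/-- The KLS constant `ψₙ`. -/
def KLSConst (n : ℕ) : ℝ :=
  sSup {s : ℝ | ∃ μ : Measure (EuclideanSpace ℝ (Fin n)), IsProbabilityMeasure μ ∧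
    IsLogConcaveMeasure μ ∧ IsIsotropicMeasure μ ∧ s = Real.sqrt (poincareConst μ)}

/-- The Hilbert-Schmidt norm of a matrix. -/
def hsNorm {n : ℕ} (M : Matrix (Fin n) (Fin n) ℝ) : ℝ :=
  Real.sqrt (∑ i, ∑ j, (M i j) ^ 2)

/-- The coefficient `κₙ`, the supremum of `‖E [X₁ (X ⊗ X)]‖_HS` over all isotropic
log-concave random vectors `X` in `ℝⁿ`. -/
def kappaConst (n : ℕ) : ℝ :=
  sSup {s : ℝ | ∃ μ : Measure (EuclideanSpace ℝ (Fin n)), IsProbabilityMeasure μ ∧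
    IsLogConcaveMeasure μ ∧ IsIsotropicMeasure μ ∧ ∃ h : 0 < n,
    s = hsNorm (Matrix.of fun i j => ∫ x, x ⟨0, h⟩ * (x i * x j) ∂μ)}

/-- A gauge function on `ℝⁿ`: non-negative, convex, positively homogeneous. -/
def IsGauge {n : ℕ} (f : EuclideanSpace ℝ (Fin n) → ℝ) : Prop :=
  (∀ x, 0 ≤ f x) ∧ ConvexOn ℝ Set.univ f ∧
    ∀ (c : ℝ), 0 ≤ c → ∀ x, f (c • x) = c * f x

/-- `M(K)`: the mean of the Minkowski functional of `K` over the unit sphere, w.r.t. the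
uniform probability measure on the sphere. -/
def Mparam (n : ℕ) (K : Set (EuclideanSpace ℝ (Fin n))) : ℝ :=
  ∫ x : Metric.sphere (0 : EuclideanSpace ℝ (Fin n)) 1,
    gauge K x ∂(((volume : Measure (EuclideanSpace ℝ (Fin n))).toSphere Set.univ)⁻¹ •
      (volume : Measure (EuclideanSpace ℝ (Fin n))).toSphere)

/-- The polar body. -/
def polarBody {n : ℕ} (K : Set (EuclideanSpace ℝ (Fin n))) : Set (EuclideanSpace ℝ (Fin n)) :=
  {x | ∀ y ∈ K, ⟪x, y⟫ ≤ 1}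

/-- `R(K)`: the maximal Euclidean norm of a point of `K`. -/
def Rparam {n : ℕ} (K : Set (EuclideanSpace ℝ (Fin n))) : ℝ :=
  sSup {r : ℝ | ∃ x ∈ K, r = ‖x‖}

/-- The operator norm `‖A : K → T‖ = sup_{x ≠ 0} ‖Ax‖_T / ‖x‖_K` (Minkowski functionals). -/
def mapNorm {n : ℕ} (K T : Set (EuclideanSpace ℝ (Fin n)))
    (A : Matrix (Fin n) (Fin n) ℝ) : ℝ :=
  sSup {r : ℝ | ∃ x : EuclideanSpace ℝ (Fin n), x ≠ 0 ∧
    r = gauge T (Matrix.toEuclideanLin A x) / gauge K x}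

/-- The ℓ₂ operator norm of a matrix. -/
def matOpNorm {n : ℕ} (M : Matrix (Fin n) (Fin n) ℝ) : ℝ :=
  ‖LinearMap.toContinuousLinearMap (Matrix.toEuclideanLin M)‖

/-- The partial containment distance between convex bodies `K₁, K₂ ⊆ ℝⁿ`. -/
def dPC {n : ℕ} (K₁ K₂ : Set (EuclideanSpace ℝ (Fin n))) : ℝ :=
  sInf {lam : ℝ | 0 < lam ∧
    ∃ (T : EuclideanSpace ℝ (Fin n) ≃ₗ[ℝ] EuclideanSpace ℝ (Fin n))
      (x y : EuclideanSpace ℝ (Fin n)),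
      (99 / 100 : ℝ≥0∞) * volume (⇑T '' (x +ᵥ K₁)) ≤
          volume (Real.sqrt lam • (y +ᵥ K₂) ∩ ⇑T '' (x +ᵥ K₁)) ∧
        (99 / 100 : ℝ≥0∞) * volume (y +ᵥ K₂) ≤
          volume (Real.sqrt lam • (⇑T '' (x +ᵥ K₁)) ∩ (y +ᵥ K₂))}

/-! ### Polynomially growing functions, integration by parts, Bochner's formula -/

/-- Euclidean space of dimension `n`. -/
abbrev Eu (n : ℕ) := EuclideanSpace ℝ (Fin n)

/-- The `i`-th standard basis vector. -/
abbrev ee {n : ℕ} (i : Fin n) : Eu n := EuclideanSpace.single i (1 : ℝ)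

/-- The partial derivative in the `i`-th coordinate direction. -/
def pd {n : ℕ} (i : Fin n) (u : Eu n → ℝ) (x : Eu n) : ℝ := fderiv ℝ u x (ee i)

/-- Smooth functions all of whose derivatives grow at most polynomially. -/
abbrev TG {n : ℕ} (u : Eu n → ℝ) : Prop := Function.HasTemperateGrowth u

/-- Polynomially bounded functions. -/
def PB {F : Type*} [Norm F] (f : F → ℝ) : Prop := ∃ (C : ℝ) (k : ℕ), 0 ≤ C ∧ ∀ x, |f x| ≤ C * (1 + ‖x‖) ^ k

/-- Continuous potentials growing at least quadratically. -/
def QG {n : ℕ} (U : Eu n → ℝ) : Prop :=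
  Continuous U ∧ ∃ c C : ℝ, 0 < c ∧ ∀ x, c * ‖x‖ ^ 2 - C ≤ U x

section basics
variable {n : ℕ}

lemma TG.diff {u : Eu n → ℝ} (hu : TG u) : Differentiable ℝ u := hu.1.differentiable (by simp)
lemma TG.cont {u : Eu n → ℝ} (hu : TG u) : Continuous u := hu.1.continuous

lemma TG.pd {u : Eu n → ℝ} (hu : TG u) (i : Fin n) : TG (pd i u) := by
  have h1 : Function.HasTemperateGrowth (fderiv ℝ u) := by
    refine ⟨hu.1.fderiv_right (by simp), fun m => ?_⟩
    obtain ⟨k, C, h⟩ := hu.2 (m + 1)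
    refine ⟨k, C, fun x => ?_⟩
    rw [norm_iteratedFDeriv_fderiv]
    exact h x
  exact ((ContinuousLinearMap.apply ℝ ℝ (ee i : Eu n)).hasTemperateGrowth).comp h1

lemma TG.pb {u : Eu n → ℝ} (hu : TG u) : PB u := by
  obtain ⟨k, C, h⟩ := hu.2 0
  refine ⟨|C|, k, abs_nonneg _, fun x => ?_⟩
  have := h x
  rw [norm_iteratedFDeriv_zero] at this
  refine this.trans ?_
  gcongr
  exact le_abs_self C

lemma TG.const (c : ℝ) : TG (fun _ : Eu n => c) := Function.HasTemperateGrowth.const c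
lemma TG.add {u v : Eu n → ℝ} (hu : TG u) (hv : TG v) : TG (fun x => u x + v x) :=
  Function.HasTemperateGrowth.add hu hv
lemma TG.sub {u v : Eu n → ℝ} (hu : TG u) (hv : TG v) : TG (fun x => u x - v x) :=
  Function.HasTemperateGrowth.sub hu hv
lemma TG.mul {u v : Eu n → ℝ} (hu : TG u) (hv : TG v) : TG (fun x => u x * v x) :=
  Function.HasTemperateGrowth.mul hu hv
lemma TG.pow {u : Eu n → ℝ} (hu : TG u) (k : ℕ) : TG (fun x => u x ^ k) :=
  Function.HasTemperateGrowth.pow hu k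
lemma TG.sum {ι : Type*} {s : Finset ι} {u : ι → Eu n → ℝ} (hu : ∀ i ∈ s, TG (u i)) :
    TG (fun x => ∑ i ∈ s, u i x) := Function.HasTemperateGrowth.sum hu
lemma TG.cmul {u : Eu n → ℝ} (c : ℝ) (hu : TG u) : TG (fun x => c * u x) := (TG.const c).mul hu
lemma TG.neg {u : Eu n → ℝ} (hu : TG u) : TG (fun x => - u x) :=
  Function.HasTemperateGrowth.neg hu
lemma TG.coord (i : Fin n) : TG (fun x : Eu n => x i) :=
  (EuclideanSpace.proj i : Eu n →L[ℝ] ℝ).hasTemperateGrowth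

lemma TG_cos_sin : Function.HasTemperateGrowth Real.cos ∧ Function.HasTemperateGrowth Real.sin := by
  have key : ∀ m : ℕ, (∀ x, |iteratedDeriv m Real.cos x| ≤ 1) ∧
      (∀ x, |iteratedDeriv m Real.sin x| ≤ 1) := by
    intro m
    induction m with
    | zero => simp [Real.abs_cos_le_one, Real.abs_sin_le_one]
    | succ m ih =>
      rw [Real.iteratedDeriv_add_one_cos, Real.iteratedDeriv_add_one_sin]
      refine ⟨fun x => ?_, ih.1⟩
      simpa using ih.2 x
  constructor
  · refine ⟨Real.contDiff_cos, fun m => ⟨0, 1, fun x => ?_⟩⟩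
    rw [norm_iteratedFDeriv_eq_norm_iteratedDeriv]
    simpa using (key m).1 x
  · refine ⟨Real.contDiff_sin, fun m => ⟨0, 1, fun x => ?_⟩⟩
    rw [norm_iteratedFDeriv_eq_norm_iteratedDeriv]
    simpa using (key m).2 x

lemma PB.const {F : Type*} [SeminormedAddCommGroup F] (c : ℝ) : PB (fun _ : F => c) :=
  ⟨|c|, 0, abs_nonneg _, fun x => by simp⟩

lemma PB.mono {F : Type*} [SeminormedAddCommGroup F] {f g : F → ℝ} (hg : PB g) (h : ∀ x, |f x| ≤ |g x|) : PB f := by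
  obtain ⟨C, k, hC, H⟩ := hg
  exact ⟨C, k, hC, fun x => (h x).trans (H x)⟩

lemma PB.add {F : Type*} [SeminormedAddCommGroup F] {f g : F → ℝ} (hf : PB f) (hg : PB g) : PB (fun x => f x + g x) := by
  obtain ⟨C, k, hC, H⟩ := hf
  obtain ⟨C', k', hC', H'⟩ := hg
  refine ⟨C + C', k + k', by positivity, fun x => ?_⟩
  have h1 : (1:ℝ) ≤ 1 + ‖x‖ := by linarith [norm_nonneg x]
  calc |f x + g x| ≤ |f x| + |g x| := abs_add_le _ _
    _ ≤ C * (1 + ‖x‖) ^ k + C' * (1 + ‖x‖) ^ k' := add_le_add (H x) (H' x)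
    _ ≤ C * (1 + ‖x‖) ^ (k + k') + C' * (1 + ‖x‖) ^ (k + k') := by
        gcongr <;> first | exact h1 | omega
    _ = _ := by ring

lemma PB.mul {F : Type*} [SeminormedAddCommGroup F] {f g : F → ℝ} (hf : PB f) (hg : PB g) : PB (fun x => f x * g x) := by
  obtain ⟨C, k, hC, H⟩ := hf
  obtain ⟨C', k', hC', H'⟩ := hg
  refine ⟨C * C', k + k', by positivity, fun x => ?_⟩
  calc |f x * g x| = |f x| * |g x| := abs_mul _ _
    _ ≤ (C * (1 + ‖x‖) ^ k) * (C' * (1 + ‖x‖) ^ k') :=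
        mul_le_mul (H x) (H' x) (abs_nonneg _) (by positivity)
    _ = _ := by ring

lemma PB.pow {F : Type*} [SeminormedAddCommGroup F] {f : F → ℝ} (hf : PB f) (k : ℕ) : PB (fun x => f x ^ k) := by
  induction k with
  | zero => simpa using PB.const 1
  | succ k ih => simpa [pow_succ] using ih.mul hf

lemma PB.sum {F : Type*} [SeminormedAddCommGroup F] {ι : Type*} {s : Finset ι} {f : ι → F → ℝ} (hf : ∀ i ∈ s, PB (f i)) :
    PB (fun x => ∑ i ∈ s, f i x) := by
  classical
  induction s using Finset.induction_on with
  | empty => simpa using PB.const 0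
  | insert a s ha ih =>
    simp only [Finset.sum_insert ha]
    exact (hf a (by simp)).add (ih fun i hi => hf i (by simp [hi]))

lemma PB.norm {F : Type*} [SeminormedAddCommGroup F] : PB (fun x : F => ‖x‖) :=
  ⟨1, 1, by norm_num, fun x => by simp⟩

lemma PB.neg {F : Type*} [SeminormedAddCommGroup F] {f : F → ℝ} (hf : PB f) : PB (fun x => - f x) := hf.mono (by simp)

lemma PB.abs {F : Type*} [SeminormedAddCommGroup F] {f : F → ℝ} (hf : PB f) : PB (fun x => |f x|) := hf.mono (by simp)

lemma PB.sub {F : Type*} [SeminormedAddCommGroup F] {f g : F → ℝ} (hf : PB f) (hg : PB g) : PB (fun x => f x - g x) := by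
  simpa [sub_eq_add_neg] using hf.add hg.neg

lemma one_add_pow_le_exp (c : ℝ) (hc : 0 < c) (k : ℕ) :
    ∃ K : ℝ, 0 ≤ K ∧ ∀ r : ℝ, 0 ≤ r → (1 + r) ^ k ≤ K * Real.exp (c * r ^ 2) := by
  refine ⟨k.factorial * Real.exp (1 + 1 / (4 * c)), by positivity, fun r hr => ?_⟩
  have h1 := Real.pow_div_factorial_le_exp (1 + r) (by linarith) k
  rw [div_le_iff₀ (by positivity)] at h1
  have h2 : 1 + r ≤ 1 + 1 / (4 * c) + c * r ^ 2 := by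
    have : 0 ≤ (2 * c * r - 1) ^ 2 / (4 * c) := by positivity
    have h3 : (2 * c * r - 1) ^ 2 / (4 * c) = c * r ^ 2 - r + 1 / (4 * c) := by field_simp; ring
    linarith
  calc (1 + r) ^ k ≤ Real.exp (1 + r) * k.factorial := h1
    _ ≤ Real.exp (1 + 1 / (4 * c) + c * r ^ 2) * k.factorial := by gcongr
    _ = _ := by rw [Real.exp_add]; ring

lemma integrable_gauss (c : ℝ) (hc : 0 < c) : Integrable (fun x : Eu n => Real.exp (-(c * ‖x‖ ^ 2))) := by
  have := GaussianFourier.integrable_cexp_neg_mul_sq_norm_add (V := Eu n) (b := (c : ℂ)) (by simpa) 0 0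
  refine this.norm.congr (Filter.Eventually.of_forall fun x => ?_)
  simp only [Complex.norm_exp]
  congr 1
  simp [← Complex.ofReal_pow, ← Complex.ofReal_mul]

/-- Polynomially bounded functions are integrable against `exp (-U)`. -/
lemma PB.integrable {f : Eu n → ℝ} (hf : PB f) (hm : AEStronglyMeasurable f volume)
    {U : Eu n → ℝ} (hU : QG U) :
    Integrable (fun x => f x * Real.exp (-(U x))) := by
  obtain ⟨C, k, hC, H⟩ := hf
  obtain ⟨hUc, c, C', hc, hU⟩ := hU
  obtain ⟨K, hK, HK⟩ := one_add_pow_le_exp (c/2) (by positivity) k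
  refine Integrable.mono' ((integrable_gauss (c/2) (by positivity)).const_mul (C * K * Real.exp C'))
    (hm.mul (Real.continuous_exp.comp hUc.neg).aestronglyMeasurable)
    (Filter.Eventually.of_forall fun x => ?_)
  rw [Real.norm_eq_abs, abs_mul, Real.abs_exp]
  calc |f x| * Real.exp (-(U x)) ≤ (C * (K * Real.exp (c / 2 * ‖x‖ ^ 2))) * Real.exp (C' - c * ‖x‖ ^ 2) := by
        gcongr
        · exact (H x).trans (by gcongr; exact HK _ (norm_nonneg _))
        · linarith [hU x]
    _ = C * K * Real.exp C' * Real.exp (-(c / 2 * ‖x‖ ^ 2)) := by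
        have : Real.exp (c / 2 * ‖x‖ ^ 2) * Real.exp (C' - c * ‖x‖ ^ 2) = Real.exp C' * Real.exp (-(c / 2 * ‖x‖ ^ 2)) := by
          rw [← Real.exp_add, ← Real.exp_add]; ring_nf
        linear_combination C * K * this

lemma TG.integrable {f : Eu n → ℝ} (hf : TG f) {U : Eu n → ℝ} (hU : QG U) :
    Integrable (fun x => f x * Real.exp (-(U x))) :=
  hf.pb.integrable hf.cont.aestronglyMeasurable hU

lemma pd_add {u v : Eu n → ℝ} {i : Fin n} {x : Eu n} (hu : DifferentiableAt ℝ u x) (hv : DifferentiableAt ℝ v x) :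
    pd i (fun x => u x + v x) x = pd i u x + pd i v x := by
  simp [pd, fderiv_fun_add hu hv]
lemma pd_sub {u v : Eu n → ℝ} {i : Fin n} {x : Eu n} (hu : DifferentiableAt ℝ u x) (hv : DifferentiableAt ℝ v x) :
    pd i (fun x => u x - v x) x = pd i u x - pd i v x := by
  simp [pd, fderiv_fun_sub hu hv]
lemma pd_mul {u v : Eu n → ℝ} {i : Fin n} {x : Eu n} (hu : DifferentiableAt ℝ u x) (hv : DifferentiableAt ℝ v x) :
    pd i (fun x => u x * v x) x = pd i u x * v x + u x * pd i v x := by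
  simp [pd, fderiv_fun_mul hu hv]; ring
lemma pd_cmul {v : Eu n → ℝ} {i : Fin n} {x : Eu n} (c : ℝ) (hv : DifferentiableAt ℝ v x) :
    pd i (fun x => c * v x) x = c * pd i v x := by
  simp [pd, fderiv_const_mul hv]
lemma pd_const {i : Fin n} {x : Eu n} (c : ℝ) : pd i (fun _ => c) x = 0 := by simp [pd]
lemma pd_sum {ι : Type*} {s : Finset ι} {u : ι → Eu n → ℝ} {i : Fin n} {x : Eu n}
    (hu : ∀ j ∈ s, DifferentiableAt ℝ (u j) x) :
    pd i (fun x => ∑ j ∈ s, u j x) x = ∑ j ∈ s, pd i (u j) x := by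
  simp [pd, fderiv_fun_sum hu]
lemma pd_coord {i j : Fin n} {x : Eu n} : pd i (fun x : Eu n => x j) x = if i = j then 1 else 0 := by
  have : fderiv ℝ (fun x : Eu n => x j) x = (EuclideanSpace.proj j : Eu n →L[ℝ] ℝ) :=
    (EuclideanSpace.proj j : Eu n →L[ℝ] ℝ).fderiv
  rw [pd, this]
  simp [eq_comm]

lemma pd_comm {u : Eu n → ℝ} (hu : TG u) (i j : Fin n) (x : Eu n) :
    pd i (pd j u) x = pd j (pd i u) x := by
  have h2 : ContDiff ℝ 1 (fderiv ℝ u) := hu.1.fderiv_right (by norm_cast)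
  have hd : DifferentiableAt ℝ (fderiv ℝ u) x := h2.differentiable (by simp) x
  have key : ∀ a b : Fin n, pd a (pd b u) x = fderiv ℝ (fderiv ℝ u) x (ee a) (ee b) := by
    intro a b
    have : pd b u = fun y => (fderiv ℝ u y) (ee b) := rfl
    rw [this, pd, fderiv_clm_apply hd (by simp)]
    simp
  rw [key, key]
  have hs : IsSymmSndFDerivAt ℝ u x := (hu.1.contDiffAt).isSymmSndFDerivAt (by simp; exact WithTop.coe_le_coe.mpr (le_top : (2:ℕ∞) ≤ ⊤))
  exact hs _ _

/-- Integration against the (unnormalised) density `exp (-U)`. -/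
def In (U f : Eu n → ℝ) : ℝ := ∫ x, f x * Real.exp (-(U x))

lemma In_add {U f g : Eu n → ℝ} (hU : QG U) (hf : TG f) (hg : TG g) :
    In U (fun x => f x + g x) = In U f + In U g := by
  simp only [In, add_mul]
  exact integral_add (hf.integrable hU) (hg.integrable hU)
lemma In_sub {U f g : Eu n → ℝ} (hU : QG U) (hf : TG f) (hg : TG g) :
    In U (fun x => f x - g x) = In U f - In U g := by
  simp only [In, sub_mul]
  exact integral_sub (hf.integrable hU) (hg.integrable hU)
lemma In_cmul {U f : Eu n → ℝ} (c : ℝ) :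
    In U (fun x => c * f x) = c * In U f := by
  simp only [In, mul_assoc]
  exact integral_const_mul _ _
lemma In_sum {ι : Type*} {s : Finset ι} {U : Eu n → ℝ} {f : ι → Eu n → ℝ} (hU : QG U)
    (hf : ∀ i ∈ s, TG (f i)) : In U (fun x => ∑ i ∈ s, f i x) = ∑ i ∈ s, In U (f i) := by
  simp only [In, Finset.sum_mul]
  exact integral_finsetSum _ fun i hi => (hf i hi).integrable hU
lemma In_mono {U f g : Eu n → ℝ} (hU : QG U) (hf : TG f) (hg : TG g) (h : ∀ x, f x ≤ g x) :
    In U f ≤ In U g :=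
  integral_mono (hf.integrable hU) (hg.integrable hU) fun x => by gcongr; exact h x
lemma In_nonneg {U f : Eu n → ℝ} (h : ∀ x, 0 ≤ f x) : 0 ≤ In U f :=
  integral_nonneg fun x => mul_nonneg (h x) (Real.exp_pos _).le

/-- Cauchy-Schwarz. -/
lemma In_cs {U f g : Eu n → ℝ} (hU : QG U) (hf : TG f) (hg : TG g) :
    (In U (fun x => f x * g x)) ^ 2 ≤ In U (fun x => f x ^ 2) * In U (fun x => g x ^ 2) := by
  have h : ∀ s : ℝ, 0 ≤ In U (fun x => g x ^ 2) * (s * s) + (2 * In U (fun x => f x * g x)) * s + In U (fun x => f x ^ 2) := by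
    intro s
    have h1 : 0 ≤ In U (fun x => (s ^ 2 * g x ^ 2 + (2 * s) * (f x * g x)) + f x ^ 2) :=
      In_nonneg fun x => by nlinarith [sq_nonneg (s * g x + f x)]
    rw [In_add hU (((hg.pow 2).cmul _).add ((hf.mul hg).cmul _)) (hf.pow 2),
      In_add hU ((hg.pow 2).cmul _) ((hf.mul hg).cmul _), In_cmul, In_cmul] at h1
    linarith
  have := discrim_le_zero h
  rw [discrim] at this
  linarith

/-- Integration by parts against `exp (-U)`. -/
lemma In_ibp {U w : Eu n → ℝ} (hU : QG U) (hUs : TG U) (hw : TG w) (i : Fin n) :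
    In U (pd i w) = In U (fun x => w x * pd i U x) := by
  have hd : ∀ x, DifferentiableAt ℝ (fun x => Real.exp (-(U x))) x := fun x =>
    ((hUs.diff x).neg).exp
  have hfd : ∀ x, fderiv ℝ (fun x => Real.exp (-(U x))) x (ee i) = -(pd i U x * Real.exp (-(U x))) := by
    intro x
    have hh : HasFDerivAt (fun x => Real.exp (-(U x))) _ x := ((hUs.diff x).hasFDerivAt.neg).exp
    rw [hh.fderiv]
    simp [pd]; ring
  have h := integral_mul_fderiv_eq_neg_fderiv_mul_of_integrable (μ := (volume : Measure (Eu n)))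
    (f := fun x => Real.exp (-(U x))) (g := w) (v := ee i) ?_ ?_ ?_ (fun x _ => hd x) (fun x _ => hw.diff x)
  · have e1 : In U (pd i w) = ∫ x, Real.exp (-(U x)) * fderiv ℝ w x (ee i) := by
      simp only [In, pd, mul_comm]
    rw [e1, h, In, ← integral_neg]
    congr 1; ext x; rw [hfd]; ring
  · refine ((hw.mul (hUs.pd i)).integrable hU).neg.congr (Filter.Eventually.of_forall fun x => ?_)
    simp only [Pi.neg_apply]; rw [hfd]; ring
  · refine ((hw.pd i).integrable hU).congr (Filter.Eventually.of_forall fun x => ?_)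
    simp only [pd]; ring
  · refine (hw.integrable hU).congr (Filter.Eventually.of_forall fun x => ?_)
    simp only; ring

/-- The Langevin generator `Δ u - ∇U · ∇u`. -/
def Lop (U u : Eu n → ℝ) (x : Eu n) : ℝ := ∑ i, (pd i (pd i u) x - pd i U x * pd i u x)

lemma TG.Lop {U u : Eu n → ℝ} (hU : TG U) (hu : TG u) : TG (Lop U u) :=
  TG.sum fun i _ => ((hu.pd i).pd i).sub ((hU.pd i).mul (hu.pd i))

lemma In_Lop_mul {U f g : Eu n → ℝ} (hU : QG U) (hUs : TG U) (hf : TG f) (hg : TG g) :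
    In U (fun x => Lop U f x * g x) = - ∑ i, In U (fun x => pd i f x * pd i g x) := by
  have h : ∀ i, In U (fun x => (pd i (pd i f) x - pd i U x * pd i f x) * g x)
      = - In U (fun x => pd i f x * pd i g x) := by
    intro i
    have h1 := In_ibp hU hUs ((hf.pd i).mul hg) i
    have h2 : pd i (fun x => pd i f x * g x) = fun x => pd i (pd i f) x * g x + pd i f x * pd i g x := by
      ext x; exact pd_mul ((hf.pd i).diff x) (hg.diff x)
    rw [h2, In_add hU (((hf.pd i).pd i).mul hg) ((hf.pd i).mul (hg.pd i))] at h1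
    have h3 : (fun x => (pd i (pd i f) x - pd i U x * pd i f x) * g x) =
      fun x => pd i (pd i f) x * g x - (pd i f x * g x) * pd i U x := by ext x; ring
    rw [h3, In_sub hU (((hf.pd i).pd i).mul hg) (((hf.pd i).mul hg).mul (hUs.pd i))]
    linarith
  simp only [Lop, Finset.sum_mul]
  rw [In_sum hU fun i _ => (((hf.pd i).pd i).sub ((hUs.pd i).mul (hf.pd i))).mul hg, ← Finset.sum_neg_distrib]
  exact Finset.sum_congr rfl fun i _ => h i

lemma pd_Lop {U u : Eu n → ℝ} (hU : TG U) (hu : TG u) (i : Fin n) (x : Eu n) :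
    pd i (Lop U u) x = Lop U (pd i u) x - ∑ j, pd i (pd j U) x * pd j u x := by
  unfold Lop
  rw [pd_sum fun j _ => ((((hu.pd j).pd j).sub ((hU.pd j).mul (hu.pd j))).diff x), ← Finset.sum_sub_distrib]
  refine Finset.sum_congr rfl fun j _ => ?_
  rw [pd_sub (((hu.pd j).pd j).diff x) (((hU.pd j).mul (hu.pd j)).diff x),
    pd_mul ((hU.pd j).diff x) ((hu.pd j).diff x)]
  have e1 : pd j (pd i u) = pd i (pd j u) := by ext y; exact pd_comm hu _ _ _
  rw [e1, pd_comm (hu.pd j) j i]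
  ring

/-- Strong convexity: the Hessian is bounded below by `t`. -/
def HessGe (U : Eu n → ℝ) (t : ℝ) : Prop :=
  ∀ x (v : Fin n → ℝ), t * ∑ i, v i ^ 2 ≤ ∑ i, ∑ j, v i * v j * pd i (pd j U) x

/-- Bochner's inequality. -/
lemma bochner {U u : Eu n → ℝ} {t : ℝ} (hU : QG U) (hUs : TG U) (hH : HessGe U t) (hu : TG u) :
    (∑ i, ∑ j, In U (fun x => pd j (pd i u) x ^ 2)) + t * ∑ i, In U (fun x => pd i u x ^ 2) ≤
      In U (fun x => Lop U u x ^ 2) := by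
  have hL := hUs.Lop hu
  have h1 : In U (fun x => Lop U u x ^ 2) = - ∑ i, In U (fun x => pd i u x * pd i (Lop U u) x) := by
    rw [← In_Lop_mul hU hUs hu hL]; simp [sq]
  have h2 : ∀ i, In U (fun x => pd i u x * pd i (Lop U u) x) =
      - (∑ j, In U (fun x => pd j (pd i u) x ^ 2)) -
        In U (fun x => ∑ j, pd i u x * pd j u x * pd i (pd j U) x) := by
    intro i
    have e : (fun x => pd i u x * pd i (Lop U u) x) = fun x => Lop U (pd i u) x * pd i u x -
        ∑ j, pd i u x * pd j u x * pd i (pd j U) x := by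
      ext x; rw [pd_Lop hUs hu, mul_sub, Finset.mul_sum]
      congr 1
      · ring
      · exact Finset.sum_congr rfl fun j _ => by ring
    rw [e, In_sub hU ((hUs.Lop (hu.pd i)).mul (hu.pd i))
      (TG.sum fun j _ => ((hu.pd i).mul (hu.pd j)).mul ((hUs.pd j).pd i)), In_Lop_mul hU hUs (hu.pd i) (hu.pd i)]
    simp [sq]
  have hTG : ∀ i ∈ Finset.univ, TG (fun x => ∑ j, pd i u x * pd j u x * pd i (pd j U) x) := fun i _ =>
    TG.sum fun j _ => ((hu.pd i).mul (hu.pd j)).mul ((hUs.pd j).pd i)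
  have h3 : t * ∑ i, In U (fun x => pd i u x ^ 2) ≤
      ∑ i, In U (fun x => ∑ j, pd i u x * pd j u x * pd i (pd j U) x) := by
    rw [← In_sum hU hTG, ← In_sum hU fun i _ => (hu.pd i).pow 2, ← In_cmul]
    exact In_mono hU ((TG.sum fun i _ => (hu.pd i).pow 2).cmul t) (TG.sum hTG) fun x => hH x fun i => pd i u x
  rw [h1]
  simp only [h2, Finset.sum_sub_distrib, Finset.sum_neg_distrib]
  linarith

end basics

/-! ### Density of the range of the Langevin generator -/

section density
variable {n : ℕ}

/-- The measure with density `exp (-U)`. -/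
def wM (U : Eu n → ℝ) : Measure (Eu n) := volume.withDensity fun x => ENNReal.ofReal (Real.exp (-(U x)))

lemma integral_wM {U : Eu n → ℝ} (hU : Continuous U) (f : Eu n → ℝ) :
    ∫ x, f x ∂(wM U) = In U f := by
  have hm : Measurable (fun x => (Real.exp (-(U x))).toNNReal) :=
    (Real.continuous_exp.comp hU.neg).measurable.real_toNNReal
  have := integral_withDensity_eq_integral_smul (μ := (volume : Measure (Eu n))) hm f
  rw [wM, In]
  refine Eq.trans this ?_
  congr 1; ext x
  rw [NNReal.smul_def, Real.coe_toNNReal _ (Real.exp_pos _).le, smul_eq_mul, mul_comm]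

lemma integrable_wM {U : Eu n → ℝ} (hU : Continuous U) {f : Eu n → ℝ} :
    Integrable f (wM U) ↔ Integrable (fun x => f x * Real.exp (-(U x))) := by
  have hm : Measurable (fun x => (Real.exp (-(U x))).toNNReal) :=
    (Real.continuous_exp.comp hU.neg).measurable.real_toNNReal
  have := integrable_withDensity_iff_integrable_smul (μ := (volume : Measure (Eu n))) hm (g := f)
  rw [wM]
  refine Iff.trans this ?_
  refine integrable_congr (Filter.Eventually.of_forall fun x => ?_)
  simp only
  rw [NNReal.smul_def, Real.coe_toNNReal _ (Real.exp_pos _).le, smul_eq_mul, mul_comm]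

lemma ae_wM {U : Eu n → ℝ} (hU : Continuous U) {p : Eu n → Prop} :
    (∀ᵐ x ∂(wM U), p x) ↔ ∀ᵐ x, p x := by
  rw [wM, ae_withDensity_iff (show Measurable fun x => ENNReal.ofReal (Real.exp (-(U x))) from
    (Real.continuous_exp.comp hU.neg).measurable.ennreal_ofReal)]
  simp [Real.exp_pos]

lemma wM_ac (U : Eu n → ℝ) : wM U ≪ volume := withDensity_absolutelyContinuous _ _
lemma ac_wM {U : Eu n → ℝ} (hU : Continuous U) : volume ≪ wM U := by
  refine Measure.AbsolutelyContinuous.mk fun s hs h => ?_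
  have : ∀ᵐ x ∂(wM U), x ∉ s := measure_eq_zero_iff_ae_notMem.1 h
  exact measure_eq_zero_iff_ae_notMem.2 ((ae_wM hU).1 this)

lemma wM_finite {U : Eu n → ℝ} (hU : QG U) : IsFiniteMeasure (wM U) := by
  have h := (TG.const (n := n) 1).integrable hU
  have := (integrable_wM hU.1).2 h
  have h2 := (integrable_const_iff (μ := wM U) (c := (1:ℝ))).1 this
  simpa using h2

lemma memLp_wM {U f : Eu n → ℝ} (hU : QG U) (hf : TG f) : MemLp f 2 (wM U) := by
  rw [memLp_two_iff_integrable_sq hf.cont.aestronglyMeasurable, integrable_wM hU.1]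
  exact (hf.pow 2).integrable hU

lemma im2 {α : Type*} [MeasurableSpace α] {μ : Measure α} {f g : α → ℝ} (hf : MemLp f 2 μ)
    (hg : MemLp g 2 μ) : Integrable (fun x => f x * g x) μ := hf.integrable_mul hg

lemma cs_meas {α : Type*} [MeasurableSpace α] {μ : Measure α} {f g : α → ℝ} (hf : MemLp f 2 μ)
    (hg : MemLp g 2 μ) : (∫ x, f x * g x ∂μ) ^ 2 ≤ (∫ x, f x ^ 2 ∂μ) * ∫ x, g x ^ 2 ∂μ := by
  have i1 := im2 hf hg
  have i2 := hf.integrable_sq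
  have i3 := hg.integrable_sq
  have h : ∀ s : ℝ, 0 ≤ (∫ x, g x ^ 2 ∂μ) * (s * s) + (2 * ∫ x, f x * g x ∂μ) * s + ∫ x, f x ^ 2 ∂μ := by
    intro s
    have h1 : 0 ≤ ∫ x, ((s ^ 2 * g x ^ 2 + (2 * s) * (f x * g x)) + f x ^ 2) ∂μ :=
      integral_nonneg fun x => by
        show 0 ≤ _
        nlinarith [sq_nonneg (s * g x + f x)]
    rw [integral_add ((i3.const_mul _).fun_add (i1.const_mul _)) i2,
      integral_add (i3.const_mul _) (i1.const_mul _), integral_const_mul, integral_const_mul] at h1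
    linarith
  have := discrim_le_zero h
  rw [discrim] at this
  linarith

/-- In a Hilbert space of square integrable functions, a space of centred functions with no centred
function orthogonal to it is dense in the centred functions. -/
lemma dense_of_orth {α : Type*} [MeasurableSpace α] {μ : Measure α} [IsFiniteMeasure μ]
    (S : Submodule ℝ (α → ℝ)) (hS : ∀ f ∈ S, MemLp f 2 μ) (hS0 : ∀ f ∈ S, ∫ x, f x ∂μ = 0)
    (H : ∀ g, MemLp g 2 μ → ∫ x, g x ∂μ = 0 → (∀ f ∈ S, ∫ x, g x * f x ∂μ = 0) → g =ᵐ[μ] 0)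
    (g : α → ℝ) (hg : MemLp g 2 μ) (hg0 : ∫ x, g x ∂μ = 0) (ε : ℝ) (hε : 0 < ε) :
    ∃ f ∈ S, ∫ x, (g x - f x) ^ 2 ∂μ ≤ ε ^ 2 := by
  let S' : Submodule ℝ (Lp ℝ 2 μ) :=
    { carrier := {F | ∃ f ∈ S, ∃ c : ℝ, F =ᵐ[μ] fun x => f x + c}
      add_mem' := by
        rintro F G ⟨f, hf, c, hF⟩ ⟨f', hf', c', hG⟩
        refine ⟨f + f', S.add_mem hf hf', c + c', ?_⟩
        filter_upwards [Lp.coeFn_add F G, hF, hG] with x h1 h2 h3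
        rw [h1, Pi.add_apply, h2, h3]; simp; ring
      zero_mem' := ⟨0, S.zero_mem, 0, by
        filter_upwards [Lp.coeFn_zero ℝ 2 μ] with x h1
        rw [h1]; simp⟩
      smul_mem' := by
        rintro a F ⟨f, hf, c, hF⟩
        refine ⟨a • f, S.smul_mem a hf, a * c, ?_⟩
        filter_upwards [Lp.coeFn_smul a F, hF] with x h1 h2
        rw [h1, Pi.smul_apply, h2]; simp; ring }
  have horth : S'ᗮ = ⊥ := by
    rw [eq_bot_iff]
    intro G hG
    rw [Submodule.mem_orthogonal'] at hG
    have hGm := Lp.memLp G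
    have hin : ∀ f, MemLp f 2 μ → (∃ f' ∈ S, ∃ c : ℝ, f = fun x => f' x + c) → ∫ x, G x * f x ∂μ = 0 := by
      rintro f hf ⟨f', hf', c, hff⟩
      have h1 := hG (hf.toLp f) ⟨f', hf', c, by rw [← hff]; exact hf.coeFn_toLp⟩
      rw [MeasureTheory.L2.inner_def] at h1
      rw [← h1]
      refine integral_congr_ae ?_
      filter_upwards [hf.coeFn_toLp] with x hx
      simp [hx, mul_comm]
    have hG1 : ∫ x, G x ∂μ = 0 := by
      have := hin (fun _ => 1) (memLp_const 1) ⟨0, S.zero_mem, 1, by ext; simp⟩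
      simpa using this
    have := H G hGm hG1 fun f hf => hin f (hS f hf) ⟨f, hf, 0, by ext; simp⟩
    rw [Submodule.mem_bot]
    exact (Lp.eq_zero_iff_ae_eq_zero).2 this
  have htop := (Submodule.topologicalClosure_eq_top_iff (K := S')).2 horth
  have hmem : hg.toLp g ∈ closure (S' : Set (Lp ℝ 2 μ)) := by
    rw [← Submodule.topologicalClosure_coe, htop]; trivial
  obtain ⟨F, ⟨f, hf, c, hF⟩, hd⟩ := Metric.mem_closure_iff.1 hmem ε hε
  refine ⟨f, hf, ?_⟩
  have hfm := hS f hf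
  have hgf : MemLp (fun x => g x - f x) 2 μ := hg.sub hfm
  have i1 : Integrable (fun x => g x - f x) μ := hgf.integrable (by norm_num)
  have e0 : ∫ x, (g x - f x) ∂μ = 0 := by
    rw [integral_sub (hg.integrable (by norm_num)) (hfm.integrable (by norm_num)), hg0, hS0 f hf]; simp
  have e1 : ‖hg.toLp g - F‖ ^ 2 = ∫ x, (g x - f x - c) ^ 2 ∂μ := by
    rw [← real_inner_self_eq_norm_sq, MeasureTheory.L2.inner_def]
    refine integral_congr_ae ?_
    filter_upwards [hg.coeFn_toLp, hF, Lp.coeFn_sub (hg.toLp g) F] with x h1 h2 h3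
    rw [h3, Pi.sub_apply, h1, h2]
    simp only [real_inner_self_eq_norm_sq, Real.norm_eq_abs, sq_abs]; ring
  have e2 : ∫ x, (g x - f x) ^ 2 ∂μ ≤ ∫ x, (g x - f x - c) ^ 2 ∂μ := by
    have : ∀ x, (g x - f x - c) ^ 2 = (g x - f x) ^ 2 + ((-2 * c) * (g x - f x) + c ^ 2) := fun x => by ring
    simp only [this]
    rw [integral_add hgf.integrable_sq ((i1.const_mul _).fun_add (integrable_const _)),
      integral_add (i1.const_mul _) (integrable_const _), integral_const_mul, e0]
    have : 0 ≤ ∫ _, c ^ 2 ∂μ := integral_nonneg fun _ => sq_nonneg c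
    linarith
  rw [← e1] at e2
  refine e2.trans ?_
  rw [dist_eq_norm] at hd
  gcongr

/-- Density of the range of the generator in the centred square integrable functions. -/
def Approx (U : Eu n → ℝ) : Prop := ∀ g, MemLp g 2 (wM U) → ∫ x, g x ∂(wM U) = 0 → ∀ ε : ℝ, 0 < ε →
  ∃ u, TG u ∧ ∫ x, (g x - Lop U u x) ^ 2 ∂(wM U) ≤ ε ^ 2

/-- The dual form of `Approx`. -/
def Orth (U : Eu n → ℝ) : Prop := ∀ g, MemLp g 2 (wM U) → ∫ x, g x ∂(wM U) = 0 →
  (∀ u, TG u → ∫ x, g x * Lop U u x ∂(wM U) = 0) → g =ᵐ[wM U] 0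

lemma Lop_add {U u v : Eu n → ℝ} (hu : TG u) (hv : TG v) :
    Lop U (fun x => u x + v x) = fun x => Lop U u x + Lop U v x := by
  ext x
  have h : ∀ i, pd i (fun x => u x + v x) = fun x => pd i u x + pd i v x := fun i => by
    ext x; exact pd_add (hu.diff x) (hv.diff x)
  simp only [Lop, h, ← Finset.sum_add_distrib]
  refine Finset.sum_congr rfl fun i _ => ?_
  rw [pd_add ((hu.pd i).diff x) ((hv.pd i).diff x)]; ring

lemma Lop_cmul {U u : Eu n → ℝ} (c : ℝ) (hu : TG u) :
    Lop U (fun x => c * u x) = fun x => c * Lop U u x := by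
  ext x
  have h : ∀ i, pd i (fun x => c * u x) = fun x => c * pd i u x := fun i => by
    ext x; exact pd_cmul c (hu.diff x)
  simp only [Lop, h, Finset.mul_sum]
  refine Finset.sum_congr rfl fun i _ => ?_
  rw [pd_cmul c ((hu.pd i).diff x)]; ring

lemma In_Lop {U u : Eu n → ℝ} (hU : QG U) (hUs : TG U) (hu : TG u) : In U (Lop U u) = 0 := by
  have := In_Lop_mul hU hUs hu (TG.const 1)
  simpa [pd_const, In] using this

lemma Orth.approx {U : Eu n → ℝ} (hU : QG U) (hUs : TG U) (h : Orth U) : Approx U := by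
  have := wM_finite hU
  intro g hg hg0 ε hε
  let S : Submodule ℝ (Eu n → ℝ) :=
    { carrier := {f | ∃ u, TG u ∧ f = Lop U u}
      add_mem' := by
        rintro _ _ ⟨u, hu, rfl⟩ ⟨v, hv, rfl⟩
        exact ⟨_, hu.add hv, (Lop_add hu hv).symm⟩
      zero_mem' := ⟨fun x => 0 * (0:ℝ), (TG.const 0).cmul 0, by rw [Lop_cmul 0 (TG.const 0)]; ext; simp⟩
      smul_mem' := by
        rintro c _ ⟨u, hu, rfl⟩
        exact ⟨_, hu.cmul c, (Lop_cmul c hu).symm⟩ }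
  obtain ⟨f, ⟨u, hu, rfl⟩, hf⟩ := dense_of_orth (μ := wM U) S
    (by rintro _ ⟨u, hu, rfl⟩; exact memLp_wM hU (hUs.Lop hu))
    (by rintro _ ⟨u, hu, rfl⟩; rw [integral_wM hU.1]; exact In_Lop hU hUs hu)
    (fun g hg hg0 H => h g hg hg0 fun u hu => H _ ⟨u, hu, rfl⟩) g hg hg0 ε hε
  exact ⟨u, hu, hf⟩

/-- Step of the continuity method: perturbing the potential by a small multiple of `ψ`. The generator changes by
`s ∇ψ · ∇u`, which Bochner's formula controls by a small multiple of the generator itself. -/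
lemma Approx.step {U ψ : Eu n → ℝ} {t s B : ℝ} (ht : 0 < t) (hU : QG U) (hUs : TG U) (hH : HessGe U t)
    (hψ : TG ψ) (hψb : ∃ M, ∀ x, |ψ x| ≤ M) (hB : ∀ x, ∑ i, pd i ψ x ^ 2 ≤ B) (hs : 8 * s ^ 2 * B ≤ t)
    (hA : Approx U) : Orth (fun x => U x + s * ψ x) := by
  obtain ⟨M, hM⟩ := hψb
  have := wM_finite hU
  set U' : Eu n → ℝ := fun x => U x + s * ψ x with hU'
  have hU'c : Continuous U' := hU.1.add (continuous_const.mul hψ.cont)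
  intro g' hg' hg0' H
  set g : Eu n → ℝ := fun x => g' x * Real.exp (-(s * ψ x)) with hgdef
  have hexp : ∀ x, Real.exp (-(s * ψ x)) * Real.exp (-(U x)) = Real.exp (-(U' x)) := fun x => by
    rw [← Real.exp_add]; simp only [hU']; ring_nf
  have hg'm : AEStronglyMeasurable g' volume := hg'.1.mono_ac (ac_wM hU'c)
  have hgm : AEStronglyMeasurable g volume :=
    hg'm.mul (Real.continuous_exp.comp (continuous_const.mul hψ.cont).neg).aestronglyMeasurable
  have hgint : ∀ f : Eu n → ℝ, ∫ x, g x * f x ∂(wM U) = ∫ x, g' x * f x ∂(wM U') := by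
    intro f
    rw [integral_wM hU.1, integral_wM hU'c, In, In]
    congr 1; ext x; rw [← hexp]; simp only [hgdef]; ring
  have hgL : MemLp g 2 (wM U) := by
    rw [memLp_two_iff_integrable_sq (hgm.mono_ac (wM_ac U)), integrable_wM hU.1]
    have h1 := (integrable_wM hU'c).1 hg'.integrable_sq
    refine Integrable.mono' (h1.const_mul (Real.exp (|s| * M)))
      ((hgm.pow 2).mul (Real.continuous_exp.comp hU.1.neg).aestronglyMeasurable)
      (Filter.Eventually.of_forall fun x => ?_)
    rw [Real.norm_of_nonneg (by positivity)]
    have e : g x ^ 2 * Real.exp (-(U x)) = Real.exp (-(s * ψ x)) * (g' x ^ 2 * Real.exp (-(U' x))) := by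
      rw [← hexp]; simp only [hgdef]; ring
    rw [e]
    gcongr
    calc -(s * ψ x) ≤ |s * ψ x| := neg_le_abs _
      _ = |s| * |ψ x| := abs_mul _ _
      _ ≤ _ := by gcongr; exact hM x
  have hg0 : ∫ x, g x ∂(wM U) = 0 := by
    have := hgint fun _ => 1
    simpa [hg0'] using this
  have hLop : ∀ u, TG u → ∀ x, Lop U' u x = Lop U u x - s * ∑ i, pd i ψ x * pd i u x := by
    intro u hu x
    simp only [Lop, Finset.mul_sum, ← Finset.sum_sub_distrib]
    refine Finset.sum_congr rfl fun i _ => ?_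
    rw [hU', pd_add (hUs.diff x) ((hψ.cmul s).diff x), pd_cmul s (hψ.diff x)]; ring
  set N := ∫ x, g x ^ 2 ∂(wM U) with hN
  have hN0 : 0 ≤ N := integral_nonneg fun x => sq_nonneg _
  have key : ∀ ε : ℝ, 0 < ε → N ≤ 5 * ε ^ 2 := by
    intro ε hε
    obtain ⟨u, hu, hapx⟩ := hA g hgL hg0 ε hε
    have hLm := memLp_wM hU (hUs.Lop hu)
    have hd : MemLp (fun x => g x - Lop U u x) 2 (wM U) := hgL.sub hLm
    have hpTG : TG (fun x => ∑ i, pd i ψ x * pd i u x) := TG.sum fun i _ => (hψ.pd i).mul (hu.pd i)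
    have hp := memLp_wM hU hpTG
    have c1 := cs_meas hgL hd
    have c2 := cs_meas hgL hp
    have z := H u hu
    rw [← hgint] at z
    have z1 : ∫ x, g x * Lop U' u x ∂(wM U) =
        (∫ x, g x * Lop U u x ∂(wM U)) - s * ∫ x, g x * ∑ i, pd i ψ x * pd i u x ∂(wM U) := by
      rw [← integral_const_mul, ← integral_sub (im2 hgL hLm) ((im2 hgL hp).const_mul s)]
      congr 1; ext x; rw [hLop u hu]; ring
    have z2 : ∫ x, g x * (g x - Lop U u x) ∂(wM U) = N - ∫ x, g x * Lop U u x ∂(wM U) := by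
      rw [hN, ← integral_sub hgL.integrable_sq (im2 hgL hLm)]
      congr 1; ext x; ring
    have b1 : ∫ x, (∑ i, pd i ψ x * pd i u x) ^ 2 ∂(wM U) ≤ B * ∑ i, In U (fun x => pd i u x ^ 2) := by
      rw [integral_wM hU.1, ← In_sum hU fun i _ => (hu.pd i).pow 2, ← In_cmul]
      refine In_mono hU (hpTG.pow 2) ((TG.sum fun i _ => (hu.pd i).pow 2).cmul B) fun x => ?_
      refine (Finset.sum_mul_sq_le_sq_mul_sq _ _ _).trans ?_
      gcongr; exact hB x
    have b2 := bochner hU hUs hH hu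
    have b3 : 0 ≤ ∑ i, ∑ j, In U (fun x => pd j (pd i u) x ^ 2) :=
      Finset.sum_nonneg fun i _ => Finset.sum_nonneg fun j _ => In_nonneg fun x => sq_nonneg _
    have hpt : ∀ p q : ℝ, q ^ 2 ≤ 2 * p ^ 2 + 2 * (p - q) ^ 2 := fun p q => by nlinarith [sq_nonneg (2 * p - q)]
    have b4 : In U (fun x => Lop U u x ^ 2) ≤ 2 * N + 2 * ε ^ 2 := by
      rw [← integral_wM hU.1]
      calc ∫ x, Lop U u x ^ 2 ∂(wM U) ≤ ∫ x, (2 * g x ^ 2 + 2 * (g x - Lop U u x) ^ 2) ∂(wM U) :=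
            integral_mono hLm.integrable_sq ((hgL.integrable_sq.const_mul 2).fun_add (hd.integrable_sq.const_mul 2))
              fun x => hpt (g x) (Lop U u x)
        _ = 2 * N + 2 * ∫ x, (g x - Lop U u x) ^ 2 ∂(wM U) := by
            rw [integral_add (hgL.integrable_sq.const_mul 2) (hd.integrable_sq.const_mul 2),
              integral_const_mul, integral_const_mul]
        _ ≤ _ := by linarith
    set P := ∑ i, In U (fun x => pd i u x ^ 2)
    have hP0 : 0 ≤ P := Finset.sum_nonneg fun i _ => In_nonneg fun x => sq_nonneg _
    set a := ∫ x, g x * (g x - Lop U u x) ∂(wM U)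
    set b := ∫ x, g x * ∑ i, pd i ψ x * pd i u x ∂(wM U)
    have hNab : N = a + s * b := by linarith
    have ha : a ^ 2 ≤ N * ε ^ 2 := c1.trans (by gcongr)
    have hb : (s * b) ^ 2 ≤ N * (2 * N + 2 * ε ^ 2) / 8 := by
      have e1 : b ^ 2 ≤ N * (B * P) := c2.trans (by gcongr)
      have e2 : 8 * s ^ 2 * B * P ≤ 2 * N + 2 * ε ^ 2 := by
        calc 8 * s ^ 2 * B * P ≤ t * P := by gcongr
          _ ≤ _ := by linarith
      calc (s * b) ^ 2 = s ^ 2 * b ^ 2 := by ring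
        _ ≤ s ^ 2 * (N * (B * P)) := by gcongr
        _ = N * (8 * s ^ 2 * B * P) / 8 := by ring
        _ ≤ _ := by gcongr
    have hN2 : N ^ 2 ≤ 2 * a ^ 2 + 2 * (s * b) ^ 2 := by
      rw [hNab]; nlinarith [sq_nonneg (a - s * b)]
    rcases hN0.eq_or_lt with h | h
    · rw [← h]; positivity
    · have : N * N ≤ N * (5 * ε ^ 2) := by nlinarith
      exact le_of_mul_le_mul_left this h
  have hN00 : N = 0 := by
    by_contra hne
    have hpos : 0 < N := lt_of_le_of_ne hN0 (Ne.symm hne)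
    have := key (Real.sqrt (N / 10)) (Real.sqrt_pos.2 (by positivity))
    rw [Real.sq_sqrt (by positivity)] at this
    linarith
  have h0 := (integral_eq_zero_iff_of_nonneg (fun x => sq_nonneg (g x)) hgL.integrable_sq).1 hN00
  have h1 := (ae_wM hU.1).1 h0
  refine (ae_wM hU'c).2 ?_
  filter_upwards [h1] with x hx
  simp only [Pi.zero_apply] at hx
  have := pow_eq_zero_iff (two_ne_zero) |>.1 hx
  simpa [hgdef, (Real.exp_pos _).ne'] using this

end density

/-! ### The Gaussian base case -/

section gaussbase
variable {n : ℕ}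

/-- The linear functional with coefficients `v`. -/
def lin (v : Fin n → ℝ) (x : Eu n) : ℝ := ∑ j, v j * x j

lemma TG_lin (v : Fin n → ℝ) : TG (lin v) := TG.sum fun j _ => (TG.coord j).cmul _

lemma pd_lin (v : Fin n → ℝ) (i : Fin n) (x : Eu n) : pd i (lin v) x = v i := by
  unfold lin
  rw [pd_sum fun j _ => ((TG.coord j).cmul _).diff x]
  simp [pd_cmul _ ((TG.coord _).diff x), pd_coord]

/-- A quadratic potential, diagonal in the standard basis. -/
def U0 (b l : Fin n → ℝ) (c : ℝ) (x : Eu n) : ℝ := ∑ i, (b i / 2 * x i ^ 2 + l i * x i) + c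

lemma TG_U0 (b l : Fin n → ℝ) (c : ℝ) : TG (U0 b l c) :=
  (TG.sum fun i _ => (((TG.coord i).pow 2).cmul _).add ((TG.coord i).cmul _)).add (TG.const c)

lemma pd_U0 (b l : Fin n → ℝ) (c : ℝ) (i : Fin n) (x : Eu n) : pd i (U0 b l c) x = b i * x i + l i := by
  unfold U0
  have h : ∀ j, TG (fun x : Eu n => b j / 2 * x j ^ 2 + l j * x j) := fun j =>
    (((TG.coord j).pow 2).cmul _).add ((TG.coord j).cmul _)
  rw [pd_add ((TG.sum fun j _ => h j).diff x) ((TG.const c).diff x), pd_sum fun j _ => (h j).diff x, pd_const]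
  have h2 : ∀ j, pd i (fun x : Eu n => b j / 2 * x j ^ 2 + l j * x j) x = if i = j then b j * x j + l j else 0 := by
    intro j
    rw [pd_add ((((TG.coord j).pow 2).cmul _).diff x) (((TG.coord j).cmul _).diff x),
      pd_cmul _ (((TG.coord j).pow 2).diff x), pd_cmul _ ((TG.coord j).diff x)]
    simp only [pow_two]
    rw [pd_mul ((TG.coord j).diff x) ((TG.coord j).diff x), pd_coord]
    split_ifs <;> ring
  simp [h2]

lemma QG_U0 (b l : Fin n → ℝ) (c : ℝ) {t : ℝ} (ht : 0 < t) (hb : ∀ i, t ≤ b i) : QG (U0 b l c) := by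
  refine ⟨(TG_U0 b l c).cont, t / 4, ∑ i, l i ^ 2 / t - c, by positivity, fun x => ?_⟩
  rw [EuclideanSpace.real_norm_sq_eq, U0, Finset.mul_sum]
  have : ∑ i, t / 4 * x i ^ 2 - ∑ i, l i ^ 2 / t ≤ ∑ i, (b i / 2 * x i ^ 2 + l i * x i) := by
    rw [← Finset.sum_sub_distrib]
    refine Finset.sum_le_sum fun i _ => ?_
    have h1 : t / 2 * x i ^ 2 ≤ b i / 2 * x i ^ 2 := by gcongr; exact hb i
    have h2 : 0 ≤ (t * x i / 2 + l i) ^ 2 / t := by positivity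
    have h3 : (t * x i / 2 + l i) ^ 2 / t = t / 4 * x i ^ 2 + l i * x i + l i ^ 2 / t := by field_simp; ring
    linarith
  linarith

/-- Uniqueness for Fourier transforms of integrable functions. -/
lemma ae_zero_of_fourier {μ : Measure (Eu n)} [IsFiniteMeasure μ] {g : Eu n → ℝ} (hg : Integrable g μ)
    (hc : ∀ v : Fin n → ℝ, ∫ x, g x * Real.cos (lin v x) ∂μ = 0)
    (hs : ∀ v : Fin n → ℝ, ∫ x, g x * Real.sin (lin v x) ∂μ = 0) : g =ᵐ[μ] 0 := by
  have hm := hg.aestronglyMeasurable.aemeasurable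
  let p : Eu n → NNReal := fun x => (g x).toNNReal
  let q : Eu n → NNReal := fun x => (-(g x)).toNNReal
  have hp : AEMeasurable p μ := hm.real_toNNReal
  have hq : AEMeasurable q μ := hm.neg.real_toNNReal
  have hpi : Integrable (fun x => (p x : ℝ)) μ := hg.real_toNNReal
  have hqi : Integrable (fun x => (q x : ℝ)) μ := hg.neg.real_toNNReal
  have fin : ∀ r : Eu n → NNReal, Integrable (fun x => (r x : ℝ)) μ → ∫⁻ x, (r x : ℝ≥0∞) ∂μ ≠ ∞ := by
    intro r hr
    have := hr.lintegral_lt_top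
    simpa using this.ne
  have h1 : IsFiniteMeasure (μ.withDensity fun x => (p x : ℝ≥0∞)) := isFiniteMeasure_withDensity (fin p hpi)
  have h2 : IsFiniteMeasure (μ.withDensity fun x => (q x : ℝ≥0∞)) := isFiniteMeasure_withDensity (fin q hqi)
  have key : (μ.withDensity fun x => (p x : ℝ≥0∞)) = μ.withDensity fun x => (q x : ℝ≥0∞) := by
    refine Measure.ext_of_charFun (funext fun ξ => ?_)
    rw [charFun_apply, charFun_apply, integral_withDensity_eq_integral_smul₀ hp,
      integral_withDensity_eq_integral_smul₀ hq, ← sub_eq_zero]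
    have hcont : Continuous fun x : Eu n => Complex.exp ((⟪x, ξ⟫ : ℝ) * Complex.I) := by fun_prop
    have bd : ∀ r : Eu n → NNReal, AEMeasurable r μ → Integrable (fun x => (r x : ℝ)) μ →
        Integrable (fun x => r x • Complex.exp ((⟪x, ξ⟫ : ℝ) * Complex.I)) μ := by
      intro r hr hri
      refine hri.mono (hr.aestronglyMeasurable.smul hcont.aestronglyMeasurable)
        (Filter.Eventually.of_forall fun x => ?_)
      rw [NNReal.smul_def, norm_smul, Complex.norm_exp_ofReal_mul_I, mul_one]
    rw [← integral_sub (bd p hp hpi) (bd q hq hqi)]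
    have e : ∀ x, p x • Complex.exp ((⟪x, ξ⟫ : ℝ) * Complex.I) - q x • Complex.exp ((⟪x, ξ⟫ : ℝ) * Complex.I)
        = ((g x * Real.cos (lin (fun i => ξ i) x) : ℝ) : ℂ) + ((g x * Real.sin (lin (fun i => ξ i) x) : ℝ) : ℂ) * Complex.I := by
      intro x
      have e1 : (⟪x, ξ⟫ : ℝ) = lin (fun i => ξ i) x := by simp [lin, PiLp.inner_apply]
      have e2 : ((p x : ℝ) : ℝ) - q x = g x := by
        simp only [p, q, Real.coe_toNNReal']
        rcases le_total 0 (g x) with h | h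
        · rw [max_eq_left h, max_eq_right (by linarith)]; ring
        · rw [max_eq_right h, max_eq_left (by linarith)]; ring
      rw [e1, NNReal.smul_def, NNReal.smul_def, ← sub_smul, e2, Complex.exp_mul_I]
      rw [Complex.real_smul]; push_cast; ring
    simp only [e]
    have ic : ∀ f : Eu n → ℝ, Continuous f → (∀ x, |f x| ≤ 1) → Integrable (fun x => g x * f x) μ := by
      intro f hf hb
      refine hg.mono (hg.1.mul hf.aestronglyMeasurable) (Filter.Eventually.of_forall fun x => ?_)
      rw [norm_mul]
      exact mul_le_of_le_one_right (norm_nonneg _) (hb x)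
    have i1 := ic _ (Real.continuous_cos.comp (TG_lin fun i => ξ i).cont) fun x => Real.abs_cos_le_one _
    have i2 := ic _ (Real.continuous_sin.comp (TG_lin fun i => ξ i).cont) fun x => Real.abs_sin_le_one _
    rw [integral_add i1.ofReal (i2.ofReal.mul_const _), integral_mul_const]
    have c1 := hc fun i => ξ i
    have c2 := hs fun i => ξ i
    simp only [Function.comp_def] at *
    rw [integral_complex_ofReal, integral_complex_ofReal, c1, c2]; simp
  rw [withDensity_eq_iff hp.coe_nnreal_ennreal hq.coe_nnreal_ennreal (fin p hpi)] at key
  filter_upwards [key] with x hx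
  have hx' : p x = q x := by exact_mod_cast hx
  have hx2 : ((p x : NNReal) : ℝ) = q x := by rw [hx']
  simp only [p, q, Real.coe_toNNReal'] at hx2
  simp only [Pi.zero_apply]
  rcases le_total 0 (g x) with h | h
  · rw [max_eq_left h, max_eq_right (by linarith)] at hx2; exact hx2
  · rw [max_eq_right h, max_eq_left (by linarith)] at hx2; linarith

lemma pd_comp_lin {φ φ' : ℝ → ℝ} (hφ : ∀ s, HasDerivAt φ (φ' s) s) (v : Fin n → ℝ) (i : Fin n) (x : Eu n) :
    pd i (fun x => φ (lin v x)) x = v i * φ' (lin v x) := by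
  have h1 : HasFDerivAt (lin v) (fderiv ℝ (lin v) x) x := ((TG_lin v).diff x).hasFDerivAt
  have h2 := (hφ (lin v x)).comp_hasFDerivAt x h1
  have h3 : fderiv ℝ (fun x => φ (lin v x)) x = φ' (lin v x) • fderiv ℝ (lin v) x := h2.fderiv
  have h4 := pd_lin v i x
  rw [pd] at h4 ⊢
  rw [h3, smul_apply, h4, smul_eq_mul, mul_comm]

lemma Lop_U0_trig (b l : Fin n → ℝ) (c : ℝ) (v : Fin n → ℝ) {φ φ' φ'' : ℝ → ℝ}
    (hφ : ∀ s, HasDerivAt φ (φ' s) s) (hφ' : ∀ s, HasDerivAt φ' (φ'' s) s) (x : Eu n) :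
    Lop (U0 b l c) (fun x => φ (lin v x)) x = (∑ i, v i ^ 2) * φ'' (lin v x)
      - (lin (fun i => b i * v i) x + ∑ i, l i * v i) * φ' (lin v x) := by
  have h1 : ∀ i, pd i (fun x => φ (lin v x)) = fun x => v i * φ' (lin v x) := fun i => by
    ext x; exact pd_comp_lin hφ v i x
  have h2 : ∀ i, pd i (fun x => v i * φ' (lin v x)) x = v i * (v i * φ'' (lin v x)) := fun i => by
    have hd : DifferentiableAt ℝ (fun x => φ' (lin v x)) x :=
      ((hφ' _).differentiableAt).comp x ((TG_lin v).diff x)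
    rw [pd_cmul _ hd, pd_comp_lin hφ' v i x]
  have h3 : lin (fun i => b i * v i) x = ∑ i, b i * v i * x i := rfl
  rw [h3]
  simp only [Lop, h1, h2, pd_U0, Finset.sum_mul, ← Finset.sum_add_distrib, ← Finset.sum_sub_distrib]
  refine Finset.sum_congr rfl fun i _ => ?_
  ring

/-- For Gaussian potentials the generator has dense range: the Fourier transform of an orthogonal
function obeys a linear transport equation along which its modulus is monotone. -/
lemma orth_U0 (b l : Fin n → ℝ) (c : ℝ) {t : ℝ} (ht : 0 < t) (hb : ∀ i, t ≤ b i) : Orth (U0 b l c) := by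
  have hQ := QG_U0 b l c ht hb
  have hfin := wM_finite hQ
  intro g hg hg0 H
  set μ := wM (U0 b l c) with hμ
  have hgi : Integrable g μ := hg.integrable (by norm_num)
  have hglin : ∀ v : Fin n → ℝ, Integrable (fun x => g x * lin v x) μ := fun v => im2 hg (memLp_wM hQ (TG_lin v))
  have hgabs : Integrable (fun x => |g x| * ‖x‖) μ := by
    have hn : MemLp (fun x : Eu n => ‖x‖) 2 μ := by
      rw [memLp_two_iff_integrable_sq continuous_norm.aestronglyMeasurable, integrable_wM hQ.1]
      exact (PB.norm.pow 2).integrable (by fun_prop) hQ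
    exact im2 hg.abs hn
  have ic : ∀ f : Eu n → ℝ, Continuous f → (∀ x, |f x| ≤ 1) → ∀ g' : Eu n → ℝ, Integrable g' μ → Integrable (fun x => g' x * f x) μ := by
    intro f hf hb g' hg'
    refine hg'.mono (hg'.1.mul hf.aestronglyMeasurable) (Filter.Eventually.of_forall fun x => ?_)
    rw [norm_mul]
    exact mul_le_of_le_one_right (norm_nonneg _) (hb x)
  -- the two transport equations
  have ccos : ∀ v, Continuous fun x : Eu n => Real.cos (lin v x) := fun v => Real.continuous_cos.comp (TG_lin v).cont
  have csin : ∀ v, Continuous fun x : Eu n => Real.sin (lin v x) := fun v => Real.continuous_sin.comp (TG_lin v).cont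
  have E1 : ∀ v : Fin n → ℝ, ∫ x, g x * lin (fun i => b i * v i) x * Real.sin (lin v x) ∂μ =
      (∑ i, v i ^ 2) * (∫ x, g x * Real.cos (lin v x) ∂μ) - (∑ i, l i * v i) * ∫ x, g x * Real.sin (lin v x) ∂μ := by
    intro v
    have h := H (fun x => Real.cos (lin v x)) (TG_cos_sin.1.comp (TG_lin v))
    have e : ∀ x, g x * Lop (U0 b l c) (fun x => Real.cos (lin v x)) x =
        (g x * lin (fun i => b i * v i) x * Real.sin (lin v x)
          - (∑ i, v i ^ 2) * (g x * Real.cos (lin v x))) + (∑ i, l i * v i) * (g x * Real.sin (lin v x)) := by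
      intro x
      rw [Lop_U0_trig b l c v (φ' := fun s => - Real.sin s) (φ'' := fun s => - Real.cos s)
        (fun s => Real.hasDerivAt_cos s) (fun s => (Real.hasDerivAt_sin s).neg)]
      ring
    simp only [e] at h
    have i1 := ic _ (csin v) (fun x => Real.abs_sin_le_one _) _ (hglin fun i => b i * v i)
    have i2 := ic _ (ccos v) (fun x => Real.abs_cos_le_one _) _ hgi
    have i3 := ic _ (csin v) (fun x => Real.abs_sin_le_one _) _ hgi
    rw [integral_add (i1.sub' (i2.const_mul _)) (i3.const_mul _), integral_sub i1 (i2.const_mul _),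
      integral_const_mul, integral_const_mul] at h
    linarith
  have E2 : ∀ v : Fin n → ℝ, ∫ x, g x * lin (fun i => b i * v i) x * Real.cos (lin v x) ∂μ =
      - (∑ i, v i ^ 2) * (∫ x, g x * Real.sin (lin v x) ∂μ) - (∑ i, l i * v i) * ∫ x, g x * Real.cos (lin v x) ∂μ := by
    intro v
    have h := H (fun x => Real.sin (lin v x)) (TG_cos_sin.2.comp (TG_lin v))
    have e : ∀ x, g x * Lop (U0 b l c) (fun x => Real.sin (lin v x)) x =
        (-1) * ((g x * lin (fun i => b i * v i) x * Real.cos (lin v x)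
          + (∑ i, v i ^ 2) * (g x * Real.sin (lin v x))) + (∑ i, l i * v i) * (g x * Real.cos (lin v x))) := by
      intro x
      rw [Lop_U0_trig b l c v (φ' := fun s => Real.cos s) (φ'' := fun s => - Real.sin s)
        (fun s => Real.hasDerivAt_sin s) (fun s => (Real.hasDerivAt_cos s))]
      ring
    simp only [e] at h
    have i1 := ic _ (ccos v) (fun x => Real.abs_cos_le_one _) _ (hglin fun i => b i * v i)
    have i2 := ic _ (csin v) (fun x => Real.abs_sin_le_one _) _ hgi
    have i3 := ic _ (ccos v) (fun x => Real.abs_cos_le_one _) _ hgi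
    rw [integral_const_mul, integral_add (i1.fun_add (i2.const_mul _)) (i3.const_mul _), integral_add i1 (i2.const_mul _),
      integral_const_mul, integral_const_mul] at h
    linarith
  have main : ∀ v : Fin n → ℝ, ∫ x, g x * Real.cos (lin v x) ∂μ = 0 ∧ ∫ x, g x * Real.sin (lin v x) ∂μ = 0 := by
    intro v
    let w : ℝ → Fin n → ℝ := fun r i => v i * Real.exp (-(b i * r))
    have hw : ∀ r x, HasDerivAt (fun r => lin (w r) x) (- lin (fun i => b i * w r i) x) r := by
      intro r x
      have h0 : ∀ i, HasDerivAt (fun r => w r i * x i) (-(b i * w r i * x i)) r := by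
        intro i
        have h1 : HasDerivAt (fun r => -(b i * r)) (-(b i * 1)) r := ((hasDerivAt_id r).const_mul (b i)).neg
        have h2 := ((h1.exp.const_mul (v i)).mul_const (x i))
        refine h2.congr_deriv ?_
        simp only [w]; ring
      have h3 := HasDerivAt.fun_sum (u := Finset.univ) fun i _ => h0 i
      simpa [lin] using h3
    let Cf : ℝ → ℝ := fun r => ∫ x, g x * Real.cos (lin (w r) x) ∂μ
    let Sf : ℝ → ℝ := fun r => ∫ x, g x * Real.sin (lin (w r) x) ∂μ
    let K : ℝ := ∑ i, b i * (|v i|)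
    have hb0 : ∀ i, 0 < b i := fun i => ht.trans_le (hb i)
    have hK : ∀ r ∈ Set.Ioi (-1:ℝ), ∀ x, |lin (fun i => b i * w r i) x| ≤ (∑ i, b i * |v i| * Real.exp (b i)) * ‖x‖ := by
      intro r hr x
      rw [lin, Finset.sum_mul]
      refine (Finset.abs_sum_le_sum_abs _ _).trans (Finset.sum_le_sum fun i _ => ?_)
      rw [abs_mul, abs_mul, abs_of_pos (hb0 i)]
      have h1 : |w r i| ≤ |v i| * Real.exp (b i) := by
        simp only [w]; rw [abs_mul, Real.abs_exp]
        gcongr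
        have : (-1:ℝ) < r := hr
        nlinarith [hb0 i]
      have h2 : |x i| ≤ ‖x‖ := by
        have := PiLp.norm_apply_le x i; simpa using this
      have := hb0 i
      calc b i * |w r i| * |x i| ≤ b i * (|v i| * Real.exp (b i)) * ‖x‖ := by gcongr
        _ = _ := by ring
    have gen : ∀ (φ φ' : ℝ → ℝ), (∀ s, HasDerivAt φ (φ' s) s) → Continuous φ' → (∀ s, |φ s| ≤ 1) → (∀ s, |φ' s| ≤ 1) →
        ∀ r > -1, HasDerivAt (fun r => ∫ x, g x * φ (lin (w r) x) ∂μ)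
          (∫ x, g x * (φ' (lin (w r) x) * (- lin (fun i => b i * w r i) x)) ∂μ) r := by
      intro φ φ' hφ hφc hb1 hb2 r hr
      have hφcont : Continuous φ := continuous_iff_continuousAt.2 fun s => (hφ s).continuousAt
      refine (hasDerivAt_integral_of_dominated_loc_of_deriv_le (μ := μ)
        (F := fun r x => g x * φ (lin (w r) x))
        (F' := fun r x => g x * (φ' (lin (w r) x) * (- lin (fun i => b i * w r i) x)))
        (bound := fun x => (∑ i, b i * |v i| * Real.exp (b i)) * (|g x| * ‖x‖)) (Ioi_mem_nhds hr) ?_ ?_ ?_ ?_ ?_ ?_).2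
      · exact Filter.Eventually.of_forall fun r => (ic _ (hφcont.comp (TG_lin _).cont) (fun x => hb1 _) _ hgi).1
      · exact ic _ (hφcont.comp (TG_lin _).cont) (fun x => hb1 _) _ hgi
      · exact hgi.1.mul ((hφc.comp (TG_lin _).cont).mul (TG_lin _).cont.neg).aestronglyMeasurable
      · refine Filter.Eventually.of_forall fun x r hr => ?_
        rw [norm_mul, norm_mul, norm_neg]
        simp only [Real.norm_eq_abs]
        calc |g x| * (|φ' (lin (w r) x)| * |lin (fun i => b i * w r i) x|)
            ≤ |g x| * (1 * ((∑ i, b i * |v i| * Real.exp (b i)) * ‖x‖)) := by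
              gcongr
              · exact hb2 _
              · exact hK r hr x
          _ = _ := by ring
      · exact hgabs.const_mul _
      · exact Filter.Eventually.of_forall fun x r hr => ((hφ _).comp r (hw r x)).const_mul (g x)
    have dC : ∀ r > -1, HasDerivAt Cf ((∑ i, w r i ^ 2) * Cf r - (∑ i, l i * w r i) * Sf r) r := by
      intro r hr
      have h := gen Real.cos (fun s => - Real.sin s) Real.hasDerivAt_cos Real.continuous_sin.neg
        Real.abs_cos_le_one (fun s => by rw [abs_neg]; exact Real.abs_sin_le_one s) r hr
      refine h.congr_deriv ?_
      rw [← E1 (w r)]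
      congr 1; ext x; ring
    have dS : ∀ r > -1, HasDerivAt Sf ((∑ i, w r i ^ 2) * Sf r + (∑ i, l i * w r i) * Cf r) r := by
      intro r hr
      have h := gen Real.sin Real.cos Real.hasDerivAt_sin Real.continuous_cos
        Real.abs_sin_le_one Real.abs_cos_le_one r hr
      refine h.congr_deriv ?_
      have := E2 (w r)
      have e : ∫ x, g x * (Real.cos (lin (w r) x) * (- lin (fun i => b i * w r i) x)) ∂μ
        = - ∫ x, g x * lin (fun i => b i * w r i) x * Real.cos (lin (w r) x) ∂μ := by
        rw [← integral_neg]; congr 1; ext x; ring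
      rw [e, this]; simp only [Cf, Sf]; ring
    let Q : ℝ → ℝ := fun r => Cf r ^ 2 + Sf r ^ 2
    have dQ : ∀ r > -1, HasDerivAt Q (2 * (∑ i, w r i ^ 2) * Q r) r := by
      intro r hr
      have h := ((dC r hr).pow 2).add ((dS r hr).pow 2)
      refine h.congr_deriv ?_
      simp only [Q]; push_cast; ring
    have hmono : MonotoneOn Q (Set.Ici 0) := by
      refine monotoneOn_of_deriv_nonneg (convex_Ici 0) ?_ ?_ ?_
      · intro r hr
        exact (dQ r (by have : (0:ℝ) ≤ r := hr; linarith)).continuousAt.continuousWithinAt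
      · intro r hr
        rw [interior_Ici] at hr
        exact (dQ r (by have : (0:ℝ) < r := hr; linarith)).differentiableAt.differentiableWithinAt
      · intro r hr
        rw [interior_Ici] at hr
        rw [(dQ r (by have : (0:ℝ) < r := hr; linarith)).deriv]
        have : 0 ≤ Q r := by positivity
        have h2 : 0 ≤ ∑ i, w r i ^ 2 := Finset.sum_nonneg fun i _ => sq_nonneg _
        positivity
    have hwlim : ∀ x, Filter.Tendsto (fun r => lin (w r) x) Filter.atTop (nhds 0) := by
      intro x
      have : Filter.Tendsto (fun r => ∑ i, w r i * x i) Filter.atTop (nhds (∑ i : Fin n, v i * 0 * x i)) := by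
        refine tendsto_finsetSum _ fun i _ => ?_
        refine (Filter.Tendsto.const_mul (v i) ?_).mul_const _
        refine Real.tendsto_exp_neg_atTop_nhds_zero.comp ?_
        exact Filter.tendsto_id.const_mul_atTop (hb0 i)
      simpa [lin] using this
    have lim : ∀ φ : ℝ → ℝ, Continuous φ → (∀ s, |φ s| ≤ 1) →
        Filter.Tendsto (fun r => ∫ x, g x * φ (lin (w r) x) ∂μ) Filter.atTop (nhds (∫ x, g x * φ 0 ∂μ)) := by
      intro φ hφ hb1
      refine tendsto_integral_filter_of_dominated_convergence (fun x => |g x|) ?_ ?_ hgi.abs ?_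
      · exact Filter.Eventually.of_forall fun r => (ic _ (hφ.comp (TG_lin _).cont) (fun x => hb1 _) _ hgi).1
      · refine Filter.Eventually.of_forall fun r => Filter.Eventually.of_forall fun x => ?_
        rw [norm_mul]
        exact mul_le_of_le_one_right (norm_nonneg _) (hb1 _)
      · refine Filter.Eventually.of_forall fun x => ?_
        exact ((hφ.tendsto 0).comp (hwlim x)).const_mul _
    have limQ : Filter.Tendsto Q Filter.atTop (nhds 0) := by
      have h1 := lim Real.cos Real.continuous_cos Real.abs_cos_le_one
      have h2 := lim Real.sin Real.continuous_sin Real.abs_sin_le_one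
      simp only [Real.cos_zero, Real.sin_zero, mul_one, mul_zero, integral_zero, hg0] at h1 h2
      simpa using (h1.pow 2).add (h2.pow 2)
    have hQ0 : Q 0 ≤ 0 := by
      refine ge_of_tendsto limQ ?_
      filter_upwards [Filter.eventually_ge_atTop 0] with r hr
      exact hmono (by simp) hr hr
    have w0 : w 0 = v := by ext i; simp [w]
    have hC : Cf 0 = 0 := by
      have : 0 ≤ Sf 0 ^ 2 := sq_nonneg _
      have h2 : Cf 0 ^ 2 ≤ 0 := by simp only [Q] at hQ0; linarith
      exact pow_eq_zero_iff (two_ne_zero) |>.1 (le_antisymm h2 (sq_nonneg _))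
    have hS : Sf 0 = 0 := by
      have : 0 ≤ Cf 0 ^ 2 := sq_nonneg _
      have h2 : Sf 0 ^ 2 ≤ 0 := by simp only [Q] at hQ0; linarith
      exact pow_eq_zero_iff (two_ne_zero) |>.1 (le_antisymm h2 (sq_nonneg _))
    simp only [Cf, Sf, w0] at hC hS
    exact ⟨hC, hS⟩
  exact ae_zero_of_fourier hgi (fun v => (main v).1) fun v => (main v).2

end gaussbase

/-! ### The improved Lichnerowicz inequality and third moments -/

section poincare
variable {n : ℕ}

lemma pd2_U0 (b l : Fin n → ℝ) (c : ℝ) (i j : Fin n) (x : Eu n) :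
    pd i (pd j (U0 b l c)) x = if i = j then b j else 0 := by
  have : pd j (U0 b l c) = fun x => b j * x j + l j := by ext x; exact pd_U0 b l c j x
  rw [this, pd_add (((TG.coord j).cmul _).diff x) ((TG.const _).diff x), pd_cmul _ ((TG.coord j).diff x),
    pd_coord, pd_const]
  split_ifs <;> simp

/-- A potential which is `t`-strongly convex and differs from a diagonal quadratic polynomial
by a smooth compactly supported function. -/
def Model (U : Eu n → ℝ) (t : ℝ) : Prop :=
  0 < t ∧ HessGe U t ∧ ∃ (b l : Fin n → ℝ) (c : ℝ) (ψ : Eu n → ℝ), (∀ i, t ≤ b i) ∧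
    ContDiff ℝ (⊤ : ℕ∞) ψ ∧ HasCompactSupport ψ ∧ U = fun x => U0 b l c x + ψ x

lemma QG.add_bdd {U ψ : Eu n → ℝ} (hU : QG U) (hc : Continuous ψ) {M : ℝ} (hM : ∀ x, |ψ x| ≤ M) :
    QG (fun x => U x + ψ x) := by
  obtain ⟨h1, c, C, hc0, h2⟩ := hU
  refine ⟨h1.add hc, c, C + M, hc0, fun x => ?_⟩
  have := h2 x
  have := (abs_le.1 (hM x)).1
  linarith

lemma bdd_of_compact {ψ : Eu n → ℝ} (h : Continuous ψ) (hc : HasCompactSupport ψ) : ∃ M, ∀ x, |ψ x| ≤ M := by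
  obtain ⟨M, hM⟩ := hc.exists_bound_of_continuous h
  exact ⟨M, hM⟩

lemma Model.tg {U : Eu n → ℝ} {t : ℝ} (h : Model U t) : TG U := by
  obtain ⟨ht, hH, b, l, c, ψ, hb, hψ, hψc, rfl⟩ := h
  exact (TG_U0 b l c).add (hψc.hasTemperateGrowth hψ)

lemma Model.qg {U : Eu n → ℝ} {t : ℝ} (h : Model U t) : QG U := by
  obtain ⟨ht, hH, b, l, c, ψ, hb, hψ, hψc, rfl⟩ := h
  obtain ⟨M, hM⟩ := bdd_of_compact hψ.continuous hψc
  exact (QG_U0 b l c ht hb).add_bdd hψ.continuous hM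

lemma pd2_perturb {U ψ : Eu n → ℝ} (hU : TG U) (hψ : TG ψ) (s : ℝ) (i j : Fin n) (x : Eu n) :
    pd i (pd j (fun x => U x + s * ψ x)) x = pd i (pd j U) x + s * pd i (pd j ψ) x := by
  have : pd j (fun x => U x + s * ψ x) = fun x => pd j U x + s * pd j ψ x := by
    ext x; rw [pd_add (hU.diff x) ((hψ.cmul s).diff x), pd_cmul s (hψ.diff x)]
  rw [this, pd_add ((hU.pd j).diff x) (((hψ.pd j).cmul s).diff x), pd_cmul s ((hψ.pd j).diff x)]

/-- The range of the generator is dense for every potential of the model class: the continuity method along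
`U0 + s ψ`, from `s = 0` to `s = 1` in finitely many small steps. -/
lemma Model.approx {U : Eu n → ℝ} {t : ℝ} (h : Model U t) : Approx U := by
  obtain ⟨ht, hH, b, l, c, ψ, hb, hψ, hψc, rfl⟩ := h
  have hψT : TG ψ := hψc.hasTemperateGrowth hψ
  obtain ⟨M, hM⟩ := bdd_of_compact hψ.continuous hψc
  have hUT := TG_U0 b l c
  have hTG : ∀ s : ℝ, TG (fun x => U0 b l c x + s * ψ x) := fun s => hUT.add (hψT.cmul s)
  have hQG : ∀ s : ℝ, QG (fun x => U0 b l c x + s * ψ x) := fun s =>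
    (QG_U0 b l c ht hb).add_bdd (hψT.cmul s).cont (M := |s| * M) fun x => by
      rw [abs_mul]; gcongr; exact hM x
  have hH0 : HessGe (U0 b l c) t := by
    intro x v
    simp only [pd2_U0, mul_ite, mul_zero, Finset.sum_ite_eq, Finset.mem_univ, if_true, Finset.mul_sum]
    refine Finset.sum_le_sum fun i _ => ?_
    nlinarith [hb i, sq_nonneg (v i)]
  have hHs : ∀ s : ℝ, 0 ≤ s → s ≤ 1 → HessGe (fun x => U0 b l c x + s * ψ x) t := by
    intro s hs0 hs1 x v
    have h0 := hH0 x v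
    have h1 := hH x v
    have e1 : (fun x => U0 b l c x + ψ x) = fun x => U0 b l c x + 1 * ψ x := by ext; simp
    rw [e1] at h1
    simp only [pd2_perturb hUT hψT] at h1 ⊢
    have lin2 : ∀ r : ℝ, ∑ i, ∑ j, v i * v j * (pd i (pd j (U0 b l c)) x + r * pd i (pd j ψ) x) =
        (∑ i, ∑ j, v i * v j * pd i (pd j (U0 b l c)) x) + r * ∑ i, ∑ j, v i * v j * pd i (pd j ψ) x := by
      intro r
      simp only [Finset.mul_sum, ← Finset.sum_add_distrib]
      exact Finset.sum_congr rfl fun i _ => Finset.sum_congr rfl fun j _ => by ring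
    rw [lin2] at h1 ⊢
    nlinarith
  have hB : ∃ B, ∀ x, ∑ i, pd i ψ x ^ 2 ≤ B := by
    have hcs : ∀ i, ∃ M, ∀ x, |pd i ψ x| ≤ M := fun i => by
      refine bdd_of_compact (hψT.pd i).cont ?_
      exact (hψc.fderiv ℝ).comp_left (g := fun L : Eu n →L[ℝ] ℝ => L (ee i)) (by simp)
    choose M hM using hcs
    exact ⟨∑ i, M i ^ 2, fun x => Finset.sum_le_sum fun i _ => sq_le_sq' (abs_le.1 (hM i x)).1 (abs_le.1 (hM i x)).2⟩
  obtain ⟨B, hB⟩ := hB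
  obtain ⟨N, hN⟩ := exists_nat_gt (max 1 (8 * B / t))
  have hN1 : (1:ℝ) < N := (le_max_left _ _).trans_lt hN
  have hN2 : 8 * B / t < N := (le_max_right _ _).trans_lt hN
  have hs : 8 * (1 / (N:ℝ)) ^ 2 * B ≤ t := by
    rw [div_lt_iff₀ ht] at hN2
    have : 8 * (1 / (N:ℝ)) ^ 2 * B = 8 * B / (N:ℝ) ^ 2 := by field_simp
    rw [this, div_le_iff₀ (by positivity)]
    nlinarith [mul_pos ht (by linarith : (0:ℝ) < N)]
  have ind : ∀ k : ℕ, k ≤ N → Approx (fun x => U0 b l c x + (k / N : ℝ) * ψ x) := by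
    intro k
    induction k with
    | zero =>
      intro _
      have := (orth_U0 b l c ht hb).approx (QG_U0 b l c ht hb) hUT
      simpa using this
    | succ k ih =>
      intro hk
      have hk' : (k : ℝ) / N ≤ 1 := by
        rw [div_le_one (by linarith)]; exact_mod_cast (by omega : k ≤ N)
      have h1 := Approx.step (s := 1 / (N:ℝ)) ht (hQG _) (hTG _) (hHs _ (by positivity) hk') hψT ⟨M, hM⟩ hB hs (ih (by omega))
      have e : (fun x => U0 b l c x + (k / N : ℝ) * ψ x + 1 / (N:ℝ) * ψ x) =
        fun x => U0 b l c x + (((k + 1 : ℕ) : ℝ) / N : ℝ) * ψ x := by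
        ext x; push_cast; ring
      rw [e] at h1
      exact h1.approx (hQG _) (hTG _)
  have := ind N le_rfl
  rw [div_self (by linarith)] at this
  simpa using this

/-- `ρ` bounds the inverse of the generator in the Dirichlet form sense. -/
def InvBd (U : Eu n → ℝ) (ρ : ℝ) : Prop :=
  ∀ u, TG u → ∑ i, In U (fun x => pd i u x ^ 2) ≤ ρ * In U (fun x => Lop U u x ^ 2)

/-- A bound on the inverse of the generator is a Poincaré inequality. -/
lemma poincare_of_invBd {U : Eu n → ℝ} {t ρ : ℝ} (h : Model U t) (hρ : 0 ≤ ρ) (hI : InvBd U ρ) {v : Eu n → ℝ}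
    (hv : TG v) (hv0 : In U v = 0) : In U (fun x => v x ^ 2) ≤ ρ * ∑ i, In U (fun x => pd i v x ^ 2) := by
  have hQ := h.qg
  have hT := h.tg
  set N := In U (fun x => v x ^ 2) with hN
  set D := ∑ i, In U (fun x => pd i v x ^ 2) with hD
  have hN0 : 0 ≤ N := In_nonneg fun x => sq_nonneg _
  have hD0 : 0 ≤ D := Finset.sum_nonneg fun i _ => In_nonneg fun x => sq_nonneg _
  have key : ∀ ε : ℝ, 0 < ε → N ≤ Real.sqrt N * ε + Real.sqrt (ρ * D) * (Real.sqrt N + ε) := by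
    intro ε hε
    obtain ⟨u, hu, hap⟩ := h.approx v (memLp_wM hQ hv) (by rw [integral_wM hQ.1]; exact hv0) ε hε
    rw [integral_wM hQ.1] at hap
    have hL := hT.Lop hu
    set R := In U (fun x => (v x - Lop U u x) ^ 2) with hR
    have hR0 : 0 ≤ R := In_nonneg fun x => sq_nonneg _
    set W := In U (fun x => Lop U u x ^ 2) with hW
    have hW0 : 0 ≤ W := In_nonneg fun x => sq_nonneg _
    have e1 : N = In U (fun x => v x * (v x - Lop U u x)) + In U (fun x => Lop U u x * v x) := by
      rw [← In_add hQ (hv.mul (hv.sub hL)) (hL.mul hv), hN]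
      congr 1; ext x; ring
    have e2 : In U (fun x => v x * (v x - Lop U u x)) ≤ Real.sqrt N * ε := by
      have := In_cs hQ hv (hv.sub hL)
      refine (le_abs_self _).trans ?_
      rw [← Real.sqrt_sq_eq_abs]
      calc Real.sqrt (In U (fun x => v x * (v x - Lop U u x)) ^ 2) ≤ Real.sqrt (N * ε ^ 2) :=
            Real.sqrt_le_sqrt (this.trans (by gcongr))
        _ = _ := by rw [Real.sqrt_mul hN0, Real.sqrt_sq hε.le]
    have hWb : Real.sqrt W ≤ Real.sqrt N + ε := by
      have c1 := In_cs hQ hL (hL.sub hv)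
      have c2 := In_cs hQ hv (hL.sub hv)
      -- triangle inequality in `L²`
      have e3 : W = N + R + 2 * In U (fun x => v x * (Lop U u x - v x)) := by
        have : (fun x => Lop U u x ^ 2) = fun x => (v x ^ 2 + (v x - Lop U u x) ^ 2) + 2 * (v x * (Lop U u x - v x)) := by
          ext x; ring
        rw [hW, this, In_add hQ ((hv.pow 2).add ((hv.sub hL).pow 2)) ((hv.mul (hL.sub hv)).cmul 2),
          In_add hQ (hv.pow 2) ((hv.sub hL).pow 2), In_cmul]
      have e4 : In U (fun x => (Lop U u x - v x) ^ 2) = R := by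
        rw [hR]; congr 1; ext x; ring
      rw [e4] at c2
      have e5 : In U (fun x => v x * (Lop U u x - v x)) ≤ Real.sqrt N * Real.sqrt R := by
        rw [← Real.sqrt_mul hN0]
        exact Real.le_sqrt_of_sq_le c2
      have e6 : Real.sqrt R ≤ ε := by
        rw [← Real.sqrt_sq hε.le]; exact Real.sqrt_le_sqrt hap
      rw [Real.sqrt_le_left (by positivity)]
      have s1 := Real.sq_sqrt hN0
      have s2 := Real.sq_sqrt hR0
      have s3 := Real.sqrt_nonneg N
      have s4 := Real.sqrt_nonneg R
      nlinarith
    have e7 : In U (fun x => Lop U u x * v x) ≤ Real.sqrt (ρ * D) * (Real.sqrt N + ε) := by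
      rw [In_Lop_mul hQ hT hu hv, ← Finset.sum_neg_distrib]
      set P := ∑ i, In U (fun x => pd i u x ^ 2) with hP
      have hP0 : 0 ≤ P := Finset.sum_nonneg fun i _ => In_nonneg fun x => sq_nonneg _
      have hPW : P ≤ ρ * W := hI u hu
      have f1 : ∑ i, - In U (fun x => pd i u x * pd i v x) ≤
          ∑ i, Real.sqrt (In U (fun x => pd i u x ^ 2)) * Real.sqrt (In U (fun x => pd i v x ^ 2)) := by
        refine Finset.sum_le_sum fun i _ => ?_
        rw [← Real.sqrt_mul (In_nonneg fun x => sq_nonneg _)]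
        refine Real.le_sqrt_of_sq_le ?_
        rw [neg_sq]
        exact In_cs hQ (hu.pd i) (hv.pd i)
      have f2 := Finset.sum_mul_sq_le_sq_mul_sq Finset.univ (fun i => Real.sqrt (In U (fun x => pd i u x ^ 2)))
        (fun i => Real.sqrt (In U (fun x => pd i v x ^ 2)))
      have f3 : ∀ w : Eu n → ℝ, ∑ i, Real.sqrt (In U (fun x => pd i w x ^ 2)) ^ 2 = ∑ i, In U (fun x => pd i w x ^ 2) :=
        fun w => Finset.sum_congr rfl fun i _ => Real.sq_sqrt (In_nonneg fun x => sq_nonneg _)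
      rw [f3, f3] at f2
      have f4 := Real.le_sqrt_of_sq_le f2
      calc _ ≤ _ := f1
        _ ≤ Real.sqrt (P * D) := f4
        _ ≤ Real.sqrt ((ρ * D) * W) := Real.sqrt_le_sqrt (by nlinarith)
        _ = Real.sqrt (ρ * D) * Real.sqrt W := Real.sqrt_mul (by positivity) _
        _ ≤ _ := by gcongr
    linarith
  have key2 : N ≤ Real.sqrt (ρ * D) * Real.sqrt N := by
    have lim : Filter.Tendsto (fun ε : ℝ => Real.sqrt N * ε + Real.sqrt (ρ * D) * (Real.sqrt N + ε))
        (nhdsWithin 0 (Set.Ioi 0)) (nhds (Real.sqrt N * 0 + Real.sqrt (ρ * D) * (Real.sqrt N + 0))) :=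
      ((by fun_prop : Continuous fun ε : ℝ => Real.sqrt N * ε + Real.sqrt (ρ * D) * (Real.sqrt N + ε)).tendsto 0).mono_left
        nhdsWithin_le_nhds
    have := ge_of_tendsto lim (Filter.eventually_of_mem self_mem_nhdsWithin fun ε hε => key ε hε)
    simpa using this
  rcases hN0.eq_or_lt with h0 | h0
  · rw [← h0]; positivity
  · have s0 : 0 < Real.sqrt N := Real.sqrt_pos.2 h0
    have s1 : Real.sqrt N ≤ Real.sqrt (ρ * D) := by
      have : Real.sqrt N * Real.sqrt N ≤ Real.sqrt (ρ * D) * Real.sqrt N := by rwa [Real.mul_self_sqrt hN0]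
      exact le_of_mul_le_mul_right this s0
    exact (Real.sqrt_le_sqrt_iff (by positivity)).1 s1

/-- Mean and covariance bound with respect to the normalised density `exp (-U)`. -/
def CovBd (U : Eu n → ℝ) (a : Fin n → ℝ) (Θ : ℝ) : Prop :=
  In U (fun _ => 1) = 1 ∧ (∀ i, In U (fun x => x i) = a i) ∧ 0 < Θ ∧
    ∀ w : Fin n → ℝ, In U (fun x => (∑ i, w i * (x i - a i)) ^ 2) ≤ Θ * ∑ i, w i ^ 2

lemma TG_clin (w a : Fin n → ℝ) : TG (fun x : Eu n => ∑ i, w i * (x i - a i)) :=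
  TG.sum fun i _ => ((TG.coord i).sub (TG.const _)).cmul _

lemma pd_clin (w a : Fin n → ℝ) (j : Fin n) (x : Eu n) : pd j (fun x : Eu n => ∑ i, w i * (x i - a i)) x = w j := by
  rw [pd_sum fun i _ => (((TG.coord i).sub (TG.const _)).cmul _).diff x]
  have : ∀ i, pd j (fun x : Eu n => w i * (x i - a i)) x = if j = i then w i else 0 := fun i => by
    rw [pd_cmul _ (((TG.coord i).sub (TG.const _)).diff x), pd_sub ((TG.coord i).diff x) ((TG.const _).diff x),
      pd_coord, pd_const]
    split_ifs <;> simp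
  simp [this]

/-- Klartag's improved Lichnerowicz inequality. A bound `ρ` for the inverse of the generator improves to
`(ρ + Θ) / (1 + ρ t)`; the optimal `ρ` therefore satisfies `ρ² t ≤ Θ`. -/
lemma improved_poincare {U : Eu n → ℝ} {t Θ : ℝ} {a : Fin n → ℝ} (h : Model U t) (hC : CovBd U a Θ) {v : Eu n → ℝ}
    (hv : TG v) (hv0 : In U v = 0) :
    In U (fun x => v x ^ 2) ≤ Real.sqrt (Θ / t) * ∑ i, In U (fun x => pd i v x ^ 2) := by
  have hQ := h.qg
  have hT := h.tg
  have ht := h.1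
  obtain ⟨h1, hmean, hΘ, hcov⟩ := hC
  have step : ∀ ρ : ℝ, 0 ≤ ρ → InvBd U ρ → InvBd U ((ρ + Θ) / (1 + ρ * t)) := by
    intro ρ hρ hI u hu
    set W := In U (fun x => Lop U u x ^ 2) with hW
    set P := ∑ i, In U (fun x => pd i u x ^ 2) with hP
    have hL := hT.Lop hu
    set m : Fin n → ℝ := fun i => In U (pd i u) with hm
    have f1 : ∀ i, In U (fun x => pd i u x ^ 2) ≤ m i ^ 2 + ρ * ∑ j, In U (fun x => pd j (pd i u) x ^ 2) := by
      intro i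
      have hc : TG (fun x => pd i u x - m i) := (hu.pd i).sub (TG.const _)
      have hc0 : In U (fun x => pd i u x - m i) = 0 := by
        rw [In_sub hQ (hu.pd i) (TG.const _)]
        have : In U (fun _ => m i) = m i := by
          have := In_cmul (U := U) (f := fun _ => 1) (m i)
          simpa [h1] using this
        rw [this]; simp [hm]
      have h2 := poincare_of_invBd h hρ hI hc hc0
      have e1 : ∀ j, pd j (fun x => pd i u x - m i) = pd j (pd i u) := fun j => by
        ext x; rw [pd_sub ((hu.pd i).diff x) ((TG.const _).diff x), pd_const, sub_zero]
      simp only [e1] at h2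
      have e2 : In U (fun x => pd i u x ^ 2) = In U (fun x => (pd i u x - m i) ^ 2) + m i ^ 2 := by
        have : (fun x => pd i u x ^ 2) = fun x => (pd i u x - m i) ^ 2 + ((2 * m i) * (pd i u x - m i) + m i ^ 2 * 1) := by
          ext x; ring
        rw [this, In_add hQ (hc.pow 2) ((hc.cmul _).add ((TG.const 1).cmul _)), In_add hQ (hc.cmul _) ((TG.const 1).cmul _),
          In_cmul, In_cmul, hc0, h1]
        ring
      linarith
    have f2 : ∑ i, m i ^ 2 ≤ Θ * W := by
      have g1 := In_Lop_mul hQ hT hu (TG_clin m a)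
      simp only [pd_clin] at g1
      have g2 : ∑ i, In U (fun x => pd i u x * m i) = ∑ i, m i ^ 2 := Finset.sum_congr rfl fun i _ => by
        have : (fun x => pd i u x * m i) = fun x => m i * pd i u x := by ext; ring
        rw [this, In_cmul, sq]
      rw [g2] at g1
      have g3 := In_cs hQ hL (TG_clin m a)
      rw [g1, neg_sq] at g3
      have g4 := hcov m
      set s := ∑ i, m i ^ 2 with hs
      have hs0 : 0 ≤ s := Finset.sum_nonneg fun i _ => sq_nonneg _
      have hW0 : 0 ≤ W := In_nonneg fun x => sq_nonneg _
      rcases hs0.eq_or_lt with h0 | h0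
      · rw [← h0]; positivity
      · have : s * s ≤ s * (Θ * W) := by
          calc s * s = s ^ 2 := by ring
            _ ≤ _ := g3
            _ ≤ W * (Θ * s) := by gcongr
            _ = _ := by ring
        exact le_of_mul_le_mul_left this h0
    have f3 := bochner hQ hT h.2.1 hu
    have f4 : P ≤ ∑ i, m i ^ 2 + ρ * ∑ i, ∑ j, In U (fun x => pd j (pd i u) x ^ 2) := by
      rw [hP, Finset.mul_sum, ← Finset.sum_add_distrib]
      exact Finset.sum_le_sum fun i _ => f1 i
    show P ≤ (ρ + Θ) / (1 + ρ * t) * W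
    rw [div_mul_eq_mul_div, le_div_iff₀ (by positivity)]
    nlinarith
  set 𝓡 : Set ℝ := {ρ | 0 ≤ ρ ∧ InvBd U ρ} with hR
  have hne : (1 / t) ∈ 𝓡 := by
    refine ⟨by positivity, fun u hu => ?_⟩
    have f3 := bochner hQ hT h.2.1 hu
    have b3 : 0 ≤ ∑ i, ∑ j, In U (fun x => pd j (pd i u) x ^ 2) :=
      Finset.sum_nonneg fun i _ => Finset.sum_nonneg fun j _ => In_nonneg fun x => sq_nonneg _
    rw [div_mul_eq_mul_div, le_div_iff₀ ht]
    linarith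
  have hbdd : BddBelow 𝓡 := ⟨0, fun ρ hρ => hρ.1⟩
  set r := sInf 𝓡 with hr
  have hr0 : 0 ≤ r := le_csInf ⟨_, hne⟩ fun ρ hρ => hρ.1
  have hrI : InvBd U r := by
    intro u hu
    have hW0 : 0 ≤ In U (fun x => Lop U u x ^ 2) := In_nonneg fun x => sq_nonneg _
    rcases hW0.eq_or_lt with h0 | h0
    · have := hne.2 u hu
      rw [← h0] at this ⊢; simpa using this
    · rw [← div_le_iff₀ h0]
      refine le_csInf ⟨_, hne⟩ fun ρ hρ => ?_
      rw [div_le_iff₀ h0]; exact hρ.2 u hu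
  have hle : r ≤ (r + Θ) / (1 + r * t) := csInf_le hbdd ⟨by positivity, step r hr0 hrI⟩
  have hr2 : r ≤ Real.sqrt (Θ / t) := by
    refine Real.le_sqrt_of_sq_le ?_
    rw [le_div_iff₀ (by positivity)] at hle
    rw [le_div_iff₀ ht]
    nlinarith
  refine (poincare_of_invBd h hr0 hrI hv hv0).trans ?_
  gcongr
  exact Finset.sum_nonneg fun i _ => In_nonneg fun x => sq_nonneg _

lemma pd_quad (M : Fin n → Fin n → ℝ) (a : Fin n → ℝ) (k : Fin n) (x : Eu n) :
    pd k (fun x : Eu n => ∑ i, ∑ j, M i j * ((x i - a i) * (x j - a j))) x =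
      ∑ j, (M k j + M j k) * (x j - a j) := by
  have hc : ∀ i, TG (fun x : Eu n => x i - a i) := fun i => (TG.coord i).sub (TG.const _)
  have hp : ∀ i, pd k (fun x : Eu n => x i - a i) x = if k = i then 1 else 0 := fun i => by
    rw [pd_sub ((TG.coord i).diff x) ((TG.const _).diff x), pd_coord, pd_const, sub_zero]
  rw [pd_sum fun i _ => (TG.sum fun j _ => ((hc i).mul (hc j)).cmul _).diff x]
  have : ∀ i, pd k (fun x : Eu n => ∑ j, M i j * ((x i - a i) * (x j - a j))) x =
      ∑ j, M i j * ((if k = i then 1 else 0) * (x j - a j) + (x i - a i) * (if k = j then 1 else 0)) := by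
    intro i
    rw [pd_sum fun j _ => (((hc i).mul (hc j)).cmul _).diff x]
    refine Finset.sum_congr rfl fun j _ => ?_
    rw [pd_cmul _ (((hc i).mul (hc j)).diff x), pd_mul ((hc i).diff x) ((hc j).diff x), hp, hp]
  simp only [this, mul_add, Finset.sum_add_distrib, add_mul]
  congr 1
  · rw [Finset.sum_eq_single k]
    · simp
    · intro i _ hi; simp [Ne.symm hi]
    · simp
  · simp

/-- Third moment tensor bound: the Hilbert-Schmidt norm of `E ⟨x - a, v⟩ (x - a) ⊗ (x - a)`. The tensor is tested
against the quadratic form whose matrix is the tensor itself, and the variance of that form is bounded by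
`improved_poincare`. -/
lemma tensor_bound {U : Eu n → ℝ} {t Θ : ℝ} {a : Fin n → ℝ} (h : Model U t) (hC : CovBd U a Θ) (v : Fin n → ℝ) :
    ∑ i, ∑ j, (In U (fun x => (∑ k, v k * (x k - a k)) * ((x i - a i) * (x j - a j)))) ^ 2 ≤
      4 * Real.sqrt (Θ / t) * Θ ^ 2 * ∑ k, v k ^ 2 := by
  have hQ := h.qg
  have hT := h.tg
  obtain ⟨h1, hmean, hΘ, hcov⟩ := id hC
  set M : Fin n → Fin n → ℝ := fun i j => In U (fun x => (∑ k, v k * (x k - a k)) * ((x i - a i) * (x j - a j))) with hM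
  have hsym : ∀ i j, M i j = M j i := fun i j => by
    simp only [hM]; congr 1; ext x; ring
  have hc : ∀ i, TG (fun x : Eu n => x i - a i) := fun i => (TG.coord i).sub (TG.const _)
  set q : Eu n → ℝ := fun x => ∑ i, ∑ j, M i j * ((x i - a i) * (x j - a j)) with hq
  have hqT : TG q := TG.sum fun i _ => TG.sum fun j _ => ((hc i).mul (hc j)).cmul _
  set p : Eu n → ℝ := fun x => ∑ k, v k * (x k - a k) with hp
  have hpT : TG p := TG_clin v a
  set S := ∑ i, ∑ j, M i j ^ 2 with hS
  have hS0 : 0 ≤ S := Finset.sum_nonneg fun i _ => Finset.sum_nonneg fun j _ => sq_nonneg _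
  have eS : S = In U (fun x => p x * q x) := by
    have : (fun x => p x * q x) = fun x => ∑ i, ∑ j, M i j * (p x * ((x i - a i) * (x j - a j))) := by
      ext x; simp only [hq, Finset.mul_sum]
      exact Finset.sum_congr rfl fun i _ => Finset.sum_congr rfl fun j _ => by ring
    rw [this, In_sum hQ fun i _ => TG.sum fun j _ => (hpT.mul ((hc i).mul (hc j))).cmul _]
    refine Finset.sum_congr rfl fun i _ => ?_
    rw [In_sum hQ fun j _ => (hpT.mul ((hc i).mul (hc j))).cmul _]
    refine Finset.sum_congr rfl fun j _ => ?_
    rw [In_cmul, sq]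
  have hp0 : In U p = 0 := by
    rw [hp, In_sum hQ fun i _ => (hc i).cmul _]
    refine Finset.sum_eq_zero fun i _ => ?_
    rw [In_cmul, In_sub hQ (TG.coord i) (TG.const _), hmean]
    have := In_cmul (U := U) (f := fun _ => 1) (a i)
    rw [h1] at this
    simp only [mul_one] at this
    rw [this]; simp
  set m := In U q with hm
  have hq'T : TG (fun x => q x - m) := hqT.sub (TG.const _)
  have hq'0 : In U (fun x => q x - m) = 0 := by
    rw [In_sub hQ hqT (TG.const _)]
    have := In_cmul (U := U) (f := fun _ => 1) m
    rw [h1] at this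
    simp only [mul_one] at this
    rw [this]; simp [hm]
  have eS2 : S = In U (fun x => p x * (q x - m)) := by
    have : (fun x => p x * (q x - m)) = fun x => p x * q x - m * p x := by ext; ring
    rw [this, In_sub hQ (hpT.mul hqT) (hpT.cmul _), In_cmul, hp0, eS]; simp
  have c1 := In_cs hQ hpT hq'T
  rw [← eS2] at c1
  have c2 := improved_poincare h hC hq'T hq'0
  have e1 : ∀ k, pd k (fun x => q x - m) = fun x => ∑ j, (2 * M k j) * (x j - a j) := fun k => by
    ext x
    rw [pd_sub (hqT.diff x) ((TG.const _).diff x), pd_const, sub_zero, hq, pd_quad]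
    exact Finset.sum_congr rfl fun j _ => by rw [hsym j k]; ring
  simp only [e1] at c2
  have c3 : ∑ k, In U (fun x => (∑ j, (2 * M k j) * (x j - a j)) ^ 2) ≤ 4 * Θ * S := by
    calc _ ≤ ∑ k, Θ * ∑ j, (2 * M k j) ^ 2 := Finset.sum_le_sum fun k _ => hcov _
      _ = _ := by
        rw [hS]; simp only [Finset.mul_sum]
        exact Finset.sum_congr rfl fun i _ => Finset.sum_congr rfl fun j _ => by ring
  have c4 : S ^ 2 ≤ (Θ * ∑ k, v k ^ 2) * (Real.sqrt (Θ / t) * (4 * Θ * S)) := by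
    refine c1.trans ?_
    have hv0 : 0 ≤ ∑ k, v k ^ 2 := Finset.sum_nonneg fun i _ => sq_nonneg _
    have := hcov v
    gcongr
    · exact In_nonneg fun x => sq_nonneg _
    · exact c2.trans (by gcongr)
  show S ≤ _
  rcases hS0.eq_or_lt with h0 | h0
  · rw [← h0]
    have hv0 : 0 ≤ ∑ k, v k ^ 2 := Finset.sum_nonneg fun i _ => sq_nonneg _
    positivity
  · have : S * S ≤ S * (4 * Real.sqrt (Θ / t) * Θ ^ 2 * ∑ k, v k ^ 2) := by
      calc S * S = S ^ 2 := by ring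
        _ ≤ _ := c4
        _ = _ := by ring
    exact le_of_mul_le_mul_left this h0

end poincare

/-! ### Tilted measures -/

section tilt
variable {n : ℕ}

/-- `V` is continuous and `V + t₀ |x|² / 2` is bounded below. -/
def LB (V : Eu n → ℝ) (t₀ : ℝ) : Prop := Continuous V ∧ ∃ C, ∀ x, -C ≤ V x + t₀ / 2 * ‖x‖ ^ 2

/-- The potential of the tilted measure `exp (⟨y, x⟩ - t |x|² / 2 - V x) dx`. -/
def pot (V : Eu n → ℝ) (t : ℝ) (y x : Eu n) : ℝ := V x + t / 2 * ‖x‖ ^ 2 - inner ℝ y x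

/-- Continuous polynomially bounded functions. -/
def PC (ψ : Eu n → ℝ) : Prop := Continuous ψ ∧ PB ψ

lemma TG.pc {ψ : Eu n → ℝ} (h : TG ψ) : PC ψ := ⟨h.cont, h.pb⟩
lemma PC.mul {f g : Eu n → ℝ} (hf : PC f) (hg : PC g) : PC (fun x => f x * g x) := ⟨hf.1.mul hg.1, hf.2.mul hg.2⟩
lemma PC.add {f g : Eu n → ℝ} (hf : PC f) (hg : PC g) : PC (fun x => f x + g x) := ⟨hf.1.add hg.1, hf.2.add hg.2⟩
lemma PC.sub {f g : Eu n → ℝ} (hf : PC f) (hg : PC g) : PC (fun x => f x - g x) := ⟨hf.1.sub hg.1, hf.2.sub hg.2⟩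
lemma PC.const (c : ℝ) : PC (fun _ : Eu n => c) := ⟨continuous_const, PB.const c⟩
lemma PC.coord (i : Fin n) : PC (fun x : Eu n => x i) := (TG.coord i).pc
lemma PC.norm : PC (fun x : Eu n => ‖x‖) := ⟨continuous_norm, PB.norm⟩
lemma PC.pow {f : Eu n → ℝ} (hf : PC f) (k : ℕ) : PC (fun x => f x ^ k) := ⟨hf.1.pow k, hf.2.pow k⟩
lemma PC.sum {ι : Type*} {s : Finset ι} {f : ι → Eu n → ℝ} (hf : ∀ i ∈ s, PC (f i)) :
    PC (fun x => ∑ i ∈ s, f i x) := ⟨continuous_finsetSum _ fun i hi => (hf i hi).1, PB.sum fun i hi => (hf i hi).2⟩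
lemma PC.abs {f : Eu n → ℝ} (hf : PC f) : PC (fun x => |f x|) := ⟨hf.1.abs, hf.2.abs⟩
lemma PC.cmul {f : Eu n → ℝ} (c : ℝ) (hf : PC f) : PC (fun x => c * f x) := (PC.const c).mul hf
lemma PC.integrable {f U : Eu n → ℝ} (hf : PC f) (hU : QG U) : Integrable (fun x => f x * Real.exp (-(U x))) :=
  hf.2.integrable hf.1.aestronglyMeasurable hU

lemma In_add' {U f g : Eu n → ℝ} (hU : QG U) (hf : PC f) (hg : PC g) :
    In U (fun x => f x + g x) = In U f + In U g := by
  simp only [In, add_mul]; exact integral_add (hf.integrable hU) (hg.integrable hU)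
lemma In_sub' {U f g : Eu n → ℝ} (hU : QG U) (hf : PC f) (hg : PC g) :
    In U (fun x => f x - g x) = In U f - In U g := by
  simp only [In, sub_mul]; exact integral_sub (hf.integrable hU) (hg.integrable hU)
lemma In_sum' {ι : Type*} {s : Finset ι} {U : Eu n → ℝ} {f : ι → Eu n → ℝ} (hU : QG U)
    (hf : ∀ i ∈ s, PC (f i)) : In U (fun x => ∑ i ∈ s, f i x) = ∑ i ∈ s, In U (f i) := by
  simp only [In, Finset.sum_mul]; exact integral_finsetSum _ fun i hi => (hf i hi).integrable hU
lemma In_mono' {U f g : Eu n → ℝ} (hU : QG U) (hf : PC f) (hg : PC g) (h : ∀ x, f x ≤ g x) :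
    In U f ≤ In U g :=
  integral_mono (hf.integrable hU) (hg.integrable hU) fun x => by
    have := h x; show f x * _ ≤ g x * _; gcongr

lemma LB.qg {V : Eu n → ℝ} {t₀ : ℝ} (h : LB V t₀) {s : ℝ} (hs : t₀ < s) (r : ℝ) :
    QG (fun x => V x + s / 2 * ‖x‖ ^ 2 - r * ‖x‖) := by
  obtain ⟨hc, C, hC⟩ := h
  refine ⟨by fun_prop, (s - t₀) / 4, C + r ^ 2 / (s - t₀), by linarith, fun x => ?_⟩
  have hd : 0 < s - t₀ := by linarith
  have h1 := hC x
  have h2 : r * ‖x‖ ≤ (s - t₀) / 4 * ‖x‖ ^ 2 + r ^ 2 / (s - t₀) := by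
    have e : (s - t₀) / 4 * ‖x‖ ^ 2 + r ^ 2 / (s - t₀) - r * ‖x‖ = ((s - t₀) / 2 * ‖x‖ - r) ^ 2 / (s - t₀) := by
      field_simp; ring
    have : 0 ≤ ((s - t₀) / 2 * ‖x‖ - r) ^ 2 / (s - t₀) := by positivity
    linarith
  nlinarith

lemma LB.pot_qg {V : Eu n → ℝ} {t₀ : ℝ} (h : LB V t₀) {t : ℝ} (ht : t₀ < t) (y : Eu n) : QG (pot V t y) := by
  obtain ⟨hc, c, C, hc0, H⟩ := h.qg ht ‖y‖
  refine ⟨?_, c, C, hc0, fun x => (H x).trans ?_⟩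
  · have := h.1; unfold pot; fun_prop
  · have := real_inner_le_norm y x
    simp only [pot]; linarith

/-- Unnormalised tilted integrals. -/
def Iw (V ψ : Eu n → ℝ) (t : ℝ) (y : Eu n) : ℝ := In (pot V t y) ψ

/-- Joint differentiability of `f (t, y)` with prescribed time derivative and partial derivatives. -/
def HD (f : ℝ → Eu n → ℝ) (t : ℝ) (y : Eu n) (a : ℝ) (v : Fin n → ℝ) : Prop :=
  ∃ L : ℝ × Eu n →L[ℝ] ℝ, HasFDerivAt (fun p : ℝ × Eu n => f p.1 p.2) L (t, y) ∧ L (1, 0) = a ∧ ∀ i, L (0, ee i) = v i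

lemma inner_eq_sum (x y : Eu n) : inner ℝ x y = ∑ i, x i * y i := by
  simp [PiLp.inner_apply, mul_comm]

lemma norm_sq_eq_sum (x : Eu n) : ‖x‖ ^ 2 = ∑ i, x i ^ 2 := by
  rw [EuclideanSpace.norm_sq_eq]; simp

/-- Differentiation under the integral sign in the time and space parameters of the tilt. -/
lemma Iw_HD {V ψ : Eu n → ℝ} {t₀ : ℝ} (h : LB V t₀) (hψ : PC ψ) {t : ℝ} (ht : t₀ < t) (y : Eu n) :
    HD (Iw V ψ) t y (-(1/2) * Iw V (fun x => ‖x‖ ^ 2 * ψ x) t y) (fun i => Iw V (fun x => x i * ψ x) t y) := by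
  let L : Eu n → (ℝ × Eu n →L[ℝ] ℝ) := fun x =>
    (innerSL ℝ x).comp (ContinuousLinearMap.snd ℝ ℝ (Eu n)) - (‖x‖ ^ 2 / 2) • ContinuousLinearMap.fst ℝ ℝ (Eu n)
  have hLc : Continuous L := by
    have : Continuous fun x : Eu n => (innerSL ℝ x : Eu n →L[ℝ] ℝ) := (innerSL ℝ).continuous
    exact (this.clm_comp continuous_const).sub (((continuous_norm.pow 2).div_const 2).smul continuous_const)
  have hLn : ∀ x, ‖L x‖ ≤ ‖x‖ + ‖x‖ ^ 2 / 2 := fun x => by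
    refine (norm_sub_le _ _).trans ?_
    gcongr
    · refine (ContinuousLinearMap.opNorm_comp_le _ _).trans ?_
      rw [innerSL_apply_norm]
      exact mul_le_of_le_one_right (norm_nonneg _) (ContinuousLinearMap.norm_snd_le ℝ ℝ (Eu n))
    · rw [norm_smul, Real.norm_of_nonneg (by positivity)]
      exact mul_le_of_le_one_right (by positivity) (ContinuousLinearMap.norm_fst_le ℝ ℝ (Eu n))
  let F' : ℝ × Eu n → Eu n → (ℝ × Eu n →L[ℝ] ℝ) := fun p x => (ψ x * Real.exp (-(pot V p.1 p.2 x))) • L x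
  set ε := (t - t₀) / 2 with hε
  have hε0 : 0 < ε := by rw [hε]; linarith
  let s : Set (ℝ × Eu n) := Set.Ioi (t - ε) ×ˢ Metric.ball y 1
  have hs : s ∈ nhds (t, y) := by
    refine (isOpen_Ioi.prod Metric.isOpen_ball).mem_nhds ⟨?_, Metric.mem_ball_self one_pos⟩
    simp [hε0]
  have hQ : QG (fun x => V x + (t - ε) / 2 * ‖x‖ ^ 2 - (‖y‖ + 1) * ‖x‖) := h.qg (by linarith) _
  have hcp : ∀ t' y', Continuous (pot V t' y') := fun t' y' => by have := h.1; unfold pot; fun_prop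
  have hint0 : Integrable (fun x => ψ x * Real.exp (-(pot V t y x))) := hψ.integrable (h.pot_qg ht y)
  have hF'm : AEStronglyMeasurable (F' (t, y)) volume :=
    ((hψ.1.mul (Real.continuous_exp.comp (hcp t y).neg)).smul hLc).aestronglyMeasurable
  have hbnd : ∀ p ∈ s, ∀ x, ‖F' p x‖ ≤ (|ψ x| * (‖x‖ + ‖x‖ ^ 2 / 2)) *
      Real.exp (-(V x + (t - ε) / 2 * ‖x‖ ^ 2 - (‖y‖ + 1) * ‖x‖)) := by
    rintro ⟨t', y'⟩ ⟨h1, h2⟩ x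
    simp only [F', norm_smul, norm_mul, Real.norm_eq_abs, Real.abs_exp]
    have h3 : ‖y'‖ ≤ ‖y‖ + 1 := by
      have := norm_le_norm_add_norm_sub y y'
      rw [Metric.mem_ball, dist_eq_norm] at h2
      rw [← norm_neg, neg_sub] at h2
      linarith
    have h4 : -(pot V t' y' x) ≤ -(V x + (t - ε) / 2 * ‖x‖ ^ 2 - (‖y‖ + 1) * ‖x‖) := by
      have a1 := (real_inner_le_norm y' x).trans (mul_le_mul_of_nonneg_right h3 (norm_nonneg x))
      have a2 : (t - ε) / 2 * ‖x‖ ^ 2 ≤ t' / 2 * ‖x‖ ^ 2 := by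
        have : t - ε < t' := h1
        gcongr
      simp only [pot]; linarith
    calc _ ≤ |ψ x| * Real.exp (-(V x + (t - ε) / 2 * ‖x‖ ^ 2 - (‖y‖ + 1) * ‖x‖)) * (‖x‖ + ‖x‖ ^ 2 / 2) := by
          gcongr; exact hLn x
      _ = _ := by ring
  have hbi : Integrable (fun x => (|ψ x| * (‖x‖ + ‖x‖ ^ 2 / 2)) *
      Real.exp (-(V x + (t - ε) / 2 * ‖x‖ ^ 2 - (‖y‖ + 1) * ‖x‖))) := by
    refine PC.integrable (f := fun x => |ψ x| * (‖x‖ + ‖x‖ ^ 2 / 2)) (hψ.abs.mul (PC.norm.add ?_)) hQ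
    simpa [div_eq_inv_mul] using (PC.norm.pow 2).cmul (2⁻¹ : ℝ)
  have hF'i : Integrable (F' (t, y)) := hbi.mono' hF'm
    (Filter.Eventually.of_forall fun x => hbnd (t, y) (mem_of_mem_nhds hs) x)
  have key := hasFDerivAt_integral_of_dominated_of_fderiv_le (𝕜 := ℝ) (μ := (volume : Measure (Eu n)))
    (F := fun (p : ℝ × Eu n) x => ψ x * Real.exp (-(pot V p.1 p.2 x))) (F' := F') (x₀ := (t, y)) hs
    (Filter.Eventually.of_forall fun p => (hψ.1.mul (Real.continuous_exp.comp (hcp p.1 p.2).neg)).aestronglyMeasurable)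
    hint0 hF'm (Filter.Eventually.of_forall fun x p hp => hbnd p hp x) hbi
    (Filter.Eventually.of_forall fun x p _ => by
      have h1 : HasFDerivAt (fun p : ℝ × Eu n => -(pot V p.1 p.2 x)) (L x) p := by
        have e : (fun p : ℝ × Eu n => -(pot V p.1 p.2 x)) = fun p => L x p - V x := by
          ext p; simp [pot, L, real_inner_comm]; ring
        rw [e]; exact (L x).hasFDerivAt.sub_const _
      have := (h1.exp).const_mul (ψ x)
      have e2 : F' p x = ψ x • Real.exp (-(pot V p.1 p.2 x)) • L x := (smul_smul _ _ _).symm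
      rw [e2]; exact this)
  refine ⟨_, key, ?_, fun i => ?_⟩
  · rw [ContinuousLinearMap.integral_apply hF'i, Iw, In, ← integral_const_mul]
    congr 1; ext x; simp [F', L]; ring
  · rw [ContinuousLinearMap.integral_apply hF'i]
    show _ = ∫ x, _
    congr 1; ext x; simp [F', L]
    rw [EuclideanSpace.inner_single_right]; simp; ring

lemma HD.differentiableAt {f : ℝ → Eu n → ℝ} {t : ℝ} {y : Eu n} {a : ℝ} {v : Fin n → ℝ} (h : HD f t y a v) :
    DifferentiableAt ℝ (f t) y := by
  obtain ⟨L, hL, -⟩ := h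
  exact (hL.comp y ((hasFDerivAt_const t y).prodMk (hasFDerivAt_id y))).differentiableAt

lemma HD.continuousAt {f : ℝ → Eu n → ℝ} {t : ℝ} {y : Eu n} {a : ℝ} {v : Fin n → ℝ} (h : HD f t y a v) :
    ContinuousAt (fun p : ℝ × Eu n => f p.1 p.2) (t, y) := by
  obtain ⟨L, hL, -⟩ := h
  exact hL.continuousAt

lemma HD.pd_eq {f : ℝ → Eu n → ℝ} {t : ℝ} {y : Eu n} {a : ℝ} {v : Fin n → ℝ} (h : HD f t y a v) (i : Fin n) :
    pd i (f t) y = v i := by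
  obtain ⟨L, hL, -, h2⟩ := h
  have := (hL.comp y ((hasFDerivAt_const t y).prodMk (hasFDerivAt_id y)))
  have e : HasFDerivAt (f t) _ y := this
  rw [pd, e.fderiv, ← h2 i]; simp

lemma HD.add {f g : ℝ → Eu n → ℝ} {t : ℝ} {y : Eu n} {a a' : ℝ} {v v' : Fin n → ℝ} (h : HD f t y a v)
    (h' : HD g t y a' v') : HD (fun t y => f t y + g t y) t y (a + a') (fun i => v i + v' i) := by
  obtain ⟨L, hL, h1, h2⟩ := h
  obtain ⟨L', hL', h1', h2'⟩ := h'
  exact ⟨_, hL.add hL', by simp [h1, h1'], fun i => by simp [h2, h2']⟩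

lemma HD.const (c t : ℝ) (y : Eu n) : HD (fun _ _ => c) t y 0 (fun _ => 0) :=
  ⟨_, hasFDerivAt_const c _, by simp, by simp⟩

lemma HD.mul {f g : ℝ → Eu n → ℝ} {t : ℝ} {y : Eu n} {a a' : ℝ} {v v' : Fin n → ℝ} (h : HD f t y a v)
    (h' : HD g t y a' v') :
    HD (fun t y => f t y * g t y) t y (a * g t y + f t y * a') (fun i => v i * g t y + f t y * v' i) := by
  obtain ⟨L, hL, h1, h2⟩ := h
  obtain ⟨L', hL', h1', h2'⟩ := h'
  exact ⟨_, hL.mul hL', by simp [h1, h1']; ring, fun i => by simp [h2, h2']; ring⟩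

lemma HD.comp {f : ℝ → Eu n → ℝ} {t : ℝ} {y : Eu n} {a : ℝ} {v : Fin n → ℝ} (h : HD f t y a v) {φ : ℝ → ℝ} {d : ℝ}
    (hφ : HasDerivAt φ d (f t y)) : HD (fun t y => φ (f t y)) t y (d * a) (fun i => d * v i) := by
  obtain ⟨L, hL, h1, h2⟩ := h
  have := hφ.comp_hasFDerivAt (t, y) (f := fun p : ℝ × Eu n => f p.1 p.2) hL
  exact ⟨_, this, by simp [h1], fun i => by simp [h2]⟩

lemma HD.congr {f : ℝ → Eu n → ℝ} {t : ℝ} {y : Eu n} {a a' : ℝ} {v v' : Fin n → ℝ} (h : HD f t y a v)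
    (ha : a = a') (hv : ∀ i, v i = v' i) : HD f t y a' v' := by
  obtain ⟨L, hL, h1, h2⟩ := h
  exact ⟨L, hL, h1.trans ha, fun i => (h2 i).trans (hv i)⟩

lemma eu_eq_sum (x : Eu n) : x = ∑ i, x i • ee i := by
  ext j; simp [Finset.sum_apply, Pi.single_apply]

lemma HD.deriv_path {f : ℝ → Eu n → ℝ} {t : ℝ} {y : Eu n} {a : ℝ} {v : Fin n → ℝ} (h : HD f t y a v)
    {τ : ℝ → ℝ} {c : ℝ → Eu n} {s τ' : ℝ} {c' : Eu n} (h1 : HasDerivAt τ τ' s) (h2 : HasDerivAt c c' s)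
    (ht : τ s = t) (hy : c s = y) :
    HasDerivAt (fun s => f (τ s) (c s)) (τ' * a + ∑ i, c' i * v i) s := by
  obtain ⟨L, hL, h3, h4⟩ := h
  subst ht; subst hy
  have := hL.comp_hasDerivAt s (h1.prodMk h2)
  suffices hh : L (τ', c') = τ' * a + ∑ i, c' i * v i by rw [← hh]; exact this
  have e : ((τ', c') : ℝ × Eu n) = τ' • ((1 : ℝ), (0 : Eu n)) + ∑ i, c' i • ((0 : ℝ), ee i) := by
    ext1
    · simp [Prod.fst_sum]
    · simp only [Prod.snd_add, Prod.snd_sum, Prod.smul_snd, smul_zero, zero_add]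
      exact eu_eq_sum c'
  rw [e, map_add, map_sum, map_smul, h3]
  simp only [map_smul, h4, smul_eq_mul]

/-! ### Posterior expectations -/

/-- Expectation with respect to the normalised tilted measure. -/
def Ep (V ψ : Eu n → ℝ) (t : ℝ) (y : Eu n) : ℝ := Iw V ψ t y / Iw V (fun _ => 1) t y

lemma In_one_pos {U : Eu n → ℝ} (hU : QG U) : 0 < In U (fun _ => 1) := by
  have : Integrable (fun x => (1 : ℝ) * Real.exp (-(U x))) := (PC.const 1).integrable hU
  rw [In, integral_pos_iff_support_of_nonneg (fun x => by positivity) this]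
  have : Function.support (fun x => (1 : ℝ) * Real.exp (-(U x))) = Set.univ := by
    ext x; simp [Real.exp_ne_zero]
  rw [this]
  exact isOpen_univ.measure_pos _ ⟨0, trivial⟩

/-- The derivatives of a tilted expectation are covariances with `-|x|² / 2` and with the coordinates. -/
lemma Ep_HD {V ψ : Eu n → ℝ} {t₀ : ℝ} (h : LB V t₀) (hψ : PC ψ) {t : ℝ} (ht : t₀ < t) (y : Eu n) :
    HD (Ep V ψ) t y
      (-(1/2) * (Ep V (fun x => ‖x‖ ^ 2 * ψ x) t y - Ep V (fun x => ‖x‖ ^ 2) t y * Ep V ψ t y))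
      (fun i => Ep V (fun x => x i * ψ x) t y - Ep V (fun x => x i) t y * Ep V ψ t y) := by
  have h1 := Iw_HD h hψ ht y
  have h2 := Iw_HD h (PC.const 1) ht y
  have hp : Iw V (fun _ => 1) t y ≠ 0 := (In_one_pos (h.pot_qg ht y)).ne'
  have h3 := h1.mul (h2.comp (φ := fun x => x⁻¹) (hasDerivAt_inv hp))
  have e : (fun t y => Iw V ψ t y * (Iw V (fun _ => 1) t y)⁻¹) = Ep V ψ := by
    ext t y; rw [Ep, div_eq_mul_inv]
  simp only [e, mul_one] at h3
  refine h3.congr ?_ fun i => ?_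
  · simp only [Ep]; field_simp; ring
  · simp only [Ep]; field_simp; ring

lemma Ep_add {V f g : Eu n → ℝ} {t₀ : ℝ} (h : LB V t₀) (hf : PC f) (hg : PC g) {t : ℝ} (ht : t₀ < t) (y : Eu n) :
    Ep V (fun x => f x + g x) t y = Ep V f t y + Ep V g t y := by
  simp only [Ep, Iw, In_add' (h.pot_qg ht y) hf hg, add_div]
lemma Ep_sub {V f g : Eu n → ℝ} {t₀ : ℝ} (h : LB V t₀) (hf : PC f) (hg : PC g) {t : ℝ} (ht : t₀ < t) (y : Eu n) :
    Ep V (fun x => f x - g x) t y = Ep V f t y - Ep V g t y := by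
  simp only [Ep, Iw, In_sub' (h.pot_qg ht y) hf hg, sub_div]
lemma Ep_cmul {V f : Eu n → ℝ} (c t : ℝ) (y : Eu n) :
    Ep V (fun x => c * f x) t y = c * Ep V f t y := by
  simp only [Ep, Iw, In_cmul, mul_div_assoc]
lemma Ep_one {V : Eu n → ℝ} {t₀ : ℝ} (h : LB V t₀) {t : ℝ} (ht : t₀ < t) (y : Eu n) :
    Ep V (fun _ => 1) t y = 1 := div_self (In_one_pos (h.pot_qg ht y)).ne'
lemma Ep_const {V : Eu n → ℝ} {t₀ : ℝ} (h : LB V t₀) {t : ℝ} (ht : t₀ < t) (y : Eu n) (c : ℝ) :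
    Ep V (fun _ => c) t y = c := by
  have := Ep_cmul (V := V) (f := fun _ => 1) c t y
  simpa [Ep_one h ht y] using this
lemma Ep_sum {ι : Type*} {s : Finset ι} {V : Eu n → ℝ} {f : ι → Eu n → ℝ} {t₀ : ℝ} (h : LB V t₀)
    (hf : ∀ i ∈ s, PC (f i)) {t : ℝ} (ht : t₀ < t) (y : Eu n) :
    Ep V (fun x => ∑ i ∈ s, f i x) t y = ∑ i ∈ s, Ep V (f i) t y := by
  simp only [Ep, Iw, In_sum' (h.pot_qg ht y) hf, Finset.sum_div]
lemma Ep_mono {V f g : Eu n → ℝ} {t₀ : ℝ} (h : LB V t₀) (hf : PC f) (hg : PC g) {t : ℝ} (ht : t₀ < t) (y : Eu n)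
    (hfg : ∀ x, f x ≤ g x) : Ep V f t y ≤ Ep V g t y := by
  have := (In_one_pos (h.pot_qg ht y)).le
  simp only [Ep, Iw]
  gcongr
  exact In_mono' (h.pot_qg ht y) hf hg hfg

end tilt

/-! ### Moment bounds and the class of admissible test functions -/

section moments
variable {n : ℕ}

lemma abs_coord_le (x : Eu n) (i : Fin n) : |x i| ≤ ‖x‖ := by
  have := PiLp.norm_apply_le x i; simpa using this

lemma norm_le_sum_abs (x : Eu n) : ‖x‖ ≤ ∑ i, |x i| := by
  conv_lhs => rw [eu_eq_sum x]
  refine (norm_sum_le _ _).trans (Finset.sum_le_sum fun i _ => ?_)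
  rw [norm_smul]; simp

lemma one_add_norm_add_le (x y : Eu n) (k : ℕ) : (1 + ‖x + y‖) ^ k ≤ (1 + ‖x‖) ^ k * (1 + ‖y‖) ^ k := by
  rw [← mul_pow]
  gcongr
  nlinarith [norm_add_le x y, norm_nonneg x, norm_nonneg y, mul_nonneg (norm_nonneg x) (norm_nonneg y)]

lemma PC.one_add_norm_pow (k : ℕ) : PC (fun x : Eu n => (1 + ‖x‖) ^ k) := ((PC.const 1).add PC.norm).pow k

lemma QG_sq {β : ℝ} (hβ : 0 < β) : QG (fun x : Eu n => β / 2 * ‖x‖ ^ 2) :=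
  ⟨by fun_prop, β / 2, 0, by positivity, fun x => by simp⟩

/-- Posterior moments are polynomially bounded in `y`, by recentring the Gaussian factor at its mean. -/
lemma Ep_bound {b l : Fin n → ℝ} {c : ℝ} {ψ₀ ψ : Eu n → ℝ} {B₀ β₀ β₁ t₀ : ℝ} (hB : ∀ x, |ψ₀ x| ≤ B₀) (hβ : 0 < β₀)
    (hβ1 : 0 < β₁)
    (hLB : LB (fun x => U0 b l c x + ψ₀ x) t₀) (hψ : PC ψ) :
    ∃ g : Eu n → ℝ, PB g ∧ ∀ t y, t₀ < t → (∀ i, β₀ ≤ b i + t ∧ b i + t ≤ β₁) →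
      |Ep (fun x => U0 b l c x + ψ₀ x) ψ t y| ≤ g y := by
  obtain ⟨C, k, hC, hψb⟩ := hψ.2
  set V : Eu n → ℝ := fun x => U0 b l c x + ψ₀ x with hV
  set J := In (fun x : Eu n => β₀ / 2 * ‖x‖ ^ 2) (fun x => (1 + ‖x‖) ^ k) with hJ
  set J' := In (fun x : Eu n => β₁ / 2 * ‖x‖ ^ 2) (fun _ => 1) with hJ'
  have hJ'0 : 0 < J' := In_one_pos (QG_sq hβ1)
  have hJ0 : 0 ≤ J := In_nonneg fun x => by positivity
  refine ⟨fun y => C * Real.exp (2 * B₀) * J / J' * (1 + (∑ i, (‖y‖ + |l i|) / β₀)) ^ k, ?_, ?_⟩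
  · refine (PB.const _).mul (((PB.const _).add (PB.sum fun i _ => ?_)).pow k)
    simp only [div_eq_mul_inv]
    exact (PB.norm.add (PB.const _)).mul (PB.const _)
  intro t y ht hbt
  let m : Eu n := WithLp.toLp 2 fun i => (y i - l i) / (b i + t)
  have hb0 : ∀ i, 0 < b i + t := fun i => hβ.trans_le (hbt i).1
  have hm : ∀ i, (b i + t) * m i = y i - l i := fun i => by
    have := (hb0 i).ne'
    simp only [m]; field_simp
  have hmn : ‖m‖ ≤ ∑ i, (‖y‖ + |l i|) / β₀ := by
    refine (norm_le_sum_abs m).trans (Finset.sum_le_sum fun i _ => ?_)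
    simp only [m, abs_div, abs_of_pos (hb0 i)]
    gcongr
    · exact (abs_sub _ _).trans (by gcongr; exact abs_coord_le y i)
    · exact (hbt i).1
  set κ := ∑ i, (b i + t) / 2 * m i ^ 2 - c with hκ
  have hpot : ∀ z, pot V t y (m + z) = ∑ i, (b i + t) / 2 * z i ^ 2 - κ + ψ₀ (m + z) := by
    intro z
    simp only [pot, hV, U0, norm_sq_eq_sum, inner_eq_sum, hκ, PiLp.add_apply, Finset.mul_sum]
    have : ∀ i, b i / 2 * (m i + z i) ^ 2 + l i * (m i + z i) + t / 2 * (m i + z i) ^ 2 - y i * (m i + z i)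
        = (b i + t) / 2 * z i ^ 2 - (b i + t) / 2 * m i ^ 2 := fun i => by
      have := hm i
      have e : y i = (b i + t) * m i + l i := by linarith
      rw [e]; ring
    have h2 := Finset.sum_congr (rfl : (Finset.univ : Finset (Fin n)) = Finset.univ) fun i _ => this i
    simp only [Finset.sum_add_distrib, Finset.sum_sub_distrib] at h2 ⊢
    linarith
  have hq1 : ∀ z : Eu n, β₀ / 2 * ‖z‖ ^ 2 ≤ ∑ i, (b i + t) / 2 * z i ^ 2 := fun z => by
    rw [norm_sq_eq_sum, Finset.mul_sum]
    exact Finset.sum_le_sum fun i _ => by have := (hbt i).1; gcongr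
  have hq2 : ∀ z : Eu n, ∑ i, (b i + t) / 2 * z i ^ 2 ≤ β₁ / 2 * ‖z‖ ^ 2 := fun z => by
    rw [norm_sq_eq_sum, Finset.mul_sum]
    exact Finset.sum_le_sum fun i _ => by have := (hbt i).2; gcongr
  have hQ := hLB.pot_qg ht y
  have hshift : ∀ f : Eu n → ℝ, In (pot V t y) f = ∫ z, f (m + z) * Real.exp (-(pot V t y (m + z))) := fun f =>
    (integral_add_left_eq_self (fun z => f z * Real.exp (-(pot V t y z))) m).symm
  have hden : Real.exp (κ - B₀) * J' ≤ Iw V (fun _ => 1) t y := by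
    rw [Iw, hshift, hJ', In, ← integral_const_mul]
    refine integral_mono (((PC.const 1).integrable (QG_sq hβ1)).const_mul _) ?_ fun z => ?_
    · exact ((PC.const 1).integrable hQ).comp_add_left m
    · simp only [one_mul]
      rw [← Real.exp_add]
      gcongr
      rw [hpot]
      have := (abs_le.1 (hB (m + z))).2
      linarith [hq2 z]
  have hnum : |Iw V ψ t y| ≤ C * (1 + ‖m‖) ^ k * Real.exp (κ + B₀) * J := by
    rw [Iw, hshift, hJ, In, ← integral_const_mul, ← Real.norm_eq_abs]
    refine (norm_integral_le_integral_norm _).trans ?_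
    refine integral_mono ?_ (((PC.one_add_norm_pow k).integrable (QG_sq hβ)).const_mul _) fun z => ?_
    · exact ((hψ.integrable hQ).comp_add_left m).norm
    · simp only [norm_mul, Real.norm_eq_abs, Real.abs_exp]
      have h1 : |ψ (m + z)| ≤ C * ((1 + ‖m‖) ^ k * (1 + ‖z‖) ^ k) :=
        (hψb _).trans (by gcongr; exact one_add_norm_add_le m z k)
      have h2 : Real.exp (-(pot V t y (m + z))) ≤ Real.exp (κ + B₀) * Real.exp (-(β₀ / 2 * ‖z‖ ^ 2)) := by
        rw [← Real.exp_add]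
        gcongr
        rw [hpot]
        have := (abs_le.1 (hB (m + z))).1
        linarith [hq1 z]
      calc _ ≤ (C * ((1 + ‖m‖) ^ k * (1 + ‖z‖) ^ k)) * (Real.exp (κ + B₀) * Real.exp (-(β₀ / 2 * ‖z‖ ^ 2))) := by gcongr
        _ = _ := by ring
  have hZ : 0 < Iw V (fun _ => 1) t y := In_one_pos hQ
  rw [Ep, abs_div, abs_of_pos hZ, div_le_iff₀ hZ]
  calc |Iw V ψ t y| ≤ C * (1 + ‖m‖) ^ k * Real.exp (κ + B₀) * J := hnum
    _ ≤ C * (1 + ∑ i, (‖y‖ + |l i|) / β₀) ^ k * Real.exp (κ + B₀) * J := by gcongr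
    _ = (C * Real.exp (2 * B₀) * J / J' * (1 + ∑ i, (‖y‖ + |l i|) / β₀) ^ k) * (Real.exp (κ - B₀) * J') := by
        have : Real.exp (κ + B₀) = Real.exp (2 * B₀) * Real.exp (κ - B₀) := by rw [← Real.exp_add]; ring_nf
        rw [this]; field_simp
    _ ≤ _ := by gcongr

end moments

section cls
variable {n : ℕ}

/-- Polynomial boundedness in `y`, uniformly for `t ∈ (0, 1)`. -/
def PBu (f : ℝ → Eu n → ℝ) : Prop := ∃ g : Eu n → ℝ, PB g ∧ ∀ t ∈ Set.Ioo (0 : ℝ) 1, ∀ y, |f t y| ≤ g y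

lemma PBu.const (c : ℝ) : PBu (fun _ (_ : Eu n) => c) := ⟨fun _ => |c|, PB.const _, fun _ _ _ => le_rfl⟩
lemma PBu.add {f g : ℝ → Eu n → ℝ} (hf : PBu f) (hg : PBu g) : PBu (fun t y => f t y + g t y) := by
  obtain ⟨F, h1, h2⟩ := hf
  obtain ⟨G, h3, h4⟩ := hg
  exact ⟨_, h1.add h3, fun t ht y => (abs_add_le _ _).trans (add_le_add (h2 t ht y) (h4 t ht y))⟩
lemma PBu.mul {f g : ℝ → Eu n → ℝ} (hf : PBu f) (hg : PBu g) : PBu (fun t y => f t y * g t y) := by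
  obtain ⟨F, h1, h2⟩ := hf
  obtain ⟨G, h3, h4⟩ := hg
  refine ⟨_, h1.mul h3, fun t ht y => ?_⟩
  rw [abs_mul]
  exact mul_le_mul (h2 t ht y) (h4 t ht y) (abs_nonneg _) ((abs_nonneg _).trans (h2 t ht y))
lemma PBu.cmul {f : ℝ → Eu n → ℝ} (c : ℝ) (hf : PBu f) : PBu (fun t y => c * f t y) := (PBu.const c).mul hf
lemma PBu.neg {f : ℝ → Eu n → ℝ} (hf : PBu f) : PBu (fun t y => - f t y) := by
  obtain ⟨F, h1, h2⟩ := hf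
  exact ⟨F, h1, fun t ht y => by rw [abs_neg]; exact h2 t ht y⟩
lemma PBu.sub {f g : ℝ → Eu n → ℝ} (hf : PBu f) (hg : PBu g) : PBu (fun t y => f t y - g t y) := by
  simpa [sub_eq_add_neg] using hf.add hg.neg
lemma PBu.sum {ι : Type*} {s : Finset ι} {f : ι → ℝ → Eu n → ℝ} (hf : ∀ i ∈ s, PBu (f i)) :
    PBu (fun t y => ∑ i ∈ s, f i t y) := by
  classical
  induction s using Finset.induction_on with
  | empty => simpa using PBu.const (n := n) 0
  | insert i s hi ih =>
    simp only [Finset.sum_insert hi]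
    exact (hf i (by simp)).add (ih fun j hj => hf j (by simp [hj]))
lemma PBu.mono {f g : ℝ → Eu n → ℝ} (hg : PBu g) (h : ∀ t ∈ Set.Ioo (0 : ℝ) 1, ∀ y, |f t y| ≤ |g t y|) : PBu f := by
  obtain ⟨F, h1, h2⟩ := hg
  exact ⟨F, h1, fun t ht y => (h t ht y).trans (h2 t ht y)⟩

/-- Functions `f (t, y)` differentiable in `(t, y)` and twice differentiable in `y` on `0 < t < 1`,
together with their time derivative, gradient and pure second derivatives, with uniform polynomial bounds. -/
structure Cls (f ft : ℝ → Eu n → ℝ) (fi fii : Fin n → ℝ → Eu n → ℝ) : Prop where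
  hd : ∀ t ∈ Set.Ioo (0 : ℝ) 1, ∀ y, HD f t y (ft t y) (fun i => fi i t y)
  hdi : ∀ t ∈ Set.Ioo (0 : ℝ) 1, ∀ y i, DifferentiableAt ℝ (fi i t) y ∧ pd i (fi i t) y = fii i t y
  ct : ∀ t ∈ Set.Ioo (0 : ℝ) 1, Continuous (ft t)
  cii : ∀ t ∈ Set.Ioo (0 : ℝ) 1, ∀ i, Continuous (fii i t)
  pb : PBu f
  pbt : PBu ft
  pbi : ∀ i, PBu (fi i)
  pbii : ∀ i, PBu (fii i)

lemma Cls.cont {f ft : ℝ → Eu n → ℝ} {fi fii : Fin n → ℝ → Eu n → ℝ} (h : Cls f ft fi fii) {t : ℝ}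
    (ht : t ∈ Set.Ioo (0 : ℝ) 1) : Continuous (f t) :=
  continuous_iff_continuousAt.2 fun y => (h.hd t ht y).differentiableAt.continuousAt
lemma Cls.conti {f ft : ℝ → Eu n → ℝ} {fi fii : Fin n → ℝ → Eu n → ℝ} (h : Cls f ft fi fii) {t : ℝ}
    (ht : t ∈ Set.Ioo (0 : ℝ) 1) (i : Fin n) : Continuous (fi i t) :=
  continuous_iff_continuousAt.2 fun y => (h.hdi t ht y i).1.continuousAt

lemma Cls.const (c : ℝ) : Cls (fun _ (_ : Eu n) => c) (fun _ _ => 0) (fun _ _ _ => 0) (fun _ _ _ => 0) where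
  hd t _ y := HD.const c t y
  hdi t _ y i := ⟨differentiableAt_const _, pd_const _⟩
  ct _ _ := continuous_const
  cii _ _ _ := continuous_const
  pb := PBu.const c
  pbt := PBu.const 0
  pbi _ := PBu.const 0
  pbii _ := PBu.const 0

lemma Cls.mul {f ft g gt : ℝ → Eu n → ℝ} {fi fii gi gii : Fin n → ℝ → Eu n → ℝ} (h : Cls f ft fi fii)
    (h' : Cls g gt gi gii) :
    Cls (fun t y => f t y * g t y) (fun t y => ft t y * g t y + f t y * gt t y)
      (fun i t y => fi i t y * g t y + f t y * gi i t y)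
      (fun i t y => fii i t y * g t y + 2 * (fi i t y * gi i t y) + f t y * gii i t y) where
  hd t ht y := (h.hd t ht y).mul (h'.hd t ht y)
  hdi t ht y i := by
    have a1 := (h.hd t ht y).differentiableAt
    have a2 := (h'.hd t ht y).differentiableAt
    obtain ⟨a3, e3⟩ := h.hdi t ht y i
    obtain ⟨a4, e4⟩ := h'.hdi t ht y i
    refine ⟨(a3.mul a2).add (a1.mul a4), ?_⟩
    have := pd_add (i := i) (a3.mul a2) (a1.mul a4)
    refine this.trans ?_
    have p1 := pd_mul (i := i) a3 a2
    have p2 := pd_mul (i := i) a1 a4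
    have q1 := (h.hd t ht y).pd_eq i
    have q2 := (h'.hd t ht y).pd_eq i
    refine (congrArg₂ (· + ·) p1 p2).trans ?_
    rw [e3, e4, q1, q2]; ring
  ct t ht := ((h.ct t ht).mul (h'.cont ht)).add ((h.cont ht).mul (h'.ct t ht))
  cii t ht i := (((h.cii t ht i).mul (h'.cont ht)).add (continuous_const.mul ((h.conti ht i).mul (h'.conti ht i)))).add
    ((h.cont ht).mul (h'.cii t ht i))
  pb := h.pb.mul h'.pb
  pbt := (h.pbt.mul h'.pb).add (h.pb.mul h'.pbt)
  pbi i := ((h.pbi i).mul h'.pb).add (h.pb.mul (h'.pbi i))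
  pbii i := (((h.pbii i).mul h'.pb).add (((h.pbi i).mul (h'.pbi i)).cmul 2)).add (h.pb.mul (h'.pbii i))

lemma Cls.congr {f ft ft' : ℝ → Eu n → ℝ} {fi fii fi' fii' : Fin n → ℝ → Eu n → ℝ} (h : Cls f ft fi fii)
    (h1 : ∀ t ∈ Set.Ioo (0 : ℝ) 1, ∀ y, ft t y = ft' t y) (h2 : ∀ i, ∀ t ∈ Set.Ioo (0 : ℝ) 1, ∀ y, fi i t y = fi' i t y)
    (h3 : ∀ i, ∀ t ∈ Set.Ioo (0 : ℝ) 1, ∀ y, fii i t y = fii' i t y) : Cls f ft' fi' fii' where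
  hd t ht y := (h.hd t ht y).congr (h1 t ht y) (fun i => h2 i t ht y)
  hdi t ht y i := by
    have : fi' i t = fi i t := by ext y; rw [h2 i t ht]
    rw [this, ← h3 i t ht]; exact h.hdi t ht y i
  ct t ht := by
    have : ft' t = ft t := by ext y; rw [h1 t ht]
    rw [this]; exact h.ct t ht
  cii t ht i := by
    have : fii' i t = fii i t := by ext y; rw [h3 i t ht]
    rw [this]; exact h.cii t ht i
  pb := h.pb
  pbt := h.pbt.mono fun t ht y => by rw [h1 t ht]
  pbi i := (h.pbi i).mono fun t ht y => by rw [h2 i t ht]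
  pbii i := (h.pbii i).mono fun t ht y => by rw [h3 i t ht]

/-- `exp (-f)` for `f ≥ 0`. -/
lemma Cls.expneg {f ft : ℝ → Eu n → ℝ} {fi fii : Fin n → ℝ → Eu n → ℝ} (h : Cls f ft fi fii)
    (h0 : ∀ t ∈ Set.Ioo (0 : ℝ) 1, ∀ y, 0 ≤ f t y) :
    Cls (fun t y => Real.exp (-(f t y))) (fun t y => -(Real.exp (-(f t y)) * ft t y))
      (fun i t y => -(Real.exp (-(f t y)) * fi i t y))
      (fun i t y => Real.exp (-(f t y)) * (fi i t y ^ 2 - fii i t y)) := by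
  have hpe : PBu (fun t y => Real.exp (-(f t y))) := (PBu.const 1).mono fun t ht y => by
    rw [Real.abs_exp, abs_one, Real.exp_le_one_iff]; linarith [h0 t ht y]
  have hce : ∀ t ∈ Set.Ioo (0 : ℝ) 1, Continuous fun y => Real.exp (-(f t y)) := fun t ht =>
    Real.continuous_exp.comp (h.cont ht).neg
  have hHD : ∀ t ∈ Set.Ioo (0 : ℝ) 1, ∀ y, HD (fun t y => Real.exp (-(f t y))) t y
      (-(Real.exp (-(f t y)) * ft t y)) (fun i => -(Real.exp (-(f t y)) * fi i t y)) := fun t ht y => by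
    have hφ : HasDerivAt (fun s : ℝ => Real.exp (-s)) (-(Real.exp (-(f t y)))) (f t y) := by
      simpa using (hasDerivAt_neg (f t y)).exp
    exact ((h.hd t ht y).comp hφ).congr (by ring) fun i => by ring
  refine ⟨hHD, ?_, ?_, ?_, hpe, (hpe.mul h.pbt).neg, fun i => (hpe.mul (h.pbi i)).neg, fun i => ?_⟩
  · intro t ht y i
    have a1 := (hHD t ht y).differentiableAt
    obtain ⟨a3, e3⟩ := h.hdi t ht y i
    refine ⟨(a1.mul a3).neg, ?_⟩
    have p1 := pd_mul (i := i) a1 a3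
    have q1 := (hHD t ht y).pd_eq i
    have : pd i (fun y => -(Real.exp (-(f t y)) * fi i t y)) y = -pd i (fun y => Real.exp (-(f t y)) * fi i t y) y := by
      simp only [pd, fderiv_fun_neg, neg_apply]
    rw [this]
    refine (congrArg Neg.neg p1).trans ?_
    rw [e3, q1]; ring
  · intro t ht; exact ((hce t ht).mul (h.ct t ht)).neg
  · intro t ht i; exact (hce t ht).mul (((h.conti ht i).pow 2).sub (h.cii t ht i))
  · refine hpe.mul (PBu.sub ?_ (h.pbii i))
    simpa only [sq] using (h.pbi i).mul (h.pbi i)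

end cls

/-! ### Posterior expectations and the observation process -/

section base
variable {n : ℕ}

/-- Convex potentials that are a positive diagonal quadratic polynomial plus a compactly supported smooth function. -/
def BaseV (V : Eu n → ℝ) : Prop :=
  HessGe V 0 ∧ ∃ (b l : Fin n → ℝ) (c : ℝ) (ψ : Eu n → ℝ), (∀ i, 0 < b i) ∧
    ContDiff ℝ (⊤ : ℕ∞) ψ ∧ HasCompactSupport ψ ∧ V = fun x => U0 b l c x + ψ x

lemma exists_pos_le (b : Fin n → ℝ) (hb : ∀ i, 0 < b i) : ∃ β, 0 < β ∧ ∀ i, β ≤ b i := by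
  rcases isEmpty_or_nonempty (Fin n) with h | h
  · exact ⟨1, one_pos, fun i => h.elim i⟩
  · obtain ⟨i, hi⟩ := Finite.exists_min b
    exact ⟨b i, hb i, hi⟩

lemma BaseV.tg {V : Eu n → ℝ} (h : BaseV V) : TG V := by
  obtain ⟨-, b, l, c, ψ, hb, hψ, hψc, rfl⟩ := h
  exact (TG_U0 b l c).add (hψc.hasTemperateGrowth hψ)

lemma BaseV.qg {V : Eu n → ℝ} (h : BaseV V) : QG V := by
  obtain ⟨-, b, l, c, ψ, hb, hψ, hψc, rfl⟩ := h
  obtain ⟨M, hM⟩ := bdd_of_compact hψ.continuous hψc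
  obtain ⟨β, hβ, hb'⟩ := exists_pos_le b hb
  exact (QG_U0 b l c hβ hb').add_bdd hψ.continuous hM

lemma BaseV.lb {V : Eu n → ℝ} (h : BaseV V) : ∃ β, 0 < β ∧ LB V (-β) := by
  obtain ⟨hc, c, C, hc0, H⟩ := h.qg
  exact ⟨2 * c, by positivity, hc, C, fun x => by have := H x; linarith⟩

lemma BaseV.pbu {V ψ : Eu n → ℝ} (h : BaseV V) (hψ : PC ψ) : PBu (Ep V ψ) := by
  obtain ⟨β, hβ, hL⟩ := h.lb
  obtain ⟨-, b, l, c, ψ₀, hb, hψ₀, hψc, rfl⟩ := h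
  obtain ⟨M, hM⟩ := bdd_of_compact hψ₀.continuous hψc
  obtain ⟨β', hβ', hb'⟩ := exists_pos_le b hb
  obtain ⟨g, hg, H⟩ := Ep_bound (β₀ := β') (β₁ := ∑ i, b i + 1) hM hβ'
    (by have := Finset.sum_nonneg fun i (_ : i ∈ Finset.univ) => (hb i).le; positivity) hL hψ
  refine ⟨g, hg, fun t ht y => H t y (by linarith [ht.1]) fun i => ⟨by linarith [hb' i, ht.1], ?_⟩⟩
  have := Finset.single_le_sum (fun i _ => (hb i).le) (Finset.mem_univ i)
  linarith [ht.2]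

/-- First derivative of a posterior expectation, as a covariance. -/
def E1 (V ψ : Eu n → ℝ) (i : Fin n) (t : ℝ) (y : Eu n) : ℝ :=
  Ep V (fun x => x i * ψ x) t y - Ep V (fun x => x i) t y * Ep V ψ t y

/-- Second derivative of a posterior expectation. -/
def E2 (V ψ : Eu n → ℝ) (i : Fin n) (t : ℝ) (y : Eu n) : ℝ :=
  E1 V (fun x => x i * ψ x) i t y - (E1 V (fun x => x i) i t y * Ep V ψ t y + Ep V (fun x => x i) t y * E1 V ψ i t y)

/-- Time derivative of a posterior expectation. -/
def Et (V ψ : Eu n → ℝ) (t : ℝ) (y : Eu n) : ℝ :=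
  -(1/2) * (Ep V (fun x => ‖x‖ ^ 2 * ψ x) t y - Ep V (fun x => ‖x‖ ^ 2) t y * Ep V ψ t y)

lemma LB.ep_cont {V ψ : Eu n → ℝ} {t₀ : ℝ} (h : LB V t₀) (hψ : PC ψ) {t : ℝ} (ht : t₀ < t) : Continuous (Ep V ψ t) :=
  continuous_iff_continuousAt.2 fun y => (Ep_HD h hψ ht y).differentiableAt.continuousAt

lemma LB.E1_cont {V ψ : Eu n → ℝ} {t₀ : ℝ} (h : LB V t₀) (hψ : PC ψ) {t : ℝ} (ht : t₀ < t) (i : Fin n) :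
    Continuous (E1 V ψ i t) :=
  (h.ep_cont ((PC.coord i).mul hψ) ht).sub ((h.ep_cont (PC.coord i) ht).mul (h.ep_cont hψ ht))

lemma LB.E1_pd {V ψ : Eu n → ℝ} {t₀ : ℝ} (h : LB V t₀) (hψ : PC ψ) {t : ℝ} (ht : t₀ < t) (y : Eu n) (i j : Fin n) :
    DifferentiableAt ℝ (E1 V ψ i t) y ∧ pd j (E1 V ψ i t) y =
      E1 V (fun x => x i * ψ x) j t y - (E1 V (fun x => x i) j t y * Ep V ψ t y + Ep V (fun x => x i) t y * E1 V ψ j t y) := by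
  have a := Ep_HD h ((PC.coord i).mul hψ) ht y
  have b := (Ep_HD h (PC.coord i) ht y).mul (Ep_HD h hψ ht y)
  refine ⟨a.differentiableAt.sub b.differentiableAt, ?_⟩
  have := pd_sub (i := j) a.differentiableAt b.differentiableAt
  refine this.trans ?_
  rw [a.pd_eq, b.pd_eq]; rfl

/-- Posterior expectations of continuous polynomially bounded functions are admissible test functions. -/
lemma BaseV.cls {V ψ : Eu n → ℝ} (h : BaseV V) (hψ : PC ψ) : Cls (Ep V ψ) (Et V ψ) (E1 V ψ) (E2 V ψ) := by
  obtain ⟨β, hβ, hL⟩ := h.lb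
  have h1 : ∀ {φ : Eu n → ℝ}, PC φ → ∀ i, PBu (E1 V φ i) := fun hφ i =>
    (h.pbu ((PC.coord i).mul hφ)).sub ((h.pbu (PC.coord i)).mul (h.pbu hφ))
  have lt : ∀ {t : ℝ}, t ∈ Set.Ioo (0 : ℝ) 1 → -β < t := fun ht => by linarith [ht.1]
  refine ⟨fun t ht y => Ep_HD hL hψ (lt ht) y, fun t ht y i => hL.E1_pd hψ (lt ht) y i i, fun t ht => ?_, fun t ht i => ?_,
    h.pbu hψ, ?_, h1 hψ, fun i => ?_⟩
  · exact continuous_const.mul ((hL.ep_cont ((PC.norm.pow 2).mul hψ) (lt ht)).sub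
      ((hL.ep_cont (PC.norm.pow 2) (lt ht)).mul (hL.ep_cont hψ (lt ht))))
  · exact (hL.E1_cont ((PC.coord i).mul hψ) (lt ht) i).sub (((hL.E1_cont (PC.coord i) (lt ht) i).mul
      (hL.ep_cont hψ (lt ht))).add ((hL.ep_cont (PC.coord i) (lt ht)).mul (hL.E1_cont hψ (lt ht) i)))
  · exact ((h.pbu ((PC.norm.pow 2).mul hψ)).sub ((h.pbu (PC.norm.pow 2)).mul (h.pbu hψ))).cmul _
  · exact (h1 ((PC.coord i).mul hψ) i).sub (((h1 (PC.coord i) i).mul (h.pbu hψ)).add ((h.pbu (PC.coord i)).mul (h1 hψ i)))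

/-- The generator `∂ₜ + a · ∇ + Δ / 2` of the observation process, `a` the posterior mean. -/
def Lgen (V : Eu n → ℝ) (ft : ℝ → Eu n → ℝ) (fi fii : Fin n → ℝ → Eu n → ℝ) (t : ℝ) (y : Eu n) : ℝ :=
  ft t y + ∑ i, (Ep V (fun x => x i) t y * fi i t y + 1 / 2 * fii i t y)

/-- Posterior expectations are martingales. -/
lemma Lgen_Ep {V ψ : Eu n → ℝ} {t₀ : ℝ} (h : LB V t₀) (hψ : PC ψ) {t : ℝ} (ht : t₀ < t) (y : Eu n) :
    Lgen V (Et V ψ) (E1 V ψ) (E2 V ψ) t y = 0 := by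
  have e1 : Ep V (fun x => ‖x‖ ^ 2 * ψ x) t y = ∑ i, Ep V (fun x => x i * (x i * ψ x)) t y := by
    rw [← Ep_sum h (fun i _ => (PC.coord i).mul ((PC.coord i).mul hψ)) ht]
    congr 1; ext x; rw [norm_sq_eq_sum, Finset.sum_mul]
    exact Finset.sum_congr rfl fun i _ => by ring
  have e2 : Ep V (fun x => ‖x‖ ^ 2) t y = ∑ i, Ep V (fun x => x i * x i) t y := by
    rw [← Ep_sum h (fun i _ => (PC.coord i).mul (PC.coord i)) ht]
    congr 1; ext x; rw [norm_sq_eq_sum]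
    exact Finset.sum_congr rfl fun i _ => by ring
  rw [Lgen, Et, e1, e2, Finset.sum_mul, ← Finset.sum_sub_distrib, Finset.mul_sum, ← Finset.sum_add_distrib]
  refine Finset.sum_eq_zero fun i _ => ?_
  simp only [E2, E1]; ring

/-! ### The law of the observation process -/

/-- The unnormalised Gaussian-weighted likelihood. -/
def Wt (V ψ : Eu n → ℝ) (t : ℝ) (z : Eu n) : ℝ := Iw V ψ t (Real.sqrt t • z) * Real.exp (-(‖z‖ ^ 2 / 2))

lemma Wt_bound {V ψ : Eu n → ℝ} {β : ℝ} (hβ : 0 < β) (h : LB V (-β)) (hψ : PC ψ) :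
    ∃ K ε : ℝ, 0 ≤ K ∧ 0 < ε ∧ ∀ t ∈ Set.Icc (0 : ℝ) 1, ∀ z, |Wt V ψ t z| ≤ K * Real.exp (-(ε * ‖z‖ ^ 2)) := by
  obtain ⟨hc, C, hC⟩ := id h
  set θ := 1 + β / 2 with hθ
  have hθ1 : 1 < θ := by rw [hθ]; linarith
  set J := In (fun x : Eu n => (β / 2) / 2 * ‖x‖ ^ 2) (fun x => |ψ x|) with hJ
  have hJ0 : 0 ≤ J := In_nonneg fun x => abs_nonneg _
  refine ⟨Real.exp C * J, 1 / 2 - 1 / (2 * θ), by positivity, ?_, fun t ht z => ?_⟩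
  · rw [sub_pos]; apply one_div_lt_one_div_of_lt <;> linarith
  have hk : ∀ x, -(pot V t (Real.sqrt t • z) x) ≤ C + ‖z‖ ^ 2 / (2 * θ) + -((β / 2) / 2 * ‖x‖ ^ 2) := by
    intro x
    have h1 : inner ℝ (Real.sqrt t • z) x ≤ θ * (t * ‖x‖ ^ 2) / 2 + ‖z‖ ^ 2 / (2 * θ) := by
      rw [real_inner_smul_left]
      have a1 := mul_le_mul_of_nonneg_left (real_inner_le_norm z x) (Real.sqrt_nonneg t)
      have a2 : Real.sqrt t * (‖z‖ * ‖x‖) ≤ θ * (Real.sqrt t ^ 2 * ‖x‖ ^ 2) / 2 + ‖z‖ ^ 2 / (2 * θ) := by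
        have e : θ * (Real.sqrt t ^ 2 * ‖x‖ ^ 2) / 2 + ‖z‖ ^ 2 / (2 * θ) - Real.sqrt t * (‖z‖ * ‖x‖) =
            (θ * (Real.sqrt t * ‖x‖) - ‖z‖) ^ 2 / (2 * θ) := by field_simp; ring
        have : 0 ≤ (θ * (Real.sqrt t * ‖x‖) - ‖z‖) ^ 2 / (2 * θ) := by positivity
        linarith
      rw [Real.sq_sqrt ht.1] at a2
      linarith
    have h2 := hC x
    have h3 : t * ‖x‖ ^ 2 ≤ 1 * ‖x‖ ^ 2 := by have := ht.2; gcongr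
    simp only [pot]
    rw [hθ] at h1
    nlinarith
  have hI : |Iw V ψ t (Real.sqrt t • z)| ≤ Real.exp (C + ‖z‖ ^ 2 / (2 * θ)) * J := by
    rw [Iw, In, hJ, In, ← integral_const_mul, ← Real.norm_eq_abs]
    refine (norm_integral_le_integral_norm _).trans ?_
    refine integral_mono (hψ.integrable (h.pot_qg (by linarith [ht.1]) _)).norm
      ((hψ.abs.integrable (QG_sq (by positivity : 0 < β / 2))).const_mul _) fun x => ?_
    simp only [norm_mul, Real.norm_eq_abs, Real.abs_exp]
    calc _ ≤ |ψ x| * Real.exp (C + ‖z‖ ^ 2 / (2 * θ) + -((β / 2) / 2 * ‖x‖ ^ 2)) := by gcongr; exact hk x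
      _ = _ := by rw [Real.exp_add]; ring
  rw [Wt, abs_mul, Real.abs_exp]
  calc _ ≤ (Real.exp (C + ‖z‖ ^ 2 / (2 * θ)) * J) * Real.exp (-(‖z‖ ^ 2 / 2)) := by gcongr
    _ = (Real.exp C * J) * (Real.exp (‖z‖ ^ 2 / (2 * θ)) * Real.exp (-(‖z‖ ^ 2 / 2))) := by rw [Real.exp_add]; ring
    _ = _ := by rw [← Real.exp_add]; congr 2; field_simp; ring

lemma Wt_cont {V ψ : Eu n → ℝ} {β : ℝ} (h : LB V (-β)) (hψ : PC ψ) {t : ℝ} (ht : -β < t) : Continuous (Wt V ψ t) := by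
  have : Continuous (Iw V ψ t) := continuous_iff_continuousAt.2 fun y => (Iw_HD h hψ ht y).differentiableAt.continuousAt
  unfold Wt
  exact (this.comp (continuous_const_smul _)).mul (by fun_prop)

lemma PB.comp_sqrt {g : Eu n → ℝ} (hg : PB g) : ∃ G : Eu n → ℝ, PC G ∧
    ∀ t ∈ Set.Icc (0 : ℝ) 1, ∀ z, |g (Real.sqrt t • z)| ≤ G z := by
  obtain ⟨C, k, hC, H⟩ := hg
  refine ⟨fun z => C * (1 + ‖z‖) ^ k, (PC.one_add_norm_pow k).cmul C, fun t ht z => (H _).trans ?_⟩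
  show C * (1 + ‖Real.sqrt t • z‖) ^ k ≤ C * (1 + ‖z‖) ^ k
  gcongr
  rw [norm_smul, Real.norm_of_nonneg (Real.sqrt_nonneg _)]
  exact mul_le_of_le_one_left (norm_nonneg _) (Real.sqrt_le_one.2 ht.2)

lemma PBu.comp_sqrt {f : ℝ → Eu n → ℝ} (hf : PBu f) : ∃ G : Eu n → ℝ, PC G ∧
    ∀ t ∈ Set.Ioo (0 : ℝ) 1, ∀ z, |f t (Real.sqrt t • z)| ≤ G z := by
  obtain ⟨g, hg, H⟩ := hf
  obtain ⟨G, hG, H2⟩ := hg.comp_sqrt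
  exact ⟨G, hG, fun t ht z => (H t ht _).trans ((le_abs_self _).trans (H2 t ⟨ht.1.le, ht.2.le⟩ z))⟩

lemma PBu.dom {f : ℝ → Eu n → ℝ} (hf : PBu f) {V ψ : Eu n → ℝ} {β : ℝ} (hβ : 0 < β) (h : LB V (-β)) (hψ : PC ψ) :
    ∃ D : Eu n → ℝ, Integrable D ∧ Integrable (fun z => D z * ‖z‖) ∧ ∀ t ∈ Set.Ioo (0 : ℝ) 1, ∀ z,
      |f t (Real.sqrt t • z) * Wt V ψ t z| ≤ D z := by
  obtain ⟨G, hG, H⟩ := hf.comp_sqrt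
  obtain ⟨K, ε, hK, hε, H2⟩ := Wt_bound hβ h hψ
  have hQ : QG (fun x : Eu n => ε * ‖x‖ ^ 2) := ⟨by fun_prop, ε, 0, hε, fun x => by simp⟩
  refine ⟨fun z => G z * K * Real.exp (-(ε * ‖z‖ ^ 2)), (hG.mul (PC.const K)).integrable hQ, ?_, fun t ht z => ?_⟩
  · refine (((hG.mul (PC.const K)).mul PC.norm).integrable hQ).congr (Filter.Eventually.of_forall fun z => ?_)
    simp only; ring
  · rw [abs_mul]
    show _ ≤ G z * K * _
    rw [mul_assoc]
    exact mul_le_mul (H t ht z) (H2 t ⟨ht.1.le, ht.2.le⟩ z) (abs_nonneg _) ((abs_nonneg _).trans (H t ht z))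

/-- The expectation of `f (t, Y)` for `Y` the observation at time `t`. -/
def Ed (V : Eu n → ℝ) (f : ℝ → Eu n → ℝ) (t : ℝ) : ℝ :=
  (∫ z, f t (Real.sqrt t • z) * Wt V (fun _ => 1) t z) / In (fun z : Eu n => ‖z‖ ^ 2 / 2) (fun _ => 1)

lemma Ed_integrable {V : Eu n → ℝ} (hV : BaseV V) {f : ℝ → Eu n → ℝ} (hf : PBu f) {ψ : Eu n → ℝ} (hψ : PC ψ) {t : ℝ}
    (ht : t ∈ Set.Ioo (0 : ℝ) 1) (hc : Continuous (f t)) : Integrable (fun z => f t (Real.sqrt t • z) * Wt V ψ t z) := by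
  obtain ⟨β, hβ, hL⟩ := hV.lb
  obtain ⟨D, hD, -, H⟩ := hf.dom hβ hL hψ
  exact hD.mono' ((hc.comp (continuous_const_smul _)).mul (Wt_cont hL hψ (by linarith [ht.1]))).aestronglyMeasurable
    (Filter.Eventually.of_forall fun z => H t ht z)

lemma Ed_integrable' {V : Eu n → ℝ} (hV : BaseV V) {f : ℝ → Eu n → ℝ} (hf : PBu f) {ψ : Eu n → ℝ} (hψ : PC ψ) {t : ℝ}
    (ht : t ∈ Set.Ioo (0 : ℝ) 1) (hc : Continuous (f t)) (i : Fin n) :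
    Integrable (fun z => z i * (f t (Real.sqrt t • z) * Wt V ψ t z)) := by
  obtain ⟨β, hβ, hL⟩ := hV.lb
  obtain ⟨D, -, hD, H⟩ := hf.dom hβ hL hψ
  refine hD.mono' ((TG.coord i).cont.mul ((hc.comp (continuous_const_smul _)).mul
    (Wt_cont hL hψ (by linarith [ht.1])))).aestronglyMeasurable
    (Filter.Eventually.of_forall fun z => ?_)
  rw [Real.norm_eq_abs, abs_mul, mul_comm]
  exact mul_le_mul (H t ht z) (abs_coord_le z i) (abs_nonneg _) ((abs_nonneg _).trans (H t ht z))

end base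

/-! ### Dynkin's formula -/

section dynkin
variable {n : ℕ}

lemma gauss_ibp {t : ℝ} {g : Eu n → ℝ} (i : Fin n) (hg : Differentiable ℝ g)
    (h1 : Integrable fun z : Eu n => g (Real.sqrt t • z) * Real.exp (-(‖z‖ ^ 2 / 2)))
    (h2 : Integrable fun z : Eu n => pd i g (Real.sqrt t • z) * Real.exp (-(‖z‖ ^ 2 / 2)))
    (h3 : Integrable fun z : Eu n => z i * (g (Real.sqrt t • z) * Real.exp (-(‖z‖ ^ 2 / 2)))) :
    ∫ z : Eu n, z i * (g (Real.sqrt t • z) * Real.exp (-(‖z‖ ^ 2 / 2))) =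
      Real.sqrt t * ∫ z : Eu n, pd i g (Real.sqrt t • z) * Real.exp (-(‖z‖ ^ 2 / 2)) := by
  have hd : ∀ x : Eu n, HasFDerivAt (fun x : Eu n => Real.exp (-(‖x‖ ^ 2 / 2)))
      (Real.exp (-(‖x‖ ^ 2 / 2)) • (-(innerSL ℝ x))) x := fun x => by
    have a := ((hasStrictFDerivAt_norm_sq x).hasFDerivAt.const_mul (1/2 : ℝ)).neg.exp
    have e : (fun x : Eu n => Real.exp (-(‖x‖ ^ 2 / 2))) = fun x : Eu n => Real.exp (-(1 / 2 * ‖x‖ ^ 2)) := by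
      ext x; ring_nf
    have e2 : Real.exp (-(‖x‖ ^ 2 / 2)) • (-(innerSL ℝ x)) =
        Real.exp (-(1 / 2 * ‖x‖ ^ 2)) • (-((1 / 2 : ℝ) • (2 • innerSL ℝ x))) := by
      congr 1
      · ring_nf
      · congr 1; ext v; simp
    rw [e, e2]; exact a
  have hfd : ∀ x : Eu n, fderiv ℝ (fun x : Eu n => Real.exp (-(‖x‖ ^ 2 / 2))) x (ee i) =
      -(x i * Real.exp (-(‖x‖ ^ 2 / 2))) := fun x => by
    rw [(hd x).fderiv]; simp [EuclideanSpace.inner_single_right]; ring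
  have hgd : ∀ z : Eu n, HasFDerivAt (fun z => g (Real.sqrt t • z)) _ z := fun z =>
    (hg (Real.sqrt t • z)).hasFDerivAt.comp z ((hasFDerivAt_id z).const_smul (Real.sqrt t))
  have hgf : ∀ z : Eu n, fderiv ℝ (fun z => g (Real.sqrt t • z)) z (ee i) = Real.sqrt t * pd i g (Real.sqrt t • z) :=
    fun z => by rw [(hgd z).fderiv]; simp [pd]
  have h := integral_mul_fderiv_eq_neg_fderiv_mul_of_integrable (μ := (volume : Measure (Eu n)))
    (f := fun z => g (Real.sqrt t • z)) (g := fun x : Eu n => Real.exp (-(‖x‖ ^ 2 / 2))) (v := ee i) ?_ ?_ h1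
    (fun x _ => (hgd x).differentiableAt) (fun x _ => (hd x).differentiableAt)
  · simp only [hfd, hgf] at h
    rw [← integral_const_mul, ← neg_inj, ← integral_neg]
    refine Eq.trans (Eq.trans ?_ h) ?_
    · congr 1; ext z; ring
    · congr 2; ext z; ring
  · simp only [hgf]; simpa only [mul_assoc] using h2.const_mul (Real.sqrt t)
  · simp only [hfd]; refine h3.neg.congr (Filter.Eventually.of_forall fun z => ?_)
    simp only [Pi.neg_apply]; ring

lemma Wt_congr_sq {V : Eu n → ℝ} {β : ℝ} (h : LB V (-β)) {t : ℝ} (ht : -β < t) (z : Eu n) :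
    Wt V (fun x => ‖x‖ ^ 2) t z = ∑ i, Wt V (fun x => x i * x i) t z := by
  simp only [Wt, ← Finset.sum_mul]
  congr 1
  simp only [Iw]
  rw [← In_sum' (h.pot_qg ht _) fun i _ => (PC.coord i).mul (PC.coord i)]
  congr 1; ext x; rw [norm_sq_eq_sum]; simp [sq]

lemma Wt_Ep {V ψ : Eu n → ℝ} {β : ℝ} (h : LB V (-β)) {t : ℝ} (ht : -β < t) (z : Eu n) :
    Wt V ψ t z = Ep V ψ t (Real.sqrt t • z) * Wt V (fun _ => 1) t z := by
  have := (In_one_pos (h.pot_qg ht (Real.sqrt t • z))).ne'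
  simp only [Wt, Ep, Iw]; field_simp

/-- Dynkin's formula for the observation process. -/
lemma dynkin {V : Eu n → ℝ} (hV : BaseV V) {f ft : ℝ → Eu n → ℝ} {fi fii : Fin n → ℝ → Eu n → ℝ}
    (hf : Cls f ft fi fii) {t : ℝ} (ht : t ∈ Set.Ioo (0 : ℝ) 1) :
    HasDerivAt (Ed V f) (Ed V (Lgen V ft fi fii) t) t := by
  obtain ⟨β, hβ, hL⟩ := hV.lb
  have lt : ∀ {t : ℝ}, t ∈ Set.Ioo (0 : ℝ) 1 → -β < t := fun ht => by linarith [ht.1]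
  refine HasDerivAt.div_const (c := fun t => ∫ z, f t (Real.sqrt t • z) * Wt V (fun _ => 1) t z) ?_ _
  have p1 : PC (fun _ : Eu n => (1 : ℝ)) := PC.const 1
  have p2 : PC (fun x : Eu n => ‖x‖ ^ 2) := PC.norm.pow 2
  let F' : ℝ → Eu n → ℝ := fun s z => ft s (Real.sqrt s • z) * Wt V (fun _ => 1) s z
    - 1 / 2 * (f s (Real.sqrt s • z) * Wt V (fun x => ‖x‖ ^ 2) s z)
    + ∑ i, 1 / (2 * Real.sqrt s) * (z i * (fi i s (Real.sqrt s • z) * Wt V (fun _ => 1) s z)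
      + z i * (f s (Real.sqrt s • z) * Wt V (fun x => x i) s z))
  obtain ⟨D1, hD1, -, H1⟩ := hf.pbt.dom hβ hL p1
  obtain ⟨D2, hD2, -, H2⟩ := hf.pb.dom hβ hL p2
  choose D3 _ hD3 H3 using fun i => (hf.pbi i).dom hβ hL p1
  choose D4 _ hD4 H4 using fun i => hf.pb.dom hβ hL (PC.coord i)
  have hs : Set.Ioo (t / 2) 1 ∈ nhds t := Ioo_mem_nhds (by linarith [ht.1]) ht.2
  have hsub : ∀ s ∈ Set.Ioo (t / 2) 1, s ∈ Set.Ioo (0 : ℝ) 1 := fun s hs => ⟨by linarith [hs.1, ht.1], hs.2⟩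
  have hder : ∀ z, ∀ s ∈ Set.Ioo (0 : ℝ) 1, HasDerivAt (fun s => f s (Real.sqrt s • z) * Wt V (fun _ => 1) s z)
      (F' s z) s := by
    intro z s hs
    have hs0 : 0 < Real.sqrt s := Real.sqrt_pos.2 hs.1
    have a := ((hf.hd s hs (Real.sqrt s • z)).mul (Iw_HD hL p1 (lt hs) (Real.sqrt s • z))).deriv_path
      (τ := fun s => s) (c := fun s => Real.sqrt s • z) (s := s) (hasDerivAt_id s)
      ((Real.hasDerivAt_sqrt hs.1.ne').smul_const z) rfl rfl
    have b := a.mul_const (Real.exp (-(‖z‖ ^ 2 / 2)))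
    suffices hh : F' s z = _ by
      rw [hh]; simp only [Wt, ← mul_assoc]; exact b
    simp only [F', Wt, mul_one, PiLp.smul_apply, smul_eq_mul, add_mul, Finset.sum_mul]
    congr 1
    · ring
    · exact Finset.sum_congr rfl fun i _ => by ring
  have hI1 := Ed_integrable hV hf.pbt p1 ht (hf.ct t ht)
  have hI2 := Ed_integrable hV hf.pb p2 ht (hf.cont ht)
  have hI3 := fun i => Ed_integrable' hV (hf.pbi i) p1 ht (hf.conti ht i) i
  have hI4 := fun i => Ed_integrable' hV hf.pb (PC.coord i) ht (hf.cont ht) i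
  have hF'i : Integrable (F' t) := (hI1.sub (hI2.const_mul _)).add
    (integrable_finsetSum _ fun i _ => ((hI3 i).add (hI4 i)).const_mul _)
  have key := (hasDerivAt_integral_of_dominated_loc_of_deriv_le (μ := (volume : Measure (Eu n)))
    (F := fun s z => f s (Real.sqrt s • z) * Wt V (fun _ => 1) s z) (F' := F')
    (bound := fun z => D1 z + 1 / 2 * D2 z + ∑ i, 1 / (2 * Real.sqrt (t / 2)) * (D3 i z * ‖z‖ + D4 i z * ‖z‖)) hs
    (Filter.mem_of_superset hs fun s hs => (Ed_integrable hV hf.pb p1 (hsub s hs) (hf.cont (hsub s hs))).aestronglyMeasurable)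
    (Ed_integrable hV hf.pb p1 ht (hf.cont ht)) hF'i.aestronglyMeasurable
    (Filter.Eventually.of_forall fun z s hs => ?_)
    ((hD1.add (hD2.const_mul _)).add (integrable_finsetSum _ fun i _ => ((hD3 i).add (hD4 i)).const_mul _))
    (Filter.Eventually.of_forall fun z s hs => hder z s (hsub s hs))).2
  · suffices hh : ∫ z, Lgen V ft fi fii t (Real.sqrt t • z) * Wt V (fun _ => 1) t z = ∫ z, F' t z by
      rw [hh]; exact key
    have hst : 0 < Real.sqrt t := Real.sqrt_pos.2 ht.1
    have J3 := fun i => Ed_integrable hV (hf.pbii i) p1 ht (hf.cii t ht i)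
    have J4 := fun i => Ed_integrable hV (hf.pbi i) (PC.coord i) ht (hf.conti ht i)
    have J5 := fun i => Ed_integrable hV hf.pb ((PC.coord i).mul (PC.coord i)) ht (hf.cont ht)
    have dI : ∀ {ψ : Eu n → ℝ}, PC ψ → Differentiable ℝ (Iw V ψ t) := fun hψ y => (Iw_HD hL hψ (lt ht) y).differentiableAt
    have b1 : ∀ i, ∫ z, z i * (fi i t (Real.sqrt t • z) * Wt V (fun _ => 1) t z) = Real.sqrt t *
        ((∫ z, fii i t (Real.sqrt t • z) * Wt V (fun _ => 1) t z) + ∫ z, fi i t (Real.sqrt t • z) * Wt V (fun x => x i) t z) := by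
      intro i
      have hg : Differentiable ℝ (fun y => fi i t y * Iw V (fun _ => 1) t y) := fun y => (hf.hdi t ht y i).1.mul (dI p1 y)
      have hp : ∀ y, pd i (fun y => fi i t y * Iw V (fun _ => 1) t y) y =
          fii i t y * Iw V (fun _ => 1) t y + fi i t y * Iw V (fun x => x i) t y := fun y => by
        rw [pd_mul (hf.hdi t ht y i).1 (dI p1 y), (hf.hdi t ht y i).2, (Iw_HD hL p1 (lt ht) y).pd_eq]; simp
      have := gauss_ibp (t := t) i hg (by simpa only [Wt, mul_assoc] using Ed_integrable hV (hf.pbi i) p1 ht (hf.conti ht i))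
        (by simp only [hp, add_mul]; simpa only [Wt, mul_assoc] using (J3 i).fun_add (J4 i))
        (by simpa only [Wt, mul_assoc] using hI3 i)
      simp only [hp, add_mul] at this
      rw [← integral_add (J3 i) (J4 i)]
      simpa only [Wt, mul_assoc] using this
    have b2 : ∀ i, ∫ z, z i * (f t (Real.sqrt t • z) * Wt V (fun x => x i) t z) = Real.sqrt t *
        ((∫ z, fi i t (Real.sqrt t • z) * Wt V (fun x => x i) t z) + ∫ z, f t (Real.sqrt t • z) * Wt V (fun x => x i * x i) t z) := by
      intro i
      have hd := fun y => (hf.hd t ht y).differentiableAt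
      have hg : Differentiable ℝ (fun y => f t y * Iw V (fun x => x i) t y) := fun y => (hd y).mul (dI (PC.coord i) y)
      have hp : ∀ y, pd i (fun y => f t y * Iw V (fun x => x i) t y) y =
          fi i t y * Iw V (fun x => x i) t y + f t y * Iw V (fun x => x i * x i) t y := fun y => by
        rw [pd_mul (hd y) (dI (PC.coord i) y), (hf.hd t ht y).pd_eq, (Iw_HD hL (PC.coord i) (lt ht) y).pd_eq]
      have := gauss_ibp (t := t) i hg (by simpa only [Wt, mul_assoc] using Ed_integrable hV hf.pb (PC.coord i) ht (hf.cont ht))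
        (by simp only [hp, add_mul]; simpa only [Wt, mul_assoc] using (J4 i).fun_add (J5 i))
        (by simpa only [Wt, mul_assoc] using hI4 i)
      simp only [hp, add_mul] at this
      rw [← integral_add (J4 i) (J5 i)]
      simpa only [Wt, mul_assoc] using this
    have e1 : ∫ z, F' t z = (∫ z, ft t (Real.sqrt t • z) * Wt V (fun _ => 1) t z)
        - 1 / 2 * (∑ i, ∫ z, f t (Real.sqrt t • z) * Wt V (fun x => x i * x i) t z)
        + ∑ i, 1 / (2 * Real.sqrt t) * ((∫ z, z i * (fi i t (Real.sqrt t • z) * Wt V (fun _ => 1) t z))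
          + ∫ z, z i * (f t (Real.sqrt t • z) * Wt V (fun x => x i) t z)) := by
      simp only [F']
      rw [integral_add (hI1.sub' (hI2.const_mul _)) (integrable_finsetSum _ fun i _ => ((hI3 i).fun_add (hI4 i)).const_mul _),
        integral_sub hI1 (hI2.const_mul _), integral_finsetSum _ fun i _ => ((hI3 i).fun_add (hI4 i)).const_mul _]
      simp only [integral_const_mul]
      congr 1
      · congr 2
        rw [← integral_finsetSum _ fun i _ => J5 i]
        congr 1; ext z; rw [Wt_congr_sq hL (lt ht), Finset.mul_sum]
      · refine Finset.sum_congr rfl fun i _ => ?_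
        rw [integral_add (hI3 i) (hI4 i)]
    have e2 : ∫ z, Lgen V ft fi fii t (Real.sqrt t • z) * Wt V (fun _ => 1) t z =
        (∫ z, ft t (Real.sqrt t • z) * Wt V (fun _ => 1) t z) +
        ∑ i, ((∫ z, fi i t (Real.sqrt t • z) * Wt V (fun x => x i) t z) +
          1 / 2 * ∫ z, fii i t (Real.sqrt t • z) * Wt V (fun _ => 1) t z) := by
      have : ∀ z, Lgen V ft fi fii t (Real.sqrt t • z) * Wt V (fun _ => 1) t z =
          ft t (Real.sqrt t • z) * Wt V (fun _ => 1) t z +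
          ∑ i, (fi i t (Real.sqrt t • z) * Wt V (fun x => x i) t z +
            1 / 2 * (fii i t (Real.sqrt t • z) * Wt V (fun _ => 1) t z)) := fun z => by
        rw [Lgen, add_mul, Finset.sum_mul]
        congr 1
        exact Finset.sum_congr rfl fun i _ => by rw [Wt_Ep hL (lt ht) z (ψ := fun x => x i)]; ring
      simp only [this]
      rw [integral_add hI1 (integrable_finsetSum _ fun i _ => (J4 i).fun_add ((J3 i).const_mul _)),
        integral_finsetSum _ fun i _ => (J4 i).fun_add ((J3 i).const_mul _)]
      congr 1
      refine Finset.sum_congr rfl fun i _ => ?_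
      rw [integral_add (J4 i) ((J3 i).const_mul _), integral_const_mul]
    rw [e1, e2, Finset.mul_sum, sub_add, sub_eq_add_neg, ← Finset.sum_sub_distrib, ← Finset.sum_neg_distrib]
    congr 1
    refine Finset.sum_congr rfl fun i _ => ?_
    rw [b1, b2]; field_simp; ring
  · have hs' := hsub s hs
    have hsq : 1 / (2 * Real.sqrt s) ≤ 1 / (2 * Real.sqrt (t / 2)) := by
      have : 0 < Real.sqrt (t / 2) := Real.sqrt_pos.2 (by linarith [ht.1])
      have := Real.sqrt_le_sqrt hs.1.le
      gcongr
    rw [Real.norm_eq_abs]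
    refine (abs_add_le _ _).trans (add_le_add ((abs_sub _ _).trans (add_le_add (H1 s hs' z) ?_))
      ((Finset.abs_sum_le_sum_abs _ _).trans (Finset.sum_le_sum fun i _ => ?_)))
    · rw [abs_mul, abs_of_pos (by norm_num : (0:ℝ) < 1 / 2)]
      exact mul_le_mul_of_nonneg_left (H2 s hs' z) (by norm_num)
    · rw [abs_mul, abs_of_nonneg (by positivity : 0 ≤ 1 / (2 * Real.sqrt s))]
      refine mul_le_mul hsq ((abs_add_le _ _).trans (add_le_add ?_ ?_)) (abs_nonneg _) (by positivity)
      · rw [abs_mul, mul_comm]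
        exact mul_le_mul (H3 i s hs' z) (abs_coord_le z i) (abs_nonneg _) ((abs_nonneg _).trans (H3 i s hs' z))
      · rw [abs_mul, mul_comm]
        exact mul_le_mul (H4 i s hs' z) (abs_coord_le z i) (abs_nonneg _) ((abs_nonneg _).trans (H4 i s hs' z))

lemma gauss_pos : 0 < In (fun z : Eu n => ‖z‖ ^ 2 / 2) (fun _ => 1) := by
  have : QG (fun z : Eu n => ‖z‖ ^ 2 / 2) := ⟨by fun_prop, 1 / 2, 0, by norm_num, fun x => by linarith⟩
  exact In_one_pos this

lemma Ed_mono {V : Eu n → ℝ} (hV : BaseV V) {f g : ℝ → Eu n → ℝ} (hf : PBu f) (hg : PBu g) {t : ℝ}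
    (ht : t ∈ Set.Ioo (0 : ℝ) 1) (cf : Continuous (f t)) (cg : Continuous (g t)) (h : ∀ y, f t y ≤ g t y) :
    Ed V f t ≤ Ed V g t := by
  refine div_le_div_of_nonneg_right ?_ gauss_pos.le
  refine integral_mono (Ed_integrable hV hf (PC.const 1) ht cf) (Ed_integrable hV hg (PC.const 1) ht cg) fun z => ?_
  have : 0 ≤ Wt V (fun _ => 1) t z := mul_nonneg (In_nonneg fun _ => zero_le_one) (Real.exp_pos _).le
  exact mul_le_mul_of_nonneg_right (h _) this

lemma Ed_add {V : Eu n → ℝ} (hV : BaseV V) {f g : ℝ → Eu n → ℝ} (hf : PBu f) (hg : PBu g) {t : ℝ}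
    (ht : t ∈ Set.Ioo (0 : ℝ) 1) (cf : Continuous (f t)) (cg : Continuous (g t)) :
    Ed V (fun t y => f t y + g t y) t = Ed V f t + Ed V g t := by
  simp only [Ed, add_mul]
  rw [integral_add (Ed_integrable hV hf (PC.const 1) ht cf) (Ed_integrable hV hg (PC.const 1) ht cg), add_div]

lemma Ed_cmul {V : Eu n → ℝ} (c : ℝ) {f : ℝ → Eu n → ℝ} {t : ℝ} :
    Ed V (fun t y => c * f t y) t = c * Ed V f t := by
  simp only [Ed, mul_assoc]
  rw [integral_const_mul, mul_div_assoc]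

lemma Ed_congr {V : Eu n → ℝ} {f g : ℝ → Eu n → ℝ} {t : ℝ} (h : ∀ y, f t y = g t y) : Ed V f t = Ed V g t := by
  simp only [Ed, h]

/-- As `t → 0` the observation concentrates at `0`, so expectations tend to the value at `(0, 0)`. -/
lemma Ed_tendsto {V : Eu n → ℝ} (hV : BaseV V) (h1 : In V (fun _ => 1) = 1) {f : ℝ → Eu n → ℝ} (hf : PBu f)
    (cf : ∀ t ∈ Set.Ioo (0 : ℝ) 1, Continuous (f t)) (h0 : ContinuousAt (fun p : ℝ × Eu n => f p.1 p.2) (0, 0)) :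
    Filter.Tendsto (Ed V f) (nhdsWithin 0 (Set.Ioi 0)) (nhds (f 0 0)) := by
  obtain ⟨β, hβ, hL⟩ := hV.lb
  have hg := (gauss_pos (n := n)).ne'
  have e : f 0 0 = (∫ z : Eu n, f 0 0 * Real.exp (-(‖z‖ ^ 2 / 2))) / In (fun z : Eu n => ‖z‖ ^ 2 / 2) (fun _ => 1) := by
    rw [integral_const_mul]; simp only [In, one_mul] at hg ⊢; field_simp
  rw [e]
  refine Filter.Tendsto.div_const ?_ _
  obtain ⟨D, hD, -, H⟩ := hf.dom hβ hL (PC.const 1)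
  have hev : ∀ᶠ t in nhdsWithin (0:ℝ) (Set.Ioi 0), t ∈ Set.Ioo (0 : ℝ) 1 := Ioo_mem_nhdsGT one_pos
  refine tendsto_integral_filter_of_dominated_convergence D
    (hev.mono fun t ht => (Ed_integrable hV hf (PC.const 1) ht (cf t ht)).aestronglyMeasurable)
    (hev.mono fun t ht => Filter.Eventually.of_forall fun z => H t ht z) hD (Filter.Eventually.of_forall fun z => ?_)
  have hc : Filter.Tendsto (fun t : ℝ => (t, Real.sqrt t • z)) (nhdsWithin 0 (Set.Ioi 0)) (nhds ((0 : ℝ), (0 : Eu n))) := by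
    have : Continuous fun t : ℝ => (t, Real.sqrt t • z) := by fun_prop
    have := this.tendsto 0
    simp only [Real.sqrt_zero, zero_smul] at this
    exact this.mono_left nhdsWithin_le_nhds
  have a1 := h0.tendsto.comp hc
  have a2 := ((Iw_HD hL (PC.const 1) (by linarith : -β < 0) (0 : Eu n)).continuousAt.tendsto.comp hc).mul_const
    (Real.exp (-(‖z‖ ^ 2 / 2)))
  have e3 : Iw V (fun _ => 1) 0 (0 : Eu n) = 1 := by
    have : pot V 0 (0 : Eu n) = V := by ext x; simp [pot]
    rw [Iw, this, h1]
  have := a1.mul a2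
  simp only [e3, one_mul] at this
  exact this

lemma le_of_deriv_nonpos {u u' : ℝ → ℝ} {c : ℝ} {a : ℝ} (h : ∀ t ∈ Set.Ioo 0 a, HasDerivAt u (u' t) t)
    (h' : ∀ t ∈ Set.Ioo 0 a, u' t ≤ 0) (h0 : Filter.Tendsto u (nhdsWithin 0 (Set.Ioi 0)) (nhds c)) {t : ℝ}
    (ht : t ∈ Set.Ioo 0 a) : u t ≤ c := by
  have hanti : AntitoneOn u (Set.Ioo 0 a) := by
    refine antitoneOn_of_deriv_nonpos (convex_Ioo 0 a) (fun s hs => (h s hs).continuousAt.continuousWithinAt)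
      (fun s hs => ?_) fun s hs => ?_
    · rw [interior_Ioo] at hs; exact (h s hs).differentiableAt.differentiableWithinAt
    · rw [interior_Ioo] at hs; rw [(h s hs).deriv]; exact h' s hs
  refine ge_of_tendsto h0 (Filter.mem_of_superset (Ioo_mem_nhdsGT ht.1) fun s hs => ?_)
  exact hanti ⟨hs.1, hs.2.trans ht.2⟩ ht hs.2.le

/-- Martingale property: functions annihilated by the generator have constant expectation. -/
lemma Ed_martingale {V : Eu n → ℝ} (hV : BaseV V) (h1 : In V (fun _ => 1) = 1) {f ft : ℝ → Eu n → ℝ}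
    {fi fii : Fin n → ℝ → Eu n → ℝ} (hf : Cls f ft fi fii) (h0 : ContinuousAt (fun p : ℝ × Eu n => f p.1 p.2) (0, 0))
    (hl : ∀ t ∈ Set.Ioo (0 : ℝ) 1, ∀ y, Lgen V ft fi fii t y = 0) {t : ℝ} (ht : t ∈ Set.Ioo (0 : ℝ) 1) :
    Ed V f t = f 0 0 := by
  have hl' : ∀ t ∈ Set.Ioo (0 : ℝ) 1, Ed V (Lgen V ft fi fii) t = 0 := fun t ht => by
    simp [Ed, hl t ht]
  have hd := fun t ht => dynkin hV hf (t := t) ht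
  have hT := Ed_tendsto hV h1 hf.pb (fun t ht => hf.cont ht) h0
  refine le_antisymm (le_of_deriv_nonpos hd (fun t ht => (hl' t ht).le) hT ht) ?_
  have := le_of_deriv_nonpos (u := fun t => -Ed V f t) (fun t ht => (hd t ht).neg)
    (fun t ht => by rw [hl' t ht, neg_zero]) hT.neg ht
  linarith

/-- Tower property: the posterior expectation averages to the prior expectation. -/
lemma Ed_Ep {V ψ : Eu n → ℝ} (hV : BaseV V) (h1 : In V (fun _ => 1) = 1) (hψ : PC ψ) {t : ℝ} (ht : t ∈ Set.Ioo (0 : ℝ) 1) :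
    Ed V (Ep V ψ) t = Ep V ψ 0 0 := by
  obtain ⟨β, hβ, hL⟩ := hV.lb
  exact Ed_martingale hV h1 (hV.cls hψ) (Ep_HD hL hψ (by linarith) 0).continuousAt
    (fun t ht y => Lgen_Ep hL hψ (by linarith [ht.1]) y) ht

lemma Ed_const {V : Eu n → ℝ} (hV : BaseV V) (h1 : In V (fun _ => 1) = 1) (c : ℝ) {t : ℝ} (ht : t ∈ Set.Ioo (0 : ℝ) 1) :
    Ed V (fun _ _ => c) t = c :=
  Ed_martingale hV h1 (Cls.const c) continuousAt_const (fun t ht y => by simp [Lgen]) ht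

end dynkin

/-! ### Traces of matrix powers -/

section mat
open Matrix
variable {n : ℕ}

/-- First derivative of the matrix power `M ^ p` in a direction `H`. -/
def dpow (M H : Matrix (Fin n) (Fin n) ℝ) (p : ℕ) : Matrix (Fin n) (Fin n) ℝ :=
  ∑ a ∈ Finset.range p, M ^ a * H * M ^ (p - 1 - a)

/-- Second derivative of `M ^ p` along a curve with velocity `H` and acceleration `J`. -/
def ddpow (M H J : Matrix (Fin n) (Fin n) ℝ) (p : ℕ) : Matrix (Fin n) (Fin n) ℝ :=
  ∑ a ∈ Finset.range p, (dpow M H a * H * M ^ (p - 1 - a) + M ^ a * J * M ^ (p - 1 - a) + M ^ a * H * dpow M H (p - 1 - a))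

lemma dpow_zero (M H : Matrix (Fin n) (Fin n) ℝ) : dpow M H 0 = 0 := by simp [dpow]

lemma dpow_succ (M H : Matrix (Fin n) (Fin n) ℝ) (p : ℕ) : dpow M H (p + 1) = dpow M H p * M + M ^ p * H := by
  rw [dpow, Finset.sum_range_succ, dpow, Finset.sum_mul]
  congr 1
  · refine Finset.sum_congr rfl fun a ha => ?_
    rw [Finset.mem_range] at ha
    rw [show p + 1 - 1 - a = (p - 1 - a) + 1 by omega, pow_succ]; simp only [mul_assoc]
  · simp

lemma ddpow_succ (M H J : Matrix (Fin n) (Fin n) ℝ) (p : ℕ) :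
    ddpow M H J (p + 1) = ddpow M H J p * M + (2 : ℝ) • (dpow M H p * H) + M ^ p * J := by
  rw [ddpow, Finset.sum_range_succ]
  have e : ∑ a ∈ Finset.range p, (dpow M H a * H * M ^ (p + 1 - 1 - a) + M ^ a * J * M ^ (p + 1 - 1 - a) +
      M ^ a * H * dpow M H (p + 1 - 1 - a)) = ddpow M H J p * M + dpow M H p * H := by
    rw [ddpow, Finset.sum_mul]
    conv_rhs => rw [dpow, Finset.sum_mul]
    rw [← Finset.sum_add_distrib]
    refine Finset.sum_congr rfl fun a ha => ?_
    rw [Finset.mem_range] at ha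
    rw [show p + 1 - 1 - a = (p - 1 - a) + 1 by omega, dpow_succ, pow_succ]
    simp only [mul_assoc, mul_add, add_mul]
    abel
  rw [e]
  simp only [Nat.add_sub_cancel, Nat.sub_self, pow_zero, mul_one, dpow_zero, mul_zero, add_zero, two_smul]
  abel

lemma trace_dpow (M H : Matrix (Fin n) (Fin n) ℝ) (p : ℕ) : (dpow M H p).trace = p * (M ^ (p - 1) * H).trace := by
  rw [dpow, trace_sum]
  have : ∀ a ∈ Finset.range p, (M ^ a * H * M ^ (p - 1 - a)).trace = (M ^ (p - 1) * H).trace := fun a ha => by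
    rw [Finset.mem_range] at ha
    rw [trace_mul_comm, ← mul_assoc, ← pow_add, show p - 1 - a + a = p - 1 by omega]
  rw [Finset.sum_congr rfl this]; simp

/-- Spectral decomposition data for a real symmetric matrix. -/
structure Spec (M O : Matrix (Fin n) (Fin n) ℝ) (l : Fin n → ℝ) : Prop where
  o1 : Oᵀ * O = 1
  o2 : O * Oᵀ = 1
  eq : M = O * diagonal l * Oᵀ

lemma exists_spec {M : Matrix (Fin n) (Fin n) ℝ} (h : Mᵀ = M) : ∃ O l, Spec M O l := by
  have hM : M.IsHermitian := by rw [IsHermitian, conjTranspose_eq_transpose_of_trivial]; exact h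
  have h1 : (hM.eigenvectorUnitary : Matrix (Fin n) (Fin n) ℝ)ᵀ * hM.eigenvectorUnitary = 1 := by
    have := Unitary.coe_star_mul_self hM.eigenvectorUnitary
    rwa [star_eq_conjTranspose, conjTranspose_eq_transpose_of_trivial] at this
  refine ⟨hM.eigenvectorUnitary, hM.eigenvalues, h1, mul_eq_one_comm.1 h1, ?_⟩
  have := hM.spectral_theorem
  rw [Unitary.conjStarAlgAut_apply, star_eq_conjTranspose, conjTranspose_eq_transpose_of_trivial] at this
  exact this

lemma Spec.pow {M O : Matrix (Fin n) (Fin n) ℝ} {l : Fin n → ℝ} (h : Spec M O l) (a : ℕ) :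
    M ^ a = O * diagonal (fun i => l i ^ a) * Oᵀ := by
  induction a with
  | zero => simp [h.o2]
  | succ a ih =>
    rw [pow_succ, ih]
    conv_lhs => rw [h.eq]
    calc _ = O * diagonal (fun i => l i ^ a) * (Oᵀ * O) * diagonal l * Oᵀ := by simp only [mul_assoc]
      _ = _ := by rw [h.o1, mul_one, mul_assoc O, diagonal_mul_diagonal]; simp only [pow_succ]

lemma Spec.trace_pow {M O : Matrix (Fin n) (Fin n) ℝ} {l : Fin n → ℝ} (h : Spec M O l) (a : ℕ) :
    (M ^ a).trace = ∑ i, l i ^ a := by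
  rw [h.pow, trace_mul_comm, ← mul_assoc, h.o1, one_mul, trace_diagonal]

lemma Spec.trace_pow_sq {M O : Matrix (Fin n) (Fin n) ℝ} {l : Fin n → ℝ} (h : Spec M O l) (a : ℕ) :
    (M ^ a * ((1 + M) * (1 + M))).trace = ∑ i, l i ^ a * (1 + l i) ^ 2 := by
  have : M ^ a * ((1 + M) * (1 + M)) = M ^ a + (2 : ℝ) • M ^ (a + 1) + M ^ (a + 2) := by
    rw [pow_add, pow_add, two_smul, pow_one, pow_two]; noncomm_ring
  rw [this, trace_add, trace_add, trace_smul, h.trace_pow, h.trace_pow, h.trace_pow, smul_eq_mul, Finset.mul_sum,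
    ← Finset.sum_add_distrib, ← Finset.sum_add_distrib]
  exact Finset.sum_congr rfl fun i _ => by ring

lemma pow_mul_pow_le {x y : ℝ} (a b : ℕ) : |x ^ a * y ^ b| ≤ |x| ^ (a + b) + |y| ^ (a + b) := by
  rw [abs_mul, abs_pow, abs_pow, pow_add, pow_add]
  have hx := abs_nonneg x
  have hy := abs_nonneg y
  rcases le_total |x| |y| with h | h
  · have := pow_le_pow_left₀ hx h a
    have h1 : 0 ≤ |x| ^ a * |x| ^ b := by positivity
    have h2 : |x| ^ a * |y| ^ b ≤ |y| ^ a * |y| ^ b := by gcongr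
    linarith
  · have h1 : 0 ≤ |y| ^ a * |y| ^ b := by positivity
    have h2 : |x| ^ a * |y| ^ b ≤ |x| ^ a * |x| ^ b := by gcongr
    linarith

lemma Spec.trace_le {M O H : Matrix (Fin n) (Fin n) ℝ} {l : Fin n → ℝ} (h : Spec M O l) (hH : Hᵀ = H) (a b : ℕ) :
    (M ^ a * H * (M ^ b * H)).trace ≤ 2 * ∑ i, |l i| ^ (a + b) * ∑ j, (∑ k, H j k * O k i) ^ 2 := by
  set G := Oᵀ * H * O with hG
  have hGs : ∀ i j, G i j = G j i := fun i j => by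
    have : Gᵀ = G := by rw [hG]; simp [transpose_mul, hH, mul_assoc]
    conv_lhs => rw [← this, transpose_apply]
  have e1 : (M ^ a * H * (M ^ b * H)).trace = ∑ i, ∑ j, l i ^ a * l j ^ b * G i j ^ 2 := by
    have : (M ^ a * H * (M ^ b * H)).trace =
        (diagonal (fun i => l i ^ a) * G * (diagonal (fun i => l i ^ b) * G)).trace := by
      rw [h.pow a, h.pow b, hG]
      rw [show O * diagonal (fun i => l i ^ a) * Oᵀ * H * (O * diagonal (fun i => l i ^ b) * Oᵀ * H) =
        O * (diagonal (fun i => l i ^ a) * Oᵀ * H * (O * diagonal (fun i => l i ^ b) * Oᵀ * H)) by simp only [mul_assoc],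
        trace_mul_comm]
      congr 1; simp only [mul_assoc]
    rw [this]
    simp only [trace, diag_apply, mul_apply (M := diagonal (fun i => l i ^ a) * G), diagonal_mul]
    refine Finset.sum_congr rfl fun i _ => Finset.sum_congr rfl fun j _ => ?_
    rw [hGs j i]; ring
  have e2 : ∀ i, ∑ j, G i j ^ 2 = ∑ j, (∑ k, H j k * O k i) ^ 2 := fun i => by
    have e3 : Gᵀ * G = (H * O)ᵀ * (H * O) := by
      rw [hG]; simp only [transpose_mul, transpose_transpose, hH]
      calc _ = Oᵀ * H * (O * Oᵀ) * H * O := by simp only [mul_assoc]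
        _ = _ := by rw [h.o2, mul_one]; simp only [mul_assoc]
    have e4 := congrFun (congrFun e3 i) i
    simp only [mul_apply (M := Gᵀ), mul_apply (M := (H * O)ᵀ), transpose_apply, ← sq] at e4
    rw [show ∑ j, G i j ^ 2 = ∑ j, G j i ^ 2 from Finset.sum_congr rfl fun j _ => by rw [hGs], e4]
    simp only [mul_apply]
  rw [e1]
  calc _ ≤ ∑ i, ∑ j, (|l i| ^ (a + b) * G i j ^ 2 + |l j| ^ (a + b) * G i j ^ 2) := by
        refine Finset.sum_le_sum fun i _ => Finset.sum_le_sum fun j _ => ?_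
        rw [← add_mul]
        exact mul_le_mul_of_nonneg_right ((le_abs_self _).trans (pow_mul_pow_le a b)) (sq_nonneg _)
    _ = 2 * ∑ i, ∑ j, |l i| ^ (a + b) * G i j ^ 2 := by
        simp only [Finset.sum_add_distrib]
        rw [two_mul]; congr 1
        rw [Finset.sum_comm]
        exact Finset.sum_congr rfl fun i _ => Finset.sum_congr rfl fun j _ => by rw [hGs]
    _ = _ := by
        congr 1; refine Finset.sum_congr rfl fun i _ => ?_
        rw [← Finset.mul_sum, e2]

lemma Spec.sum_trace_le {M O : Matrix (Fin n) (Fin n) ℝ} {l : Fin n → ℝ} (h : Spec M O l)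
    {T : Fin n → Matrix (Fin n) (Fin n) ℝ} (hT : ∀ k, (T k)ᵀ = T k) {B : ℝ}
    (hB : ∀ v : Fin n → ℝ, ∑ k, ∑ i, (∑ j, T k i j * v j) ^ 2 ≤ B * ∑ j, v j ^ 2) (a b : ℕ) :
    ∑ k, (M ^ a * T k * (M ^ b * T k)).trace ≤ 2 * B * ∑ i, |l i| ^ (a + b) := by
  have hO : ∀ i, ∑ j, O j i ^ 2 = 1 := fun i => by
    have := congrFun (congrFun h.o1 i) i
    simpa [mul_apply, ← sq] using this
  calc _ ≤ ∑ k, 2 * ∑ i, |l i| ^ (a + b) * ∑ j, (∑ m, T k j m * O m i) ^ 2 :=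
        Finset.sum_le_sum fun k _ => h.trace_le (hT k) a b
    _ = 2 * ∑ i, |l i| ^ (a + b) * ∑ k, ∑ j, (∑ m, T k j m * O m i) ^ 2 := by
        rw [← Finset.mul_sum, Finset.sum_comm]; simp only [Finset.mul_sum]
    _ ≤ 2 * ∑ i, |l i| ^ (a + b) * B := by
        gcongr with i _
        have := hB (fun m => O m i)
        rwa [hO, mul_one] at this
    _ = _ := by rw [← Finset.sum_mul]; ring

/-- Upper bound for the generator applied to `tr M ^ q`, when it sends `M` to `-(1 + M)²` and the space derivatives
`T k` of `M` satisfy the quadratic bound `B`. -/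
lemma Spec.gen_bound {M O : Matrix (Fin n) (Fin n) ℝ} {l : Fin n → ℝ} (h : Spec M O l)
    {T J : Fin n → Matrix (Fin n) (Fin n) ℝ} (hT : ∀ k, (T k)ᵀ = T k) {B : ℝ} (hB0 : 0 ≤ B)
    (hB : ∀ v : Fin n → ℝ, ∑ k, ∑ i, (∑ j, T k i j * v j) ^ 2 ≤ B * ∑ j, v j ^ 2)
    {Mt : Matrix (Fin n) (Fin n) ℝ} {c : Fin n → ℝ}
    (hgen : Mt + ∑ k, (c k • T k + (1 / 2 : ℝ) • J k) = -((1 + M) * (1 + M))) {r : ℝ} (hr : ∀ i, |l i| ≤ r)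
    {q : ℕ} :
    (dpow M Mt q).trace + ∑ k, (c k * (dpow M (T k) q).trace + 1 / 2 * (ddpow M (T k) (J k) q).trace) ≤
      q * (1 + r) ^ 2 * (∑ i, |l i| ^ (q - 1)) + q ^ 2 * B * ∑ i, |l i| ^ (q - 2) := by
  have hQ0 : 0 ≤ ∑ i, |l i| ^ (q - 2) := Finset.sum_nonneg fun i _ => by positivity
  have e1 : ∀ k, (ddpow M (T k) (J k) q).trace = q * (M ^ (q - 1) * J k).trace +
      ∑ a ∈ Finset.range q, ((∑ b ∈ Finset.range a, (M ^ (q - 1 - a + b) * T k * (M ^ (a - 1 - b) * T k)).trace) +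
        ∑ b ∈ Finset.range (q - 1 - a), (M ^ (q - 1 - a - 1 - b + a) * T k * (M ^ b * T k)).trace) := fun k => by
    rw [← trace_dpow, ddpow, dpow, trace_sum, trace_sum, ← Finset.sum_add_distrib]
    refine Finset.sum_congr rfl fun a _ => ?_
    rw [trace_add, trace_add, add_comm (trace _) (trace _), add_assoc]
    congr 1
    congr 1
    · rw [dpow, Finset.sum_mul, Finset.sum_mul, trace_sum]
      refine Finset.sum_congr rfl fun b _ => ?_
      rw [trace_mul_comm, pow_add]; simp only [mul_assoc]
    · rw [dpow, Finset.mul_sum, trace_sum]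
      refine Finset.sum_congr rfl fun b _ => ?_
      rw [← mul_assoc, trace_mul_comm, pow_add]; simp only [mul_assoc]
  have e2 : (dpow M Mt q).trace + ∑ k, (c k * (dpow M (T k) q).trace + 1 / 2 * (ddpow M (T k) (J k) q).trace) =
      -(q * (M ^ (q - 1) * ((1 + M) * (1 + M))).trace) + 1 / 2 * ∑ a ∈ Finset.range q,
        ((∑ b ∈ Finset.range a, ∑ k, (M ^ (q - 1 - a + b) * T k * (M ^ (a - 1 - b) * T k)).trace) +
        ∑ b ∈ Finset.range (q - 1 - a), ∑ k, (M ^ (q - 1 - a - 1 - b + a) * T k * (M ^ b * T k)).trace) := by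
    have : -(q * (M ^ (q - 1) * ((1 + M) * (1 + M))).trace) = (q : ℝ) * (M ^ (q - 1) * Mt).trace +
        ∑ k, (c k * (q * (M ^ (q - 1) * T k).trace) + 1 / 2 * (q * (M ^ (q - 1) * J k).trace)) := by
      rw [← mul_neg, ← trace_neg, ← mul_neg, ← hgen, mul_add, trace_add, Finset.mul_sum, trace_sum, mul_add, Finset.mul_sum]
      congr 1
      refine Finset.sum_congr rfl fun k _ => ?_
      rw [mul_add, trace_add, mul_smul_comm, mul_smul_comm, trace_smul, trace_smul, smul_eq_mul, smul_eq_mul]; ring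
    rw [this]
    simp only [trace_dpow, e1]
    rw [add_assoc]; congr 1
    have sw : ∑ a ∈ Finset.range q,
        ((∑ b ∈ Finset.range a, ∑ k, (M ^ (q - 1 - a + b) * T k * (M ^ (a - 1 - b) * T k)).trace) +
        ∑ b ∈ Finset.range (q - 1 - a), ∑ k, (M ^ (q - 1 - a - 1 - b + a) * T k * (M ^ b * T k)).trace) =
        ∑ k, ∑ a ∈ Finset.range q, ((∑ b ∈ Finset.range a, (M ^ (q - 1 - a + b) * T k * (M ^ (a - 1 - b) * T k)).trace) +
        ∑ b ∈ Finset.range (q - 1 - a), (M ^ (q - 1 - a - 1 - b + a) * T k * (M ^ b * T k)).trace) := by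
      rw [Finset.sum_comm]
      refine Finset.sum_congr rfl fun a _ => ?_
      rw [Finset.sum_add_distrib]
      congr 1 <;> exact Finset.sum_comm
    rw [sw, Finset.mul_sum, ← Finset.sum_add_distrib]
    exact Finset.sum_congr rfl fun k _ => by ring
  rw [e2]
  have b1 : -(q * (M ^ (q - 1) * ((1 + M) * (1 + M))).trace) ≤ q * (1 + r) ^ 2 * (∑ i, |l i| ^ (q - 1)) := by
    rw [h.trace_pow_sq, ← mul_neg, mul_assoc]
    refine mul_le_mul_of_nonneg_left ?_ (by positivity)
    rw [← Finset.sum_neg_distrib, Finset.mul_sum]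
    refine Finset.sum_le_sum fun i _ => ?_
    have h1 : -(l i ^ (q - 1)) ≤ |l i| ^ (q - 1) := by rw [← abs_pow]; exact neg_le_abs _
    have h2 : (1 + l i) ^ 2 ≤ (1 + r) ^ 2 := by
      have := abs_le.1 (hr i)
      have h0 := (abs_nonneg _).trans (hr i)
      exact sq_le_sq' (by linarith) (by linarith)
    calc _ = -(l i ^ (q - 1)) * (1 + l i) ^ 2 := by ring
      _ ≤ |l i| ^ (q - 1) * (1 + l i) ^ 2 := mul_le_mul_of_nonneg_right h1 (sq_nonneg _)
      _ ≤ |l i| ^ (q - 1) * (1 + r) ^ 2 := mul_le_mul_of_nonneg_left h2 (by positivity)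
      _ = _ := mul_comm _ _
  have b2 : ∑ a ∈ Finset.range q,
      ((∑ b ∈ Finset.range a, ∑ k, (M ^ (q - 1 - a + b) * T k * (M ^ (a - 1 - b) * T k)).trace) +
      ∑ b ∈ Finset.range (q - 1 - a), ∑ k, (M ^ (q - 1 - a - 1 - b + a) * T k * (M ^ b * T k)).trace) ≤
      ∑ a ∈ Finset.range q, (q : ℝ) * (2 * B * ∑ i, |l i| ^ (q - 2)) := by
    refine Finset.sum_le_sum fun a ha => ?_
    rw [Finset.mem_range] at ha
    have c1 : ∑ b ∈ Finset.range a, ∑ k, (M ^ (q - 1 - a + b) * T k * (M ^ (a - 1 - b) * T k)).trace ≤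
        ∑ b ∈ Finset.range a, 2 * B * ∑ i, |l i| ^ (q - 2) := Finset.sum_le_sum fun b hb => by
      rw [Finset.mem_range] at hb
      have := h.sum_trace_le hT hB (q - 1 - a + b) (a - 1 - b)
      rwa [show q - 1 - a + b + (a - 1 - b) = q - 2 by omega] at this
    have c2 : ∑ b ∈ Finset.range (q - 1 - a), ∑ k, (M ^ (q - 1 - a - 1 - b + a) * T k * (M ^ b * T k)).trace ≤
        ∑ b ∈ Finset.range (q - 1 - a), 2 * B * ∑ i, |l i| ^ (q - 2) := Finset.sum_le_sum fun b hb => by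
      rw [Finset.mem_range] at hb
      have := h.sum_trace_le hT hB (q - 1 - a - 1 - b + a) b
      rwa [show q - 1 - a - 1 - b + a + b = q - 2 by omega] at this
    refine (add_le_add c1 c2).trans ?_
    simp only [Finset.sum_const, Finset.card_range, nsmul_eq_mul]
    rw [← add_mul]
    refine mul_le_mul_of_nonneg_right ?_ (by positivity)
    have : a + (q - 1 - a) ≤ q := by omega
    exact_mod_cast this
  simp only [Finset.sum_const, Finset.card_range, nsmul_eq_mul] at b2
  nlinarith

end mat

/-! ### The posterior covariance -/

section covm
open Matrix
variable {n : ℕ}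

lemma Cls.add {f ft g gt : ℝ → Eu n → ℝ} {fi fii gi gii : Fin n → ℝ → Eu n → ℝ} (h : Cls f ft fi fii)
    (h' : Cls g gt gi gii) :
    Cls (fun t y => f t y + g t y) (fun t y => ft t y + gt t y) (fun i t y => fi i t y + gi i t y)
      (fun i t y => fii i t y + gii i t y) where
  hd t ht y := (h.hd t ht y).add (h'.hd t ht y)
  hdi t ht y i := by
    obtain ⟨a3, e3⟩ := h.hdi t ht y i
    obtain ⟨a4, e4⟩ := h'.hdi t ht y i
    refine ⟨a3.add a4, ?_⟩
    have := pd_add (i := i) a3 a4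
    exact this.trans (by rw [e3, e4])
  ct t ht := (h.ct t ht).add (h'.ct t ht)
  cii t ht i := (h.cii t ht i).add (h'.cii t ht i)
  pb := h.pb.add h'.pb
  pbt := h.pbt.add h'.pbt
  pbi i := (h.pbi i).add (h'.pbi i)
  pbii i := (h.pbii i).add (h'.pbii i)

lemma Cls.sum {ι : Type*} {s : Finset ι} {f ft : ι → ℝ → Eu n → ℝ} {fi fii : ι → Fin n → ℝ → Eu n → ℝ}
    (h : ∀ a ∈ s, Cls (f a) (ft a) (fi a) (fii a)) :
    Cls (fun t y => ∑ a ∈ s, f a t y) (fun t y => ∑ a ∈ s, ft a t y) (fun i t y => ∑ a ∈ s, fi a i t y)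
      (fun i t y => ∑ a ∈ s, fii a i t y) := by
  classical
  induction s using Finset.induction_on with
  | empty => simpa using Cls.const (n := n) 0
  | insert i s hi ih =>
    simp only [Finset.sum_insert hi]
    exact (h i (by simp)).add (ih fun j hj => h j (by simp [hj]))

lemma Cls.cmul {f ft : ℝ → Eu n → ℝ} {fi fii : Fin n → ℝ → Eu n → ℝ} (c : ℝ) (h : Cls f ft fi fii) :
    Cls (fun t y => c * f t y) (fun t y => c * ft t y) (fun i t y => c * fi i t y) (fun i t y => c * fii i t y) :=
  ((Cls.const c).mul h).congr (fun t _ y => by ring) (fun i t _ y => by ring) (fun i t _ y => by ring)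

/-- Entrywise version of `Cls` for matrix-valued functions. -/
def ClsM (M Mt : ℝ → Eu n → Matrix (Fin n) (Fin n) ℝ) (Mi Mii : Fin n → ℝ → Eu n → Matrix (Fin n) (Fin n) ℝ) : Prop :=
  ∀ a b, Cls (fun t y => M t y a b) (fun t y => Mt t y a b) (fun i t y => Mi i t y a b) (fun i t y => Mii i t y a b)

lemma ClsM.mul {M Mt N Nt : ℝ → Eu n → Matrix (Fin n) (Fin n) ℝ} {Mi Mii Ni Nii : Fin n → ℝ → Eu n → Matrix (Fin n) (Fin n) ℝ}
    (h : ClsM M Mt Mi Mii) (h' : ClsM N Nt Ni Nii) :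
    ClsM (fun t y => M t y * N t y) (fun t y => Mt t y * N t y + M t y * Nt t y)
      (fun i t y => Mi i t y * N t y + M t y * Ni i t y)
      (fun i t y => Mii i t y * N t y + (2 : ℝ) • (Mi i t y * Ni i t y) + M t y * Nii i t y) := by
  intro a b
  have := Cls.sum (s := Finset.univ) fun (c : Fin n) _ => (h a c).mul (h' c b)
  simp only [mul_apply]
  refine this.congr (fun t _ y => ?_) (fun i t _ y => ?_) (fun i t _ y => ?_)
  · simp [mul_apply, Finset.sum_add_distrib]
  · simp [mul_apply, Finset.sum_add_distrib]
  · simp [mul_apply, Finset.sum_add_distrib, Finset.mul_sum]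

lemma ClsM.pow {M Mt : ℝ → Eu n → Matrix (Fin n) (Fin n) ℝ} {Mi Mii : Fin n → ℝ → Eu n → Matrix (Fin n) (Fin n) ℝ}
    (h : ClsM M Mt Mi Mii) (p : ℕ) :
    ClsM (fun t y => M t y ^ p) (fun t y => dpow (M t y) (Mt t y) p) (fun i t y => dpow (M t y) (Mi i t y) p)
      (fun i t y => ddpow (M t y) (Mi i t y) (Mii i t y) p) := by
  induction p with
  | zero => intro a b; simpa [dpow, ddpow] using Cls.const (n := n) ((1 : Matrix (Fin n) (Fin n) ℝ) a b)
  | succ p ih =>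
    have := ih.mul h
    simpa only [pow_succ, dpow_succ, ddpow_succ] using this

lemma ClsM.trace {M Mt : ℝ → Eu n → Matrix (Fin n) (Fin n) ℝ} {Mi Mii : Fin n → ℝ → Eu n → Matrix (Fin n) (Fin n) ℝ}
    (h : ClsM M Mt Mi Mii) :
    Cls (fun t y => (M t y).trace) (fun t y => (Mt t y).trace) (fun i t y => (Mi i t y).trace)
      (fun i t y => (Mii i t y).trace) :=
  Cls.sum (s := Finset.univ) fun (c : Fin n) _ => h c c

/-- Posterior covariance minus the identity. -/
def Mc (V : Eu n → ℝ) (t : ℝ) (y : Eu n) : Matrix (Fin n) (Fin n) ℝ :=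
  of fun i j => Ep V (fun x => x i * x j) t y - Ep V (fun x => x i) t y * Ep V (fun x => x j) t y - (1 : Matrix (Fin n) (Fin n) ℝ) i j

/-- Time derivative of the posterior covariance. -/
def Mct (V : Eu n → ℝ) (t : ℝ) (y : Eu n) : Matrix (Fin n) (Fin n) ℝ :=
  of fun i j => Et V (fun x => x i * x j) t y -
    (Et V (fun x => x i) t y * Ep V (fun x => x j) t y + Ep V (fun x => x i) t y * Et V (fun x => x j) t y)

/-- Space derivatives of the posterior covariance: third central moments. -/
def Mci (V : Eu n → ℝ) (k : Fin n) (t : ℝ) (y : Eu n) : Matrix (Fin n) (Fin n) ℝ :=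
  of fun i j => E1 V (fun x => x i * x j) k t y -
    (E1 V (fun x => x i) k t y * Ep V (fun x => x j) t y + Ep V (fun x => x i) t y * E1 V (fun x => x j) k t y)

/-- Pure second space derivatives of the posterior covariance. -/
def Mcii (V : Eu n → ℝ) (k : Fin n) (t : ℝ) (y : Eu n) : Matrix (Fin n) (Fin n) ℝ :=
  of fun i j => E2 V (fun x => x i * x j) k t y -
    (E2 V (fun x => x i) k t y * Ep V (fun x => x j) t y + 2 * (E1 V (fun x => x i) k t y * E1 V (fun x => x j) k t y) +
      Ep V (fun x => x i) t y * E2 V (fun x => x j) k t y)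

lemma Mc_cls {V : Eu n → ℝ} (hV : BaseV V) : ClsM (Mc V) (Mct V) (Mci V) (Mcii V) := by
  intro a b
  have h1 := hV.cls ((PC.coord a).mul (PC.coord b))
  have h2 := ((hV.cls (PC.coord a)).mul (hV.cls (PC.coord b))).cmul (-1)
  have h3 := Cls.const (n := n) (-((1 : Matrix (Fin n) (Fin n) ℝ) a b))
  have := (h1.add h2).add h3
  have e : (fun t y => Mc V t y a b) = fun t y => Ep V (fun x => x a * x b) t y +
      -1 * (Ep V (fun x => x a) t y * Ep V (fun x => x b) t y) + -((1 : Matrix (Fin n) (Fin n) ℝ) a b) := by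
    ext t y; simp only [Mc, of_apply]; ring
  rw [e]
  refine this.congr (fun t _ y => ?_) (fun i t _ y => ?_) (fun i t _ y => ?_)
  · simp only [Mct, of_apply]; ring
  · simp only [Mci, of_apply]; ring
  · simp only [Mcii, of_apply]; ring

lemma Mc_symm (V : Eu n → ℝ) (t : ℝ) (y : Eu n) : (Mc V t y)ᵀ = Mc V t y := by
  ext i j
  simp only [transpose_apply, Mc, of_apply]
  have : (fun x : Eu n => x j * x i) = fun x => x i * x j := by ext x; ring
  rw [this, ← transpose_apply (1 : Matrix (Fin n) (Fin n) ℝ), transpose_one]; ring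

lemma one_add_Mc (V : Eu n → ℝ) (t : ℝ) (y : Eu n) (i j : Fin n) : (1 + Mc V t y) i j = E1 V (fun x => x j) i t y := by
  simp [Mc, E1]

lemma Mci_symm (V : Eu n → ℝ) (k : Fin n) (t : ℝ) (y : Eu n) : (Mci V k t y)ᵀ = Mci V k t y := by
  ext i j
  simp only [transpose_apply, Mci, of_apply]
  have : (fun x : Eu n => x j * x i) = fun x => x i * x j := by ext x; ring
  rw [this]; ring

/-- The generator sends the posterior covariance `A` to `-A²`. -/
lemma Mc_gen {V : Eu n → ℝ} {β : ℝ} (hL : LB V (-β)) {t : ℝ} (ht : -β < t) (y : Eu n) :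
    Mct V t y + ∑ k, (Ep V (fun x => x k) t y • Mci V k t y + (1 / 2 : ℝ) • Mcii V k t y) =
      -((1 + Mc V t y) * (1 + Mc V t y)) := by
  have hs : (1 + Mc V t y)ᵀ = 1 + Mc V t y := by rw [transpose_add, Mc_symm, transpose_one]
  conv_rhs => enter [1, 1]; rw [← hs]
  ext i j
  have l1 := Lgen_Ep hL ((PC.coord i).mul (PC.coord j)) ht y
  have l2 := Lgen_Ep hL (PC.coord i) ht y
  have l3 := Lgen_Ep hL (PC.coord j) ht y
  simp only [Matrix.neg_apply, mul_apply, transpose_apply, one_add_Mc]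
  simp only [Matrix.add_apply, Matrix.sum_apply, Matrix.smul_apply, smul_eq_mul]
  simp only [Lgen] at l1 l2 l3
  have e : ∑ k, (Ep V (fun x => x k) t y * Mci V k t y i j + 1 / 2 * Mcii V k t y i j) =
      (∑ k, (Ep V (fun x => x k) t y * E1 V (fun x => x i * x j) k t y + 1 / 2 * E2 V (fun x => x i * x j) k t y))
      - Ep V (fun x => x j) t y * (∑ k, (Ep V (fun x => x k) t y * E1 V (fun x => x i) k t y + 1 / 2 * E2 V (fun x => x i) k t y))
      - Ep V (fun x => x i) t y * (∑ k, (Ep V (fun x => x k) t y * E1 V (fun x => x j) k t y + 1 / 2 * E2 V (fun x => x j) k t y))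
      - ∑ k, E1 V (fun x => x i) k t y * E1 V (fun x => x j) k t y := by
    simp only [Finset.mul_sum, ← Finset.sum_sub_distrib]
    refine Finset.sum_congr rfl fun k _ => ?_
    simp only [Mci, Mcii, of_apply]; ring
  rw [e]
  simp only [Mct, of_apply]
  linear_combination l1 - Ep V (fun x => x j) t y * l2 - Ep V (fun x => x i) t y * l3

/-- The normalised potential of the posterior, so that `exp (-Upost V t y)` is a probability density. -/
def Upost (V : Eu n → ℝ) (t : ℝ) (y : Eu n) (x : Eu n) : ℝ := pot V t y x + Real.log (Iw V (fun _ => 1) t y)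

lemma In_Upost {V : Eu n → ℝ} {t₀ : ℝ} (hL : LB V t₀) {t : ℝ} (ht : t₀ < t) (y : Eu n) (f : Eu n → ℝ) :
    In (Upost V t y) f = Ep V f t y := by
  have hp : 0 < Iw V (fun _ => 1) t y := In_one_pos (hL.pot_qg ht y)
  rw [Ep, div_eq_mul_inv, Iw, In, In, ← integral_mul_const]
  congr 1; ext x
  rw [Upost, neg_add, Real.exp_add, Real.exp_neg (Real.log _), Real.exp_log hp]; ring

lemma Upost_model {V : Eu n → ℝ} (hV : BaseV V) {t : ℝ} (ht : 0 < t) (y : Eu n) : Model (Upost V t y) t := by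
  have hT := hV.tg
  obtain ⟨hH, b, l, c, ψ, hb, hψ, hψc, rfl⟩ := hV
  set c' := Real.log (Iw (fun x => U0 b l c x + ψ x) (fun _ => 1) t y) with hc'
  have hq : ∀ x, U0 (fun _ => t) (fun i => - y i) c' x = t / 2 * ‖x‖ ^ 2 - inner ℝ y x + c' := fun x => by
    rw [U0, norm_sq_eq_sum, inner_eq_sum, Finset.mul_sum, ← Finset.sum_sub_distrib]
    congr 1; exact Finset.sum_congr rfl fun i _ => by ring
  have e1 : Upost (fun x => U0 b l c x + ψ x) t y = fun x => (U0 b l c x + ψ x) + 1 * U0 (fun _ => t) (fun i => - y i) c' x := by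
    ext x; rw [hq, Upost, pot, ← hc']; ring
  refine ⟨ht, fun x v => ?_, fun i => b i + t, fun i => l i - y i, c + c', ψ, fun i => by linarith [hb i], hψ, hψc, ?_⟩
  · rw [e1]
    simp only [pd2_perturb hT (TG_U0 _ _ _), pd2_U0]
    simp only [one_mul, mul_add, Finset.sum_add_distrib]
    have h0 := hH x v
    rw [zero_mul] at h0
    have : ∑ i, ∑ j, v i * v j * (if i = j then t else 0) = t * ∑ i, v i ^ 2 := by
      rw [Finset.mul_sum]
      refine Finset.sum_congr rfl fun i _ => ?_
      simp; ring
    rw [this]; linarith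
  · rw [e1]; ext x
    have : U0 (fun i => b i + t) (fun i => l i - y i) (c + c') x = U0 b l c x + U0 (fun _ => t) (fun i => - y i) c' x := by
      simp only [U0]
      have : ∑ i, ((b i + t) / 2 * x i ^ 2 + (l i - y i) * x i) = ∑ i, (b i / 2 * x i ^ 2 + l i * x i) +
        ∑ i, (t / 2 * x i ^ 2 + -y i * x i) := by
        rw [← Finset.sum_add_distrib]; exact Finset.sum_congr rfl fun i _ => by ring
      rw [this]; ring
    rw [this]; ring

/-- The second central moments of the posterior form its covariance `1 + Mc`. -/
lemma Ep_central2 {V : Eu n → ℝ} {t₀ : ℝ} (hL : LB V t₀) {t : ℝ} (ht : t₀ < t) (y : Eu n) (w : Fin n → ℝ) :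
    Ep V (fun x => (∑ i, w i * (x i - Ep V (fun x => x i) t y)) ^ 2) t y =
      ∑ i, ∑ j, w i * w j * (1 + Mc V t y) i j := by
  set a := fun i => Ep V (fun x => x i) t y with ha
  have e : (fun x : Eu n => (∑ i, w i * (x i - a i)) ^ 2) =
      fun x => ∑ i, ∑ j, w i * w j * (x i * x j - a j * x i - a i * x j + a i * a j) := by
    ext x; rw [sq, Finset.sum_mul_sum]
    exact Finset.sum_congr rfl fun i _ => Finset.sum_congr rfl fun j _ => by ring
  have p : ∀ i j, PC (fun x : Eu n => x i * x j - a j * x i - a i * x j + a i * a j) := fun i j =>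
    ((((PC.coord i).mul (PC.coord j)).sub ((PC.coord i).cmul _)).sub ((PC.coord j).cmul _)).add (PC.const _)
  show Ep V (fun x : Eu n => (∑ i, w i * (x i - a i)) ^ 2) t y = _
  rw [e, Ep_sum hL (fun i _ => PC.sum fun j _ => (p i j).cmul _) ht]
  refine Finset.sum_congr rfl fun i _ => ?_
  rw [Ep_sum hL (fun j _ => (p i j).cmul _) ht]
  refine Finset.sum_congr rfl fun j _ => ?_
  rw [Ep_cmul, Ep_add hL ((((PC.coord i).mul (PC.coord j)).sub ((PC.coord i).cmul _)).sub ((PC.coord j).cmul _)) (PC.const _) ht,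
    Ep_sub hL (((PC.coord i).mul (PC.coord j)).sub ((PC.coord i).cmul _)) ((PC.coord j).cmul _) ht,
    Ep_sub hL ((PC.coord i).mul (PC.coord j)) ((PC.coord i).cmul _) ht, Ep_cmul, Ep_cmul, Ep_const hL ht, one_add_Mc, E1]
  simp only [ha]; ring

/-- The third central moments of the posterior are the space derivatives of its covariance. -/
lemma Ep_central3 {V : Eu n → ℝ} {t₀ : ℝ} (hL : LB V t₀) {t : ℝ} (ht : t₀ < t) (y : Eu n) (v : Fin n → ℝ) (k i : Fin n) :
    Ep V (fun x => (∑ j, v j * (x j - Ep V (fun x => x j) t y)) *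
      ((x k - Ep V (fun x => x k) t y) * (x i - Ep V (fun x => x i) t y))) t y = ∑ j, Mci V k t y i j * v j := by
  set a := fun i => Ep V (fun x => x i) t y with ha
  have hm : ∀ i j, PC (fun x : Eu n => x i * x j) := fun i j => (PC.coord i).mul (PC.coord j)
  have e : (fun x : Eu n => (∑ j, v j * (x j - a j)) * ((x k - a k) * (x i - a i))) =
      fun x => ∑ j, v j * ((x k * (x i * x j) - a k * (x i * x j) - a j * (x k * x i) - a i * (x k * x j)) +
        (a k * a j * x i + a i * a j * x k + a i * a k * x j - a k * a i * a j)) := by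
    ext x; rw [Finset.sum_mul]
    exact Finset.sum_congr rfl fun j _ => by ring
  have p1 : ∀ j, PC (fun x : Eu n => x k * (x i * x j) - a k * (x i * x j) - a j * (x k * x i)) := fun j =>
    (((PC.coord k).mul (hm i j)).sub ((hm i j).cmul _)).sub ((hm k i).cmul _)
  have p2 : ∀ j, PC (fun x : Eu n => a k * a j * x i + a i * a j * x k + a i * a k * x j) := fun j =>
    (((PC.coord i).cmul _).add ((PC.coord k).cmul _)).add ((PC.coord j).cmul _)
  have p1' : ∀ j, PC (fun x : Eu n => x k * (x i * x j) - a k * (x i * x j) - a j * (x k * x i) - a i * (x k * x j)) :=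
    fun j => (p1 j).sub ((hm k j).cmul _)
  have p2' : ∀ j, PC (fun x : Eu n => a k * a j * x i + a i * a j * x k + a i * a k * x j - a k * a i * a j) :=
    fun j => (p2 j).sub (PC.const _)
  show Ep V (fun x : Eu n => (∑ j, v j * (x j - a j)) * ((x k - a k) * (x i - a i))) t y = _
  rw [e, Ep_sum hL (fun j _ => ((p1' j).add (p2' j)).cmul _) ht]
  refine Finset.sum_congr rfl fun j _ => ?_
  rw [Ep_cmul, Ep_add hL (p1' j) (p2' j) ht, Ep_sub hL (p1 j) ((hm k j).cmul _) ht, Ep_sub hL (p2 j) (PC.const _) ht,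
    Ep_sub hL (((PC.coord k).mul (hm i j)).sub ((hm i j).cmul _)) ((hm k i).cmul _) ht,
    Ep_sub hL ((PC.coord k).mul (hm i j)) ((hm i j).cmul _) ht,
    Ep_add hL (((PC.coord i).cmul _).add ((PC.coord k).cmul _)) ((PC.coord j).cmul _) ht,
    Ep_add hL ((PC.coord i).cmul _) ((PC.coord k).cmul _) ht, Ep_const hL ht]
  simp only [Ep_cmul, Mci, of_apply, E1]
  simp only [ha]; ring

lemma Spec.quad_le {M O : Matrix (Fin n) (Fin n) ℝ} {l : Fin n → ℝ} (h : Spec M O l) {r : ℝ} (hr : ∀ i, |l i| ≤ r)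
    (w : Fin n → ℝ) : ∑ i, ∑ j, w i * w j * (1 + M) i j ≤ (1 + r) * ∑ i, w i ^ 2 := by
  have e1 : ∑ i, ∑ j, w i * w j * (1 + M) i j = w ⬝ᵥ ((1 + M) *ᵥ w) := by
    simp only [dotProduct, mulVec, Finset.mul_sum]
    exact Finset.sum_congr rfl fun i _ => Finset.sum_congr rfl fun j _ => by ring
  have e2 : (1 + M) = O * diagonal (fun i => 1 + l i) * Oᵀ := by
    have : diagonal (fun i => 1 + l i) = 1 + diagonal l := by rw [← diagonal_one, diagonal_add]
    rw [this, mul_add, add_mul, mul_one, h.o2, ← h.eq]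
  set g := Oᵀ *ᵥ w with hg
  have e3 : w ⬝ᵥ ((1 + M) *ᵥ w) = ∑ i, (1 + l i) * g i ^ 2 := by
    rw [e2, mul_assoc, ← mulVec_mulVec, dotProduct_mulVec, ← mulVec_transpose, ← hg, ← mulVec_mulVec, ← hg]
    simp only [dotProduct, mulVec_diagonal]
    exact Finset.sum_congr rfl fun i _ => by ring
  have e4 : ∑ i, g i ^ 2 = ∑ i, w i ^ 2 := by
    have : g ⬝ᵥ g = w ⬝ᵥ w := by
      rw [hg, dotProduct_mulVec, ← mulVec_transpose, transpose_transpose, mulVec_mulVec, h.o2, one_mulVec]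
    simpa [dotProduct, sq] using this
  rw [e1, e3, ← e4, Finset.mul_sum]
  refine Finset.sum_le_sum fun i _ => mul_le_mul_of_nonneg_right ?_ (sq_nonneg _)
  linarith [(abs_le.1 (hr i)).2]

end covm

/-! ### Gronwall estimate for the posterior covariance -/

section gron
open Matrix
variable {n : ℕ}

/-- The spectral functional `tr (A - 1)^q` of the posterior covariance `A`. -/
def Str (V : Eu n → ℝ) (q : ℕ) (t : ℝ) (y : Eu n) : ℝ := (Mc V t y ^ q).trace

lemma Str_nonneg (V : Eu n → ℝ) {q : ℕ} (hq : Even q) (t : ℝ) (y : Eu n) : 0 ≤ Str V q t y := by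
  obtain ⟨O, l, h⟩ := exists_spec (Mc_symm V t y)
  rw [Str, h.trace_pow]
  exact Finset.sum_nonneg fun i _ => hq.pow_nonneg _

lemma pow_sub_one_le {x : ℝ} (hx : 0 ≤ x) {q : ℕ} (hq : 2 ≤ q) : x ^ (q - 1) ≤ 64 * (x ^ q + (1 / 8) ^ q) := by
  obtain ⟨p, rfl⟩ := Nat.exists_eq_add_of_le' hq
  rw [show p + 2 - 1 = p + 1 from rfl]
  rcases le_total x (1 / 8) with h | h
  · have := pow_le_pow_left₀ hx h (p + 1)
    have h2 : (1 / 8 : ℝ) ^ (p + 2) = (1 / 8) ^ (p + 1) / 8 := by rw [pow_succ _ (p + 1)]; ring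
    have : 0 ≤ x ^ (p + 2) := by positivity
    have : 0 ≤ (1 / 8 : ℝ) ^ (p + 1) := by positivity
    linarith
  · have h3 : x ^ (p + 2) = x ^ (p + 1) * x := pow_succ _ _
    have : 0 ≤ (1 / 8 : ℝ) ^ (p + 2) := by positivity
    have : 0 ≤ x ^ (p + 1) := by positivity
    nlinarith

lemma pow_sub_two_le {x : ℝ} (hx : 0 ≤ x) {q : ℕ} (hq : 2 ≤ q) : x ^ (q - 2) ≤ 64 * (x ^ q + (1 / 8) ^ q) := by
  obtain ⟨p, rfl⟩ := Nat.exists_eq_add_of_le' hq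
  rw [show p + 2 - 2 = p from rfl]
  rcases le_total x (1 / 8) with h | h
  · have := pow_le_pow_left₀ hx h p
    have h2 : (1 / 8 : ℝ) ^ (p + 2) = (1 / 8) ^ p / 64 := by rw [pow_add]; ring
    have : 0 ≤ x ^ (p + 2) := by positivity
    linarith
  · have h3 : x ^ (p + 2) = x ^ p * (x * x) := by ring
    have : 0 ≤ (1 / 8 : ℝ) ^ (p + 2) := by positivity
    have : 0 ≤ x ^ p := by positivity
    have h4 : 1 / 64 ≤ x * x := by nlinarith
    nlinarith

/-- The factor `exp (-S)` absorbs the polynomial growth in the spectral radius `r`; this is what makes the Gronwall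
estimate for `1 - exp (-S)` linear. -/
lemma exp_theta {S r ε : ℝ} {q : ℕ} (hq : 3 ≤ q) (hr : 0 ≤ r) (hrS : r ^ q ≤ S) (hε : 0 ≤ ε) :
    Real.exp (-S) * ((1 + r) ^ 3 * (S + ε)) ≤ 16 * (1 - Real.exp (-S) + ε) := by
  have hS : 0 ≤ S := le_trans (by positivity) hrS
  have e1 : Real.exp (-S) * Real.exp S = 1 := by rw [← Real.exp_add]; simp
  have e0 := Real.exp_pos (-S)
  have e2 : 1 + S + S ^ 2 / 2 ≤ Real.exp S := Real.quadratic_le_exp_of_nonneg hS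
  have e3 : Real.exp (-S) ≤ 1 := Real.exp_le_one_iff.2 (by linarith)
  have e4 : Real.exp (-S) * (1 + S + S ^ 2 / 2) ≤ 1 := (mul_le_mul_of_nonneg_left e2 e0.le).trans e1.le
  have f1 : Real.exp (-S) * S ≤ 1 - Real.exp (-S) := by nlinarith [mul_nonneg e0.le (sq_nonneg S)]
  have f2 : Real.exp (-S) * S ^ 2 ≤ 2 * (1 - Real.exp (-S)) := by nlinarith [mul_nonneg e0.le hS]
  have f3 : Real.exp (-S) * ε ≤ ε := by nlinarith
  have f4 : Real.exp (-S) * S * ε ≤ ε := by nlinarith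
  have g0 : 0 ≤ Real.exp (-S) * (S + ε) := by positivity
  rcases le_total r 1 with h | h
  · have h1 : (1 + r) ^ 3 ≤ 8 := by
      have := pow_le_pow_left₀ (by linarith) (show 1 + r ≤ 2 by linarith) 3
      norm_num at this ⊢; exact this
    calc _ = (1 + r) ^ 3 * (Real.exp (-S) * (S + ε)) := by ring
      _ ≤ 8 * (Real.exp (-S) * (S + ε)) := mul_le_mul_of_nonneg_right h1 g0
      _ ≤ _ := by nlinarith
  · have h1 : (1 + r) ^ 3 ≤ 8 * S := by
      have h2 := pow_le_pow_left₀ (by linarith) (show 1 + r ≤ 2 * r by linarith) 3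
      have h3 : r ^ 3 ≤ r ^ q := pow_le_pow_right₀ h hq
      rw [mul_pow] at h2; norm_num at h2; linarith
    calc _ = (1 + r) ^ 3 * (Real.exp (-S) * (S + ε)) := by ring
      _ ≤ 8 * S * (Real.exp (-S) * (S + ε)) := mul_le_mul_of_nonneg_right h1 g0
      _ ≤ _ := by nlinarith

/-- Generator bound for the spectral functional. -/
lemma Str_gen {V : Eu n → ℝ} (hV : BaseV V) (hn : 0 < n) {q : ℕ} (hq : Even q) (hq3 : 3 ≤ q) {t : ℝ}
    (ht : t ∈ Set.Ioo (0 : ℝ) 1) (y : Eu n) :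
    Real.exp (-(Str V q t y)) * Lgen V (fun t y => (dpow (Mc V t y) (Mct V t y) q).trace)
      (fun i t y => (dpow (Mc V t y) (Mci V i t y) q).trace)
      (fun i t y => (ddpow (Mc V t y) (Mci V i t y) (Mcii V i t y) q).trace) t y ≤
      5120 * q ^ 2 / Real.sqrt t * (1 - Real.exp (-(Str V q t y)) + n * (1 / 8) ^ q) := by
  obtain ⟨β, hβ, hL⟩ := hV.lb
  have htβ : -β < t := by linarith [ht.1]
  obtain ⟨O, l, h⟩ := exists_spec (Mc_symm V t y)
  have : Nonempty (Fin n) := ⟨⟨0, hn⟩⟩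
  obtain ⟨i₀, hi₀⟩ := Finite.exists_max (fun i => |l i|)
  set r := |l i₀| with hr
  have hr0 : 0 ≤ r := abs_nonneg _
  have hS : Str V q t y = ∑ i, |l i| ^ q := by
    rw [Str, h.trace_pow]; exact Finset.sum_congr rfl fun i _ => (hq.pow_abs _).symm
  have hrS : r ^ q ≤ Str V q t y := by
    rw [hS]
    exact Finset.single_le_sum (f := fun i => |l i| ^ q) (fun i _ => by positivity) (Finset.mem_univ i₀)
  set Θ := 1 + r with hΘ
  have hΘ1 : 1 ≤ Θ := by linarith
  have hC : CovBd (Upost V t y) (fun i => Ep V (fun x => x i) t y) Θ := by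
    refine ⟨?_, fun i => In_Upost hL htβ y _, by linarith, fun w => ?_⟩
    · rw [In_Upost hL htβ y, Ep_const hL htβ]
    · rw [In_Upost hL htβ y, Ep_central2 hL htβ]
      exact h.quad_le hi₀ w
  have hB : ∀ v : Fin n → ℝ, ∑ k, ∑ i, (∑ j, Mci V k t y i j * v j) ^ 2 ≤
      4 * Real.sqrt (Θ / t) * Θ ^ 2 * ∑ j, v j ^ 2 := fun v => by
    have := tensor_bound (Upost_model hV ht.1 y) hC v
    simp only [In_Upost hL htβ y, Ep_central3 hL htβ] at this
    exact this
  have hG := h.gen_bound (fun k => Mci_symm V k t y) (by positivity) hB (Mc_gen hL htβ y) hi₀ (q := q)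
  have hst : 0 < Real.sqrt t := Real.sqrt_pos.2 ht.1
  have hst1 : Real.sqrt t ≤ 1 := Real.sqrt_le_one.2 ht.2.le
  have hε : 0 ≤ n * (1 / 8 : ℝ) ^ q := by positivity
  set ε := n * (1 / 8 : ℝ) ^ q with hεd
  have w1 : ∑ i, |l i| ^ (q - 1) ≤ 64 * (Str V q t y + ε) := by
    rw [hS]
    refine (Finset.sum_le_sum fun i _ => pow_sub_one_le (abs_nonneg (l i)) (by omega : 2 ≤ q)).trans (le_of_eq ?_)
    rw [← Finset.mul_sum, Finset.sum_add_distrib]; simp [hεd]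
  have w2 : ∑ i, |l i| ^ (q - 2) ≤ 64 * (Str V q t y + ε) := by
    rw [hS]
    refine (Finset.sum_le_sum fun i _ => pow_sub_two_le (abs_nonneg (l i)) (by omega : 2 ≤ q)).trans (le_of_eq ?_)
    rw [← Finset.mul_sum, Finset.sum_add_distrib]; simp [hεd]
  have hW : 0 ≤ Str V q t y + ε := add_nonneg (Str_nonneg V hq t y) hε
  set W := Str V q t y + ε with hWd
  have hsq : Real.sqrt (Θ / t) ≤ Θ / Real.sqrt t := by
    rw [Real.sqrt_div (by linarith)]
    exact div_le_div_of_nonneg_right (Real.sqrt_le_iff.2 ⟨by linarith, by nlinarith⟩) hst.le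
  have hq1 : (1 : ℝ) ≤ q := by exact_mod_cast (by omega : 1 ≤ q)
  have hfin : Lgen V (fun t y => (dpow (Mc V t y) (Mct V t y) q).trace)
      (fun i t y => (dpow (Mc V t y) (Mci V i t y) q).trace)
      (fun i t y => (ddpow (Mc V t y) (Mci V i t y) (Mcii V i t y) q).trace) t y ≤
      320 * q ^ 2 / Real.sqrt t * (Θ ^ 3 * W) := by
    refine hG.trans ?_
    have c1 : q * Θ ^ 2 ≤ q ^ 2 * Θ ^ 3 / Real.sqrt t := by
      rw [le_div_iff₀ hst]
      calc q * Θ ^ 2 * Real.sqrt t ≤ q * Θ ^ 2 * 1 := by gcongr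
        _ ≤ q * Θ ^ 2 * (q * Θ) := by
          refine mul_le_mul_of_nonneg_left ?_ (by positivity)
          nlinarith
        _ = _ := by ring
    have c2 : q ^ 2 * (4 * Real.sqrt (Θ / t) * Θ ^ 2) ≤ 4 * (q ^ 2 * Θ ^ 3 / Real.sqrt t) := by
      calc q ^ 2 * (4 * Real.sqrt (Θ / t) * Θ ^ 2) ≤ q ^ 2 * (4 * (Θ / Real.sqrt t) * Θ ^ 2) := by gcongr
        _ = _ := by ring
    have d1 : q * Θ ^ 2 * ∑ i, |l i| ^ (q - 1) ≤ (q ^ 2 * Θ ^ 3 / Real.sqrt t) * (64 * W) :=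
      mul_le_mul c1 w1 (Finset.sum_nonneg fun i _ => by positivity) (by positivity)
    have d2 : q ^ 2 * (4 * Real.sqrt (Θ / t) * Θ ^ 2) * ∑ i, |l i| ^ (q - 2) ≤
        4 * (q ^ 2 * Θ ^ 3 / Real.sqrt t) * (64 * W) :=
      mul_le_mul c2 w2 (Finset.sum_nonneg fun i _ => by positivity) (by positivity)
    refine (add_le_add d1 d2).trans (le_of_eq (by ring))
  calc _ ≤ Real.exp (-(Str V q t y)) * (320 * q ^ 2 / Real.sqrt t * (Θ ^ 3 * W)) :=
        mul_le_mul_of_nonneg_left hfin (Real.exp_pos _).le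
    _ = 320 * q ^ 2 / Real.sqrt t * (Real.exp (-(Str V q t y)) * (Θ ^ 3 * W)) := by ring
    _ ≤ 320 * q ^ 2 / Real.sqrt t * (16 * (1 - Real.exp (-(Str V q t y)) + ε)) :=
        mul_le_mul_of_nonneg_left (exp_theta hq3 hr0 hrS hε) (by positivity)
    _ = _ := by ring

lemma Lgen_pbu {V : Eu n → ℝ} (hV : BaseV V) {f ft : ℝ → Eu n → ℝ} {fi fii : Fin n → ℝ → Eu n → ℝ}
    (hf : Cls f ft fi fii) : PBu (Lgen V ft fi fii) :=
  hf.pbt.add (PBu.sum fun i _ => ((hV.pbu (PC.coord i)).mul (hf.pbi i)).add ((hf.pbii i).cmul _))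

lemma Lgen_cont {V : Eu n → ℝ} (hV : BaseV V) {f ft : ℝ → Eu n → ℝ} {fi fii : Fin n → ℝ → Eu n → ℝ}
    (hf : Cls f ft fi fii) {t : ℝ} (ht : t ∈ Set.Ioo (0 : ℝ) 1) : Continuous (Lgen V ft fi fii t) := by
  obtain ⟨β, hβ, hL⟩ := hV.lb
  exact (hf.ct t ht).add (continuous_finsetSum _ fun i _ =>
    ((hL.ep_cont (PC.coord i) (by linarith [ht.1])).mul (hf.conti ht i)).add ((hf.cii t ht i).const_mul _))

lemma Str_continuousAt {V : Eu n → ℝ} (hV : BaseV V) (q : ℕ) :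
    ContinuousAt (fun p : ℝ × Eu n => Str V q p.1 p.2) (0, 0) := by
  obtain ⟨β, hβ, hL⟩ := hV.lb
  have h0 : -β < 0 := by linarith
  have h1 : ContinuousAt (fun p : ℝ × Eu n => Mc V p.1 p.2) (0, 0) := by
    refine tendsto_pi_nhds.2 fun i => tendsto_pi_nhds.2 fun j => ?_
    exact (((Ep_HD hL ((PC.coord i).mul (PC.coord j)) h0 0).continuousAt).sub
      (((Ep_HD hL (PC.coord i) h0 0).continuousAt).mul ((Ep_HD hL (PC.coord j) h0 0).continuousAt))).sub continuousAt_const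
  exact (Continuous.matrix_trace continuous_id).continuousAt.comp (h1.pow q)

/-- Up to time `q⁻⁴` the posterior covariance stays close to the identity, in expectation. -/
lemma Str_small {V : Eu n → ℝ} (hV : BaseV V) (h1 : In V (fun _ => 1) = 1) (hM : Mc V 0 0 = 0) (hn : 0 < n) {q : ℕ}
    (hq : Even q) (hq3 : 3 ≤ q) {t : ℝ} (ht : 0 < t) (htq : t ≤ 1 / q ^ 4) :
    1 - Ed V (fun t y => Real.exp (-(Str V q t y))) t ≤ Real.exp 10240 * (n * (1 / 8) ^ q) := by
  set ε := n * (1 / 8 : ℝ) ^ q with hεd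
  have hε : 0 ≤ ε := by positivity
  have hq1 : (3 : ℝ) ≤ q := by exact_mod_cast hq3
  have htI : t ∈ Set.Ioo (0 : ℝ) 1 := ⟨ht, htq.trans_lt (by
    rw [div_lt_one (by positivity)]; exact one_lt_pow₀ (by linarith) (by norm_num))⟩
  have hS : Cls (Str V q) _ _ _ := ((Mc_cls hV).pow q).trace
  have hg := hS.expneg fun t _ y => Str_nonneg V hq t y
  set g := fun t y => Real.exp (-(Str V q t y)) with hgd
  set κ : ℝ := 5120 * q ^ 2 with hκ
  have hd := fun t ht => dynkin hV hg (t := t) ht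
  have hlow : ∀ t ∈ Set.Ioo (0 : ℝ) 1, κ / Real.sqrt t * (Ed V g t + -(1 + ε)) ≤ Ed V (Lgen V _ _ _) t := fun t ht => by
    have e : Ed V (fun s y => κ / Real.sqrt t * (g s y + -(1 + ε))) t = κ / Real.sqrt t * (Ed V g t + -(1 + ε)) := by
      rw [Ed_cmul, Ed_add hV hg.pb (PBu.const _) ht (hg.cont ht) continuous_const, Ed_const hV h1 _ ht]
    rw [← e]
    refine Ed_mono hV ((hg.pb.add (PBu.const _)).cmul _) (Lgen_pbu hV hg) ht
      (((hg.cont ht).add continuous_const).const_mul _) (Lgen_cont hV hg ht) fun y => ?_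
    have := Str_gen hV hn hq hq3 ht y
    rw [← hεd, ← hκ] at this
    refine le_trans (b := -(Real.exp (-(Str V q t y)) * Lgen V (fun t y => (dpow (Mc V t y) (Mct V t y) q).trace)
      (fun i t y => (dpow (Mc V t y) (Mci V i t y) q).trace)
      (fun i t y => (ddpow (Mc V t y) (Mci V i t y) (Mcii V i t y) q).trace) t y)) ?_ ?_
    · have e2 : κ / Real.sqrt t * (g t y + -(1 + ε)) = -(κ / Real.sqrt t * (1 - Real.exp (-Str V q t y) + ε)) := by
        simp only [hgd]; ring
      rw [e2]; linarith
    · simp only [Lgen]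
      rw [mul_add, neg_add, Finset.mul_sum, ← Finset.sum_neg_distrib]
      refine add_le_add_right (Finset.sum_le_sum fun i _ => ?_) _
      have := mul_nonneg (Real.exp_pos (-Str V q t y)).le (sq_nonneg ((dpow (Mc V t y) (Mci V i t y) q).trace))
      nlinarith
  have hu : ∀ s ∈ Set.Ioo (0 : ℝ) 1, HasDerivAt (fun s => (1 - Ed V g s + ε) * Real.exp (-(2 * κ * Real.sqrt s)))
      ((-(Ed V (Lgen V _ _ _) s)) * Real.exp (-(2 * κ * Real.sqrt s)) + (1 - Ed V g s + ε) *
        (Real.exp (-(2 * κ * Real.sqrt s)) * (-(2 * κ * (1 / (2 * Real.sqrt s)))))) s := fun s hs =>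
    (((hd s hs).const_sub 1).add_const ε).mul (((Real.hasDerivAt_sqrt hs.1.ne').const_mul (2 * κ)).neg.exp)
  have hlim : Filter.Tendsto (fun s => (1 - Ed V g s + ε) * Real.exp (-(2 * κ * Real.sqrt s))) (nhdsWithin 0 (Set.Ioi 0))
      (nhds ε) := by
    have l1 := Ed_tendsto hV h1 hg.pb (fun t ht => hg.cont ht) ((Str_continuousAt hV q).neg.rexp)
    have l0 : Real.exp (-Str V q 0 0) = 1 := by
      rw [Str, hM, zero_pow (by omega)]; simp
    have l1' : Filter.Tendsto (Ed V g) (nhdsWithin 0 (Set.Ioi 0)) (nhds 1) := by rw [← l0]; exact l1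
    have l2 : Filter.Tendsto (fun s => Real.exp (-(2 * κ * Real.sqrt s))) (nhdsWithin 0 (Set.Ioi 0)) (nhds 1) := by
      have : Continuous fun s => Real.exp (-(2 * κ * Real.sqrt s)) := by fun_prop
      have := this.tendsto 0
      simp only [Real.sqrt_zero, mul_zero, neg_zero, Real.exp_zero] at this
      exact this.mono_left nhdsWithin_le_nhds
    have := ((l1'.const_sub 1).add_const ε).mul l2
    simpa using this
  have := le_of_deriv_nonpos hu (fun s hs => ?_) hlim htI
  · have e3 : 2 * κ * Real.sqrt t ≤ 10240 := by
      have : Real.sqrt t ≤ 1 / q ^ 2 := Real.sqrt_le_iff.2 ⟨by positivity, htq.trans (le_of_eq (by rw [div_pow]; ring))⟩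
      calc 2 * κ * Real.sqrt t ≤ 2 * κ * (1 / q ^ 2) := by gcongr
        _ = _ := by rw [hκ]; field_simp; norm_num
    have e4 : Real.exp (-(2 * κ * Real.sqrt t)) * Real.exp (2 * κ * Real.sqrt t) = 1 := by rw [← Real.exp_add]; simp
    have e5 : 1 - Ed V g t + ε ≤ ε * Real.exp (2 * κ * Real.sqrt t) := by
      have := mul_le_mul_of_nonneg_right this (Real.exp_pos (2 * κ * Real.sqrt t)).le
      rwa [mul_assoc, e4, mul_one] at this
    have e6 := mul_le_mul_of_nonneg_left (Real.exp_le_exp.2 e3) hε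
    linarith
  · have h2 := hlow s hs
    have h3 := Real.exp_pos (-(2 * κ * Real.sqrt s))
    have h4 : (2 * κ * (1 / (2 * Real.sqrt s))) = κ / Real.sqrt s := by
      have := (Real.sqrt_pos.2 hs.1).ne'
      field_simp
    rw [h4]
    nlinarith

end gron

/-! ### Gaussian expectations and sublinear functions -/

section heat
variable {n : ℕ}

lemma LB_zero : LB (fun _ : Eu n => (0 : ℝ)) 0 := ⟨continuous_const, 0, fun x => by simp⟩

/-- Standard Gaussian expectation. -/
def Eg (ψ : Eu n → ℝ) : ℝ := Ep (fun _ => 0) ψ 1 0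

lemma Iw_zero_shift (ψ : Eu n → ℝ) {τ : ℝ} (hτ : 0 < τ) (x : Eu n) :
    Iw (fun _ => 0) ψ τ (τ • x) = |((Real.sqrt τ)⁻¹) ^ n| * Real.exp (τ / 2 * ‖x‖ ^ 2) *
      Iw (fun _ => 0) (fun z => ψ (x + (Real.sqrt τ)⁻¹ • z)) 1 0 := by
  set r := (Real.sqrt τ)⁻¹ with hr
  have hr0 : 0 < r := inv_pos.2 (Real.sqrt_pos.2 hτ)
  have hr2 : τ * r ^ 2 = 1 := by
    rw [hr, inv_pow, Real.sq_sqrt hτ.le, mul_inv_cancel₀ hτ.ne']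
  set f : Eu n → ℝ := fun u => ψ u * Real.exp (-(pot (fun _ => 0) τ (τ • x) u)) with hf
  have h1 : ∫ z, f (x + r • z) = |(r ^ n)⁻¹| • ∫ u, f u := by
    have := Measure.integral_comp_smul (volume : Measure (Eu n)) (fun z => f (x + z)) r
    rw [integral_add_left_eq_self (μ := (volume : Measure (Eu n))) f x] at this
    simpa using this
  have h2 : ∀ z, f (x + r • z) = Real.exp (τ / 2 * ‖x‖ ^ 2) *
      (ψ (x + r • z) * Real.exp (-(pot (fun _ => 0) 1 0 z))) := fun z => by
    have : -(pot (fun _ => 0) τ (τ • x) (x + r • z)) = τ / 2 * ‖x‖ ^ 2 + -(pot (fun _ => 0) 1 0 z) := by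
      simp only [pot]
      rw [norm_add_sq_real, inner_add_right, inner_smul_left, inner_smul_left, inner_smul_right, norm_smul,
        real_inner_self_eq_norm_sq, inner_zero_left, mul_pow, Real.norm_eq_abs, sq_abs]
      simp only [conj_trivial]
      linear_combination (-(1 / 2) * ‖z‖ ^ 2) * hr2
    rw [hf]
    simp only [this, Real.exp_add]; ring
  simp only [h2] at h1
  rw [integral_const_mul] at h1
  have h3 : |r ^ n| * |(r ^ n)⁻¹| = 1 := by rw [← abs_mul, mul_inv_cancel₀ (by positivity), abs_one]
  simp only [Iw, In]
  calc ∫ u, f u = (|r ^ n| * |(r ^ n)⁻¹|) * ∫ u, f u := by rw [h3, one_mul]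
    _ = |r ^ n| * (|(r ^ n)⁻¹| • ∫ u, f u) := by rw [smul_eq_mul, mul_assoc]
    _ = _ := by rw [← h1, mul_assoc]

lemma Ep_zero_shift (ψ : Eu n → ℝ) {τ : ℝ} (hτ : 0 < τ) (x : Eu n) :
    Ep (fun _ => 0) ψ τ (τ • x) = Eg (fun z => ψ (x + (Real.sqrt τ)⁻¹ • z)) := by
  have : 0 < (Real.sqrt τ)⁻¹ := inv_pos.2 (Real.sqrt_pos.2 hτ)
  have h1 : |((Real.sqrt τ)⁻¹) ^ n| * Real.exp (τ / 2 * ‖x‖ ^ 2) ≠ 0 := by positivity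
  rw [Eg, Ep, Iw_zero_shift ψ hτ x, Iw_zero_shift _ hτ x, mul_div_mul_left _ _ h1]; rfl

lemma Eg_add {f g : Eu n → ℝ} (hf : PC f) (hg : PC g) : Eg (fun x => f x + g x) = Eg f + Eg g :=
  Ep_add LB_zero hf hg one_pos 0
lemma Eg_sub {f g : Eu n → ℝ} (hf : PC f) (hg : PC g) : Eg (fun x => f x - g x) = Eg f - Eg g :=
  Ep_sub LB_zero hf hg one_pos 0
lemma Eg_cmul (c : ℝ) (f : Eu n → ℝ) : Eg (fun x => c * f x) = c * Eg f := Ep_cmul c 1 0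
lemma Eg_const (c : ℝ) : Eg (fun _ : Eu n => c) = c := Ep_const LB_zero one_pos 0 c
lemma Eg_mono {f g : Eu n → ℝ} (hf : PC f) (hg : PC g) (h : ∀ x, f x ≤ g x) : Eg f ≤ Eg g :=
  Ep_mono LB_zero hf hg one_pos 0 h
lemma Eg_sum {ι : Type*} {s : Finset ι} {f : ι → Eu n → ℝ} (hf : ∀ i ∈ s, PC (f i)) :
    Eg (fun x => ∑ i ∈ s, f i x) = ∑ i ∈ s, Eg (f i) := Ep_sum LB_zero hf one_pos 0

lemma Eg_isometry (L : Eu n ≃ₗᵢ[ℝ] Eu n) (ψ : Eu n → ℝ) : Eg (fun x => ψ (L x)) = Eg ψ := by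
  have : ∀ ψ : Eu n → ℝ, Iw (fun _ => 0) (fun x => ψ (L x)) 1 0 = Iw (fun _ => 0) ψ 1 0 := fun ψ => by
    simp only [Iw, In]
    rw [← (L.measurePreserving).integral_comp L.toHomeomorph.measurableEmbedding
      (fun x => ψ x * Real.exp (-(pot (fun _ => 0) 1 0 x)))]
    congr 1; ext x; simp [pot]
  rw [Eg, Ep, this, Eg, Ep]

lemma Eg_coord_mul {w : Eu n → ℝ} (hw : TG w) (i : Fin n) : Eg (fun x => x i * w x) = Eg (pd i w) := by
  have e : pot (fun _ : Eu n => (0 : ℝ)) 1 0 = U0 (fun _ => 1) (fun _ => 0) 0 := by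
    ext x; simp [pot, U0, norm_sq_eq_sum, Finset.mul_sum]
  have hQ : QG (U0 (n := n) (fun _ => 1) (fun _ => 0) 0) := QG_U0 _ _ _ one_pos fun _ => le_rfl
  have := In_ibp hQ (TG_U0 _ _ _) hw i
  rw [Eg, Eg, Ep, Ep, Iw, Iw, Iw, e, this]
  congr 2; ext x
  rw [pd_U0]; simp; ring

lemma Eg_coord (i : Fin n) : Eg (fun x : Eu n => x i) = 0 := by
  have := Eg_coord_mul (TG.const (n := n) 1) i
  have e : pd i (fun _ : Eu n => (1 : ℝ)) = fun _ => 0 := by ext x; exact pd_const _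
  rw [e, Eg_const] at this
  simpa using this

lemma Eg_coord_sq (i : Fin n) : Eg (fun x : Eu n => x i ^ 2) = 1 := by
  have := Eg_coord_mul (TG.coord i) i
  have e : pd i (fun x : Eu n => x i) = fun _ => 1 := by ext x; rw [pd_coord]; simp
  rw [e, Eg_const] at this
  rw [← this]; congr 1; ext x; ring

lemma Eg_norm_sq : Eg (fun x : Eu n => ‖x‖ ^ 2) = n := by
  simp only [norm_sq_eq_sum]
  rw [Eg_sum fun i _ => (PC.coord i).pow 2]
  simp [Eg_coord_sq]

lemma Eg_coord_four (i j : Fin n) : Eg (fun x : Eu n => x i ^ 2 * x j ^ 2) = 1 + if i = j then 2 else 0 := by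
  have := Eg_coord_mul ((TG.coord i).mul ((TG.coord j).pow 2)) i
  have e : pd i (fun x : Eu n => x i * x j ^ 2) = fun x => x j ^ 2 + (if i = j then 2 else 0) * x j ^ 2 := by
    ext x
    have d := fun k : Fin n => (TG.coord k).diff x
    have e2 : (fun x : Eu n => x i * x j ^ 2) = fun x => x i * (x j * x j) := by ext x; ring
    rw [e2, pd_mul (d i) (((TG.coord j).mul (TG.coord j)).diff x), pd_mul (d j) (d j), pd_coord, pd_coord]
    split_ifs with h1 h2 h2
    · subst h2; ring
    · ring
    · simp at h1
    · simp at h1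
  rw [e, Eg_add ((PC.coord j).pow 2) (((PC.coord j).pow 2).cmul _), Eg_cmul, Eg_coord_sq, mul_one] at this
  rw [← this]; congr 1; ext x; ring

lemma Eg_norm_four : Eg (fun x : Eu n => ‖x‖ ^ 4) = n ^ 2 + 2 * n := by
  have e : (fun x : Eu n => ‖x‖ ^ 4) = fun x => ∑ i, ∑ j, x i ^ 2 * x j ^ 2 := by
    ext x
    rw [show ‖x‖ ^ 4 = ‖x‖ ^ 2 * ‖x‖ ^ 2 by ring, norm_sq_eq_sum, Finset.sum_mul_sum]
  have p : ∀ i j, PC (fun x : Eu n => x i ^ 2 * x j ^ 2) := fun i j => ((PC.coord i).pow 2).mul ((PC.coord j).pow 2)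
  rw [e, Eg_sum fun i _ => PC.sum fun j _ => p i j]
  have : ∀ i, Eg (fun x : Eu n => ∑ j, x i ^ 2 * x j ^ 2) = n + 2 := fun i => by
    rw [Eg_sum fun j _ => p i j]
    simp [Eg_coord_four, Finset.sum_add_distrib]
  simp only [this]; simp; ring

lemma twelve_mul_ge {u : ℝ} (hu : 0 ≤ u) : 9 * u ^ 2 - u ^ 4 ≤ 12 * u := by
  have : 0 ≤ u * ((u - 7 / 4) ^ 2 * (u + 7 / 2) + 3 / 16 * u + 41 / 32) := by positivity
  nlinarith

lemma Eg_abs_coord (i : Fin n) : 1 / 2 ≤ Eg (fun x : Eu n => |x i|) := by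
  have p2 : PC (fun x : Eu n => x i ^ 2) := (PC.coord i).pow 2
  have p4 : PC (fun x : Eu n => x i ^ 2 * x i ^ 2) := p2.mul p2
  have := Eg_mono (f := fun x : Eu n => 9 * x i ^ 2 - x i ^ 2 * x i ^ 2) (g := fun x => 12 * |x i|)
    ((p2.cmul 9).sub p4) ((PC.coord i).abs.cmul 12) fun x => by
      have := twelve_mul_ge (abs_nonneg (x i))
      rw [show |x i| ^ 4 = (|x i| ^ 2) * |x i| ^ 2 by ring, sq_abs] at this
      exact this
  rw [Eg_sub (p2.cmul 9) p4, Eg_cmul, Eg_cmul, Eg_coord_sq, Eg_coord_four, if_pos rfl] at this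
  linarith

lemma Eg_norm (hn : 0 < n) : Real.sqrt n / 2 ≤ Eg (fun x : Eu n => ‖x‖) := by
  have hn1 : (1 : ℝ) ≤ n := by exact_mod_cast hn
  set m := Real.sqrt n with hm
  have hm0 : 0 < m := Real.sqrt_pos.2 (by linarith)
  have hm2 : m ^ 2 = n := Real.sq_sqrt (by linarith)
  have p2 : PC (fun x : Eu n => ‖x‖ ^ 2) := PC.norm.pow 2
  have p4 : PC (fun x : Eu n => ‖x‖ ^ 4) := PC.norm.pow 4
  have := Eg_mono (f := fun x : Eu n => 9 * m ^ 2 * ‖x‖ ^ 2 - ‖x‖ ^ 4) (g := fun x => 12 * m ^ 3 * ‖x‖)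
    ((p2.cmul _).sub p4) (PC.norm.cmul _) fun x => by
      have := twelve_mul_ge (show 0 ≤ ‖x‖ / m by positivity)
      have h2 := mul_le_mul_of_nonneg_left this (show 0 ≤ m ^ 4 by positivity)
      have e1 : m ^ 4 * (9 * (‖x‖ / m) ^ 2 - (‖x‖ / m) ^ 4) = 9 * m ^ 2 * ‖x‖ ^ 2 - ‖x‖ ^ 4 := by field_simp
      have e2 : m ^ 4 * (12 * (‖x‖ / m)) = 12 * m ^ 3 * ‖x‖ := by field_simp
      rw [e1, e2] at h2; exact h2
  rw [Eg_sub (p2.cmul _) p4, Eg_cmul, Eg_cmul, Eg_norm_sq, Eg_norm_four, hm2] at this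
  have h3 : 6 * m ^ 4 ≤ 12 * m ^ 3 * Eg (fun x : Eu n => ‖x‖) := by
    have : m ^ 4 = n ^ 2 := by rw [← hm2]; ring
    nlinarith
  have h4 : 0 < m ^ 3 := by positivity
  have h5 : m ^ 3 * (6 * m) ≤ m ^ 3 * (12 * Eg (fun x : Eu n => ‖x‖)) := by nlinarith
  have := le_of_mul_le_mul_left h5 h4
  linarith

/-- Continuous nonnegative sublinear functionals, i.e. gauges of convex neighbourhoods of the origin. -/
structure Sublin (h : Eu n → ℝ) : Prop where
  nonneg : ∀ x, 0 ≤ h x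
  add_le : ∀ x y, h (x + y) ≤ h x + h y
  smul : ∀ (c : ℝ), 0 ≤ c → ∀ x, h (c • x) = c * h x
  cont : Continuous h

lemma Sublin.zero {h : Eu n → ℝ} (hh : Sublin h) : h 0 = 0 := by simpa using hh.smul 0 le_rfl 0

lemma Sublin.sum_le {h : Eu n → ℝ} (hh : Sublin h) {ι : Type*} (s : Finset ι) (x : ι → Eu n) :
    h (∑ i ∈ s, x i) ≤ ∑ i ∈ s, h (x i) := by
  classical
  induction s using Finset.induction_on with
  | empty => simp [hh.zero]
  | insert i s hi ih => rw [Finset.sum_insert hi, Finset.sum_insert hi]; linarith [hh.add_le (x i) (∑ j ∈ s, x j)]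

lemma Sublin.le_norm {h : Eu n → ℝ} (hh : Sublin h) {m : ℝ} (hm : ∀ i, h (ee i) ≤ m ∧ h (-ee i) ≤ m) (x : Eu n) :
    h x ≤ n * m * ‖x‖ := by
  conv_lhs => rw [eu_eq_sum x]
  refine (hh.sum_le _ _).trans ?_
  have : ∀ i, h (x i • ee i) ≤ ‖x‖ * m := fun i => by
    have hm0 : 0 ≤ m := (hh.nonneg _).trans (hm i).1
    have h1 := mul_le_mul_of_nonneg_right (abs_coord_le x i) hm0
    refine le_trans ?_ h1
    rcases le_total 0 (x i) with h0 | h0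
    · rw [hh.smul _ h0, abs_of_nonneg h0]; exact mul_le_mul_of_nonneg_left (hm i).1 h0
    · rw [show x i • (ee i : Eu n) = (-(x i)) • (-ee i) by simp, hh.smul _ (by linarith), abs_of_nonpos h0]
      exact mul_le_mul_of_nonneg_left (hm i).2 (by linarith)
  refine (Finset.sum_le_sum fun i _ => this i).trans (le_of_eq ?_)
  simp; ring

lemma Sublin.pc {h : Eu n → ℝ} (hh : Sublin h) : PC h := by
  refine ⟨hh.cont, n * ∑ i, (h (ee i) + h (-ee i)), 1, ?_, fun x => ?_⟩
  · exact mul_nonneg (by positivity) (Finset.sum_nonneg fun i _ => add_nonneg (hh.nonneg _) (hh.nonneg _))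
  · rw [abs_of_nonneg (hh.nonneg x), pow_one]
    have h0 : 0 ≤ n * ∑ i, (h (ee i) + h (-ee i)) :=
      mul_nonneg (by positivity) (Finset.sum_nonneg fun i _ => add_nonneg (hh.nonneg _) (hh.nonneg _))
    refine (hh.le_norm (m := ∑ i, (h (ee i) + h (-ee i))) (fun i => ?_) x).trans ?_
    · have := Finset.single_le_sum (f := fun i => h (ee i) + h (-ee i))
        (fun i _ => add_nonneg (hh.nonneg _) (hh.nonneg _)) (Finset.mem_univ i)
      constructor <;> linarith [hh.nonneg (ee i), hh.nonneg (-ee i)]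
    · exact mul_le_mul_of_nonneg_left (by linarith) h0

lemma Sublin.Eg_nonneg {h : Eu n → ℝ} (hh : Sublin h) : 0 ≤ Eg h := by
  have := Eg_mono (PC.const 0) hh.pc hh.nonneg
  rwa [Eg_const] at this

lemma Sublin.le_Eg {h : Eu n → ℝ} (hh : Sublin h) (i : Fin n) {σ : ℝ} (hσ : σ = 1 ∨ σ = -1) : h (σ • ee i) ≤ 4 * Eg h := by
  let R : Eu n ≃ₗᵢ[ℝ] Eu n := (ℝ ∙ (ee i : Eu n)).reflection
  have hR : ∀ x, x + R x = (2 * x i) • (ee i : Eu n) := fun x => by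
    simp only [R]
    rw [Submodule.reflection_singleton_apply, EuclideanSpace.inner_single_left]
    simp [mul_smul, two_smul]
  have h1 : ∀ x : Eu n, h (σ • ee i) * (|x i| + σ * x i) ≤ h x + h (R x) := fun x => by
    refine le_trans ?_ (hh.add_le _ _)
    rw [hR]
    have h0 := hh.nonneg (σ • ee i)
    have h2 := hh.nonneg ((2 * x i) • ee i)
    rcases le_total 0 (σ * x i) with h3 | h3
    · have e : (2 * x i) • (ee i : Eu n) = (2 * (σ * x i)) • (σ • ee i) := by
        rw [smul_smul]; congr 1; rcases hσ with rfl | rfl <;> ring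
      have e2 : |x i| = σ * x i := by
        rw [← abs_of_nonneg h3, abs_mul]; rcases hσ with rfl | rfl <;> simp
      rw [e, hh.smul (2 * (σ * x i)) (by linarith) (σ • ee i), e2]; linarith
    · have e2 : |x i| = -(σ * x i) := by
        rw [← abs_of_nonpos h3, abs_mul]; rcases hσ with rfl | rfl <;> simp
      rw [e2]; simpa using h2
  have p : PC (fun x => h (R x)) := by
    refine ⟨hh.cont.comp R.continuous, ?_⟩
    obtain ⟨C, k, hC, H⟩ := hh.pc.2
    exact ⟨C, k, hC, fun x => by simpa using H (R x)⟩
  have := Eg_mono (((PC.coord i).abs.add ((PC.coord i).cmul σ)).cmul (h (σ • ee i))) (hh.pc.add p) h1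
  rw [Eg_cmul, Eg_add (PC.coord i).abs ((PC.coord i).cmul σ), Eg_cmul, Eg_coord, Eg_add hh.pc p, Eg_isometry R h] at this
  have h5 := mul_le_mul_of_nonneg_left (Eg_abs_coord i) (hh.nonneg (σ • ee i))
  linarith

lemma Sublin.le_Eg_norm {h : Eu n → ℝ} (hh : Sublin h) (x : Eu n) : h x ≤ n * (4 * Eg h) * ‖x‖ :=
  hh.le_norm (fun i => ⟨by simpa using hh.le_Eg i (σ := 1) (Or.inl rfl), by simpa using hh.le_Eg i (σ := -1) (Or.inr rfl)⟩) x

lemma Sublin.lip {h : Eu n → ℝ} (hh : Sublin h) (x y : Eu n) : |h (x + y) - h x| ≤ n * (4 * Eg h) * ‖y‖ := by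
  have h1 := hh.add_le x y
  have h2 := hh.add_le (x + y) (-y)
  rw [add_neg_cancel_right] at h2
  have h3 := hh.le_Eg_norm y
  have h4 := hh.le_Eg_norm (-y)
  rw [norm_neg] at h4
  rw [abs_le]; constructor <;> linarith

end heat

/-! ### Composition with Gaussian averages -/

section compose
variable {n : ℕ}

/-- The vector with coordinates `m k t y`. -/
def vecm (m : Fin n → ℝ → Eu n → ℝ) (t : ℝ) (y : Eu n) : Eu n := WithLp.toLp 2 (fun k => m k t y)

lemma HD.comp_vec {Φ : ℝ → Eu n → ℝ} {t : ℝ} {y : Eu n} {a : ℝ} {v : Fin n → ℝ} {τ : ℝ → ℝ} {τ' : ℝ}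
    {m : Fin n → ℝ → Eu n → ℝ} {μ : Fin n → ℝ} {ν : Fin n → Fin n → ℝ}
    (h : HD Φ (τ t) (vecm m t y) a v) (hτ : HasDerivAt τ τ' t) (hm : ∀ k, HD (m k) t y (μ k) (ν k)) :
    HD (fun t y => Φ (τ t) (vecm m t y)) t y (a * τ' + ∑ k, v k * μ k) (fun i => ∑ k, v k * ν k i) := by
  obtain ⟨L, hL, h1, h2⟩ := h
  choose P hP hP1 hP2 using hm
  have e1 : HasFDerivAt (fun p : ℝ × Eu n => vecm m p.1 p.2)
      (((PiLp.continuousLinearEquiv 2 ℝ (fun _ : Fin n => ℝ)).symm : (Fin n → ℝ) →L[ℝ] Eu n).comp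
        (ContinuousLinearMap.pi P)) (t, y) :=
    ((PiLp.continuousLinearEquiv 2 ℝ (fun _ : Fin n => ℝ)).symm : (Fin n → ℝ) →L[ℝ] Eu n).hasFDerivAt.comp (t, y)
      (hasFDerivAt_pi.2 hP)
  have e2 : HasFDerivAt (fun p : ℝ × Eu n => τ p.1) (τ' • ContinuousLinearMap.fst ℝ ℝ (Eu n)) (t, y) :=
    hτ.comp_hasFDerivAt (t, y) (f := fun p : ℝ × Eu n => p.1) hasFDerivAt_fst
  have e3 := HasFDerivAt.comp (t, y) (f := fun p : ℝ × Eu n => (τ p.1, vecm m p.1 p.2)) hL (e2.prodMk e1)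
  have key : ∀ (s : ℝ) (w : Eu n), L (s, w) = s * a + ∑ k, w k * v k := fun s w => by
    have : (s, w) = s • ((1 : ℝ), (0 : Eu n)) + ∑ k, w k • ((0 : ℝ), (ee k : Eu n)) := by
      ext1
      · simp [Prod.fst_sum]
      · simp only [Prod.snd_add, Prod.smul_snd, smul_zero, zero_add, Prod.snd_sum]
        exact eu_eq_sum w
    rw [this, map_add, map_smul, map_sum, h1]
    simp only [map_smul, h2, smul_eq_mul]
  refine ⟨_, e3, ?_, fun i => ?_⟩
  · simp only [ContinuousLinearMap.comp_apply, ContinuousLinearMap.prod_apply]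
    rw [key]
    simp [hP1, mul_comm]
  · simp only [ContinuousLinearMap.comp_apply, ContinuousLinearMap.prod_apply]
    rw [key]
    simp [hP2, mul_comm]

lemma PBu.abs {f : ℝ → Eu n → ℝ} (hf : PBu f) : PBu (fun t y => |f t y|) := by
  obtain ⟨F, h1, h2⟩ := hf
  exact ⟨F, h1, fun t ht y => by rw [abs_abs]; exact h2 t ht y⟩
lemma PBu.pow {f : ℝ → Eu n → ℝ} (hf : PBu f) (k : ℕ) : PBu (fun t y => f t y ^ k) := by
  induction k with
  | zero => simpa using PBu.const (n := n) 1
  | succ k ih => simpa [pow_succ] using ih.mul hf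

variable {m mt : Fin n → ℝ → Eu n → ℝ} {mi mii : Fin n → Fin n → ℝ → Eu n → ℝ}
  {τ τ' : ℝ → ℝ} {τ0 τ1 : ℝ}

lemma PBu_comp (hm : ∀ k, PBu (m k)) (h0 : 0 < τ0) (h1 : ∀ t ∈ Set.Ioo (0 : ℝ) 1, τ0 ≤ τ t ∧ τ t ≤ τ1)
    {ψ : Eu n → ℝ} (hψ : PC ψ) : PBu (fun t y => Ep (fun _ => 0) ψ (τ t) (vecm m t y)) := by
  have e : (fun x : Eu n => U0 (fun _ => 0) (fun _ => 0) 0 x + (fun _ => (0:ℝ)) x) = fun _ => 0 := by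
    ext x; simp [U0]
  have h01 : τ0 ≤ τ1 := (h1 (1/2) (by constructor <;> norm_num)).1.trans (h1 (1/2) (by constructor <;> norm_num)).2
  obtain ⟨g, ⟨C, k, hC, hg⟩, H⟩ := Ep_bound (b := fun _ : Fin n => 0) (l := fun _ => 0) (c := 0) (ψ₀ := fun _ => 0) (B₀ := 0)
    (β₀ := τ0) (β₁ := τ1) (t₀ := 0) (by simp) h0 (h0.trans_le h01) (by rw [e]; exact LB_zero) hψ
  rw [e] at H
  have hp : PBu (fun t y => C * (1 + ∑ i, |m i t y|) ^ k) :=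
    (((PBu.const 1).add (PBu.sum fun i _ => (hm i).abs)).pow k).cmul C
  refine hp.mono fun t ht y => ?_
  have h2 := H (τ t) (vecm m t y) (h0.trans_le (h1 t ht).1) fun i => by simpa using h1 t ht
  refine h2.trans ((le_abs_self _).trans ((hg _).trans (le_trans ?_ (le_abs_self _))))
  have := norm_le_sum_abs (vecm m t y)
  gcongr
  exact this

lemma vecm_cont {t : ℝ} (hm : ∀ k, Continuous (m k t)) : Continuous (vecm m t) :=
  (PiLp.continuous_toLp 2 _).comp (continuous_pi hm)

/-- Second partial derivative of the Gaussian average `Ep 0 ψ t y` in its natural parameter `y`. -/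
def Ekl (ψ : Eu n → ℝ) (k l : Fin n) (t : ℝ) (y : Eu n) : ℝ :=
  E1 (fun _ => 0) (fun x => x k * ψ x) l t y -
    (E1 (fun _ => 0) (fun x => x k) l t y * Ep (fun _ => 0) ψ t y + Ep (fun _ => 0) (fun x => x k) t y * E1 (fun _ => 0) ψ l t y)

/-- Chain rule for a Gaussian average whose precision and natural parameter depend on `(t, y)`. -/
lemma Cls.compEp (hm : ∀ k, Cls (m k) (mt k) (mi k) (mii k)) (h0 : 0 < τ0)
    (h1 : ∀ t ∈ Set.Ioo (0 : ℝ) 1, τ0 ≤ τ t ∧ τ t ≤ τ1) (hτ : ∀ t ∈ Set.Ioo (0 : ℝ) 1, HasDerivAt τ (τ' t) t)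
    {B : ℝ} (hτ' : ∀ t ∈ Set.Ioo (0 : ℝ) 1, |τ' t| ≤ B) {ψ : Eu n → ℝ} (hψ : PC ψ) :
    Cls (fun t y => Ep (fun _ => 0) ψ (τ t) (vecm m t y))
      (fun t y => Et (fun _ => 0) ψ (τ t) (vecm m t y) * τ' t + ∑ k, E1 (fun _ => 0) ψ k (τ t) (vecm m t y) * mt k t y)
      (fun i t y => ∑ k, E1 (fun _ => 0) ψ k (τ t) (vecm m t y) * mi k i t y)
      (fun i t y => ∑ k, ((∑ l, Ekl ψ k l (τ t) (vecm m t y) * mi l i t y) * mi k i t y +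
        E1 (fun _ => 0) ψ k (τ t) (vecm m t y) * mii k i t y)) := by
  have pos : ∀ {t}, t ∈ Set.Ioo (0 : ℝ) 1 → 0 < τ t := fun ht => h0.trans_le (h1 _ ht).1
  have hd0 : ∀ {φ : Eu n → ℝ}, PC φ → ∀ t ∈ Set.Ioo (0 : ℝ) 1, ∀ y,
      HD (fun t y => Ep (fun _ => 0) φ (τ t) (vecm m t y)) t y _ _ := fun hφ t ht y =>
    (Ep_HD LB_zero hφ (pos ht) _).comp_vec (hτ t ht) fun k => (hm k).hd t ht y
  have pb0 : ∀ {φ : Eu n → ℝ}, PC φ → PBu (fun t y => Ep (fun _ => 0) φ (τ t) (vecm m t y)) := fun hφ =>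
    PBu_comp (fun k => (hm k).pb) h0 h1 hφ
  have pb1 : ∀ {φ : Eu n → ℝ}, PC φ → ∀ i, PBu (fun t y => E1 (fun _ => 0) φ i (τ t) (vecm m t y)) := fun hφ i =>
    (pb0 ((PC.coord i).mul hφ)).sub ((pb0 (PC.coord i)).mul (pb0 hφ))
  have pb2 : ∀ k l, PBu (fun t y => Ekl ψ k l (τ t) (vecm m t y)) := fun k l =>
    (pb1 ((PC.coord k).mul hψ) l).sub (((pb1 (PC.coord k) l).mul (pb0 hψ)).add ((pb0 (PC.coord k)).mul (pb1 hψ l)))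
  have cm : ∀ {t}, t ∈ Set.Ioo (0 : ℝ) 1 → Continuous (vecm m t) := fun ht => vecm_cont fun k => (hm k).cont ht
  have c0 : ∀ {φ : Eu n → ℝ}, PC φ → ∀ t ∈ Set.Ioo (0 : ℝ) 1,
      Continuous (fun y => Ep (fun _ => 0) φ (τ t) (vecm m t y)) := fun hφ t ht =>
    (LB_zero.ep_cont hφ (pos ht)).comp (cm ht)
  have c1 : ∀ {φ : Eu n → ℝ}, PC φ → ∀ i, ∀ t ∈ Set.Ioo (0 : ℝ) 1,
      Continuous (fun y => E1 (fun _ => 0) φ i (τ t) (vecm m t y)) := fun hφ i t ht =>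
    (LB_zero.E1_cont hφ (pos ht) i).comp (cm ht)
  have c2 : ∀ k l, ∀ t ∈ Set.Ioo (0 : ℝ) 1, Continuous (fun y => Ekl ψ k l (τ t) (vecm m t y)) := fun k l t ht =>
    (c1 ((PC.coord k).mul hψ) l t ht).sub (((c1 (PC.coord k) l t ht).mul (c0 hψ t ht)).add
      ((c0 (PC.coord k) t ht).mul (c1 hψ l t ht)))
  have hE1 : ∀ k, ∀ t ∈ Set.Ioo (0 : ℝ) 1, ∀ y i, DifferentiableAt ℝ (fun y => E1 (fun _ => 0) ψ k (τ t) (vecm m t y)) y ∧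
      pd i (fun y => E1 (fun _ => 0) ψ k (τ t) (vecm m t y)) y = ∑ l, Ekl ψ k l (τ t) (vecm m t y) * mi l i t y := fun k t ht y i => by
    have a := hd0 ((PC.coord k).mul hψ) t ht y
    have b := (hd0 (PC.coord k) t ht y).mul (hd0 hψ t ht y)
    have a1 := a.differentiableAt
    have b1 := b.differentiableAt
    refine ⟨a1.sub b1, ?_⟩
    have e : (fun y => E1 (fun _ => 0) ψ k (τ t) (vecm m t y)) = fun y =>
      (fun t y => Ep (fun _ => 0) (fun x => x k * ψ x) (τ t) (vecm m t y)) t y -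
      (fun t y => Ep (fun _ => 0) (fun x => x k) (τ t) (vecm m t y) * Ep (fun _ => 0) ψ (τ t) (vecm m t y)) t y := rfl
    rw [e, pd_sub a1 b1, a.pd_eq, b.pd_eq, Finset.sum_mul, Finset.mul_sum, ← Finset.sum_add_distrib, ← Finset.sum_sub_distrib]
    refine Finset.sum_congr rfl fun l _ => ?_
    simp only [Ekl, E1]; ring
  refine ⟨fun t ht y => hd0 hψ t ht y, fun t ht y i => ?_, fun t ht => ?_, fun t ht i => ?_, pb0 hψ, ?_, fun i => ?_, fun i => ?_⟩
  · have d1 := fun k => (hE1 k t ht y i).1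
    have d2 := fun k => ((hm k).hdi t ht y i).1
    have d3 : ∀ k ∈ Finset.univ, DifferentiableAt ℝ (fun y => E1 (fun _ => 0) ψ k (τ t) (vecm m t y) * mi k i t y) y :=
      fun k _ => (d1 k).mul (d2 k)
    refine ⟨DifferentiableAt.fun_sum d3, ?_⟩
    rw [pd_sum d3]
    refine Finset.sum_congr rfl fun k _ => ?_
    rw [pd_mul (d1 k) (d2 k), (hE1 k t ht y i).2, ((hm k).hdi t ht y i).2]
  · refine Continuous.add (Continuous.mul ?_ continuous_const) (continuous_finsetSum _ fun k _ =>
      (c1 hψ k t ht).mul ((hm k).ct t ht))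
    exact ((c0 ((PC.norm.pow 2).mul hψ) t ht).sub ((c0 (PC.norm.pow 2) t ht).mul (c0 hψ t ht))).const_mul _
  · exact continuous_finsetSum _ fun k _ => ((continuous_finsetSum _ fun l _ => (c2 k l t ht).mul ((hm l).conti ht i)).mul
      ((hm k).conti ht i)).add ((c1 hψ k t ht).mul ((hm k).cii t ht i))
  · have p1 : PBu (fun t y => Et (fun _ => 0) ψ (τ t) (vecm m t y)) :=
      ((pb0 ((PC.norm.pow 2).mul hψ)).sub ((pb0 (PC.norm.pow 2)).mul (pb0 hψ))).cmul _
    have p2 : PBu (fun t (_ : Eu n) => τ' t) := ⟨fun _ => B, PB.const _, fun t ht _ => hτ' t ht⟩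
    exact (p1.mul p2).add (PBu.sum fun k _ => (pb1 hψ k).mul (hm k).pbt)
  · exact PBu.sum fun k _ => (pb1 hψ k).mul ((hm k).pbi i)
  · exact PBu.sum fun k _ => ((PBu.sum fun l _ => (pb2 k l).mul ((hm l).pbi i)).mul ((hm k).pbi i)).add
      ((pb1 hψ k).mul ((hm k).pbii i))

end compose

/-! ### Convexity and Laplacian bounds for Gaussian averages, Jensen -/

section convexity
variable {n : ℕ}

lemma hasDerivAt_line {G : Eu n → ℝ} {y v : Eu n} {r : ℝ} (h : DifferentiableAt ℝ G (y + r • v)) :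
    HasDerivAt (fun r : ℝ => G (y + r • v)) (∑ i, v i * pd i G (y + r • v)) r := by
  have h1 : HasDerivAt (fun r : ℝ => y + r • v) v r := by
    simpa using ((hasDerivAt_id r).smul_const v).const_add y
  have h2 := h.hasFDerivAt.comp_hasDerivAt r h1
  have e : fderiv ℝ G (y + r • v) v = ∑ i, v i * pd i G (y + r • v) := by
    conv_lhs => enter [2]; rw [eu_eq_sum v]
    rw [map_sum]; simp [pd]
  rw [← e]; exact h2

lemma hess_nonneg {G : Eu n → ℝ} (hc : ConvexOn ℝ Set.univ G) (hd : ∀ x, DifferentiableAt ℝ G x)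
    (hd2 : ∀ x j, DifferentiableAt ℝ (pd j G) x) (y v : Eu n) :
    0 ≤ ∑ i, ∑ j, v i * v j * pd i (pd j G) y := by
  have h1 : ConvexOn ℝ Set.univ (fun r : ℝ => G (y + r • v)) := by
    have := hc.comp_affineMap (AffineMap.lineMap y (y + v) : ℝ →ᵃ[ℝ] Eu n)
    rw [Set.preimage_univ] at this
    refine this.congr fun r _ => ?_
    simp [AffineMap.lineMap_apply, add_comm]
  have h2 := fun r => hasDerivAt_line (v := v) (hd (y + r • v))
  have h3 := h1.monotoneOn_deriv fun r _ => (h2 r).differentiableAt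
  have e : deriv (fun r : ℝ => G (y + r • v)) = fun r => ∑ j, v j * pd j G (y + r • v) := by
    ext r; exact (h2 r).deriv
  rw [e, monotoneOn_univ] at h3
  have h4 : HasDerivAt (fun r : ℝ => ∑ j, v j * pd j G (y + r • v))
      (∑ j, v j * ∑ i, v i * pd i (pd j G) (y + (0 : ℝ) • v)) 0 :=
    HasDerivAt.fun_sum fun j _ => (hasDerivAt_line (hd2 _ j)).const_mul _
  have h5 := h3.deriv_nonneg (x := 0)
  rw [h4.deriv] at h5
  rw [Finset.sum_comm]
  refine h5.trans (le_of_eq (Finset.sum_congr rfl fun j _ => ?_))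
  rw [Finset.mul_sum]
  exact Finset.sum_congr rfl fun i _ => by rw [zero_smul, add_zero]; ring

end convexity

section heatflow
variable {n : ℕ}

lemma PC.comp_affine {ψ : Eu n → ℝ} (h : PC ψ) (x : Eu n) (r : ℝ) : PC (fun z => ψ (x + r • z)) := by
  obtain ⟨hc, C, k, hC, H⟩ := h
  refine ⟨by fun_prop, C * ((1 + ‖x‖) * (1 + |r|)) ^ k, k, by positivity, fun z => (H _).trans ?_⟩
  rw [mul_assoc, ← mul_pow]
  gcongr
  have h1 := norm_add_le x (r • z)
  rw [norm_smul, Real.norm_eq_abs] at h1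
  have h2 := norm_nonneg x
  have h3 := norm_nonneg z
  have h4 := abs_nonneg r
  have h5 := mul_nonneg h2 h3
  have h6 := mul_nonneg h4 h3
  have h7 := mul_nonneg h2 h4
  have h8 := mul_nonneg h2 h6
  nlinarith

lemma Sublin.convex {h : Eu n → ℝ} (hh : Sublin h) {a b : ℝ} (ha : 0 ≤ a) (hb : 0 ≤ b) (x y : Eu n) :
    h (a • x + b • y) ≤ a * h x + b * h y := by
  rw [← hh.smul a ha, ← hh.smul b hb]; exact hh.add_le _ _

lemma Ep_zero_convex {h : Eu n → ℝ} (hh : Sublin h) {s : ℝ} (hs : 0 < s) :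
    ConvexOn ℝ Set.univ (Ep (fun _ => 0) h s) := by
  refine ⟨convex_univ, fun x _ y _ a b ha hb hab => ?_⟩
  have e : ∀ w : Eu n, Ep (fun _ => 0) h s w = Eg (fun z => h (s⁻¹ • w + (Real.sqrt s)⁻¹ • z)) := fun w => by
    rw [← Ep_zero_shift h hs, smul_smul, mul_inv_cancel₀ hs.ne', one_smul]
  have p := fun w : Eu n => hh.pc.comp_affine w (Real.sqrt s)⁻¹
  rw [e, e, e, smul_eq_mul, smul_eq_mul, ← Eg_cmul, ← Eg_cmul, ← Eg_add ((p _).cmul a) ((p _).cmul b)]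
  refine Eg_mono (p _) (((p _).cmul a).add ((p _).cmul b)) fun z => ?_
  have := hh.convex ha hb (s⁻¹ • x + (Real.sqrt s)⁻¹ • z) (s⁻¹ • y + (Real.sqrt s)⁻¹ • z)
  refine le_trans (le_of_eq ?_) this
  congr 1
  calc s⁻¹ • (a • x + b • y) + (Real.sqrt s)⁻¹ • z = s⁻¹ • (a • x + b • y) + (a + b) • (Real.sqrt s)⁻¹ • z := by
        rw [hab, one_smul]
    _ = _ := by module

/-- Gaussian averages of a sublinear function are convex in the natural parameter. -/
lemma Ekl_nonneg {h : Eu n → ℝ} (hh : Sublin h) {s : ℝ} (hs : 0 < s) (w v : Eu n) :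
    0 ≤ ∑ k, ∑ l, v k * v l * Ekl h k l s w := by
  have e1 : ∀ j, pd j (Ep (fun _ => 0) h s) = E1 (fun _ => 0) h j s := fun j => by
    ext x; exact (Ep_HD LB_zero hh.pc hs x).pd_eq j
  have := hess_nonneg (Ep_zero_convex hh hs) (fun x => (Ep_HD LB_zero hh.pc hs x).differentiableAt)
    (fun x j => by rw [e1]; exact (LB_zero.E1_pd hh.pc hs x j j).1) w v
  rw [Finset.sum_comm] at this
  refine this.trans (le_of_eq (Finset.sum_congr rfl fun k _ => Finset.sum_congr rfl fun l _ => ?_))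
  rw [e1, (LB_zero.E1_pd hh.pc hs w k l).2, Ekl]; ring

lemma Ep_zero_coord {s : ℝ} (hs : 0 < s) (a : Eu n) (k : Fin n) : Ep (fun _ => 0) (fun x : Eu n => x k) s (s • a) = a k := by
  rw [Ep_zero_shift _ hs]
  have : (fun z : Eu n => (a + (Real.sqrt s)⁻¹ • z) k) = fun z => a k + (Real.sqrt s)⁻¹ * z k := by ext z; simp
  rw [this, Eg_add (PC.const _) ((PC.coord k).cmul _), Eg_const, Eg_cmul, Eg_coord]; simp

lemma Ekk_eq {h : Eu n → ℝ} (hp : PC h) {s : ℝ} (hs : 0 < s) (a : Eu n) (k : Fin n) :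
    Ekl h k k s (s • a) = s⁻¹ * Eg (fun z => h (a + (Real.sqrt s)⁻¹ • z) * (z k ^ 2 - 1)) := by
  set r := (Real.sqrt s)⁻¹ with hr
  have hr2 : r ^ 2 = s⁻¹ := by rw [hr, inv_pow, Real.sq_sqrt hs.le]
  set H := fun z : Eu n => h (a + r • z) with hH
  have pH : PC H := hp.comp_affine a r
  have pk := PC.coord (n := n) k
  have c1 : Ep (fun _ => 0) h s (s • a) = Eg H := Ep_zero_shift h hs a
  have key : ∀ {f : Eu n → ℝ}, PC f → Eg (fun z => (a k + r * z k) * f z) = a k * Eg f + r * Eg (fun z => z k * f z) := fun {f} hf => by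
    rw [← Eg_cmul, ← Eg_cmul, ← Eg_add (hf.cmul _) ((pk.mul hf).cmul _)]
    congr 1; ext z; ring
  have c2 : Ep (fun _ => 0) (fun x => x k * h x) s (s • a) = a k * Eg H + r * Eg (fun z => z k * H z) := by
    rw [Ep_zero_shift _ hs, ← hr, ← key pH]
    congr 1
  have c3 : Ep (fun _ => 0) (fun x => x k * (x k * h x)) s (s • a) =
      a k * (a k * Eg H + r * Eg (fun z => z k * H z)) + r * (a k * Eg (fun z => z k * H z) + r * Eg (fun z => z k * (z k * H z))) := by
    rw [Ep_zero_shift _ hs, ← hr, ← key pH, ← key (pk.mul pH), ← Eg_cmul, ← Eg_cmul, ← Eg_add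
      ((((PC.const _).add (pk.cmul r)).mul pH).cmul _) ((((PC.const _).add (pk.cmul r)).mul (pk.mul pH)).cmul _)]
    congr 1; ext z; simp [hH]; ring
  have c4 : Ep (fun _ => 0) (fun x : Eu n => x k * x k) s (s • a) = a k * a k + r ^ 2 := by
    rw [Ep_zero_shift _ hs, ← hr]
    have := key ((PC.const (a k)).add (pk.cmul r))
    have e2 := key pk
    have e3 : Eg (fun z : Eu n => z k * z k) = 1 := by rw [← Eg_coord_sq k]; congr 1; ext z; ring
    rw [Eg_add (PC.const _) (pk.cmul r), Eg_const, Eg_cmul, Eg_coord] at this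
    have e4 : Eg (fun z : Eu n => z k * (a k + r * z k)) = r := by
      rw [e3, Eg_coord] at e2
      simp only [mul_zero, zero_add, mul_one] at e2
      refine Eq.trans ?_ e2
      congr 1; ext z; ring
    rw [e4] at this
    trans (a k * (a k + r * 0) + r * r)
    · rw [← this]; congr 1
    · ring
  have c5 := Ep_zero_coord hs a k
  have c6 : Eg (fun z => H z * (z k ^ 2 - 1)) = Eg (fun z => z k * (z k * H z)) - Eg H := by
    rw [← Eg_sub (pk.mul (pk.mul pH)) pH]
    congr 1; ext z; ring
  simp only [Ekl, E1, c1, c2, c3, c4, c5]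
  rw [c6, ← hr2]; ring

/-- Laplacian bound: the Laplacian is a Gaussian mean of `h (a + r z) (|z|² - n)`, and `h` is Lipschitz. -/
lemma Ekk_sum_le {h : Eu n → ℝ} (hh : Sublin h) (hn : 0 < n) {s : ℝ} (hs : 0 < s) (a : Eu n) :
    ∑ k, Ekl h k k s (s • a) ≤ 12 * n ^ 3 * Eg h * (s⁻¹ * (Real.sqrt s)⁻¹) := by
  simp only [Ekk_eq hh.pc hs a, ← Finset.mul_sum]
  set r := (Real.sqrt s)⁻¹ with hr
  have hr0 : 0 < r := inv_pos.2 (Real.sqrt_pos.2 hs)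
  have pH := hh.pc.comp_affine a r
  have pk := fun k => PC.coord (n := n) k
  rw [← Eg_sum fun k _ => pH.mul (((pk k).pow 2).sub (PC.const 1))]
  have p2 : PC (fun x : Eu n => ‖x‖ ^ 2) := PC.norm.pow 2
  have p4 : PC (fun x : Eu n => ‖x‖ ^ 4) := PC.norm.pow 4
  set Λ := n * (4 * Eg h) with hΛ
  have hE := hh.Eg_nonneg
  have hn1 : (1 : ℝ) ≤ n := by exact_mod_cast hn
  have hΛ0 : 0 ≤ Λ := by positivity
  have pc1 : PC (fun z : Eu n => h a * (‖z‖ ^ 2 - n)) := (p2.sub (PC.const _)).cmul _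
  have pc2 : PC (fun z : Eu n => Λ * r / 2 * (‖z‖ ^ 4 + (n + 1) * ‖z‖ ^ 2 + n)) :=
    ((p4.add (p2.cmul _)).add (PC.const _)).cmul _
  have hb : Eg (fun z => ∑ k, h (a + r • z) * (z k ^ 2 - 1)) ≤
      Eg (fun z : Eu n => h a * (‖z‖ ^ 2 - n) + Λ * r / 2 * (‖z‖ ^ 4 + (n + 1) * ‖z‖ ^ 2 + n)) := by
    refine Eg_mono (PC.sum fun k _ => pH.mul (((pk k).pow 2).sub (PC.const 1))) (pc1.add pc2) fun z => ?_
    have e : ∑ k, h (a + r • z) * (z k ^ 2 - 1) = h (a + r • z) * (‖z‖ ^ 2 - n) := by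
      rw [← Finset.mul_sum, Finset.sum_sub_distrib, ← norm_sq_eq_sum]; simp
    rw [e]
    have h1 := hh.lip a (r • z)
    rw [norm_smul, Real.norm_eq_abs, abs_of_pos hr0, ← hΛ] at h1
    have h2 : |‖z‖ ^ 2 - n| ≤ ‖z‖ ^ 2 + n := by
      rw [abs_le]; constructor <;> nlinarith [sq_nonneg ‖z‖]
    have h3 : (h (a + r • z) - h a) * (‖z‖ ^ 2 - n) ≤ (Λ * (r * ‖z‖)) * (‖z‖ ^ 2 + n) := by
      refine (le_abs_self _).trans ?_
      rw [abs_mul]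
      exact mul_le_mul h1 h2 (abs_nonneg _) (by positivity)
    have h4 : ‖z‖ ≤ (1 + ‖z‖ ^ 2) / 2 := by nlinarith [sq_nonneg (‖z‖ - 1)]
    have h5 : (Λ * (r * ‖z‖)) * (‖z‖ ^ 2 + n) ≤ (Λ * (r * ((1 + ‖z‖ ^ 2) / 2))) * (‖z‖ ^ 2 + n) := by gcongr
    nlinarith
  rw [Eg_add pc1 pc2, Eg_cmul, Eg_cmul, Eg_sub p2 (PC.const _), Eg_const, Eg_norm_sq, Eg_add (p4.add (p2.cmul _)) (PC.const _),
    Eg_add p4 (p2.cmul _), Eg_cmul, Eg_norm_sq, Eg_norm_four, Eg_const] at hb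
  have h6 : Λ * r / 2 * (n ^ 2 + 2 * n + (n + 1) * n + n) ≤ Λ * r * (3 * n ^ 2) := by
    have : (n : ℝ) ≤ n ^ 2 := by nlinarith
    have h7 : (0:ℝ) ≤ Λ * r := by positivity
    nlinarith [mul_le_mul_of_nonneg_left this h7]
  have h8 := mul_le_mul_of_nonneg_left (hb.trans (b := h a * ((n : ℝ) - n) + _) (le_refl _) |>.trans (show _ ≤ Λ * r * (3 * n ^ 2) by rw [sub_self, mul_zero, zero_add]; exact h6)) (inv_pos.2 hs).le
  refine h8.trans (le_of_eq ?_)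
  rw [hΛ]; ring

/-- Jensen's inequality for the posterior, through a supporting linear functional. -/
lemma Sublin.jensen {h : Eu n → ℝ} (hh : Sublin h) {V : Eu n → ℝ} {t₀ : ℝ} (hL : LB V t₀) {t : ℝ} (ht : t₀ < t) (y : Eu n) :
    h (vecm (fun k => Ep V (fun x => x k)) t y) ≤ Ep V h t y := by
  set a := vecm (fun k => Ep V (fun x => x k)) t y with ha
  have hE0 : 0 ≤ Ep V h t y := by
    have := Ep_mono hL (PC.const 0) hh.pc ht y hh.nonneg
    rwa [Ep_const hL ht] at this
  rcases eq_or_ne a 0 with h0 | h0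
  · rw [h0, hh.zero]; exact hE0
  obtain ⟨g, hg1, hg2⟩ := exists_extension_of_le_sublinear (LinearPMap.mkSpanSingleton a (h a) h0) h
    (fun c hc x => hh.smul c hc.le x) hh.add_le (by
      rintro ⟨x, hx⟩
      obtain ⟨c, rfl⟩ := Submodule.mem_span_singleton.1 hx
      rw [LinearPMap.mkSpanSingleton'_apply, RingHom.id_apply]
      rcases le_total 0 c with hc | hc
      · rw [hh.smul c hc, smul_eq_mul]
      · exact (mul_nonpos_of_nonpos_of_nonneg hc (hh.nonneg _)).trans (hh.nonneg _))
  have hga : g a = h a := by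
    have := hg1 ⟨a, Submodule.mem_span_singleton_self a⟩
    rw [this]
    exact LinearPMap.mkSpanSingleton_apply ℝ ℝ h0 (h a)
  have hgs : ∀ x, g x = ∑ k, g (ee k) * x k := fun x => by
    conv_lhs => rw [eu_eq_sum x]
    rw [map_sum]; simp [mul_comm]
  have e : Ep V (fun x => ∑ k, g (ee k) * x k) t y = g a := by
    rw [Ep_sum hL (fun k _ => (PC.coord k).cmul _) ht, hgs a]
    exact Finset.sum_congr rfl fun k _ => by rw [Ep_cmul]; rfl
  rw [← hga, ← e]
  exact Ep_mono hL (PC.sum fun k _ => (PC.coord k).cmul _) hh.pc ht y fun x => by rw [← hgs]; exact hg2 x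

end heatflow

/-! ### The comparison functional and its drift -/

section eigen
open Matrix
variable {n : ℕ}

lemma Spec.one_add_sq {M O : Matrix (Fin n) (Fin n) ℝ} {l : Fin n → ℝ} (h : Spec M O l) :
    (1 + M) * (1 + M) = O * diagonal (fun i => (1 + l i) ^ 2) * Oᵀ := by
  have e2 : (1 + M) = O * diagonal (fun i => 1 + l i) * Oᵀ := by
    have : diagonal (fun i => 1 + l i) = 1 + diagonal l := by rw [← diagonal_one, diagonal_add]
    rw [this, mul_add, add_mul, mul_one, h.o2, ← h.eq]
  rw [e2]
  calc O * diagonal (fun i => 1 + l i) * Oᵀ * (O * diagonal (fun i => 1 + l i) * Oᵀ)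
      = O * diagonal (fun i => 1 + l i) * (Oᵀ * O) * diagonal (fun i => 1 + l i) * Oᵀ := by simp only [mul_assoc]
    _ = O * (diagonal (fun i => 1 + l i) * diagonal (fun i => 1 + l i)) * Oᵀ := by rw [h.o1]; simp only [mul_assoc, mul_one]
    _ = _ := by rw [diagonal_mul_diagonal]; simp only [sq]

/-- In the eigenbasis of `M`, the contraction of a positive semidefinite `E` with `(1 + M)² - c` splits into
nonnegative multiples of `(1 + lᵢ)² - c`; eigenvalues below `-1/2` are detected by the trace of an even power. -/
lemma eig_lower {M E : Matrix (Fin n) (Fin n) ℝ} (hM : Mᵀ = M)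
    (hE : ∀ v : Fin n → ℝ, 0 ≤ ∑ k, ∑ l, v k * v l * E k l) {c : ℝ} (hc : c ≤ 1 / 4) (hc0 : 0 ≤ c) {q : ℕ} (hq : Even q) :
    -(c * (∑ k, E k k) * (2 ^ (q + 1) * (1 - Real.exp (-(M ^ q).trace)))) ≤
      (∑ k, ∑ l, E k l * ((1 + M) * (1 + M)) k l) - c * ∑ k, E k k := by
  obtain ⟨O, l, h⟩ := exists_spec hM
  set Q := fun i => ∑ k, ∑ j, O k i * O j i * E k j with hQ
  have hQ0 : ∀ i, 0 ≤ Q i := fun i => hE (fun k => O k i)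
  have key : ∀ d : Fin n → ℝ, ∑ k, ∑ j, E k j * (O * diagonal d * Oᵀ) k j = ∑ i, d i * Q i := fun d => by
    have : ∀ k j, (O * diagonal d * Oᵀ) k j = ∑ i, O k i * d i * O j i := fun k j => by
      rw [mul_apply]; simp [mul_diagonal]
    simp only [this, hQ, Finset.mul_sum]
    rw [Finset.sum_congr rfl fun k _ => Finset.sum_comm, Finset.sum_comm]
    exact Finset.sum_congr rfl fun i _ => Finset.sum_congr rfl fun k _ => Finset.sum_congr rfl fun j _ => by ring
  have e1 : ∑ k, E k k = ∑ i, Q i := by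
    have := key (fun _ => 1)
    rw [diagonal_one, mul_one, h.o2] at this
    simp only [one_mul] at this
    rw [← this]
    simp [one_apply]
  have hS : 0 ≤ (M ^ q).trace := by rw [h.trace_pow]; exact Finset.sum_nonneg fun i _ => hq.pow_nonneg _
  have hX0 : 0 ≤ 1 - Real.exp (-(M ^ q).trace) := by
    have := Real.exp_le_one_iff.2 (neg_nonpos.2 hS); linarith
  have hQs : 0 ≤ ∑ i, Q i := Finset.sum_nonneg fun i _ => hQ0 i
  rw [h.one_add_sq, key, e1]
  by_cases hg : ∀ i, -(1 / 2) ≤ l i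
  · have h1 : c * ∑ i, Q i ≤ ∑ i, (1 + l i) ^ 2 * Q i := by
      rw [Finset.mul_sum]
      refine Finset.sum_le_sum fun i _ => mul_le_mul_of_nonneg_right ?_ (hQ0 i)
      nlinarith [hg i]
    have h2 : 0 ≤ c * (∑ i, Q i) * (2 ^ (q + 1) * (1 - Real.exp (-(M ^ q).trace))) := by positivity
    linarith
  · push Not at hg
    obtain ⟨i, hi⟩ := hg
    have h3 : (1 / 2 : ℝ) ^ q ≤ (M ^ q).trace := by
      rw [h.trace_pow]
      refine le_trans ?_ (Finset.single_le_sum (f := fun i => l i ^ q) (fun i _ => hq.pow_nonneg _) (Finset.mem_univ i))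
      show _ ≤ l i ^ q
      rw [← hq.neg_pow (l i)]
      exact pow_le_pow_left₀ (by norm_num) (by linarith) _
    have h4 : 1 ≤ 2 ^ (q + 1) * (1 - Real.exp (-(M ^ q).trace)) := by
      set x : ℝ := (1 / 2) ^ q with hx
      have hx0 : 0 < x := by positivity
      have hx1 : x ≤ 1 := pow_le_one₀ (by norm_num) (by norm_num)
      have h5 : Real.exp (-(M ^ q).trace) ≤ Real.exp (-x) := Real.exp_le_exp.2 (by linarith)
      have h6 : Real.exp (-x) ≤ 1 - x / 2 := by
        rw [Real.exp_neg]
        have := Real.add_one_le_exp x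
        rw [inv_le_comm₀ (Real.exp_pos _) (by linarith)]
        refine le_trans ?_ this
        rw [inv_le_iff_one_le_mul₀ (by linarith)]
        nlinarith
      have h7 : (2 : ℝ) ^ (q + 1) * (x / 2) = 1 := by
        rw [hx, pow_succ, one_div, inv_pow]; field_simp
      have : (2 : ℝ) ^ (q + 1) * (x / 2) ≤ 2 ^ (q + 1) * (1 - Real.exp (-(M ^ q).trace)) := by gcongr; linarith
      linarith
    have h8 : 0 ≤ ∑ i, (1 + l i) ^ 2 * Q i := Finset.sum_nonneg fun i _ => mul_nonneg (sq_nonneg _) (hQ0 i)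
    have h9 := mul_le_mul_of_nonneg_left h4 (mul_nonneg hc0 hQs)
    linarith

end eigen

section flow
variable {n : ℕ}

/-- The inverse variance (precision) of the comparison Gaussian at time `t`. -/
def tauf (γ t : ℝ) : ℝ := 4 * γ * Real.exp (γ * t)

lemma tauf_pos {γ : ℝ} (h : 0 < γ) (t : ℝ) : 0 < tauf γ t := by unfold tauf; positivity

lemma tauf_deriv (γ t : ℝ) : HasDerivAt (tauf γ) (γ * tauf γ t) t := by
  have : HasDerivAt (fun t => 4 * γ * Real.exp (γ * t)) (4 * γ * (Real.exp (γ * t) * (γ * 1))) t :=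
    (((hasDerivAt_id t).const_mul γ).exp).const_mul _
  suffices hh : 4 * γ * (Real.exp (γ * t) * (γ * 1)) = γ * tauf γ t by rw [← hh]; exact this
  unfold tauf; ring

lemma tauf_bd {γ : ℝ} (h : 0 < γ) {t : ℝ} (ht : t ∈ Set.Ioo (0 : ℝ) 1) : 4 * γ ≤ tauf γ t ∧ tauf γ t ≤ 4 * γ * Real.exp γ := by
  have h1 : 1 ≤ Real.exp (γ * t) := Real.one_le_exp (by have := ht.1; positivity)
  have h2 : Real.exp (γ * t) ≤ Real.exp γ := Real.exp_le_exp.2 (by nlinarith [ht.2])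
  unfold tauf
  constructor <;> nlinarith

lemma tauf_cls {γ : ℝ} (h : 0 < γ) : Cls (fun t (_ : Eu n) => tauf γ t) (fun t _ => γ * tauf γ t) (fun _ _ _ => 0) (fun _ _ _ => 0) where
  hd t _ y := ⟨(γ * tauf γ t) • ContinuousLinearMap.fst ℝ ℝ (Eu n),
    (tauf_deriv γ t).comp_hasFDerivAt (t, y) (f := fun p : ℝ × Eu n => p.1) hasFDerivAt_fst, by simp, by simp⟩
  hdi t _ y i := ⟨differentiableAt_const _, pd_const _⟩
  ct _ _ := continuous_const
  cii _ _ _ := continuous_const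
  pb := ⟨fun _ => 4 * γ * Real.exp γ, PB.const _, fun t ht y => by
    rw [abs_of_pos (tauf_pos h t)]; exact (tauf_bd h ht).2⟩
  pbt := ⟨fun _ => γ * (4 * γ * Real.exp γ), PB.const _, fun t ht y => by
    rw [abs_of_pos (mul_pos h (tauf_pos h t))]; exact mul_le_mul_of_nonneg_left (tauf_bd h ht).2 h.le⟩
  pbi _ := PBu.const 0
  pbii _ := PBu.const 0

/-- Natural parameter of the comparison Gaussian centred at the posterior mean. -/
def mf (V : Eu n → ℝ) (γ : ℝ) (k : Fin n) (t : ℝ) (y : Eu n) : ℝ := tauf γ t * Ep V (fun x => x k) t y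

lemma mf_cls {V : Eu n → ℝ} (hV : BaseV V) {γ : ℝ} (h : 0 < γ) (k : Fin n) : Cls (mf V γ k)
    (fun t y => γ * tauf γ t * Ep V (fun x => x k) t y + tauf γ t * Et V (fun x => x k) t y)
    (fun i t y => tauf γ t * E1 V (fun x => x k) i t y) (fun i t y => tauf γ t * E2 V (fun x => x k) i t y) :=
  ((tauf_cls h).mul (hV.cls (PC.coord k))).congr (fun t _ y => rfl) (fun i t _ y => by ring) (fun i t _ y => by ring)

/-- The posterior mean. -/
def av (V : Eu n → ℝ) (t : ℝ) (y : Eu n) : Eu n := vecm (fun k => Ep V (fun x => x k)) t y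

lemma vecm_mf (V : Eu n → ℝ) (γ t : ℝ) (y : Eu n) : vecm (mf V γ) t y = tauf γ t • av V t y := by
  ext k; simp [vecm, mf, av]

/-- The gauge averaged over a Gaussian of variance `1 / tauf γ t` around the posterior mean. -/
def Ff (V h : Eu n → ℝ) (γ t : ℝ) (y : Eu n) : ℝ := Ep (fun _ => 0) h (tauf γ t) (vecm (mf V γ) t y)

lemma gen_alg {a at' e : Fin n → ℝ} {b c E : Fin n → Fin n → ℝ} {T γ τ : ℝ} (hτ : τ ≠ 0)
    (l0 : T + (∑ k, a k * e k + ∑ k, 1 / 2 * E k k) = 0)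
    (lk : ∀ k, at' k + ∑ i, (a i * b k i + 1 / 2 * c k i) = 0) :
    T * (γ * τ) + ∑ k, e k * (γ * τ * a k + τ * at' k) +
      ∑ i, (a i * ∑ k, e k * (τ * b k i) + 1 / 2 * ∑ k, ((∑ l, E k l * (τ * b l i)) * (τ * b k i) + e k * (τ * c k i))) =
    1 / 2 * τ ^ 2 * ((∑ k, ∑ l, E k l * ∑ i, b k i * b l i) - γ / τ * ∑ k, E k k) := by
  have e1 : ∑ i, (a i * ∑ k, e k * (τ * b k i) + 1 / 2 * ∑ k, ((∑ l, E k l * (τ * b l i)) * (τ * b k i) + e k * (τ * c k i)))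
      = τ * ∑ k, e k * ∑ i, (a i * b k i + 1 / 2 * c k i) + 1 / 2 * τ ^ 2 * ∑ k, ∑ l, E k l * ∑ i, b k i * b l i := by
    have h1 : ∑ k, ∑ l, E k l * ∑ i, b k i * b l i = ∑ i, ∑ k, ∑ l, E k l * (b k i * b l i) := by
      simp only [Finset.mul_sum]
      rw [Finset.sum_comm (s := (Finset.univ : Finset (Fin n))) (f := fun i k => ∑ l, E k l * (b k i * b l i))]
      exact Finset.sum_congr rfl fun k _ => Finset.sum_comm
    have h2 : ∑ k, e k * ∑ i, (a i * b k i + 1 / 2 * c k i) = ∑ i, ∑ k, e k * (a i * b k i + 1 / 2 * c k i) := by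
      simp only [Finset.mul_sum]
      exact Finset.sum_comm
    rw [h1, h2, Finset.mul_sum, Finset.mul_sum, ← Finset.sum_add_distrib]
    refine Finset.sum_congr rfl fun i _ => ?_
    simp only [Finset.mul_sum, Finset.sum_mul, Finset.sum_add_distrib, ← Finset.sum_add_distrib]
    refine Finset.sum_congr rfl fun k _ => ?_
    rw [mul_add, Finset.mul_sum, ← add_assoc, add_right_comm]
    have : ∑ l, 1 / 2 * (E k l * (τ * b l i) * (τ * b k i)) = ∑ l, 1 / 2 * τ ^ 2 * (E k l * (b k i * b l i)) :=
      Finset.sum_congr rfl fun l _ => by ring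
    rw [this]; ring
  have e2 : ∑ k, e k * (γ * τ * a k + τ * at' k) = γ * τ * ∑ k, a k * e k + τ * ∑ k, e k * at' k := by
    rw [Finset.mul_sum, Finset.mul_sum, ← Finset.sum_add_distrib]
    exact Finset.sum_congr rfl fun k _ => by ring
  have e3 : ∑ k, e k * at' k + ∑ k, e k * ∑ i, (a i * b k i + 1 / 2 * c k i) = 0 := by
    rw [← Finset.sum_add_distrib]
    exact Finset.sum_eq_zero fun k _ => by rw [← mul_add, lk, mul_zero]
  rw [← Finset.mul_sum] at l0
  rw [e1, e2]
  have e4 : 1 / 2 * τ ^ 2 * (γ / τ * ∑ k, E k k) = γ * τ * (1 / 2 * ∑ k, E k k) := by field_simp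
  rw [mul_sub, e4]
  linear_combination (γ * τ) * l0 + τ * e3

/-- The drift of `Ff`: the Hessian of the Gaussian average is contracted with `A² - γ / τ`, for `A` the posterior
covariance and `τ` the precision. -/
lemma Ff_gen {V : Eu n → ℝ} (hV : BaseV V) {h : Eu n → ℝ} (hh : Sublin h) {γ : ℝ} (hγ : 0 < γ) :
    ∃ ft fi fii, Cls (Ff V h γ) ft fi fii ∧ ∀ t ∈ Set.Ioo (0 : ℝ) 1, ∀ y, Lgen V ft fi fii t y =
      1 / 2 * tauf γ t ^ 2 * ((∑ k, ∑ l, Ekl h k l (tauf γ t) (tauf γ t • av V t y) * ((1 + Mc V t y) * (1 + Mc V t y)) k l) -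
        γ / tauf γ t * ∑ k, Ekl h k k (tauf γ t) (tauf γ t • av V t y)) := by
  have hb : ∀ t ∈ Set.Ioo (0 : ℝ) 1, |γ * tauf γ t| ≤ γ * (4 * γ * Real.exp γ) := fun t ht => by
    rw [abs_of_pos (mul_pos hγ (tauf_pos hγ t))]; exact mul_le_mul_of_nonneg_left (tauf_bd hγ ht).2 hγ.le
  refine ⟨_, _, _, Cls.compEp (mf_cls hV hγ) (by positivity) (fun t ht => tauf_bd hγ ht)
    (fun t _ => tauf_deriv γ t) hb hh.pc, fun t ht y => ?_⟩
  obtain ⟨β, hβ, hL⟩ := hV.lb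
  set τ := tauf γ t with hτ
  have hτ0 : 0 < τ := tauf_pos hγ t
  rw [← vecm_mf]
  set w := vecm (mf V γ) t y with hw
  have l0 := Lgen_Ep LB_zero hh.pc hτ0 w
  have lk := fun k => Lgen_Ep hL (PC.coord k) (t := t) (by linarith [ht.1]) y
  have hak : ∀ k, Ep (fun _ => 0) (fun x : Eu n => x k) τ w = Ep V (fun x => x k) t y := fun k => by
    rw [hw, vecm_mf, Ep_zero_coord hτ0]; rfl
  simp only [Lgen, hak] at l0
  simp only [Lgen] at lk ⊢
  rw [← hτ, ← hw]
  have ekk : ∀ k, E2 (fun _ => 0) h k τ w = Ekl h k k τ w := fun k => rfl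
  simp only [ekk, Finset.sum_add_distrib] at l0
  have hA : ∀ k l, ((1 + Mc V t y) * (1 + Mc V t y)) k l = ∑ i, E1 V (fun x => x k) i t y * E1 V (fun x => x l) i t y := fun k l => by
    have hs : (1 + Mc V t y).transpose = 1 + Mc V t y := by rw [Matrix.transpose_add, Mc_symm, Matrix.transpose_one]
    conv_lhs => enter [1]; rw [← hs]
    rw [Matrix.mul_apply]
    exact Finset.sum_congr rfl fun i _ => by rw [Matrix.transpose_apply, one_add_Mc, one_add_Mc]
  simp only [hA]
  exact gen_alg hτ0.ne' l0 lk

end flow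

/-! ### Gaussian mean versus isotropic mean of a gauge -/

section gaussle
open Matrix
variable {n : ℕ}

lemma sqrt_tauf_ge {q : ℕ} (hq : 3 ≤ q) {t : ℝ} (ht : 0 ≤ t) : 2 * (q : ℝ) ^ 2 ≤ Real.sqrt (tauf ((q : ℝ) ^ 4) t) := by
  apply Real.le_sqrt_of_sq_le
  have h1 : 1 ≤ Real.exp ((q : ℝ) ^ 4 * t) := Real.one_le_exp (by positivity)
  have : (0 : ℝ) ≤ (q : ℝ) ^ 4 := by positivity
  unfold tauf; nlinarith

/-- The drift of `Ff` is bounded below by minus a multiple of `1 - exp (-Str)`: it is nonnegative as long as the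
posterior covariance is at least `1/2`. -/
lemma drift_lower {V : Eu n → ℝ} (hn : 0 < n) {h : Eu n → ℝ} (hh : Sublin h) {q : ℕ} (hq : Even q) (hq3 : 3 ≤ q)
    {t : ℝ} (ht : t ∈ Set.Ioo (0 : ℝ) 1) (y : Eu n) {γ : ℝ} (hγ : γ = (q : ℝ) ^ 4) :
    -(3 * n ^ 3 * q ^ 2 * 2 ^ (q + 1) * Eg h * (1 - Real.exp (-(Str V q t y)))) ≤
      1 / 2 * tauf γ t ^ 2 * ((∑ k, ∑ l, Ekl h k l (tauf γ t) (tauf γ t • av V t y) * ((1 + Mc V t y) * (1 + Mc V t y)) k l) -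
        γ / tauf γ t * ∑ k, Ekl h k k (tauf γ t) (tauf γ t • av V t y)) := by
  have hqp : (0 : ℝ) < q := by exact_mod_cast (by omega : 0 < q)
  have hγ0 : 0 < γ := by rw [hγ]; positivity
  have hτs : 2 * (q : ℝ) ^ 2 ≤ Real.sqrt (tauf γ t) := hγ ▸ sqrt_tauf_ge hq3 ht.1.le
  set τ := tauf γ t with hτ
  have hτ0 : 0 < τ := tauf_pos hγ0 t
  have hc : γ / τ ≤ 1 / 4 := by
    rw [div_le_iff₀ hτ0]; linarith [(tauf_bd hγ0 ht).1]
  have h1 := eig_lower (E := Matrix.of fun k l => Ekl h k l τ (τ • av V t y)) (Mc_symm V t y)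
    (fun v => by
      have := Ekl_nonneg hh hτ0 (τ • av V t y) (WithLp.toLp 2 v)
      simpa using this) hc (by positivity) hq
  simp only [Matrix.of_apply] at h1
  set A := ∑ k, ∑ l, Ekl h k l τ (τ • av V t y) * ((1 + Mc V t y) * (1 + Mc V t y)) k l
  set B := ∑ k, Ekl h k k τ (τ • av V t y) with hB
  have hBle : B ≤ 12 * n ^ 3 * Eg h * (τ⁻¹ * (Real.sqrt τ)⁻¹) := Ekk_sum_le hh hn hτ0 _
  have hE := hh.Eg_nonneg
  have hS : 0 ≤ 1 - Real.exp (-(Str V q t y)) := by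
    have := Real.exp_le_one_iff.2 (neg_nonpos.2 (Str_nonneg V hq t y)); linarith
  have key : 1 / 2 * τ ^ 2 * (γ / τ * B) ≤ 3 * n ^ 3 * q ^ 2 * Eg h := by
    calc 1 / 2 * τ ^ 2 * (γ / τ * B) = 1 / 2 * τ * γ * B := by field_simp
      _ ≤ 1 / 2 * τ * γ * (12 * n ^ 3 * Eg h * (τ⁻¹ * (Real.sqrt τ)⁻¹)) := by gcongr
      _ = 6 * γ * n ^ 3 * Eg h * (Real.sqrt τ)⁻¹ := by field_simp; ring
      _ ≤ 6 * γ * n ^ 3 * Eg h * (2 * (q : ℝ) ^ 2)⁻¹ := by gcongr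
      _ = 3 * n ^ 3 * q ^ 2 * Eg h := by rw [hγ]; field_simp; ring
  have h2 := mul_le_mul_of_nonneg_left h1 (show 0 ≤ 1 / 2 * τ ^ 2 by positivity)
  have h3 := mul_le_mul_of_nonneg_right key (show 0 ≤ 2 ^ (q + 1) * (1 - Real.exp (-(Str V q t y))) by positivity)
  refine le_trans ?_ h2
  unfold Str at h3 ⊢
  nlinarith

/-- Subadditivity of `h`, and Jensen's inequality at the posterior mean. -/
lemma Ff_le {V : Eu n → ℝ} {t₀ : ℝ} (hL : LB V t₀) {h : Eu n → ℝ} (hh : Sublin h) {γ : ℝ} (hγ : 0 < γ) {t : ℝ} (ht : t₀ < t) (y : Eu n) :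
    Ff V h γ t y ≤ Ep V h t y + (Real.sqrt (tauf γ t))⁻¹ * Eg h := by
  rw [Ff, vecm_mf, Ep_zero_shift _ (tauf_pos hγ t)]
  have hr : 0 ≤ (Real.sqrt (tauf γ t))⁻¹ := by positivity
  have p1 : PC (fun z => h (av V t y + (Real.sqrt (tauf γ t))⁻¹ • z)) := hh.pc.comp_affine _ _
  refine (Eg_mono p1 (g := fun z => h (av V t y) + (Real.sqrt (tauf γ t))⁻¹ * h z) ((PC.const _).add (hh.pc.cmul _)) fun z => ?_).trans ?_
  · rw [← hh.smul _ hr]; exact hh.add_le _ _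
  · rw [Eg_add (PC.const _) (hh.pc.cmul _), Eg_const, Eg_cmul]
    gcongr
    exact hh.jensen hL ht y

/-- At the origin the comparison Gaussian is centred, with standard deviation `1 / (2 q²)`. -/
lemma Ff_zero {V : Eu n → ℝ} (hmean : ∀ k, Ep V (fun x => x k) 0 0 = 0) {h : Eu n → ℝ} (hh : Sublin h) {q : ℕ} (hq3 : 3 ≤ q) :
    Ff V h ((q : ℝ) ^ 4) 0 0 = Eg h / (2 * q ^ 2) := by
  have hqp : (0 : ℝ) < q := by exact_mod_cast (by omega : 0 < q)
  have ha : av V 0 0 = 0 := by ext k; simp [av, vecm, hmean]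
  rw [Ff, vecm_mf, Ep_zero_shift _ (tauf_pos (by positivity) 0), ha]
  have hr : Real.sqrt (tauf ((q : ℝ) ^ 4) 0) = 2 * q ^ 2 := by
    rw [show tauf ((q : ℝ) ^ 4) 0 = (2 * q ^ 2) ^ 2 by simp [tauf]; ring]
    exact Real.sqrt_sq (by positivity)
  rw [hr]
  simp only [zero_add, hh.smul _ (show 0 ≤ (2 * (q : ℝ) ^ 2)⁻¹ by positivity)]
  rw [Eg_cmul]; field_simp

lemma Ff_continuousAt {V : Eu n → ℝ} (hV : BaseV V) {h : Eu n → ℝ} (hh : Sublin h) {γ : ℝ} (hγ : 0 < γ) :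
    ContinuousAt (fun p : ℝ × Eu n => Ff V h γ p.1 p.2) (0, 0) := by
  obtain ⟨β, hβ, hL⟩ := hV.lb
  have h0 : -β < 0 := by linarith
  have hm : ∀ k, HD (mf V γ k) 0 0 _ _ := fun k =>
    HD.mul (f := fun t (_ : Eu n) => tauf γ t) (a := γ * tauf γ 0) (v := fun _ => 0)
      ⟨(γ * tauf γ 0) • ContinuousLinearMap.fst ℝ ℝ (Eu n),
        (tauf_deriv γ 0).comp_hasFDerivAt ((0 : ℝ), (0 : Eu n)) (f := fun p : ℝ × Eu n => p.1) hasFDerivAt_fst, by simp, by simp⟩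
      (Ep_HD hL (PC.coord k) h0 0)
  exact (HD.comp_vec (Ep_HD LB_zero hh.pc (tauf_pos hγ 0) _) (tauf_deriv γ 0) hm).continuousAt

lemma exp_neg_quarter : Real.exp (-(1 / 4)) ≤ 4 / 5 := by
  rw [Real.exp_neg, inv_le_comm₀ (Real.exp_pos _) (by norm_num)]
  have := Real.add_one_le_exp (1 / 4 : ℝ)
  norm_num at this ⊢; linarith

/-- For an isotropic log-concave density, the Gaussian average of a gauge is at most `20 q²` times its average,
with `q` of logarithmic order. -/
theorem gauss_le {V : Eu n → ℝ} (hV : BaseV V) (h1 : In V (fun _ => 1) = 1) (hM : Mc V 0 0 = 0)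
    (hmean : ∀ k, Ep V (fun x => x k) 0 0 = 0) {h : Eu n → ℝ} (hh : Sublin h) (hn : 0 < n) {q : ℕ} (hq : Even q)
    (hq3 : 3 ≤ q) (h4 : 60 * (n : ℝ) ^ 4 * Real.exp 10240 ≤ 4 ^ q) : Eg h ≤ 20 * q ^ 2 * Ep V h 0 0 := by
  obtain ⟨β, hβ, hL⟩ := hV.lb
  have hq3' : (3 : ℝ) ≤ q := by exact_mod_cast hq3
  have hqp : (0 : ℝ) < q := by linarith
  obtain ⟨γ, hγ⟩ : ∃ γ : ℝ, γ = (q : ℝ) ^ 4 := ⟨_, rfl⟩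
  have hγ0 : 0 < γ := by rw [hγ]; positivity
  obtain ⟨ft, fi, fii, hF, hLg⟩ := Ff_gen hV hh hγ0
  have hE := hh.Eg_nonneg
  set T : ℝ := 1 / (q : ℝ) ^ 4 with hT
  have hT0 : 0 < T := by positivity
  have hT1 : T < 1 := by
    rw [hT, div_lt_one (by positivity)]
    calc (1 : ℝ) < 3 ^ 4 := by norm_num
      _ ≤ (q : ℝ) ^ 4 := by gcongr
  set κ : ℝ := 3 * n ^ 3 * q ^ 2 * 2 ^ (q + 1) * Eg h with hκ
  have hκ0 : 0 ≤ κ := by positivity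
  set R : ℝ := κ * (Real.exp 10240 * (n * (1 / 8) ^ q)) with hR
  have hX := ((Mc_cls hV).pow q).trace.expneg (fun t _ y => Str_nonneg V hq t y)
  have hder : ∀ t ∈ Set.Ioo 0 T, -R ≤ Ed V (Lgen V ft fi fii) t := fun t ht => by
    have htI : t ∈ Set.Ioo (0 : ℝ) 1 := ⟨ht.1, ht.2.trans hT1⟩
    have e1 : Ed V (fun t y => (-κ) + κ * Real.exp (-(Str V q t y))) t = -κ + κ * Ed V (fun t y => Real.exp (-(Str V q t y))) t := by
      rw [Ed_add hV (f := fun _ _ => -κ) (g := fun t y => κ * Real.exp (-(Str V q t y))) (PBu.const _) (hX.pb.cmul κ) htI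
        continuous_const ((hX.cont htI).const_mul κ), Ed_const hV h1 _ htI, Ed_cmul]
    have e2 := Ed_mono hV (f := fun t y => (-κ) + κ * Real.exp (-(Str V q t y))) (g := Lgen V ft fi fii)
      ((PBu.const _).add (hX.pb.cmul κ)) (Lgen_pbu hV hF) htI (continuous_const.add ((hX.cont htI).const_mul κ))
      (Lgen_cont hV hF htI) fun y => by
        rw [hLg t htI y]
        have := drift_lower (V := V) hn hh hq hq3 htI y hγ
        rw [← hκ] at this
        linarith
    have e3 := mul_le_mul_of_nonneg_left (Str_small hV h1 hM hn hq hq3 ht.1 ht.2.le) hκ0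
    rw [e1] at e2
    linarith
  have ht2 : T / 2 ∈ Set.Ioo 0 T := ⟨by linarith, by linarith⟩
  have htI : T / 2 ∈ Set.Ioo (0 : ℝ) 1 := ⟨ht2.1, ht2.2.trans hT1⟩
  -- Dynkin's formula from time `0`, where `Ff` equals `Eg h / (2 q²)`; the drift loses at most `R` per unit time.
  have key : -Ed V (Ff V h γ) (T / 2) - R * (T / 2) ≤ -(Eg h / (2 * q ^ 2)) := by
    refine le_of_deriv_nonpos (u := fun t => -Ed V (Ff V h γ) t - R * t) (u' := fun t => -Ed V (Lgen V ft fi fii) t - R * 1) (a := T)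
      (fun t ht => ?_) (fun t ht => ?_) ?_ ht2
    · exact (dynkin hV hF ⟨ht.1, ht.2.trans hT1⟩).neg.sub ((hasDerivAt_id t).const_mul R)
    · have := hder t ht; linarith
    · have l1 := Ed_tendsto hV h1 hF.pb (fun t ht => hF.cont ht) (Ff_continuousAt hV hh hγ0)
      have l2 : Filter.Tendsto (fun t : ℝ => R * t) (nhdsWithin 0 (Set.Ioi 0)) (nhds 0) := by
        have : Filter.Tendsto (fun t : ℝ => R * t) (nhds 0) (nhds (R * 0)) := (continuous_const_mul R).tendsto 0
        rw [mul_zero] at this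
        exact this.mono_left nhdsWithin_le_nhds
      have l3 := l1.neg.sub l2
      rwa [hγ, Ff_zero hmean hh hq3, sub_zero, ← hγ] at l3
  -- At the later time the comparison Gaussian is narrower, so the multiple of `Eg h` is smaller than at time `0`.
  have up : Ed V (Ff V h γ) (T / 2) ≤ Ep V h 0 0 + (Real.sqrt (tauf γ (T / 2)))⁻¹ * Eg h := by
    set c := (Real.sqrt (tauf γ (T / 2)))⁻¹ * Eg h with hc
    have e2 := Ed_mono hV (f := Ff V h γ) (g := fun t y => Ep V h t y + c) hF.pb ((hV.cls hh.pc).pb.add (PBu.const _)) htI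
      (hF.cont htI) (((hV.cls hh.pc).cont htI).add continuous_const) fun y => Ff_le hL hh hγ0 (by linarith) y
    rwa [Ed_add hV (hV.cls hh.pc).pb (PBu.const c) htI ((hV.cls hh.pc).cont htI) continuous_const, Ed_const hV h1 _ htI,
      Ed_Ep hV h1 hh.pc htI] at e2
  have hs : (Real.sqrt (tauf γ (T / 2)))⁻¹ = Real.exp (-(1 / 4)) / (2 * q ^ 2) := by
    have : tauf γ (T / 2) = (2 * q ^ 2 * Real.exp (1 / 4)) ^ 2 := by
      rw [tauf, hγ, hT, mul_pow, ← Real.exp_nat_mul]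
      congr 1
      · ring
      · congr 1; push_cast; field_simp; norm_num
    rw [this, Real.sqrt_sq (by positivity), Real.exp_neg, mul_inv, mul_comm]; rfl
  -- The size of `q` (hypothesis `h4`) makes the accumulated loss of drift negligible.
  have hRT : R * (T / 2) ≤ 1 / 20 * (Eg h / q ^ 2) := by
    have e8 : (8 : ℝ) ^ q = 2 ^ q * 4 ^ q := by rw [← mul_pow]; norm_num
    have : R * (T / 2) = (60 * (n : ℝ) ^ 4 * Real.exp 10240) / 4 ^ q * (1 / 20 * (Eg h / q ^ 2)) := by
      rw [hR, hκ, hT, _root_.one_div_pow, e8, pow_succ]; field_simp; ring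
    rw [this]
    refine mul_le_of_le_one_left (by positivity) ((div_le_one (by positivity)).2 h4)
  rw [hs] at up
  have h5 : Real.exp (-(1 / 4)) / (2 * (q : ℝ) ^ 2) * Eg h ≤ 4 / 5 * (Eg h / (2 * q ^ 2)) := by
    rw [div_mul_eq_mul_div, mul_div_assoc]
    exact mul_le_mul_of_nonneg_right exp_neg_quarter (by positivity)
  have h6 : Eg h / (2 * (q : ℝ) ^ 2) = 1 / 2 * (Eg h / q ^ 2) := by field_simp
  rw [h6] at h5 key
  have h7 : 1 / 20 * (Eg h / q ^ 2) ≤ Ep V h 0 0 := by linarith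
  have h8 := mul_le_mul_of_nonneg_left h7 (show 0 ≤ 20 * (q : ℝ) ^ 2 by positivity)
  calc Eg h = 20 * (q : ℝ) ^ 2 * (1 / 20 * (Eg h / q ^ 2)) := by field_simp
    _ ≤ _ := h8

end gaussle

/-! ### Mollification -/

section moll
variable {n : ℕ}

/-- A bump function supported in the ball of radius `δ`. -/
def bmp (n : ℕ) {δ : ℝ} (hδ : 0 < δ) : ContDiffBump (0 : Eu n) := ⟨δ / 2, δ, by linarith, by linarith⟩

/-- Mollification of `g` at scale `δ`. -/
def moll {δ : ℝ} (hδ : 0 < δ) (g : Eu n → ℝ) (x : Eu n) : ℝ := ∫ t, (bmp n hδ).normed volume t * g (x - t)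

variable {δ : ℝ} (hδ : 0 < δ) {g : Eu n → ℝ}

lemma bmp_supp {t : Eu n} (ht : δ ≤ ‖t‖) : (bmp n hδ).normed volume t = 0 := by
  have := (bmp n hδ).support_normed_eq (μ := volume)
  by_contra h
  have h1 : t ∈ Function.support ((bmp n hδ).normed volume) := h
  rw [this] at h1
  simp [bmp] at h1
  linarith

lemma moll_integrable (hg : Continuous g) (x : Eu n) : Integrable (fun t => (bmp n hδ).normed volume t * g (x - t)) := by
  refine Continuous.integrable_of_hasCompactSupport ?_ ?_
  · exact ((bmp n hδ).continuous_normed).mul (hg.comp (continuous_const.sub continuous_id))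
  · exact ((bmp n hδ).hasCompactSupport_normed).mul_right

lemma moll_const_mul (a : ℝ) : ∫ t, (bmp n hδ).normed volume t * a = a := by
  rw [integral_mul_const, (bmp n hδ).integral_normed, one_mul]

lemma le_moll (hg : Continuous g) {x : Eu n} {a : ℝ} (h : ∀ t, ‖t‖ ≤ δ → a ≤ g (x - t)) : a ≤ moll hδ g x := by
  rw [← moll_const_mul (n := n) hδ a]
  refine integral_mono (((bmp n hδ).integrable_normed).mul_const a) (moll_integrable hδ hg x) fun t => ?_
  rcases le_or_gt ‖t‖ δ with ht | ht
  · exact mul_le_mul_of_nonneg_left (h t ht) ((bmp n hδ).nonneg_normed t)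
  · simp [bmp_supp hδ ht.le]

lemma moll_le (hg : Continuous g) {x : Eu n} {a : ℝ} (h : ∀ t, ‖t‖ ≤ δ → g (x - t) ≤ a) : moll hδ g x ≤ a := by
  rw [← moll_const_mul (n := n) hδ a]
  refine integral_mono (moll_integrable hδ hg x) (((bmp n hδ).integrable_normed).mul_const a) fun t => ?_
  rcases le_or_gt ‖t‖ δ with ht | ht
  · exact mul_le_mul_of_nonneg_left (h t ht) ((bmp n hδ).nonneg_normed t)
  · simp [bmp_supp hδ ht.le]

lemma moll_contDiff (hg : Continuous g) : ContDiff ℝ (⊤ : ℕ∞) (moll hδ g) :=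
  ((bmp n hδ).hasCompactSupport_normed (μ := volume)).contDiff_convolution_left (ContinuousLinearMap.lsmul ℝ ℝ) (n := ⊤)
    ((bmp n hδ).contDiff_normed) hg.locallyIntegrable

lemma moll_convex (hg : Continuous g) (hc : ConvexOn ℝ Set.univ g) : ConvexOn ℝ Set.univ (moll hδ g) := by
  refine ⟨convex_univ, fun x _ y _ a b ha hb hab => ?_⟩
  simp only [moll, smul_eq_mul]
  rw [← integral_const_mul, ← integral_const_mul,
    ← integral_add ((moll_integrable hδ hg x).const_mul a) ((moll_integrable hδ hg y).const_mul b)]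
  refine integral_mono (moll_integrable hδ hg _) (((moll_integrable hδ hg x).const_mul a).add ((moll_integrable hδ hg y).const_mul b)) fun t => ?_
  have h1 : a • x + b • y - t = a • (x - t) + b • (y - t) := by
    rw [smul_sub, smul_sub]
    have : a • t + b • t = t := by rw [← add_smul, hab, one_smul]
    calc a • x + b • y - t = a • x + b • y - (a • t + b • t) := by rw [this]
      _ = _ := by abel
  have := hc.2 (Set.mem_univ (x - t)) (Set.mem_univ (y - t)) ha hb hab
  simp only [smul_eq_mul] at this
  simp only [h1]
  have h2 := mul_le_mul_of_nonneg_left this ((bmp n hδ).nonneg_normed (μ := volume) t)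
  linarith

/-- Mollifying a shifted half-square adds an affine function. -/
lemma moll_quad (C : ℝ) : ∃ (l : Fin n → ℝ) (c : ℝ), ∀ x : Eu n, (∀ t, ‖t‖ ≤ δ → g (x - t) = ‖x - t‖ ^ 2 / 2 - C) →
    moll hδ g x = U0 (fun _ => 1) l c x := by
  set φ := (bmp n hδ).normed volume with hφ
  have i1 : ∀ {f : Eu n → ℝ}, Continuous f → Integrable (fun t => φ t * f t) := fun hf =>
    Continuous.integrable_of_hasCompactSupport (((bmp n hδ).continuous_normed).mul hf) ((bmp n hδ).hasCompactSupport_normed).mul_right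
  refine ⟨fun i => -∫ t, φ t * t i, ∫ t, φ t * (‖t‖ ^ 2 / 2 - C), fun x hx => ?_⟩
  have e : ∀ t, φ t * g (x - t) = φ t * (∑ i, x i ^ 2 / 2) + (∑ i, -x i * (φ t * t i)) + φ t * (‖t‖ ^ 2 / 2 - C) := fun t => by
    rcases le_or_gt ‖t‖ δ with ht | ht
    · rw [hx t ht, norm_sub_sq_real, inner_eq_sum, norm_sq_eq_sum x]
      have : ∑ i, -x i * (φ t * t i) = -φ t * ∑ i, x i * t i := by
        rw [Finset.mul_sum]; exact Finset.sum_congr rfl fun i _ => by ring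
      rw [this, ← Finset.sum_div]; ring
    · simp [hφ, bmp_supp hδ ht.le]
  have c1 : ∀ i, Integrable (fun t : Eu n => φ t * t i) := fun i => i1 (by fun_prop)
  rw [moll]
  simp only [← hφ, e]
  rw [integral_add, integral_add, moll_const_mul, integral_finsetSum]
  · simp only [integral_const_mul, U0]
    rw [Finset.sum_add_distrib]
    congr 2
    · exact Finset.sum_congr rfl fun i _ => by ring
    · exact Finset.sum_congr rfl fun i _ => by ring
  · exact fun i _ => (c1 i).const_mul _
  · exact ((bmp n hδ).integrable_normed).mul_const _
  · exact integrable_finsetSum _ fun i _ => (c1 i).const_mul _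
  · exact (((bmp n hδ).integrable_normed).mul_const _).add (integrable_finsetSum _ fun i _ => (c1 i).const_mul _)
  · exact i1 (by fun_prop)

lemma convexOn_infDist {K : Set (Eu n)} (hK : IsCompact K) (hne : K.Nonempty) (hc : Convex ℝ K) :
    ConvexOn ℝ Set.univ (fun x => Metric.infDist x K) := by
  refine ⟨convex_univ, fun x _ y _ a b ha hb hab => ?_⟩
  obtain ⟨u, hu, hxu⟩ := hK.exists_infDist_eq_dist hne x
  obtain ⟨v, hv, hyv⟩ := hK.exists_infDist_eq_dist hne y
  simp only [smul_eq_mul, hxu, hyv]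
  refine (Metric.infDist_le_dist_of_mem (hc hu hv ha hb hab)).trans ?_
  rw [dist_eq_norm, dist_eq_norm, dist_eq_norm]
  calc ‖a • x + b • y - (a • u + b • v)‖ = ‖a • (x - u) + b • (y - v)‖ := by congr 1; rw [smul_sub, smul_sub]; abel
    _ ≤ ‖a • (x - u)‖ + ‖b • (y - v)‖ := norm_add_le _ _
    _ = _ := by rw [norm_smul, norm_smul, Real.norm_of_nonneg ha, Real.norm_of_nonneg hb]

lemma convexOn_half_sq : ConvexOn ℝ Set.univ (fun x : Eu n => ‖x‖ ^ 2) := 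
  convexOn_univ_norm.pow (fun x _ => norm_nonneg x) 2

end moll

/-! ### Smooth approximation of a convex body -/

section approx
variable {n : ℕ}

/-- The convex function `max (m · dist(x, K)) (‖x‖² / 2 - C)`. -/
def Vpre (K : Set (Eu n)) (C : ℝ) (m : ℕ) (x : Eu n) : ℝ := max (m * Metric.infDist x K) (‖x‖ ^ 2 / 2 - C)

lemma Vpre_cont (K : Set (Eu n)) (C : ℝ) (m : ℕ) : Continuous (Vpre K C m) :=
  ((Metric.continuous_infDist_pt K).const_mul _).max (by fun_prop)

lemma Vpre_convex {K : Set (Eu n)} (hK : IsCompact K) (hne : K.Nonempty) (hc : Convex ℝ K) (C : ℝ) (m : ℕ) :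
    ConvexOn ℝ Set.univ (Vpre K C m) := by
  have h1 : ConvexOn ℝ Set.univ (fun x : Eu n => (m : ℝ) * Metric.infDist x K) := 
    (convexOn_infDist hK hne hc).smul (Nat.cast_nonneg m)
  have h2 : ConvexOn ℝ Set.univ (fun x : Eu n => ‖x‖ ^ 2 / 2 - C) := by
    have := (convexOn_half_sq (n := n)).smul (show (0 : ℝ) ≤ 1 / 2 by norm_num)
    refine (this.add_const (-C)).congr fun x _ => ?_
    simp; ring
  exact h1.sup h2

/-- Mollification scale used with slope `m`. -/
def dl (m : ℕ) : ℝ := 1 / (2 * ((m : ℝ) + 1) ^ 2)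

lemma dl_pos (m : ℕ) : 0 < dl m := by unfold dl; positivity
lemma dl_le (m : ℕ) : dl m ≤ 1 / 2 := by
  unfold dl
  rw [div_le_div_iff₀ (by positivity) (by norm_num)]
  nlinarith [Nat.cast_nonneg (α := ℝ) m, sq_nonneg (m : ℝ)]
lemma m_dl_le (m : ℕ) : m * dl m ≤ 1 / (2 * ((m : ℝ) + 1)) := by
  unfold dl
  rw [mul_one_div, div_le_div_iff₀ (by positivity) (by positivity)]
  nlinarith [Nat.cast_nonneg (α := ℝ) m, sq_nonneg (m : ℝ)]

/-- The smooth convex potentials approximating the indicator of `K`. -/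
def Vm (K : Set (Eu n)) (C : ℝ) (m : ℕ) : Eu n → ℝ := moll (dl_pos m) (Vpre K C m)

variable {K : Set (Eu n)} {ρ : ℝ}

lemma Vm_nonneg (C : ℝ) (m : ℕ) (x : Eu n) : 0 ≤ Vm K C m x :=
  le_moll _ (Vpre_cont K C m) fun t _ => le_max_of_le_left (mul_nonneg (Nat.cast_nonneg m) Metric.infDist_nonneg)

lemma Vm_le (hρ : ∀ x ∈ K, ‖x‖ ≤ ρ) (m : ℕ) {x : Eu n} (hx : x ∈ K) : Vm K ((ρ + 1) ^ 2 / 2) m x ≤ 1 / (2 * ((m : ℝ) + 1)) := by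
  refine moll_le _ (Vpre_cont K _ m) fun t ht => max_le ?_ ?_
  · refine le_trans ?_ (m_dl_le m)
    gcongr
    refine (Metric.infDist_le_dist_of_mem hx).trans ?_
    simpa [dist_eq_norm] using ht
  · have h1 : ‖x - t‖ ≤ ρ + 1 := (norm_sub_le _ _).trans (by linarith [hρ x hx, dl_le m])
    have h2 : ‖x - t‖ ^ 2 ≤ (ρ + 1) ^ 2 := by gcongr
    have : 0 ≤ 1 / (2 * ((m : ℝ) + 1)) := by positivity
    linarith

lemma Vm_ge_dist (C : ℝ) (m : ℕ) (x : Eu n) : m * Metric.infDist x K - 1 / 2 ≤ Vm K C m x := by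
  refine le_moll _ (Vpre_cont K C m) fun t ht => le_max_of_le_left ?_
  have h1 : Metric.infDist x K ≤ Metric.infDist (x - t) K + ‖t‖ := by
    refine (Metric.infDist_le_infDist_add_dist (y := x - t)).trans ?_
    simp [dist_eq_norm]
  have h2 : (m : ℝ) * Metric.infDist x K ≤ m * (Metric.infDist (x - t) K + dl m) := by gcongr; linarith
  have h3 := m_dl_le m
  have h4 : 1 / (2 * ((m : ℝ) + 1)) ≤ 1 / 2 := by
    apply one_div_le_one_div_of_le (by norm_num); linarith [Nat.cast_nonneg (α := ℝ) m]
  linarith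

lemma Vm_ge_sq (C : ℝ) (m : ℕ) (x : Eu n) : ‖x‖ ^ 2 / 4 - (C + 1 / 2) ≤ Vm K C m x := by
  refine le_moll _ (Vpre_cont K C m) fun t ht => le_max_of_le_right ?_
  have h1 : ‖x‖ ≤ ‖x - t‖ + ‖t‖ := by simpa using norm_add_le (x - t) t
  have h2 : ‖t‖ ≤ 1 / 2 := ht.trans (dl_le m)
  have h3 : ‖x‖ ^ 2 ≤ (‖x - t‖ + ‖t‖) ^ 2 := by gcongr
  nlinarith [sq_nonneg (‖x - t‖ - ‖t‖), norm_nonneg t, norm_nonneg (x - t)]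

lemma Vm_form (hne : K.Nonempty) (hρ : ∀ x ∈ K, ‖x‖ ≤ ρ) (C : ℝ) (hC : 0 ≤ C) (m : ℕ) : ∃ l c ψ, ContDiff ℝ (⊤ : ℕ∞) ψ ∧ HasCompactSupport ψ ∧
    Vm K C m = fun x => U0 (fun _ => 1) l c x + ψ x := by
  obtain ⟨l, c, h⟩ := moll_quad (g := Vpre K C m) (dl_pos m) C
  refine ⟨l, c, fun x => Vm K C m x - U0 (fun _ => 1) l c x, ?_, ?_, by ext x; ring⟩
  · refine (moll_contDiff _ (Vpre_cont K C m)).sub ?_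
    unfold U0
    fun_prop
  · obtain ⟨p, hp⟩ := hne
    have hρ0 : 0 ≤ ρ := (norm_nonneg _).trans (hρ p hp)
    refine HasCompactSupport.intro (isCompact_closedBall (0 : Eu n) (2 * (m + m * ρ + C + 1) + 1)) fun x hx => ?_
    rw [sub_eq_zero]
    refine h x fun t ht => max_eq_right ?_
    simp only [Metric.mem_closedBall, dist_zero_right, not_le] at hx
    have h1 : ‖x‖ ≤ ‖x - t‖ + ‖t‖ := by simpa using norm_add_le (x - t) t
    have h2 : ‖t‖ ≤ 1 / 2 := ht.trans (dl_le m)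
    have h3 : Metric.infDist (x - t) K ≤ ‖x - t‖ + ρ := by
      refine (Metric.infDist_le_dist_of_mem hp).trans ?_
      rw [dist_eq_norm]
      exact (norm_sub_le _ _).trans (by linarith [hρ p hp])
    have hm : (0 : ℝ) ≤ m := Nat.cast_nonneg m
    set z := ‖x - t‖
    have h4 : 2 * (m + m * ρ + C + 1) ≤ z := by linarith
    have hmr : 0 ≤ m * ρ := by positivity
    calc (m : ℝ) * Metric.infDist (x - t) K ≤ m * (z + ρ) := by gcongr
      _ ≤ z ^ 2 / 2 - C := by nlinarith

/-- The densities `exp (-Vm)` converge to the indicator of `K` in weighted `L¹`, by dominated convergence. -/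
lemma Vm_tendsto (hK : IsCompact K) (hne : K.Nonempty) (hρ : ∀ x ∈ K, ‖x‖ ≤ ρ) : Filter.Tendsto (fun m => ∫ x, |K.indicator (fun _ => (1 : ℝ)) x - Real.exp (-Vm K ((ρ + 1) ^ 2 / 2) m x)| * (1 + ‖x‖))
      Filter.atTop (nhds 0) ∧ ∀ m, Integrable (fun x => |K.indicator (fun _ => (1 : ℝ)) x - Real.exp (-Vm K ((ρ + 1) ^ 2 / 2) m x)| * (1 + ‖x‖)) := by
  set C := (ρ + 1) ^ 2 / 2 with hC
  have hmeas : ∀ m, AEStronglyMeasurable (fun x => |K.indicator (fun _ => (1 : ℝ)) x - Real.exp (-Vm K C m x)| * (1 + ‖x‖)) volume := fun m => by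
    have : Continuous (Vm K C m) := (moll_contDiff _ (Vpre_cont K C m)).continuous
    have h2 : Measurable (K.indicator (fun _ => (1 : ℝ))) := measurable_const.indicator hK.measurableSet
    exact ((h2.sub (by fun_prop)).abs.mul (by fun_prop)).aestronglyMeasurable
  have hb : Integrable (fun x : Eu n => (Real.exp (ρ ^ 2 / 4) + Real.exp (C + 1 / 2)) * ((1 + ‖x‖) ^ 1 * Real.exp (-(1 / 4) * ‖x‖ ^ 2))) :=
    Integrable.const_mul (by
      have := PB.integrable (f := fun x : Eu n => (1 + ‖x‖) ^ 1) (((PB.const 1).add PB.norm).pow 1)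
        (by fun_prop) (U := fun x => 1 / 4 * ‖x‖ ^ 2) ⟨by fun_prop, 1 / 4, 0, by norm_num, fun x => by simp⟩
      simpa only [neg_mul] using this) _
  have bd : ∀ m, ∀ x : Eu n, ‖|K.indicator (fun _ => (1 : ℝ)) x - Real.exp (-Vm K C m x)| * (1 + ‖x‖)‖ ≤
      (Real.exp (ρ ^ 2 / 4) + Real.exp (C + 1 / 2)) * ((1 + ‖x‖) ^ 1 * Real.exp (-(1 / 4) * ‖x‖ ^ 2)) := fun m x => by
    rw [Real.norm_of_nonneg (by positivity)]
    have h1 : Real.exp (-Vm K C m x) ≤ Real.exp (C + 1 / 2) * Real.exp (-(1 / 4) * ‖x‖ ^ 2) := by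
      rw [← Real.exp_add]; apply Real.exp_le_exp.2; linarith [Vm_ge_sq (K := K) C m x]
    have h2 : K.indicator (fun _ => (1 : ℝ)) x ≤ Real.exp (ρ ^ 2 / 4) * Real.exp (-(1 / 4) * ‖x‖ ^ 2) := by
      by_cases hx : x ∈ K
      · rw [Set.indicator_of_mem hx, ← Real.exp_add]
        apply Real.one_le_exp
        have : ‖x‖ ^ 2 ≤ ρ ^ 2 := by have := hρ x hx; gcongr
        linarith
      · rw [Set.indicator_of_notMem hx]; positivity
    have h0 : 0 ≤ K.indicator (fun _ => (1 : ℝ)) x := Set.indicator_nonneg (fun _ _ => zero_le_one) x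
    have h3 : |K.indicator (fun _ => (1 : ℝ)) x - Real.exp (-Vm K C m x)| ≤ 
        K.indicator (fun _ => (1 : ℝ)) x + Real.exp (-Vm K C m x) := by
      rw [abs_le]; have := Real.exp_pos (-Vm K C m x); constructor <;> linarith
    calc _ ≤ (Real.exp (ρ ^ 2 / 4) * Real.exp (-(1 / 4) * ‖x‖ ^ 2) + Real.exp (C + 1 / 2) * Real.exp (-(1 / 4) * ‖x‖ ^ 2)) * (1 + ‖x‖) := by
          gcongr; linarith
      _ = _ := by ring
  refine ⟨?_, fun m => hb.mono' (hmeas m) (Filter.Eventually.of_forall (bd m))⟩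
  have := tendsto_integral_of_dominated_convergence (f := fun _ => (0 : ℝ)) _ hmeas hb (fun m => Filter.Eventually.of_forall (bd m))
    (Filter.Eventually.of_forall fun x => ?_)
  · simpa using this
  rw [← zero_mul (1 + ‖x‖)]
  refine Filter.Tendsto.mul_const _ ?_
  rw [← abs_zero]
  refine Filter.Tendsto.abs ?_
  by_cases hx : x ∈ K
  · rw [Set.indicator_of_mem hx]
    have h1 : Filter.Tendsto (fun m : ℕ => 1 / (2 * ((m : ℝ) + 1))) Filter.atTop (nhds 0) := by
      have := (tendsto_one_div_add_atTop_nhds_zero_nat (𝕜 := ℝ)).const_mul (1 / 2)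
      rw [mul_zero] at this
      refine this.congr fun m => ?_
      field_simp
    have h2 := squeeze_zero (fun m => Vm_nonneg (K := K) C m x) (fun m => Vm_le hρ m hx) h1
    have h3 := (h2.neg.rexp).const_sub 1
    simpa using h3
  · rw [Set.indicator_of_notMem hx]
    have hd : 0 < Metric.infDist x K := (hK.isClosed.notMem_iff_infDist_pos hne).1 hx
    have h1 : Filter.Tendsto (fun m : ℕ => (m : ℝ) * Metric.infDist x K - 1 / 2) Filter.atTop Filter.atTop :=
      Filter.tendsto_atTop_add_const_right _ _ (tendsto_natCast_atTop_atTop.atTop_mul_const hd)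
    have h2 := Filter.tendsto_atTop_mono (fun m => Vm_ge_dist (K := K) C m x) h1
    have h3 := (Real.tendsto_exp_neg_atTop_nhds_zero.comp h2).const_sub 0
    simpa using h3

/-- The indicator of a convex body is a weighted `L¹` limit of densities `exp (-V)`, with `V` convex and equal to a
quadratic polynomial plus a smooth compactly supported function. -/
theorem body_approx {K : Set (Eu n)} (hK : IsCompact K) (hne : K.Nonempty) (hc : Convex ℝ K) {ε : ℝ} (hε : 0 < ε) :
    ∃ V : Eu n → ℝ, ConvexOn ℝ Set.univ V ∧ (∃ l c ψ, ContDiff ℝ (⊤ : ℕ∞) ψ ∧ HasCompactSupport ψ ∧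
      V = fun x => U0 (fun _ => 1) l c x + ψ x) ∧ (∀ x ∈ K, Real.exp (-V x) ≥ 1 / 2) ∧
      Integrable (fun x => |K.indicator (fun _ => (1 : ℝ)) x - Real.exp (-V x)| * (1 + ‖x‖)) ∧
      ∫ x, |K.indicator (fun _ => (1 : ℝ)) x - Real.exp (-V x)| * (1 + ‖x‖) ≤ ε := by
  obtain ⟨ρ, hρ⟩ := hK.isBounded.exists_norm_le
  obtain ⟨h1, h2⟩ := Vm_tendsto hK hne hρ
  obtain ⟨m, hm⟩ := (h1.eventually (gt_mem_nhds hε)).exists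
  refine ⟨Vm K ((ρ + 1) ^ 2 / 2) m, moll_convex _ (Vpre_cont _ _ _) (Vpre_convex hK hne hc _ _), 
    Vm_form hne hρ _ (by positivity) m, fun x hx => ?_, h2 m, hm.le⟩
  have h3 := Vm_le hρ m hx
  have h4 : 1 / (2 * ((m : ℝ) + 1)) ≤ 1 / 2 := by
    apply one_div_le_one_div_of_le (by norm_num); linarith [Nat.cast_nonneg (α := ℝ) m]
  have := Real.add_one_le_exp (-Vm K ((ρ + 1) ^ 2 / 2) m x)
  linarith

end approx

/-! ### The potential attached to a convex body -/

section bary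
variable {n : ℕ}

lemma baseV_of_convex {V : Eu n → ℝ} (hc : ConvexOn ℝ Set.univ V) {b l : Fin n → ℝ} {c : ℝ} {ψ : Eu n → ℝ} (hb : ∀ i, 0 < b i)
    (h1 : ContDiff ℝ (⊤ : ℕ∞) ψ) (h2 : HasCompactSupport ψ) (h3 : V = fun x => U0 b l c x + ψ x) : BaseV V := by
  refine ⟨fun x v => ?_, b, l, c, ψ, hb, h1, h2, h3⟩
  have hT : TG V := by rw [h3]; exact (TG_U0 b l c).add (h2.hasTemperateGrowth h1)
  have := hess_nonneg hc (fun x => hT.diff x) (fun x j => (hT.pd j).diff x) x (WithLp.toLp 2 v)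
  simpa using this

lemma volume_real_pos {K : Set (Eu n)} (hK : IsCompact K) (hi : (interior K).Nonempty) : 0 < volume.real K := by
  refine ENNReal.toReal_pos (Measure.measure_pos_of_nonempty_interior _ hi).ne' hK.measure_lt_top.ne

/-- The barycenter of a convex body is an interior point. -/
lemma bary_interior {K : Set (Eu n)} (hK : IsCompact K) (hc : Convex ℝ K) (hi : (interior K).Nonempty) :
    (volume.real K)⁻¹ • ∫ x in K, x ∈ interior K := by
  by_contra hb
  set b := (volume.real K)⁻¹ • ∫ x in K, x with hbd
  have hv := volume_real_pos hK hi
  obtain ⟨f, hf⟩ := geometric_hahn_banach_open_point hc.interior isOpen_interior hb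
  have hgint : IntegrableOn (fun x : Eu n => x) K := continuous_id.continuousOn.integrableOn_compact hK
  have e1 : ∫ x in K, f x = volume.real K * f b := by
    rw [f.integral_comp_comm hgint, hbd, map_smul, smul_eq_mul, mul_inv_cancel_left₀ hv.ne']
  have hae : interior K =ᵐ[volume] K := interior_ae_eq_of_null_frontier (hc.addHaar_frontier volume)
  have hle : ∫ x in interior K, f x < ∫ x in interior K, f b := by
    have hfin : volume (interior K) ≠ ⊤ := ((measure_mono interior_subset).trans_lt hK.measure_lt_top).ne
    have hi1 : IntegrableOn (fun x => f x) (interior K) :=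
      (f.continuous.continuousOn.integrableOn_compact hK).mono_set interior_subset
    have hi2 : IntegrableOn (fun _ : Eu n => f b) (interior K) := integrableOn_const hfin
    rw [← sub_pos, ← integral_sub hi2 hi1]
    rw [setIntegral_pos_iff_support_of_nonneg_ae (f := fun x => f b - f x) _ (hi2.sub hi1)]
    · have : interior K ⊆ Function.support (fun x => f b - f x) ∩ interior K := fun x hx =>
        ⟨(sub_pos.2 (hf x hx)).ne', hx⟩
      exact (isOpen_interior.measure_pos volume hi).trans_le (measure_mono this)
    · exact (ae_restrict_mem isOpen_interior.measurableSet).mono fun x hx => (sub_pos.2 (hf x hx)).le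
  rw [setIntegral_congr_set hae, setIntegral_congr_set hae, e1, setIntegral_const, smul_eq_mul] at hle
  exact lt_irrefl _ hle

lemma abs_ind_le {K : Set (Eu n)} {V : Eu n → ℝ}
    (hI : Integrable (fun x => |K.indicator (fun _ => (1 : ℝ)) x - Real.exp (-V x)| * (1 + ‖x‖))) {F : Type*} [NormedAddCommGroup F]
    [NormedSpace ℝ F] {f : Eu n → F} {D : ℝ} (hf : ∀ x, ‖f x‖ ≤ D * (1 + ‖x‖)) (i1 : IntegrableOn f K) (i2 : Integrable (fun x => Real.exp (-V x) • f x))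
    (hK : MeasurableSet K) :
    ‖(∫ x, Real.exp (-V x) • f x) - ∫ x in K, f x‖ ≤ D * ∫ x, |K.indicator (fun _ => (1 : ℝ)) x - Real.exp (-V x)| * (1 + ‖x‖) := by
  rw [← integral_indicator hK, ← integral_sub i2 (i1.integrable_indicator hK), ← integral_const_mul]
  refine norm_integral_le_of_norm_le (hI.const_mul D) (Filter.Eventually.of_forall fun x => ?_)
  have : Real.exp (-V x) • f x - K.indicator f x = (Real.exp (-V x) - K.indicator (fun _ => (1 : ℝ)) x) • f x := by
    by_cases hx : x ∈ K <;> simp [hx, sub_smul]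
  rw [this, norm_smul, Real.norm_eq_abs, abs_sub_comm]
  have := mul_le_mul_of_nonneg_left (hf x) (abs_nonneg (K.indicator (fun _ => (1 : ℝ)) x - Real.exp (-V x)))
  linarith

lemma sublin_gauge {K : Set (Eu n)} (hc : Convex ℝ K) (h0 : K ∈ nhds (0 : Eu n)) : Sublin (gauge K) where
  nonneg := gauge_nonneg
  add_le := gauge_add_le hc (absorbent_nhds_zero h0)
  smul c hc x := by rw [gauge_smul_of_nonneg hc, smul_eq_mul]
  cont := continuous_gauge hc h0

/-- A smooth convex potential whose measure is close enough to the uniform measure on a convex body. -/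
theorem body_potential {K : Set (Eu n)} (hK : IsCompact K) (hc : Convex ℝ K) (hi : (interior K).Nonempty) :
    ∃ (V : Eu n → ℝ) (c : Eu n), ConvexOn ℝ Set.univ V ∧ (∃ l r ψ, ContDiff ℝ (⊤ : ℕ∞) ψ ∧ HasCompactSupport ψ ∧
      V = fun x => U0 (fun _ => 1) l r x + ψ x) ∧ (∀ x ∈ K, 1 / 2 ≤ Real.exp (-V x)) ∧ In V (fun _ => 1) ≤ 2 * volume.real K ∧
      (∀ k, In V (fun x => x k) = c k * In V (fun _ => 1)) ∧ (-c +ᵥ K) ∈ nhds (0 : Eu n) ∧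
      In V (fun x => gauge (-c +ᵥ K) (x - c)) ≤ 2 * In V (fun _ => 1) := by
  set v := volume.real K with hv
  have hv0 : 0 < v := volume_real_pos hK hi
  set b := v⁻¹ • ∫ x in K, x with hb
  obtain ⟨r, hr, hball⟩ := Metric.isOpen_iff.1 isOpen_interior b (bary_interior hK hc hi)
  set ρ := r / 2 with hρ
  have hρ0 : 0 < ρ := by positivity
  have hne : K.Nonempty := hi.mono interior_subset
  set ε := ρ * v / (2 * (1 + ‖b‖ + ρ)) with hε
  have hεp : 0 < ε := by positivity
  have hεe : ε * (1 + ‖b‖ + ρ) = ρ * v / 2 := by rw [hε]; field_simp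
  have hεv : ε ≤ v / 2 := by nlinarith [norm_nonneg b]
  obtain ⟨V, hVc, ⟨l, r', ψ, h1, h2, h3⟩, hK2, hI, hIle⟩ := body_approx hK hne hc hεp
  have hB : BaseV V := baseV_of_convex hVc (fun _ => one_pos) h1 h2 h3
  have hQ := hB.qg
  have i1 : IntegrableOn (fun x : Eu n => x) K := continuous_id.continuousOn.integrableOn_compact hK
  have i2 : Integrable (fun x : Eu n => Real.exp (-V x) • x) := by
    refine (PB.integrable (f := fun x : Eu n => ‖x‖) PB.norm (by fun_prop) hQ).mono' ?_ (Filter.Eventually.of_forall fun x => ?_)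
    · have := hQ.1
      exact (by fun_prop : Continuous fun x : Eu n => Real.exp (-V x) • x).aestronglyMeasurable
    · rw [norm_smul, Real.norm_of_nonneg (Real.exp_pos _).le, mul_comm]
  have i3 : Integrable (fun x : Eu n => Real.exp (-V x) • (1 : ℝ)) := by
    simpa using (TG.const (n := n) 1).integrable hQ
  set Z := In V (fun _ => 1) with hZ
  have hZe : ∫ x : Eu n, Real.exp (-V x) • (1 : ℝ) = Z := by simp [hZ, In]
  have hZv : |Z - v| ≤ ε := by
    have := abs_ind_le hI (f := fun _ => (1 : ℝ)) (D := 1) (fun x => by simp) (integrableOn_const hK.measure_lt_top.ne) i3 hK.measurableSet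
    rw [hZe, setIntegral_const, smul_eq_mul, mul_one, one_mul] at this
    exact this.trans hIle
  have hZ2 := abs_le.1 hZv
  have hZ0 : v / 2 ≤ Z := by linarith
  have hZp : 0 < Z := by linarith
  set M := ∫ x : Eu n, Real.exp (-V x) • x with hM
  have hMv : ‖M - v • b‖ ≤ ε := by
    have := abs_ind_le hI (f := fun x => x) (D := 1) (fun x => by simp) i1 i2 hK.measurableSet
    rw [hb, smul_inv_smul₀ hv0.ne']
    rw [one_mul] at this
    exact this.trans hIle
  set c := Z⁻¹ • M with hcd
  have hZc : Z • c = M := by rw [hcd, smul_inv_smul₀ hZp.ne']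
  have hcb : ‖c - b‖ ≤ ρ := by
    have e : Z • (c - b) = (M - v • b) + (v - Z) • b := by rw [smul_sub, hZc, sub_smul]; abel
    have : Z * ‖c - b‖ ≤ ε + ε * ‖b‖ := by
      calc Z * ‖c - b‖ = ‖Z • (c - b)‖ := by rw [norm_smul, Real.norm_of_nonneg hZp.le]
        _ ≤ ‖M - v • b‖ + ‖(v - Z) • b‖ := by rw [e]; exact norm_add_le _ _
        _ ≤ ε + ε * ‖b‖ := by
          rw [norm_smul, Real.norm_eq_abs, abs_sub_comm]
          gcongr
    by_contra hcon
    push Not at hcon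
    nlinarith
  have hbc : Metric.ball (0 : Eu n) ρ ⊆ -c +ᵥ K := fun x hx => by
    rw [Set.mem_vadd_set_iff_neg_vadd_mem]
    apply interior_subset
    apply hball
    rw [neg_neg, vadd_eq_add, Metric.mem_ball, dist_eq_norm]
    rw [Metric.mem_ball, dist_zero_right] at hx
    calc ‖c + x - b‖ = ‖(c - b) + x‖ := by congr 1; abel
      _ ≤ ‖c - b‖ + ‖x‖ := norm_add_le _ _
      _ < r := by linarith
  have hnh : (-c +ᵥ K) ∈ nhds (0 : Eu n) := Filter.mem_of_superset (Metric.ball_mem_nhds 0 hρ0) hbc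
  have hcc : Convex ℝ (-c +ᵥ K) := hc.vadd _
  have hS := sublin_gauge hcc hnh
  refine ⟨V, c, hVc, ⟨l, r', ψ, h1, h2, h3⟩, hK2, by linarith, fun k => ?_, hnh, ?_⟩
  · have : (M : Eu n) k = In V (fun x => x k) := by
      have := (EuclideanSpace.proj k : Eu n →L[ℝ] ℝ).integral_comp_comm i2
      change ∫ x : Eu n, Real.exp (-V x) * x k = M k at this
      rw [In, ← this]
      exact integral_congr_ae (Filter.Eventually.of_forall fun x => mul_comm _ _)
    rw [← this, ← hZc]; simp [mul_comm, hZ]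
  · have hD : 0 ≤ 1 + ‖c‖ := by positivity
    have hpt : ∀ x, gauge (-c +ᵥ K) (x - c) * Real.exp (-V x) ≤ Real.exp (-V x) + ρ⁻¹ * (1 + ‖c‖) *
        (|K.indicator (fun _ => (1 : ℝ)) x - Real.exp (-V x)| * (1 + ‖x‖)) := fun x => by
      by_cases hx : x ∈ K
      · have : gauge (-c +ᵥ K) (x - c) ≤ 1 := gauge_le_one_of_mem (by
          rw [Set.mem_vadd_set_iff_neg_vadd_mem]; simpa using hx)
        have h5 := mul_le_mul_of_nonneg_right this (Real.exp_pos (-V x)).le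
        have : 0 ≤ ρ⁻¹ * (1 + ‖c‖) * (|K.indicator (fun _ => (1 : ℝ)) x - Real.exp (-V x)| * (1 + ‖x‖)) := by positivity
        linarith
      · have h5 := mul_gauge_le_norm (x := x - c) hbc
        have h6 : gauge (-c +ᵥ K) (x - c) ≤ ρ⁻¹ * ‖x - c‖ := by rwa [← div_eq_inv_mul, le_div_iff₀ hρ0, mul_comm]
        have h7 : ‖x - c‖ ≤ (1 + ‖c‖) * (1 + ‖x‖) := by nlinarith [norm_sub_le x c, norm_nonneg x, norm_nonneg c]
        rw [Set.indicator_of_notMem hx, zero_sub, abs_neg, abs_of_pos (Real.exp_pos _)]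
        have h8 : gauge (-c +ᵥ K) (x - c) ≤ ρ⁻¹ * ((1 + ‖c‖) * (1 + ‖x‖)) := h6.trans (by gcongr)
        have h9 := mul_le_mul_of_nonneg_right h8 (Real.exp_pos (-V x)).le
        have := Real.exp_pos (-V x)
        linarith
    have i4 : Integrable (fun x => gauge (-c +ᵥ K) (x - c) * Real.exp (-V x)) := by
      have hp : PC (fun z => gauge (-c +ᵥ K) (-c + (1 : ℝ) • z)) := hS.pc.comp_affine (-c) 1
      have := PB.integrable hp.2 hp.1.aestronglyMeasurable hQ
      simpa [neg_add_eq_sub] using this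
    have i3' : Integrable (fun x : Eu n => Real.exp (-V x)) := by simpa using i3
    have h5 : In V (fun x => gauge (-c +ᵥ K) (x - c)) ≤ Z + ρ⁻¹ * (1 + ‖c‖) * ε := by
      refine (integral_mono i4 (i3'.add (hI.const_mul _)) hpt).trans ?_
      simp only [Pi.add_apply]
      rw [integral_add i3' (hI.const_mul _), integral_const_mul]
      have : ∫ x : Eu n, Real.exp (-V x) = Z := by simp [hZ, In]
      rw [this]
      gcongr
    have h6 : ‖c‖ ≤ ‖b‖ + ρ := by
      have := norm_add_le (c - b) b
      rw [sub_add_cancel] at this; linarith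
    have h7 : ρ⁻¹ * (1 + ‖c‖) * ε ≤ v / 2 := by
      calc ρ⁻¹ * (1 + ‖c‖) * ε ≤ ρ⁻¹ * (1 + (‖b‖ + ρ)) * ε := by gcongr
        _ = ρ⁻¹ * (ε * (1 + ‖b‖ + ρ)) := by ring
        _ = v / 2 := by rw [hεe]; field_simp
    linarith

end bary

/-! ### Whitening -/

section whiten
variable {n : ℕ}
open Matrix

/-- Unnormalised second moments of the measure `exp (-V)` about the point `c`. -/
def Qm (V : Eu n → ℝ) (c : Eu n) : Matrix (Fin n) (Fin n) ℝ := of fun k l => In V (fun x => (x k - c k) * (x l - c l))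

lemma Qm_symm (V : Eu n → ℝ) (c : Eu n) : (Qm V c)ᵀ = Qm V c := by
  ext k l
  simp only [Qm, transpose_apply, of_apply]
  congr 1; ext x; ring

lemma Qm_conj {V : Eu n → ℝ} (hV : QG V) (c : Eu n) (B : Matrix (Fin n) (Fin n) ℝ) (i j : Fin n) :
    In V (fun x => (∑ k, B i k * (x k - c k)) * ∑ l, B j l * (x l - c l)) = (B * Qm V c * Bᵀ) i j := by
  have e : (fun x : Eu n => (∑ k, B i k * (x k - c k)) * ∑ l, B j l * (x l - c l)) =
      fun x => ∑ l, ∑ k, (B i k * B j l) * ((x k - c k) * (x l - c l)) := by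
    ext x
    rw [Finset.sum_mul_sum, Finset.sum_comm]
    exact Finset.sum_congr rfl fun l _ => Finset.sum_congr rfl fun k _ => by ring
  have hT : ∀ k l, TG (fun x : Eu n => (B i k * B j l) * ((x k - c k) * (x l - c l))) := fun k l =>
    (((TG.coord k).sub (TG.const _)).mul ((TG.coord l).sub (TG.const _))).cmul _
  rw [e, In_sum hV fun l _ => TG.sum fun k _ => hT k l]
  simp only [Matrix.mul_apply, transpose_apply, Finset.sum_mul]
  refine Finset.sum_congr rfl fun l _ => ?_
  rw [In_sum hV fun k _ => hT k l]
  refine Finset.sum_congr rfl fun k _ => ?_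
  rw [In_cmul, Qm, of_apply]; ring

/-- A linear change of variables that brings the measure `exp (-V)` into isotropic position. -/
lemma whiten {V : Eu n → ℝ} (hV : QG V) (c : Eu n) : ∃ (S : Eu n ≃ₗ[ℝ] Eu n) (a : Fin n → ℝ), (∀ i, 0 < a i) ∧
    (∀ z, ‖S z‖ ^ 2 = ∑ i, a i * z i ^ 2) ∧
    ∀ i j, In V (fun x => S.symm (x - c) i * S.symm (x - c) j) = (1 : Matrix (Fin n) (Fin n) ℝ) i j * In V (fun _ => 1) := by
  set Z := In V (fun _ => 1) with hZ
  have hZ0 : 0 < Z := In_one_pos hV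
  obtain ⟨O, l, hS⟩ := exists_spec (Qm_symm V c)
  have hd : Oᵀ * Qm V c * O = diagonal l := by
    rw [hS.eq]
    calc Oᵀ * (O * diagonal l * Oᵀ) * O = (Oᵀ * O) * diagonal l * (Oᵀ * O) := by simp only [Matrix.mul_assoc]
      _ = _ := by rw [hS.o1]; simp
  have hl : ∀ i, 0 < l i := fun i => by
    have h1 := Qm_conj hV c Oᵀ i i
    rw [transpose_transpose, hd, diagonal_apply_eq] at h1
    rw [← h1]
    have hT : TG (fun x : Eu n => ∑ k, Oᵀ i k * (x k - c k)) :=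
      TG.sum fun k _ => ((TG.coord k).sub (TG.const _)).cmul _
    refine integral_pos_of_integrable_nonneg_nonzero (x := c + WithLp.toLp 2 (fun k => O k i)) ?_
      ((hT.mul hT).integrable hV) (fun x => mul_nonneg (mul_self_nonneg _) (Real.exp_pos _).le) ?_
    · exact (hT.mul hT).cont.mul (Real.continuous_exp.comp hV.1.neg)
    · have : ∑ k, Oᵀ i k * ((c + WithLp.toLp 2 (fun k => O k i)) k - c k) = 1 := by
        have := congrFun (congrFun hS.o1 i) i
        rw [Matrix.mul_apply, Matrix.one_apply_eq] at this
        rw [← this]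
        exact Finset.sum_congr rfl fun k _ => by simp
      refine mul_ne_zero ?_ (Real.exp_ne_zero _)
      beta_reduce
      rw [this]; norm_num
  set a : Fin n → ℝ := fun i => l i / Z with ha
  have ha0 : ∀ i, 0 < a i := fun i => div_pos (hl i) hZ0
  set s : Fin n → ℝ := fun i => Real.sqrt (a i) with hs
  have hs0 : ∀ i, 0 < s i := fun i => Real.sqrt_pos.2 (ha0 i)
  set A := O * diagonal s with hA
  set B := diagonal (fun i => (s i)⁻¹) * Oᵀ with hB
  have hss : diagonal (fun i => (s i)⁻¹) * diagonal s = 1 := by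
    rw [diagonal_mul_diagonal, ← diagonal_one]
    congr 1; ext i; exact inv_mul_cancel₀ (hs0 i).ne'
  have hBA : B * A = 1 := by
    calc B * A = diagonal (fun i => (s i)⁻¹) * (Oᵀ * O) * diagonal s := by simp only [hA, hB, Matrix.mul_assoc]
      _ = 1 := by rw [hS.o1, Matrix.mul_one, hss]
  have hAB : A * B = 1 := mul_eq_one_comm.1 hBA
  have hAA : Aᵀ * A = diagonal a := by
    calc Aᵀ * A = diagonal s * (Oᵀ * O) * diagonal s := by
          simp only [hA, transpose_mul, diagonal_transpose, Matrix.mul_assoc]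
      _ = diagonal a := by
          rw [hS.o1, Matrix.mul_one, diagonal_mul_diagonal]
          congr 1; ext i; exact Real.mul_self_sqrt (ha0 i).le
  have hBQ : B * Qm V c * Bᵀ = diagonal fun _ => Z := by
    calc B * Qm V c * Bᵀ = diagonal (fun i => (s i)⁻¹) * (Oᵀ * Qm V c * O) * diagonal (fun i => (s i)⁻¹) := by
          simp only [hB, transpose_mul, diagonal_transpose, transpose_transpose, Matrix.mul_assoc]
      _ = _ := by
          rw [hd, diagonal_mul_diagonal, diagonal_mul_diagonal]
          congr 1; ext i
          have h1 : s i * s i = l i / Z := Real.mul_self_sqrt (ha0 i).le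
          have h2 : l i = s i * s i * Z := by rw [h1]; field_simp
          rw [h2]
          have := (hs0 i).ne'
          field_simp
  let S : Eu n ≃ₗ[ℝ] Eu n :=
    { toFun := fun z => WithLp.toLp 2 (A *ᵥ z.ofLp)
      map_add' := fun x y => by ext i; simp [mulVec_add]
      map_smul' := fun r x => by ext i; simp [mulVec_smul]
      invFun := fun z => WithLp.toLp 2 (B *ᵥ z.ofLp)
      left_inv := fun x => by ext i; simp [hBA]
      right_inv := fun x => by ext i; simp [hAB] }
  refine ⟨S, a, ha0, fun z => ?_, fun i j => ?_⟩
  · have e1 : ‖S z‖ ^ 2 = (A *ᵥ z.ofLp) ⬝ᵥ (A *ᵥ z.ofLp) := by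
      rw [norm_sq_eq_sum]; exact Finset.sum_congr rfl fun i _ => pow_two _
    rw [e1, dotProduct_mulVec, vecMul_mulVec, ← mulVec_transpose, transpose_mul, transpose_transpose, hAA,
      dotProduct]
    exact Finset.sum_congr rfl fun i _ => by rw [mulVec_diagonal]; ring
  · have h1 := Qm_conj hV c B i j
    rw [hBQ] at h1
    have h2 : ∀ x : Eu n, ∀ i, S.symm (x - c) i = ∑ k, B i k * (x k - c k) := fun x i => rfl
    simp only [h2]
    rw [h1, diagonal_apply, Matrix.one_apply]
    split_ifs <;> simp

end whiten

/-! ### Isotropic position -/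

section isopos
variable {n : ℕ}

/-- Affine change of variables, with an unspecified Jacobian `κ`. -/
lemma exists_change (S : Eu n ≃ₗ[ℝ] Eu n) (c : Eu n) : ∃ κ : ℝ, 0 < κ ∧ ∀ g : Eu n → ℝ, ∫ z, g (S z + c) = κ * ∫ x, g x := by
  have hdet : LinearMap.det (S : Eu n →ₗ[ℝ] Eu n) ≠ 0 := (LinearEquiv.isUnit_det' S).ne_zero
  refine ⟨|(LinearMap.det (S : Eu n →ₗ[ℝ] Eu n))⁻¹|, abs_pos.2 (inv_ne_zero hdet), fun g => ?_⟩
  have h1 := Measure.map_linearMap_addHaar_eq_smul_addHaar (volume : Measure (Eu n)) hdet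
  have h2 := S.toContinuousLinearEquiv.toHomeomorph.measurableEmbedding.integral_map (μ := (volume : Measure (Eu n))) (fun x => g (x + c))
  have h3 : ∫ z, g (S z + c) = ∫ y, g (y + c) ∂(Measure.map (S : Eu n →ₗ[ℝ] Eu n) volume) := h2.symm
  rw [h3, h1, integral_smul_measure, integral_add_right_eq_self (fun x => g x) c, ENNReal.toReal_ofReal (abs_nonneg _), smul_eq_mul]

lemma lin_sum (L : Eu n →ₗ[ℝ] ℝ) (z : Eu n) : L z = ∑ i, L (ee i) * z i := by
  conv_lhs => rw [eu_eq_sum z]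
  rw [map_sum]
  exact Finset.sum_congr rfl fun i _ => by rw [map_smul, smul_eq_mul, mul_comm]

/-- Every convex body has an affine image whose gauge `h` has small Gaussian mean and whose second moment is of order `n`. -/
theorem iso_position {K : Set (Eu n)} (hK : IsCompact K) (hc : Convex ℝ K) (hi : (interior K).Nonempty) (hn : 0 < n) {q : ℕ}
    (hq : Even q) (hq3 : 3 ≤ q) (h4 : 60 * (n : ℝ) ^ 4 * Real.exp 10240 ≤ 4 ^ q) :
    ∃ (R : Eu n ≃ₗ[ℝ] Eu n) (x₀ : Eu n) (h : Eu n → ℝ), Sublin h ∧ (∀ z, z ∈ R '' (x₀ +ᵥ K) ↔ h z ≤ 1) ∧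
      Eg h ≤ 40 * q ^ 2 ∧ ∫ z in R '' (x₀ +ᵥ K), ‖z‖ ^ 2 ≤ 4 * n * volume.real (R '' (x₀ +ᵥ K)) := by
  obtain ⟨V, c, hVc, ⟨l, r, ψ, h1, h2, h3⟩, hK2, hZv, hmean, hnh, hgauge⟩ := body_potential hK hc hi
  have hB : BaseV V := baseV_of_convex hVc (fun _ => one_pos) h1 h2 h3
  have hQ := hB.qg
  obtain ⟨S, a, ha, hSn, hcov⟩ := whiten hQ c
  obtain ⟨κ, hκ, hcv⟩ := exists_change S c
  set Z := In V (fun _ => 1) with hZ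
  have hZ0 : 0 < Z := In_one_pos hQ
  set W : Eu n → ℝ := fun z => V (S z + c) + Real.log (κ * Z) with hW
  have hIn : ∀ f : Eu n → ℝ, In W f = In V (fun x => f (S.symm (x - c))) / Z := fun f => by
    have e := hcv (fun x => f (S.symm (x - c)) * Real.exp (-V x) / (κ * Z))
    simp only [add_sub_cancel_right, LinearEquiv.symm_apply_apply] at e
    rw [integral_div, integral_div] at e
    have e2 : In W f = ∫ z, f z * Real.exp (-V (S z + c)) / (κ * Z) := by
      simp only [In, hW]
      congr 1; ext z
      rw [neg_add, Real.exp_add, Real.exp_neg (Real.log _), Real.exp_log (by positivity)]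
      field_simp
    rw [e2, integral_div, e, In]; field_simp
  have hpot : pot W 0 0 = W := by ext x; simp [pot]
  have hIn1 : In W (fun _ => 1) = 1 := by rw [hIn, ← hZ, div_self hZ0.ne']
  have hEp : ∀ f : Eu n → ℝ, Ep W f 0 0 = In V (fun x => f (S.symm (x - c))) / Z := fun f => by
    rw [Ep, Iw, Iw, hpot, hIn1, div_one, hIn]
  have hWc : ConvexOn ℝ Set.univ W := ⟨convex_univ, fun x _ y _ s t hs ht hst => by
    have := hVc.2 (Set.mem_univ (S x + c)) (Set.mem_univ (S y + c)) hs ht hst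
    have e : S (s • x + t • y) + c = s • (S x + c) + t • (S y + c) := by
      rw [map_add, map_smul, map_smul]
      calc s • S x + t • S y + c = s • S x + t • S y + (s + t) • c := by rw [hst, one_smul]
        _ = _ := by module
    simp only [hW, e, smul_eq_mul] at this ⊢
    have e3 : Real.log (κ * Z) = s * Real.log (κ * Z) + t * Real.log (κ * Z) := by rw [← add_mul, hst, one_mul]
    linarith⟩
  let L : Eu n →ₗ[ℝ] ℝ := (innerₛₗ ℝ (WithLp.toLp 2 l + c)).comp (S : Eu n →ₗ[ℝ] Eu n)
  have hL : ∀ z, L z = ∑ k, (l k + c k) * S z k := fun z => by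
    change inner ℝ (WithLp.toLp 2 l + c) (S z) = _
    rw [inner_eq_sum]; rfl
  have hBW : BaseV W := by
    refine baseV_of_convex hWc (b := a) (l := fun i => L (ee i)) (c := ‖c‖ ^ 2 / 2 + ∑ k, l k * c k + r + Real.log (κ * Z))
      (ψ := fun z => ψ (S z + c)) ha ?_ ?_ ?_
    · exact h1.comp (S.toContinuousLinearEquiv.contDiff.add contDiff_const)
    · exact h2.comp_homeomorph (S.toContinuousLinearEquiv.toHomeomorph.trans (Homeomorph.addRight c))
    · ext z
      simp only [hW, h3, U0]
      have e1 : ∑ i, (1 / 2 * (S z + c) i ^ 2 + l i * (S z + c) i) = ‖S z‖ ^ 2 / 2 + L z + ‖c‖ ^ 2 / 2 + ∑ k, l k * c k := by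
        rw [hL, norm_sq_eq_sum, norm_sq_eq_sum, Finset.sum_div, Finset.sum_div, ← Finset.sum_add_distrib, ← Finset.sum_add_distrib,
          ← Finset.sum_add_distrib]
        refine Finset.sum_congr rfl fun i _ => ?_
        rw [PiLp.add_apply]; ring
      rw [e1, hSn, lin_sum L z, Finset.sum_add_distrib]
      have : ∑ i, a i / 2 * z i ^ 2 = (∑ i, a i * z i ^ 2) / 2 := by
        rw [Finset.sum_div]; exact Finset.sum_congr rfl fun i _ => by ring
      rw [this]; ring
  have hm0 : ∀ k, In V (fun x => S.symm (x - c) k) = 0 := fun k => by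
    let M : Eu n →ₗ[ℝ] ℝ := ((EuclideanSpace.proj k : Eu n →L[ℝ] ℝ) : Eu n →ₗ[ℝ] ℝ).comp (S.symm : Eu n →ₗ[ℝ] Eu n)
    have hM : ∀ x, S.symm (x - c) k = ∑ i, M (ee i) * (x i - c i) := fun x => lin_sum M (x - c)
    simp only [hM]
    rw [In_sum hQ fun i _ => ((TG.coord i).sub (TG.const _)).cmul _]
    refine Finset.sum_eq_zero fun i _ => ?_
    have : In V (fun x => c i) = c i * Z := by simpa using In_cmul (U := V) (f := fun _ => 1) (c i)
    rw [In_cmul, In_sub hQ (TG.coord i) (TG.const _), hmean, this, sub_self, mul_zero]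
  have hmeanW : ∀ k, Ep W (fun x => x k) 0 0 = 0 := fun k => by rw [hEp, hm0, zero_div]
  have hMc : Mc W 0 0 = 0 := by
    ext i j
    simp only [Mc, Matrix.of_apply, hmeanW, Matrix.zero_apply]
    rw [hEp, hcov, mul_div_cancel_right₀ _ hZ0.ne']; ring
  have hG := sublin_gauge (hc.vadd (-c)) hnh
  have hh : Sublin (fun z => gauge (-c +ᵥ K) (S z)) :=
    { nonneg := fun x => hG.nonneg _
      add_le := fun x y => by rw [map_add]; exact hG.add_le _ _
      smul := fun t ht x => by rw [map_smul]; exact hG.smul t ht _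
      cont := hG.cont.comp S.toContinuousLinearEquiv.continuous }
  have hEph : Ep W (fun z => gauge (-c +ᵥ K) (S z)) 0 0 ≤ 2 := by
    rw [hEp, div_le_iff₀ hZ0]
    simpa using hgauge
  have hmem : ∀ z, z ∈ S.symm '' (-c +ᵥ K) ↔ S z + c ∈ K := fun z => by
    rw [LinearEquiv.image_symm_eq_preimage, Set.mem_preimage, Set.mem_vadd_set_iff_neg_vadd_mem, neg_neg, vadd_eq_add, add_comm]
  have hind : ∀ f : Eu n → ℝ, ∫ z in S.symm '' (-c +ᵥ K), f z = κ * ∫ x in K, f (S.symm (x - c)) := fun f => by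
    have hKm : MeasurableSet (S.symm '' (-c +ᵥ K)) :=
      ((hK.vadd (-c)).image S.symm.toContinuousLinearEquiv.continuous).measurableSet
    rw [← integral_indicator hKm, ← integral_indicator hK.measurableSet, ← hcv]
    congr 1; ext z
    by_cases hz : S z + c ∈ K
    · rw [Set.indicator_of_mem ((hmem z).2 hz), Set.indicator_of_mem hz]; simp
    · rw [Set.indicator_of_notMem (fun h => hz ((hmem z).1 h)), Set.indicator_of_notMem hz]
  refine ⟨S.symm, -c, fun z => gauge (-c +ᵥ K) (S z), hh, fun z => ?_, ?_, ?_⟩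
  · rw [gauge_le_one_iff_mem_closure (hc.vadd _) hnh, (hK.vadd (-c)).isClosed.closure_eq, LinearEquiv.image_symm_eq_preimage]; rfl
  · have := gauss_le hBW hIn1 hMc hmeanW hh hn hq hq3 h4
    have hq0 : (0 : ℝ) ≤ 20 * q ^ 2 := by positivity
    nlinarith
  · have hvol : volume.real (S.symm '' (-c +ᵥ K)) = κ * volume.real K := by
      have := hind (fun _ => 1)
      simpa using this
    rw [hind, hvol]
    have hTi : ∀ i, TG (fun x : Eu n => S.symm (x - c) i) := fun i => by
      let M : Eu n →ₗ[ℝ] ℝ := ((EuclideanSpace.proj i : Eu n →L[ℝ] ℝ) : Eu n →ₗ[ℝ] ℝ).comp (S.symm : Eu n →ₗ[ℝ] Eu n)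
      have hM : (fun x : Eu n => S.symm (x - c) i) = fun x => ∑ k, M (ee k) * (x k - c k) := by
        ext x; exact lin_sum M (x - c)
      rw [hM]
      exact TG.sum fun k _ => ((TG.coord k).sub (TG.const _)).cmul _
    have hsq : ∀ x : Eu n, ‖S.symm (x - c)‖ ^ 2 = ∑ i, S.symm (x - c) i * S.symm (x - c) i := fun x => by
      rw [norm_sq_eq_sum]; exact Finset.sum_congr rfl fun i _ => pow_two _
    have hTs : TG (fun x : Eu n => ‖S.symm (x - c)‖ ^ 2) := by
      simp only [hsq]; exact TG.sum fun i _ => (hTi i).mul (hTi i)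
    have hIs : In V (fun x => ‖S.symm (x - c)‖ ^ 2) = n * Z := by
      simp only [hsq]
      rw [In_sum hQ fun i _ => (hTi i).mul (hTi i)]
      simp only [hcov, Matrix.one_apply_eq, one_mul, Finset.sum_const, Finset.card_univ, Fintype.card_fin, nsmul_eq_mul]
    have hle : ∫ x in K, ‖S.symm (x - c)‖ ^ 2 ≤ 2 * In V (fun x => ‖S.symm (x - c)‖ ^ 2) := by
      rw [← integral_indicator hK.measurableSet, In, ← integral_const_mul]
      refine integral_mono ((hTs.cont.continuousOn.integrableOn_compact hK).integrable_indicator hK.measurableSet)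
        ((hTs.integrable hQ).const_mul 2) fun x => ?_
      by_cases hx : x ∈ K
      · rw [Set.indicator_of_mem hx]
        have := mul_le_mul_of_nonneg_left (hK2 x hx) (sq_nonneg ‖S.symm (x - c)‖)
        change ‖S.symm (x - c)‖ ^ 2 ≤ 2 * (‖S.symm (x - c)‖ ^ 2 * Real.exp (-V x))
        linarith
      · rw [Set.indicator_of_notMem hx]; positivity
    have hn0 : (0 : ℝ) ≤ n := by positivity
    calc κ * ∫ x in K, ‖S.symm (x - c)‖ ^ 2 ≤ κ * (2 * (n * (2 * volume.real K))) := by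
          rw [hIs] at hle; gcongr; exact hle.trans (by gcongr)
      _ = _ := by ring

end isopos

/-! ### Haar averages over rotations -/

section rotation
variable {n : ℕ}

/-- The orthogonal group of `ℝⁿ`, as a compact topological group of operators. -/
abbrev RG (n : ℕ) := unitary (Eu n →L[ℝ] Eu n)

instance : ContinuousStar (Eu n →L[ℝ] Eu n) := ⟨ContinuousLinearMap.adjoint.continuous⟩

instance : CompactSpace (RG n) := by
  have : ProperSpace (Eu n →L[ℝ] Eu n) := FiniteDimensional.proper ℝ _
  have hb : Bornology.IsBounded (unitary (Eu n →L[ℝ] Eu n) : Set (Eu n →L[ℝ] Eu n)) := by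
    refine (Metric.isBounded_closedBall (x := (0 : Eu n →L[ℝ] Eu n)) (r := 1)).subset fun u hu => ?_
    rw [mem_closedBall_zero_iff]
    refine ContinuousLinearMap.opNorm_le_bound _ zero_le_one fun x => ?_
    rw [Unitary.norm_map ⟨u, hu⟩ x, one_mul]
  exact isCompact_iff_compactSpace.1 (Metric.isCompact_of_isClosed_isBounded isClosed_unitary hb)

/-- The normalised Haar measure of the orthogonal group. -/
def muR (n : ℕ) : Measure (RG n) := Measure.haarMeasure ⊤

instance : IsProbabilityMeasure (muR n) := ⟨by
  have := Measure.haarMeasure_self (K₀ := (⊤ : TopologicalSpace.PositiveCompacts (RG n)))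
  simpa [muR] using this⟩

instance : (muR n).IsMulLeftInvariant := by unfold muR; infer_instance

lemma rg_inv_mul_apply (g U : RG n) (y : Eu n) : ((g * U)⁻¹ : RG n).1 y = (U⁻¹ : RG n).1 ((g⁻¹ : RG n).1 y) := by
  rw [mul_inv_rev]; rfl

lemma rg_apply_inv (U : RG n) (y : Eu n) : U.1 ((U⁻¹ : RG n).1 y) = y := by
  change (U * U⁻¹ : RG n).1 y = y
  rw [mul_inv_cancel]; rfl

lemma rg_transitive {v w : Eu n} (h : ‖v‖ = ‖w‖) : ∃ g : RG n, g.1 v = w :=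
  ⟨Unitary.linearIsometryEquiv.symm (ℝ ∙ (v - w))ᗮ.reflection, Submodule.reflection_sub h⟩

/-- Average of `h` over the orbit of `y` under rotations. -/
def avg (h : Eu n → ℝ) (y : Eu n) : ℝ≥0∞ := ∫⁻ U, ENNReal.ofReal (h ((U⁻¹ : RG n).1 y)) ∂(muR n)

/-- Rotations act transitively on spheres, so the orbit average depends only on the norm. -/
lemma avg_congr (h : Eu n → ℝ) {v w : Eu n} (hvw : ‖v‖ = ‖w‖) : avg h v = avg h w := by
  obtain ⟨g, hg⟩ := rg_transitive hvw
  rw [avg, avg, ← lintegral_mul_left_eq_self _ g⁻¹]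
  congr 1; ext U
  rw [rg_inv_mul_apply, inv_inv, hg]

lemma avg_smul {h : Eu n → ℝ} (hh : Sublin h) {t : ℝ} (ht : 0 ≤ t) (y : Eu n) : avg h (t • y) = ENNReal.ofReal t * avg h y := by
  rw [avg, avg, ← lintegral_const_mul' _ _ ENNReal.ofReal_ne_top]
  congr 1; ext U
  rw [map_smul, hh.smul t ht, ENNReal.ofReal_mul ht]

lemma continuous_rg_apply {X : Type*} [TopologicalSpace X] {U : X → RG n} {y : X → Eu n} (hU : Continuous U) (hy : Continuous y) :
    Continuous fun x => (U x).1 (y x) := (continuous_subtype_val.comp hU).clm_apply hy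

/-- The weight of the (unnormalised) standard Gaussian measure. -/
def gw (x : Eu n) : ℝ≥0∞ := ENNReal.ofReal (Real.exp (-(‖x‖ ^ 2 / 2)))

lemma gw_continuous : Continuous (gw (n := n)) := ENNReal.continuous_ofReal.comp (by fun_prop)

lemma lintegral_gw {h : Eu n → ℝ} (hp : PC h) (h0 : ∀ x, 0 ≤ h x) :
    ∫⁻ x, ENNReal.ofReal (h x) * gw x = ENNReal.ofReal (Eg h * Iw (fun _ : Eu n => 0) (fun _ => 1) 1 0) := by
  have hZ : 0 < Iw (fun _ : Eu n => 0) (fun _ => 1) 1 0 := In_one_pos (LB_zero.pot_qg one_pos 0)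
  have hi : Integrable (fun x => h x * Real.exp (-(pot (fun _ : Eu n => 0) 1 0 x))) := hp.integrable (LB_zero.pot_qg one_pos 0)
  rw [Eg, Ep, div_mul_cancel₀ _ hZ.ne', Iw, In,
    ofReal_integral_eq_lintegral_ofReal hi (Filter.Eventually.of_forall fun x => mul_nonneg (h0 x) (Real.exp_pos _).le)]
  congr 1; ext x
  rw [ENNReal.ofReal_mul (h0 x), gw]
  congr 3; simp [pot]; ring

/-- The spherical average of a sublinear function, expressed through its Gaussian mean. -/
lemma avg_le {h : Eu n → ℝ} (hh : Sublin h) (hn : 0 < n) (y : Eu n) :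
    avg h y ≤ ENNReal.ofReal (2 * Eg h / Real.sqrt n * ‖y‖) := by
  have hZ : 0 < Iw (fun _ : Eu n => 0) (fun _ => 1) 1 0 := In_one_pos (LB_zero.pot_qg one_pos 0)
  set Z := Iw (fun _ : Eu n => 0) (fun _ => 1) 1 0 with hZd
  set u : Eu n := ee ⟨0, hn⟩ with hu
  have hu1 : ‖u‖ = 1 := by simp [hu]
  have havg : ∀ y, avg h y = ENNReal.ofReal ‖y‖ * avg h u := fun y => by
    rw [← avg_smul hh (norm_nonneg y)]
    exact avg_congr h (by rw [norm_smul, hu1, norm_norm, mul_one])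
  have hcont : Measurable fun p : Eu n × RG n => ENNReal.ofReal (h ((p.2⁻¹ : RG n).1 p.1)) * gw p.1 :=
    (ENNReal.continuous_ofReal.comp (hh.cont.comp (continuous_rg_apply continuous_snd.inv continuous_fst))).measurable.mul
      (gw_continuous.comp continuous_fst).measurable
  have e1 : ∫⁻ y, avg h y * gw y = ENNReal.ofReal (Eg h * Z) := by
    simp only [avg]
    calc ∫⁻ y, (∫⁻ U, ENNReal.ofReal (h ((U⁻¹ : RG n).1 y)) ∂(muR n)) * gw y
        = ∫⁻ y, ∫⁻ U, ENNReal.ofReal (h ((U⁻¹ : RG n).1 y)) * gw y ∂(muR n) := by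
          congr 1; ext y
          rw [lintegral_mul_const' _ _ (by exact ENNReal.ofReal_ne_top)]
      _ = ∫⁻ U, (∫⁻ y, ENNReal.ofReal (h ((U⁻¹ : RG n).1 y)) * gw y) ∂(muR n) := lintegral_lintegral_swap hcont.aemeasurable
      _ = ∫⁻ U, ENNReal.ofReal (Eg h * Z) ∂(muR n) := by
         
          refine lintegral_congr fun U => ?_
          have hS : Sublin (fun y => h ((U⁻¹ : RG n).1 y)) :=
            { nonneg := fun x => hh.nonneg _
              add_le := fun x y => by rw [map_add]; exact hh.add_le _ _
              smul := fun t ht x => by rw [map_smul]; exact hh.smul t ht _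
              cont := hh.cont.comp (U⁻¹ : RG n).1.continuous }
          have hp := hS.pc
          rw [lintegral_gw hp (fun x => hh.nonneg _)]
          have := Eg_isometry (Unitary.linearIsometryEquiv (U⁻¹)) h
          exact congrArg (fun t => ENNReal.ofReal (t * Z)) this
      _ = _ := by simp
  have e2 : ∫⁻ y, avg h y * gw y = avg h u * ENNReal.ofReal (Eg (fun x : Eu n => ‖x‖) * Z) := by
    rw [← lintegral_gw PC.norm (fun x => norm_nonneg x), ← lintegral_const_mul]
    · congr 1; ext y; rw [havg y]; ring
    · have := gw_continuous (n := n)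
      exact Measurable.mul (by fun_prop) this.measurable
  have hgn := Eg_norm hn
  have hsn : 0 < Real.sqrt n := Real.sqrt_pos.2 (by exact_mod_cast hn)
  have hE := hh.Eg_nonneg
  have e3 : avg h u ≤ ENNReal.ofReal (2 * Eg h / Real.sqrt n) := by
    rw [e1] at e2
    have hpos : 0 < Eg (fun x : Eu n => ‖x‖) * Z := by nlinarith
    have : avg h u = ENNReal.ofReal (Eg h * Z) / ENNReal.ofReal (Eg (fun x : Eu n => ‖x‖) * Z) := by
      rw [ENNReal.eq_div_iff (by simpa using hpos) ENNReal.ofReal_ne_top, e2, mul_comm]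
    rw [this, ← ENNReal.ofReal_div_of_pos hpos]
    apply ENNReal.ofReal_le_ofReal
    rw [mul_div_mul_right _ _ hZ.ne', div_le_div_iff₀ (by linarith) hsn]
    nlinarith
  rw [havg y, mul_comm, ENNReal.ofReal_mul (by positivity)]
  gcongr

end rotation

/-! ### A common rotation -/

section randrot
variable {n : ℕ}

/-- Unnormalised mean of `h` over the image of `A` under the rotation `U⁻¹ V`. -/
def Jr (h : Eu n → ℝ) (A : Set (Eu n)) (p : RG n × RG n) : ℝ≥0∞ :=
  ∫⁻ x in A, ENNReal.ofReal (h ((p.1⁻¹ : RG n).1 (p.2.1 x)))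

lemma Jr_meas {h : Eu n → ℝ} (hh : Sublin h) (A : Set (Eu n)) : Measurable (Jr h A) := by
  have : Measurable fun p : (RG n × RG n) × Eu n => ENNReal.ofReal (h ((p.1.1⁻¹ : RG n).1 (p.1.2.1 p.2))) := by
    refine (ENNReal.continuous_ofReal.comp (hh.cont.comp (continuous_rg_apply ?_ (continuous_rg_apply ?_ continuous_snd)))).measurable
    · exact (continuous_fst.comp continuous_fst).inv
    · exact continuous_snd.comp continuous_fst
  exact this.lintegral_prod_right'

lemma lintegral_norm_le {A : Set (Eu n)} (hA : IsCompact A) (hn : 0 < n)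
    (h2 : ∫ z in A, ‖z‖ ^ 2 ≤ 4 * n * volume.real A) : ∫⁻ z in A, ENNReal.ofReal ‖z‖ ≤ ENNReal.ofReal (2 * Real.sqrt n) * volume A := by
  have hs : 0 < Real.sqrt n := Real.sqrt_pos.2 (by exact_mod_cast hn)
  have hsq : Real.sqrt n * Real.sqrt n = n := Real.mul_self_sqrt (by positivity)
  have i1 : IntegrableOn (fun z : Eu n => ‖z‖) A := continuous_norm.continuousOn.integrableOn_compact hA
  have i2 : IntegrableOn (fun z : Eu n => ‖z‖ ^ 2 / (4 * Real.sqrt n)) A :=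
    (by fun_prop : Continuous fun z : Eu n => ‖z‖ ^ 2 / (4 * Real.sqrt n)).continuousOn.integrableOn_compact hA
  have i3 : IntegrableOn (fun _ : Eu n => Real.sqrt n) A := integrableOn_const hA.measure_lt_top.ne
  rw [← ofReal_integral_eq_lintegral_ofReal i1 (Filter.Eventually.of_forall fun x => norm_nonneg x)]
  rw [← ENNReal.ofReal_toReal hA.measure_lt_top.ne, ← ENNReal.ofReal_mul (by positivity)]
  apply ENNReal.ofReal_le_ofReal
  have : ∫ z in A, ‖z‖ ≤ ∫ z in A, (‖z‖ ^ 2 / (4 * Real.sqrt n) + Real.sqrt n) := by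
    refine integral_mono i1 (i2.add i3) fun z => ?_
    have : ‖z‖ ^ 2 / (4 * Real.sqrt n) + Real.sqrt n - ‖z‖ = (‖z‖ - 2 * Real.sqrt n) ^ 2 / (4 * Real.sqrt n) := by
      field_simp; ring
    have h3 : 0 ≤ (‖z‖ - 2 * Real.sqrt n) ^ 2 / (4 * Real.sqrt n) := by positivity
    change ‖z‖ ≤ ‖z‖ ^ 2 / (4 * Real.sqrt n) + Real.sqrt n
    linarith
  rw [integral_add i2 i3, integral_div, setIntegral_const, smul_eq_mul] at this
  refine this.trans ?_
  have h4 : (∫ z in A, ‖z‖ ^ 2) / (4 * Real.sqrt n) ≤ Real.sqrt n * volume.real A := by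
    rw [div_le_iff₀ (by positivity)]
    calc _ ≤ _ := h2
      _ = 4 * (Real.sqrt n * Real.sqrt n) * volume.real A := by rw [hsq]
      _ = _ := by ring
  change _ ≤ 2 * Real.sqrt n * volume.real A
  linarith

/-- The mean of the gauge over a randomly rotated copy of `A` is small on average. -/
lemma lintegral_Jr {h : Eu n → ℝ} (hh : Sublin h) (hn : 0 < n) {A : Set (Eu n)} (hA : IsCompact A)
    (h2 : ∫ z in A, ‖z‖ ^ 2 ≤ 4 * n * volume.real A) {B : ℝ} (hB : Eg h ≤ B) :
    ∫⁻ p, Jr h A p ∂((muR n).prod (muR n)) ≤ ENNReal.ofReal (4 * B) * volume A := by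
  have hs : 0 < Real.sqrt n := Real.sqrt_pos.2 (by exact_mod_cast hn)
  have hE := hh.Eg_nonneg
  rw [lintegral_prod_symm _ (Jr_meas hh A).aemeasurable]
  have : ∀ V : RG n, ∫⁻ U, Jr h A (U, V) ∂(muR n) ≤ ENNReal.ofReal (4 * B) * volume A := fun V => by
    have hm : Measurable fun p : RG n × Eu n => ENNReal.ofReal (h ((p.1⁻¹ : RG n).1 (V.1 p.2))) :=
      (ENNReal.continuous_ofReal.comp (hh.cont.comp (continuous_rg_apply continuous_fst.inv
        (V.1.continuous.comp continuous_snd)))).measurable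
    simp only [Jr]
    rw [lintegral_lintegral_swap hm.aemeasurable]
    calc ∫⁻ x in A, avg h (V.1 x) ≤ ∫⁻ x in A, ENNReal.ofReal (2 * B / Real.sqrt n) * ENNReal.ofReal ‖x‖ := by
          refine lintegral_mono fun x => (avg_le hh hn _).trans ?_
          rw [Unitary.norm_map, ENNReal.ofReal_mul (by positivity)]
          gcongr
      _ = ENNReal.ofReal (2 * B / Real.sqrt n) * ∫⁻ x in A, ENNReal.ofReal ‖x‖ := lintegral_const_mul' _ _ ENNReal.ofReal_ne_top
      _ ≤ ENNReal.ofReal (2 * B / Real.sqrt n) * (ENNReal.ofReal (2 * Real.sqrt n) * volume A) := by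
          gcongr; exact lintegral_norm_le hA hn h2
      _ = _ := by
          rw [← mul_assoc, ← ENNReal.ofReal_mul (by have := hE.trans hB; positivity)]
          congr 2; field_simp; ring
  calc _ ≤ ∫⁻ _, ENNReal.ofReal (4 * B) * volume A ∂(muR n) := lintegral_mono this
    _ = _ := by simp

/-- A single rotation makes both gauges bounded on average over the other body. -/
theorem exists_rotation {h₁ h₂ : Eu n → ℝ} (hh₁ : Sublin h₁) (hh₂ : Sublin h₂) (hn : 0 < n) {A₁ A₂ : Set (Eu n)} (hA₁ : IsCompact A₁)
    (hA₂ : IsCompact A₂) (hm₁ : ∫ z in A₁, ‖z‖ ^ 2 ≤ 4 * n * volume.real A₁) (hm₂ : ∫ z in A₂, ‖z‖ ^ 2 ≤ 4 * n * volume.real A₂)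
    (hv₁ : volume A₁ ≠ 0) (hv₂ : volume A₂ ≠ 0) {B : ℝ} (hB₁ : Eg h₁ ≤ B) (hB₂ : Eg h₂ ≤ B) :
    ∃ L : Eu n ≃ₗᵢ[ℝ] Eu n, ∫⁻ x in A₁, ENNReal.ofReal (h₂ (L x)) ≤ ENNReal.ofReal (8 * B) * volume A₁ ∧
      ∫⁻ z in A₂, ENNReal.ofReal (h₁ (L.symm z)) ≤ ENNReal.ofReal (8 * B) * volume A₂ := by
  have hB : 0 ≤ B := hh₁.Eg_nonneg.trans hB₁
  set ν := (muR n).prod (muR n) with hν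
  have hf₁ : volume A₁ ≠ ⊤ := hA₁.measure_lt_top.ne
  have hf₂ : volume A₂ ≠ ⊤ := hA₂.measure_lt_top.ne
  have hJ₁ : ∫⁻ p, Jr h₂ A₁ p / volume A₁ ∂ν ≤ ENNReal.ofReal (4 * B) := by
    simp only [div_eq_mul_inv]
    rw [lintegral_mul_const _ (Jr_meas hh₂ A₁), ← div_eq_mul_inv, ENNReal.div_le_iff hv₁ hf₁]
    exact lintegral_Jr hh₂ hn hA₁ hm₁ hB₂
  have hms : Measurable fun p : RG n × RG n => Jr h₁ A₂ p.swap := (Jr_meas hh₁ A₂).comp measurable_swap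
  have hJ₂ : ∫⁻ p, Jr h₁ A₂ p.swap / volume A₂ ∂ν ≤ ENNReal.ofReal (4 * B) := by
    simp only [div_eq_mul_inv]
    rw [lintegral_mul_const _ hms, ← div_eq_mul_inv, ENNReal.div_le_iff hv₂ hf₂]
    rw [hν, (Measure.measurePreserving_swap (μ := muR n) (ν := muR n)).lintegral_comp (Jr_meas hh₁ A₂)]
    exact lintegral_Jr hh₁ hn hA₂ hm₂ hB₁
  have hsum : ∫⁻ p, (Jr h₂ A₁ p / volume A₁ + Jr h₁ A₂ p.swap / volume A₂) ∂ν ≤ ENNReal.ofReal (8 * B) := by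
    rw [lintegral_add_left ((Jr_meas hh₂ A₁).div_const _)]
    refine (add_le_add hJ₁ hJ₂).trans ?_
    rw [← ENNReal.ofReal_add (by positivity) (by positivity)]
    apply ENNReal.ofReal_le_ofReal; linarith
  obtain ⟨p, hp⟩ := exists_le_lintegral (μ := ν) (f := fun p => Jr h₂ A₁ p / volume A₁ + Jr h₁ A₂ p.swap / volume A₂)
    (((Jr_meas hh₂ A₁).div_const _).add (hms.div_const _)).aemeasurable
  have hp := hp.trans hsum
  refine ⟨Unitary.linearIsometryEquiv (p.1⁻¹ * p.2), ?_, ?_⟩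
  · exact (ENNReal.div_le_iff hv₁ hf₁).1 (le_self_add.trans hp)
  · have h3 := (ENNReal.div_le_iff hv₂ hf₂).1 (le_add_self.trans hp)
    refine le_trans (le_of_eq ?_) h3
    simp only [Jr, Prod.fst_swap, Prod.snd_swap]
    refine lintegral_congr fun z => ?_
    congr 2
    rw [LinearIsometryEquiv.symm_apply_eq]
    change z = (p.1⁻¹ * p.2 * (p.2⁻¹ * p.1) : RG n).1 z
    simp [mul_assoc]

/-- Transport of an almost containment by a linear map, from a first-moment bound through Markov's inequality. -/
lemma part_cont {h : Eu n → ℝ} (hc : Continuous h) {A D : Set (Eu n)} (hA : IsCompact A) {B s : ℝ} (hB : 0 < B) (hs : s = 100 * B)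
    (hb : ∫⁻ x in A, ENNReal.ofReal (h x) ≤ ENNReal.ofReal B * volume A) (G : Eu n ≃ₗ[ℝ] Eu n)
    (hD : ∀ x ∈ A, h x ≤ s → G x ∈ D) : (99 / 100 : ℝ≥0∞) * volume (G '' A) ≤ volume (D ∩ G '' A) := by
  have hm : Measurable fun x => ENNReal.ofReal (h x) := (ENNReal.continuous_ofReal.comp hc).measurable
  have h1 := mul_meas_ge_le_lintegral (μ := volume.restrict A) hm (ENNReal.ofReal s)
  set bad := {x | ENNReal.ofReal s ≤ ENNReal.ofReal (h x)} with hbad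
  have hbm : MeasurableSet bad := measurableSet_le measurable_const hm
  have hf : volume A ≠ ⊤ := hA.measure_lt_top.ne
  have hbf : volume.restrict A bad ≤ (1 / 100 : ℝ≥0∞) * volume A := by
    have h2 := h1.trans hb
    have e : ENNReal.ofReal s = ENNReal.ofReal B * 100 := by
      rw [hs, mul_comm, ENNReal.ofReal_mul hB.le]; norm_num
    rw [e, mul_assoc] at h2
    have h3 := (ENNReal.mul_le_mul_iff_right (by simpa using hB) ENNReal.ofReal_ne_top).1 h2
    calc volume.restrict A bad = (1 / 100 : ℝ≥0∞) * (100 * volume.restrict A bad) := by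
          rw [← mul_assoc, ENNReal.div_mul_cancel (by norm_num) (by norm_num), one_mul]
      _ ≤ _ := by gcongr
  have hgood : (99 / 100 : ℝ≥0∞) * volume A ≤ volume (A ∩ badᶜ) := by
    have h4 : volume A ≤ volume (A ∩ badᶜ) + (1 / 100 : ℝ≥0∞) * volume A := by
      calc volume A = volume (A ∩ bad) + volume (A \ bad) := (measure_inter_add_sdiff A hbm).symm
        _ ≤ (1 / 100 : ℝ≥0∞) * volume A + volume (A ∩ badᶜ) := by
          rw [Measure.restrict_apply hbm, Set.inter_comm] at hbf
          exact add_le_add hbf le_rfl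
        _ = _ := add_comm _ _
    have h5 : volume A = (99 / 100 : ℝ≥0∞) * volume A + (1 / 100 : ℝ≥0∞) * volume A := by
      rw [← add_mul, ENNReal.div_add_div_same]
      norm_num
      rw [ENNReal.div_self (by norm_num) (by norm_num), one_mul]
    have hfin : (1 / 100 : ℝ≥0∞) * volume A ≠ ⊤ := ENNReal.mul_ne_top (by simp) hf
    conv at h4 => lhs; rw [h5]
    exact (ENNReal.add_le_add_iff_right hfin).1 h4
  have himg : ∀ X : Set (Eu n), volume (G '' X) = ENNReal.ofReal |LinearMap.det (G : Eu n →ₗ[ℝ] Eu n)| * volume X :=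
    fun X => Measure.addHaar_image_linearMap volume (G : Eu n →ₗ[ℝ] Eu n) X
  calc (99 / 100 : ℝ≥0∞) * volume (G '' A)
      = ENNReal.ofReal |LinearMap.det (G : Eu n →ₗ[ℝ] Eu n)| * ((99 / 100 : ℝ≥0∞) * volume A) := by rw [himg]; ring
    _ ≤ ENNReal.ofReal |LinearMap.det (G : Eu n →ₗ[ℝ] Eu n)| * volume (A ∩ badᶜ) := by gcongr
    _ = volume (G '' (A ∩ badᶜ)) := (himg _).symm
    _ ≤ volume (D ∩ G '' A) := by
        refine measure_mono ?_
        rintro _ ⟨x, ⟨hx, hxb⟩, rfl⟩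
        refine ⟨hD x hx ?_, x, hx, rfl⟩
        by_contra hcon
        push Not at hcon
        exact hxb (ENNReal.ofReal_le_ofReal hcon.le)

end randrot

/-! ### Partial containment and the choice of exponent -/

section final
variable {n : ℕ}

lemma Sublin.scaled_mem {h : Eu n → ℝ} (hh : Sublin h) {R : Eu n ≃ₗ[ℝ] Eu n} {K : Set (Eu n)} (hm : ∀ z, z ∈ R '' K ↔ h z ≤ 1)
    {s : ℝ} (hs : 0 < s) {z : Eu n} (hz : h z ≤ s) : R.symm z ∈ s • K := by
  rw [Set.mem_smul_set_iff_inv_smul_mem₀ hs.ne', ← map_smul]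
  have : h (s⁻¹ • z) ≤ 1 := by
    rw [hh.smul _ (by positivity)]
    calc s⁻¹ * h z ≤ s⁻¹ * s := by gcongr
      _ = 1 := inv_mul_cancel₀ hs.ne'
  obtain ⟨w, hw, e⟩ := (hm _).2 this
  rw [← e, LinearEquiv.symm_apply_apply]
  exact hw

/-- Partial containment of two convex bodies with the explicit factor `32000 q²`. -/
theorem containment {K₁ K₂ : Set (Eu n)} (hK₁ : IsCompact K₁) (hc₁ : Convex ℝ K₁) (hi₁ : (interior K₁).Nonempty) (hK₂ : IsCompact K₂)
    (hc₂ : Convex ℝ K₂) (hi₂ : (interior K₂).Nonempty) (hn : 0 < n) {q : ℕ} (hq : Even q) (hq3 : 3 ≤ q)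
    (h4 : 60 * (n : ℝ) ^ 4 * Real.exp 10240 ≤ 4 ^ q) {s : ℝ} (hs : s = 32000 * q ^ 2) :
    ∃ (T : Eu n ≃ₗ[ℝ] Eu n) (x y : Eu n),
      (99 / 100 : ℝ≥0∞) * volume (T '' (x +ᵥ K₁)) ≤ volume (s • (y +ᵥ K₂) ∩ T '' (x +ᵥ K₁)) ∧
      (99 / 100 : ℝ≥0∞) * volume (y +ᵥ K₂) ≤ volume (s • (T '' (x +ᵥ K₁)) ∩ (y +ᵥ K₂)) := by
  obtain ⟨R₁, x₁, h₁, hh₁, hm₁, hE₁, hv₁⟩ := iso_position hK₁ hc₁ hi₁ hn hq hq3 h4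
  obtain ⟨R₂, x₂, h₂, hh₂, hm₂, hE₂, hv₂⟩ := iso_position hK₂ hc₂ hi₂ hn hq hq3 h4
  have hq0 : (0 : ℝ) < q := by exact_mod_cast (by omega : 0 < q)
  have hcpt : ∀ {K : Set (Eu n)} (R : Eu n ≃ₗ[ℝ] Eu n) (x : Eu n), IsCompact K → IsCompact (R '' (x +ᵥ K)) := fun R x hK =>
    (hK.vadd x).image R.toContinuousLinearEquiv.continuous
  have hpos : ∀ {K : Set (Eu n)} (R : Eu n ≃ₗ[ℝ] Eu n) (x : Eu n), (interior K).Nonempty → volume (R '' (x +ᵥ K)) ≠ 0 := fun {K} R x hi => by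
    have h0 : volume K ≠ 0 := (Measure.measure_pos_of_nonempty_interior _ hi).ne'
    have e := Measure.addHaar_image_linearMap volume (R : Eu n →ₗ[ℝ] Eu n) (x +ᵥ K)
    have hdet : LinearMap.det (R : Eu n →ₗ[ℝ] Eu n) ≠ 0 := (LinearEquiv.isUnit_det' R).ne_zero
    change volume (R '' (x +ᵥ K)) = _ at e
    rw [e, measure_vadd]
    exact mul_ne_zero (by simpa using hdet) h0
  obtain ⟨L, hL₁, hL₂⟩ := exists_rotation hh₁ hh₂ hn (hcpt R₁ x₁ hK₁) (hcpt R₂ x₂ hK₂) hv₁ hv₂ (hpos R₁ x₁ hi₁) (hpos R₂ x₂ hi₂)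
    hE₁ hE₂
  have hs0 : 0 < s := by rw [hs]; positivity
  have hB : 0 < 8 * (40 * (q : ℝ) ^ 2) := by positivity
  have hsB : s = 100 * (8 * (40 * (q : ℝ) ^ 2)) := by rw [hs]; ring
  let T : Eu n ≃ₗ[ℝ] Eu n := R₁ ≪≫ₗ L.toLinearEquiv ≪≫ₗ R₂.symm
  have hT : T '' (x₁ +ᵥ K₁) = (L.toLinearEquiv ≪≫ₗ R₂.symm) '' (R₁ '' (x₁ +ᵥ K₁)) := by
    rw [← Set.image_comp]; rfl
  have hR : x₂ +ᵥ K₂ = R₂.symm '' (R₂ '' (x₂ +ᵥ K₂)) := by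
    rw [← Set.image_comp]
    have : (R₂.symm ∘ R₂ : Eu n → Eu n) = id := by ext1 z; simp
    rw [this, Set.image_id]
  refine ⟨T, x₁, x₂, ?_, ?_⟩
  · rw [hT]
    exact part_cont (hh₂.cont.comp L.continuous) (hcpt R₁ x₁ hK₁) hB hsB hL₁ _ fun x _ hx => hh₂.scaled_mem hm₂ hs0 hx
  · have := part_cont (D := s • (T '' (x₁ +ᵥ K₁))) (hh₁.cont.comp L.symm.continuous) (hcpt R₂ x₂ hK₂) hB hsB hL₂ R₂.symm fun z _ hz => by
      obtain ⟨w, hw, e⟩ := hh₁.scaled_mem hm₁ hs0 hz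
      refine ⟨T w, ⟨w, hw, rfl⟩, ?_⟩
      change s • T w = _
      change s • w = R₁.symm (L.symm z) at e
      rw [← map_smul, e]
      simp [T]
    rwa [← hR] at this

/-- Choice of the moment exponent `q`, of logarithmic size in the dimension. -/
lemma exists_q (hn : 2 ≤ n) : ∃ q : ℕ, Even q ∧ 3 ≤ q ∧ 60 * (n : ℝ) ^ 4 * Real.exp 10240 ≤ 4 ^ q ∧ (q : ℝ) ≤ 20510 * Real.log (n + 1) := by
  have hn0 : (0 : ℝ) < n := by exact_mod_cast (by omega : 0 < n)
  have hn2 : (2 : ℝ) ≤ n := by exact_mod_cast hn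
  have hl0 : 0 ≤ Real.log n := Real.log_nonneg (by linarith)
  have hl1 : 1 ≤ Real.log (n + 1) := by
    rw [Real.le_log_iff_exp_le (by linarith)]
    have := Real.exp_one_lt_d9
    linarith
  have hl2 : Real.log n ≤ Real.log (n + 1) := Real.log_le_log hn0 (by linarith)
  set m := ⌈10250 + 4 * Real.log n⌉₊ with hm
  have hm1 : 10250 + 4 * Real.log n ≤ m := Nat.le_ceil _
  have hm2 : (m : ℝ) < 10250 + 4 * Real.log n + 1 := Nat.ceil_lt_add_one (by positivity)
  have hm3 : (3 : ℝ) ≤ m := by linarith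
  refine ⟨2 * m, even_two_mul m, ?_, ?_, ?_⟩
  · have : 3 ≤ m := by exact_mod_cast hm3
    omega
  · have h60 : (60 : ℝ) ≤ Real.exp 10 := by
      have h2 : (2 : ℝ) ≤ Real.exp 1 := by have := Real.exp_one_gt_d9; linarith
      have : Real.exp 10 = Real.exp 1 ^ 10 := by rw [← Real.exp_nat_mul]; norm_num
      rw [this]
      calc (60 : ℝ) ≤ 2 ^ 10 := by norm_num
        _ ≤ _ := by gcongr
    have hn4 : (n : ℝ) ^ 4 = Real.exp (4 * Real.log n) := by
      rw [show (4 : ℝ) = ((4 : ℕ) : ℝ) by norm_num, Real.exp_nat_mul, Real.exp_log hn0]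
    calc 60 * (n : ℝ) ^ 4 * Real.exp 10240 ≤ Real.exp 10 * Real.exp (4 * Real.log n) * Real.exp 10240 := by rw [hn4]; gcongr
      _ = Real.exp (10250 + 4 * Real.log n) := by rw [← Real.exp_add, ← Real.exp_add]; congr 1; ring
      _ ≤ Real.exp m := Real.exp_le_exp.2 hm1
      _ = Real.exp 1 ^ m := by rw [← Real.exp_nat_mul, mul_one]
      _ ≤ 16 ^ m := by
        have := Real.exp_one_lt_d9
        gcongr
        linarith
      _ = 4 ^ (2 * m) := by rw [pow_mul]; norm_num
  · push_cast
    linarith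

end final

/-- `d_PC(K₁, K₂) ≤ C log^α (n+1)` for all convex bodies `K₁, K₂ ⊆ ℝⁿ`. -/
theorem partial_containment_distance_bound :
    ∃ C α : ℝ, 0 < C ∧ 0 < α ∧ α ≤ 4 ∧
      ∀ n : ℕ, 2 ≤ n → ∀ K₁ K₂ : Set (EuclideanSpace ℝ (Fin n)),
        IsConvexBody K₁ → IsConvexBody K₂ →
        dPC K₁ K₂ ≤ C * Real.log (n + 1) ^ α := by
  refine ⟨32000 ^ 2 * 20510 ^ 4, 4, by norm_num, by norm_num, le_rfl, fun n hn K₁ K₂ h₁ h₂ => ?_⟩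
  obtain ⟨q, hq, hq3, h4, hqle⟩ := exists_q hn
  obtain ⟨T, x, y, hT₁, hT₂⟩ := containment h₁.1 h₁.2.1 h₁.2.2 h₂.1 h₂.2.1 h₂.2.2 (by omega : 0 < n) hq hq3 h4 rfl
  have hq0 : (0 : ℝ) < q := by exact_mod_cast (by omega : 0 < q)
  have hs0 : (0 : ℝ) < 32000 * q ^ 2 := by positivity
  have hle : dPC K₁ K₂ ≤ (32000 * (q : ℝ) ^ 2) ^ 2 := by
    refine csInf_le ⟨0, fun lam hlam => hlam.1.le⟩ ⟨by positivity, T, x, y, ?_⟩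
    rw [Real.sqrt_sq hs0.le]
    exact ⟨hT₁, hT₂⟩
  refine hle.trans ?_
  rw [show (4 : ℝ) = ((4 : ℕ) : ℝ) by norm_num, Real.rpow_natCast]
  calc (32000 * (q : ℝ) ^ 2) ^ 2 = 32000 ^ 2 * (q : ℝ) ^ 4 := by ring
    _ ≤ 32000 ^ 2 * (20510 * Real.log (n + 1)) ^ 4 := by gcongr
    _ = _ := by push_cast; ring

end
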